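/- Let Φ be a conformal iterated function system on ℝ^d with attractor K, let μ be a self-conformal measure associated to Φ, and let ν be any Borel probability measure on ℝ^d. Then for μ×ν-almost every (x,y) the following holds: if Q is any tangent distribution of μ×ν at (x,y) (with respect to the maximum metric on ℝ^d × ℝ^d) and Q' is a probability measure supported on ergodic fractal distributions with barycenter Q (an ergodic decomposition Q = ∫ P dQ'(P)), then for Q'-almost every P there exist a conformal map h of (-1,1)^d and t₀ ≥ 0 such that for every f ∈ Φ and for h_*μ-almost every x' ∈ h(K) and h_*μ-almost every y' ∈ h(K), writing f_h := h∘f∘h^{-1}, one has S_t(Df_h(x'), I)_*P = P and S_t(Df_h(y')^{-1}, I)_*P = P for every t ≥ t₀, where S_t(L, I)_*P denotes the pushforward of P under η ↦ ((L,I)_*η)_{0,t} and (L,I)(u,v) := (Lu, v). -/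

import Mathlib

/-!
Throughout, `phi θ z t = -log θ(B(z, 2^{-t}))` measures the decay of mass at `z`, and `entD P` is the mean
decay of the first marginal under one unit of magnification by `P`.

By the zero–one law for self-conformal measures, `limsup phi μ u n / n` equals a constant `s` for `μ`-a.e.
`u` (`SelfConf.exists_dim`). Hence a tangent distribution `Q` at a typical point satisfies `entD Q ≤ s`
(`IsTangentDistribution.entD_le`), and it is carried by product measures that are limits of
magnifications of `μ × ν`, since magnifications in the maximum metric preserve products.

Let `P` be an ergodic component of `Q`. A limit of magnifications of `μ` is built from limits of the
rescaled maps `f_w`, which are conformal by bounded distortion; so there are a product measure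
`η = μ' × ν'` generic for `P`, a point `b`, and a conformal map `g` sending `μ`-a.e. point `u` to a
point `(g u, b)` typical for `η` (`SelfConf.exists_conformal`, `SelfConf.exists_good`). The maximal ergodic
theorem shows that at these points the scenery of `η` equidistributes for `P` and `μ'` decays at rate at
most `entD P` (`IsErgodicFD.ae_generic`). Comparing the masses of cells gives `s ≤ entD P`
(`ofReal_le_entD`). As `entD` is affine and `entD Q ≤ s`, equality holds for a.e. component.

Now let `G` be a map, such as `g` or `g ∘ f_i`, that sends `μ`-a.e. point to a typical point of `η`.
Along scales where
`G_* μ` decays at the maximal rate `s`, the cells around `G u` do not have exponentially smaller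
`μ'`-mass than `G_* μ`-mass. A supermartingale built from the Hellinger affinities of the two measures
inside nested cells of shifted dyadic grids then shows that magnifications of `G_* μ` and of `μ'` are close
at most scales (`ae_sync`), although the two measures may be mutually singular. Consequently the
scenery of `G_* μ × ν'` at `(G u, b)` equidistributes for `P` along these scales (`ae_equi_of_good`).

Apply this to `G = g` and `G = g ∘ f_i`. At small scales, `(g f_i)_* μ` near `g f_i u` is to first order
the image of `g_* μ` near `g u` under `L = D(g f_i g⁻¹)(g u)` (`UD.linearize`), so the scenery
and its image under `S_t (L, I)` equidistribute for the same `P` along the same scales. This gives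
the invariance of `P` (`Equi.map_eq`, `SelfConf.ae_map_StLI`), and the invariance under `L⁻¹` follows
formally (`map_StLI_inv`).
-/

open MeasureTheory Metric Filter Set Topology
open scoped ENNReal NNReal Pointwise

noncomputable section

/-- `ℝ^d` with the maximum metric, so that `ball 0 1 = (-1,1)^d`. -/
abbrev Euc (d : ℕ) : Type := Fin d → ℝ

/-- The (lower Hausdorff) dimension of a measure:
`dim μ = inf { dim_H A : A Borel, μ A > 0 }`. -/
def mdim {X : Type*} [EMetricSpace X] [MeasurableSpace X] (μ : Measure X) : ℝ≥0∞ :=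
  ⨅ (A : Set X) (_ : MeasurableSet A) (_ : 0 < μ A), dimH A

/-- The topological support of a measure. -/
def msupport {X : Type*} [TopologicalSpace X] [MeasurableSpace X] (μ : Measure X) : Set X :=
  {x | ∀ U : Set X, IsOpen U → x ∈ U → 0 < μ U}

/-- The matrix of the derivative of `f` at `x`. -/
def Dmat {d : ℕ} (f : Euc d → Euc d) (x : Euc d) : Matrix (Fin d) (Fin d) ℝ :=
  LinearMap.toMatrix' (fderiv ℝ f x : Euc d →ₗ[ℝ] Euc d)

/-- The conformal scaling factor `‖Df(x)‖ = |det Df(x)|^{1/d}` of a conformal map. -/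
def confScale {d : ℕ} (f : Euc d → Euc d) (x : Euc d) : ℝ :=
  |LinearMap.det (fderiv ℝ f x : Euc d →ₗ[ℝ] Euc d)| ^ ((d : ℝ)⁻¹)

/-- The special orthogonal group `SO(d)`, as a set of matrices. -/
def SOset (d : ℕ) : Set (Matrix (Fin d) (Fin d) ℝ) :=
  {O | O ∈ Matrix.orthogonalGroup (Fin d) ℝ ∧ O.det = 1}

/-- The conformal orthogonal group `CO(d) = {rO : r > 0, O ∈ SO(d)}`, as a set of matrices. -/
def COset (d : ℕ) : Set (Matrix (Fin d) (Fin d) ℝ) :=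
  {A | ∃ r : ℝ, 0 < r ∧ ∃ O ∈ SOset d, A = r • O}

/-- `⟨A⟩`: the closure of the set of finite (nonempty) products of elements of `A`. -/
def genClosure {G : Type*} [Monoid G] [TopologicalSpace G] (A : Set G) : Set G :=
  closure {g | ∃ l : List G, l ≠ [] ∧ (∀ x ∈ l, x ∈ A) ∧ l.prod = g}

/-- `f` is a conformal map on `U`: injective on `U`, `closure (f '' U) ⊆ U`, differentiable
with conformal derivative `Df(x) = c • O`, `O` orthogonal, and `Df` Hölder continuous. -/
def IsConformalMapOn (d : ℕ) (f : Euc d → Euc d) (U : Set (Euc d)) : Prop :=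
  Set.InjOn f U ∧ closure (f '' U) ⊆ U ∧ (∀ x ∈ U, DifferentiableAt ℝ f x) ∧
    (∀ x ∈ U, ∃ c : ℝ, 0 < c ∧ ∃ O ∈ Matrix.orthogonalGroup (Fin d) ℝ,
      (fderiv ℝ f x : Euc d →ₗ[ℝ] Euc d) = c • O.mulVecLin) ∧
    (∃ C α : ℝ≥0, 0 < α ∧ HolderOnWith C α (fun x => fderiv ℝ f x) U)

/-- A conformal iterated function system on `(-1,1)^d`: at least two contractive
conformal maps. -/
structure ConformalIFS (d : ℕ) where
  n : ℕ
  two_le : 2 ≤ n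
  funs : Fin n → Euc d → Euc d
  conf : ∀ i, IsConformalMapOn d (funs i) (Metric.ball 0 1)
  contr : ∀ i, ∃ r : ℝ, r < 1 ∧ ∀ x ∈ Metric.ball (0 : Euc d) 1, confScale (funs i) x ≤ r

/-- `μ` is a self-conformal measure associated to `Φ`: a Borel probability measure on
`(-1,1)^d` with `μ = Σ_i p_i • (f_i)_* μ` for a strictly positive probability vector `p`. -/
def IsSelfConformal {d : ℕ} (Φ : ConformalIFS d) (μ : Measure (Euc d)) : Prop :=
  IsProbabilityMeasure μ ∧ μ (Metric.ball (0 : Euc d) 1)ᶜ = 0 ∧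
    ∃ p : Fin Φ.n → ℝ≥0∞, (∀ i, 0 < p i) ∧ (∑ i, p i) = 1 ∧
      μ = ∑ i, p i • μ.map (Φ.funs i)

/-- `K` is the attractor of `Φ`: the unique nonempty compact set with `K = ⋃ i, f_i(K)`. -/
def IsAttractor {d : ℕ} (Φ : ConformalIFS d) (K : Set (Euc d)) : Prop :=
  K.Nonempty ∧ IsCompact K ∧ K ⊆ Metric.ball 0 1 ∧ K = ⋃ i, Φ.funs i '' K

/-- `Φ` is totally non-linear: for every conformal map `g` of `(-1,1)^d` there is `f ∈ Φ`
such that `g ∘ f ∘ g⁻¹` is not (the restriction of) an affine map. -/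
def TotallyNonLinear {d : ℕ} (Φ : ConformalIFS d) : Prop :=
  ∀ g : Euc d → Euc d, IsConformalMapOn d g (Metric.ball 0 1) →
    ∃ i, ¬ ∃ A : Euc d →ᵃ[ℝ] Euc d, ∀ x ∈ Metric.ball (0 : Euc d) 1, g (Φ.funs i x) = A (g x)

/-- All maps of `Φ` are orientation-preserving. -/
def OrientationPreserving {d : ℕ} (Φ : ConformalIFS d) : Prop :=
  ∀ i, ∀ x ∈ Metric.ball (0 : Euc d) 1,
    0 < LinearMap.det (fderiv ℝ (Φ.funs i) x : Euc d →ₗ[ℝ] Euc d)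

instance {X : Type*} [MeasurableSpace X] : MeasurableSpace (ProbabilityMeasure X) :=
  inferInstanceAs (MeasurableSpace {μ : Measure X // IsProbabilityMeasure μ})

section Scenery

variable {X : Type*} [NormedAddCommGroup X] [NormedSpace ℝ X] [MeasurableSpace X] [BorelSpace X]

/-- The rescaled measure `μ_{x,t}`, with `μ_{x,t}(A) = μ(2^{-t}A + x)/μ(B(x,2^{-t}))`,
viewed as a measure on `B(0,1)`. -/
def resc (μ : Measure X) (x : X) (t : ℝ) : Measure X :=
  (μ (closedBall x ((2 : ℝ) ^ (-t))))⁻¹ •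
    ((μ.map (fun y => (2 : ℝ) ^ t • (y - x))).restrict (closedBall (0 : X) 1))

open Classical in
/-- `μ_{x,t}` as a probability measure (junk value if the normalization fails). -/
def rescPM (μ : Measure X) (x : X) (t : ℝ) : ProbabilityMeasure X :=
  if h : IsProbabilityMeasure (resc μ x t) then ⟨resc μ x t, h⟩
  else ⟨Measure.dirac 0, Measure.dirac.isProbabilityMeasure⟩

/-- `P` is a tangent distribution of `μ` at `x`: a weak-* accumulation point, as `T → ∞`,
of the sceneries `⟨μ⟩_{x,T} = (1/T)∫_0^T δ_{μ_{x,t}} dt`. -/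
def IsTangentDistribution (μ : Measure X) (x : X) (P : Measure (ProbabilityMeasure X)) : Prop :=
  IsProbabilityMeasure P ∧
    ∃ T : ℕ → ℝ, (∀ n, 1 ≤ T n) ∧ Tendsto T atTop atTop ∧
      ∀ F : BoundedContinuousFunction (ProbabilityMeasure X) ℝ,
        Tendsto (fun n => (T n)⁻¹ * ∫ t in Set.Ioc (0 : ℝ) (T n), F (rescPM μ x t))
          atTop (𝓝 (∫ η, F η ∂P))

/-- `μ` is tangent-regular: at `μ`-a.e. `x`, every tangent distribution `P` of `μ` at `x`
satisfies `dim η = dim μ` for `P`-a.e. `η`. -/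
def TangentRegular (μ : Measure X) : Prop :=
  ∀ᵐ x ∂μ, ∀ P : Measure (ProbabilityMeasure X), IsTangentDistribution μ x P →
    ∀ᵐ η : ProbabilityMeasure X ∂P, mdim η.toMeasure = mdim μ

/-- The magnification semiflow `S_t : μ ↦ μ_{0,t}` on probability measures. -/
def stMap (t : ℝ) (η : ProbabilityMeasure X) : ProbabilityMeasure X :=
  rescPM η.toMeasure 0 t

/-- `P` is a fractal distribution: an `S_t`-invariant, quasi-Palm probability
distribution on measures. -/
def IsFractalDistribution (P : Measure (ProbabilityMeasure X)) : Prop :=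
  IsProbabilityMeasure P ∧
    (∀ t : ℝ, 0 ≤ t → P.map (stMap t) = P) ∧
    ∀ A : Set (ProbabilityMeasure X), MeasurableSet A → P Aᶜ = 0 →
      ∀ᵐ η : ProbabilityMeasure X ∂P, ∀ᵐ x ∂η.toMeasure, ∀ t : ℝ, 0 ≤ t →
        closedBall x ((2 : ℝ) ^ (-t)) ⊆ closedBall (0 : X) 1 → rescPM η.toMeasure x t ∈ A

/-- `P` is an ergodic fractal distribution. -/
def IsErgodicFD (P : Measure (ProbabilityMeasure X)) : Prop :=
  IsFractalDistribution P ∧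
    ∀ A : Set (ProbabilityMeasure X), MeasurableSet A →
      (∀ t : ℝ, 0 ≤ t → stMap t ⁻¹' A = A) → P A = 0 ∨ P Aᶜ = 0

/-- `μ` is exact-dimensional: the local dimension exists `μ`-a.e. and equals `dim μ`. -/
def ExactDimensional (μ : Measure X) : Prop :=
  ∀ᵐ x ∂μ, Tendsto (fun r : ℝ => Real.log (μ (closedBall x r)).toReal / Real.log r)
    (𝓝[>] (0 : ℝ)) (𝓝 (mdim μ).toReal)

end Scenery

/-- `M` is a `C^k` hypersurface: locally the zero set of a `C^k` real-valued function
with non-vanishing derivative. -/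
def IsCkHypersurface {X : Type*} [NormedAddCommGroup X] [NormedSpace ℝ X]
    (k : ℕ∞) (M : Set X) : Prop :=
  ∀ x ∈ M, ∃ (U : Set X) (F : X → ℝ), IsOpen U ∧ x ∈ U ∧ ContDiffOn ℝ k F U ∧
    (∀ y ∈ U, fderiv ℝ F y ≠ 0) ∧ M ∩ U = {y ∈ U | F y = 0}

/-- An analytic curve: the image of a non-constant real-analytic map defined on an
open interval. -/
def IsAnalyticCurve {d : ℕ} (C : Set (Euc d)) : Prop :=
  ∃ (I : Set ℝ) (γ : ℝ → Euc d), IsOpen I ∧ I.OrdConnected ∧ I.Nonempty ∧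
    AnalyticOnNhd ℝ γ I ∧ (∃ s ∈ I, ∃ t ∈ I, γ s ≠ γ t) ∧ C = γ '' I

/-- An affine hyperplane in `ℝ^d`. -/
def IsAffineHyperplane {d : ℕ} (H : Set (Euc d)) : Prop :=
  ∃ (v : Euc d) (c : ℝ), v ≠ 0 ∧ H = {x : Euc d | (∑ i, v i * x i) = c}

/-- A (d-1)-dimensional (Euclidean) sphere in `ℝ^d`. -/
def IsEucSphere {d : ℕ} (S : Set (Euc d)) : Prop :=
  ∃ (z : Euc d) (r : ℝ), 0 < r ∧ S = {x : Euc d | (∑ i, (x i - z i) ^ 2) = r ^ 2}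

/-- `ν` is `s`-Ahlfors-regular. -/
def IsAhlforsRegular {d : ℕ} (ν : Measure (Euc d)) (s : ℝ) : Prop :=
  ν ≠ 0 ∧ ∃ C : ℝ≥0∞, 1 ≤ C ∧ C ≠ ∞ ∧ ∀ x ∈ msupport ν, ∀ r : ℝ, 0 < r →
    r ≤ Metric.diam (msupport ν) →
      ENNReal.ofReal (r ^ s) / C ≤ ν (closedBall x r) ∧
        ν (closedBall x r) ≤ C * ENNReal.ofReal (r ^ s)

/-- `xf` assigns to each map of `Φ` its fixed point in `(-1,1)^d`. -/
def IsFixedPoints {d : ℕ} (Φ : ConformalIFS d) (xf : Fin Φ.n → Euc d) : Prop :=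
  ∀ i, xf i ∈ Metric.ball (0 : Euc d) 1 ∧ Φ.funs i (xf i) = xf i

/-- `λ(f_i)`: the contraction ratio of `f_i` at its fixed point. -/
def fixLam {d : ℕ} (Φ : ConformalIFS d) (xf : Fin Φ.n → Euc d) (i : Fin Φ.n) : ℝ :=
  confScale (Φ.funs i) (xf i)

/-- `O(f_i)`: the rotation part of `Df_i` at the fixed point of `f_i`. -/
def fixO {d : ℕ} (Φ : ConformalIFS d) (xf : Fin Φ.n → Euc d) (i : Fin Φ.n) :
    Matrix (Fin d) (Fin d) ℝ :=
  (fixLam Φ xf i)⁻¹ • Dmat (Φ.funs i) (xf i)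

/-- `O(Φ) = {O(f), O(f)⁻¹ : f ∈ Φ}`. -/
def OsetOf {d : ℕ} (Φ : ConformalIFS d) (xf : Fin Φ.n → Euc d) :
    Set (Matrix (Fin d) (Fin d) ℝ) :=
  {M | ∃ i, M = fixO Φ xf i ∨ M = (fixO Φ xf i)⁻¹}

/-- `S_t (L, I)`: push a measure on `ℝ^d × ℝ^d` forward by `(u,v) ↦ (Lu, v)` and
magnify by `S_t`. -/
def StLI {d : ℕ} (L : Matrix (Fin d) (Fin d) ℝ) (t : ℝ)
    (η : ProbabilityMeasure (Euc d × Euc d)) : ProbabilityMeasure (Euc d × Euc d) :=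
  rescPM (η.toMeasure.map (fun p => (L.mulVec p.1, p.2))) 0 t

/-- The matrix of `D(h ∘ f ∘ h⁻¹)` at `h z`, computed by the chain rule. -/
def DfhMat {d : ℕ} (h f : Euc d → Euc d) (z : Euc d) : Matrix (Fin d) (Fin d) ℝ :=
  Dmat h (f z) * Dmat f z * (Dmat h z)⁻¹

/-- The space of conformal maps of `(-1,1)^d`, with the topology of uniform convergence. -/
abbrev ConfMaps (d : ℕ) :=
  {g : UniformFun (Euc d) (Euc d) //
    IsConformalMapOn d (UniformFun.toFun g) (Metric.ball 0 1)}

noncomputable instance (d : ℕ) : MeasurableSpace (ConfMaps d) := borel (ConfMaps d)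

end

set_option linter.unusedSectionVars false
set_option linter.style.longLine false

/-! ### The space of probability measures -/

section ProbSpace

variable {E : Type*} [PseudoMetricSpace E] [SecondCountableTopology E] [MeasurableSpace E]
  [BorelSpace E]

/-- The weak topology on probability measures on a second countable metrizable space is induced
by countably many test functions: outer approximations of complements of finite unions of basic
open sets. -/
lemma exists_isInducing_testAgainstNN : ∃ f : (Finset ℕ × ℕ) → BoundedContinuousFunction E ℝ≥0,
    IsInducing (fun (η : ProbabilityMeasure E) (k : Finset ℕ × ℕ) =>
      η.toFiniteMeasure.testAgainstNN (f k)) := by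
  classical
  obtain ⟨e, he⟩ : ∃ e : ℕ → Set E, insert ∅ (TopologicalSpace.countableBasis E) = range e :=
    ((TopologicalSpace.countable_countableBasis E).insert ∅).exists_eq_range ⟨∅, by simp⟩
  have heo : ∀ k, IsOpen (e k) := by
    intro k
    have : e k ∈ insert ∅ (TopologicalSpace.countableBasis E) := he ▸ mem_range_self k
    rcases this with h | h
    · rw [h]; exact isOpen_empty
    · exact TopologicalSpace.isOpen_of_mem_countableBasis h
  have hcl : ∀ s : Finset ℕ, IsClosed (⋃ k ∈ s, e k)ᶜ := fun s =>
    (isOpen_biUnion fun k _ => heo k).isClosed_compl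
  refine ⟨fun k => (hcl k.1).apprSeq k.2, ?_⟩
  set f : (Finset ℕ × ℕ) → BoundedContinuousFunction E ℝ≥0 := fun k => (hcl k.1).apprSeq k.2 with hf
  set J := fun (η : ProbabilityMeasure E) (k : Finset ℕ × ℕ) =>
      η.toFiniteMeasure.testAgainstNN (f k) with hJ
  have hJc : Continuous J := continuous_pi fun k =>
    ProbabilityMeasure.continuous_testAgainstNN_eval (f k)
  rw [isInducing_iff_nhds]
  intro η
  apply le_antisymm
  · exact hJc.continuousAt.le_comap
  change Tendsto id (comap J (𝓝 (J η))) (𝓝 η)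
  refine tendsto_of_forall_isClosed_limsup_le' fun F hF => ?_
  refine le_of_forall_gt_imp_ge_of_dense fun a ha => ?_
  -- approximate `F` from outside by the complement of a finite union of basic sets
  let s : ℕ → Finset ℕ := fun n => (Finset.range n).filter (fun k => e k ⊆ Fᶜ)
  have hFU : F = ⋂ n, (⋃ k ∈ s n, e k)ᶜ := by
    rw [← compl_iUnion, ← compl_compl F]
    congr 1
    ext x
    constructor
    · intro hx
      obtain ⟨u, hu, hxu, huF⟩ := (TopologicalSpace.isBasis_countableBasis E).exists_subset_of_mem_open
        hx hF.isOpen_compl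
      obtain ⟨k, rfl⟩ : u ∈ range e := he ▸ mem_insert_of_mem _ hu
      simp only [mem_iUnion]
      exact ⟨k + 1, k, by simp [s, huF], hxu⟩
    · simp only [mem_iUnion]
      rintro ⟨n, k, hk, hx⟩
      exact (Finset.mem_filter.1 hk).2 hx
  have hanti : Antitone fun n => (⋃ k ∈ s n, e k)ᶜ := by
    intro m n hmn
    apply compl_subset_compl.2
    apply biUnion_subset_biUnion_left
    intro k hk
    simp only [s, Finset.coe_filter, Finset.mem_range, mem_ofPred_eq] at hk ⊢
    exact ⟨hk.1.trans_le hmn, hk.2⟩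
  have h1 : Tendsto (fun n => (η : Measure E) (⋃ k ∈ s n, e k)ᶜ) atTop (𝓝 ((η : Measure E) F)) := by
    conv => rhs; rw [hFU]
    exact tendsto_measure_iInter_atTop (fun n => (hcl _).measurableSet.nullMeasurableSet) hanti
      ⟨0, measure_ne_top _ _⟩
  obtain ⟨n, hn⟩ := (h1.eventually_lt_const ha).exists
  have h2 := HasOuterApproxClosed.tendsto_lintegral_apprSeq (hcl (s n)) (η : Measure E)
  obtain ⟨m, hm⟩ := (h2.eventually_lt_const hn).exists
  have h3 : ∀ᶠ ξ in comap J (𝓝 (J η)), ((J ξ (s n, m) : ℝ≥0) : ℝ≥0∞) < a := by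
    have : ∀ᶠ y in 𝓝 (J η), ((y (s n, m) : ℝ≥0) : ℝ≥0∞) < a := by
      have hc : Continuous fun y : (Finset ℕ × ℕ) → ℝ≥0 => ((y (s n, m) : ℝ≥0) : ℝ≥0∞) := by fun_prop
      apply hc.continuousAt.eventually_lt_const
      simp only [hJ, FiniteMeasure.testAgainstNN_coe_eq]
      exact hm
    exact this.comap J
  apply limsup_le_of_le
  · isBoundedDefault
  filter_upwards [h3] with ξ hξ
  simp only [hJ, FiniteMeasure.testAgainstNN_coe_eq] at hξ
  calc (ξ : Measure E) F ≤ (ξ : Measure E) (⋃ k ∈ s n, e k)ᶜ := by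
        apply measure_mono
        conv => lhs; rw [hFU]
        exact iInter_subset _ n
    _ ≤ ∫⁻ x, (f (s n, m) x : ℝ≥0∞) ∂(ξ : Measure E) :=
        HasOuterApproxClosed.measure_le_lintegral (hcl (s n)) _ m
    _ ≤ a := hξ.le

instance instSecondCountablePM : SecondCountableTopology (ProbabilityMeasure E) := by
  obtain ⟨f, hf⟩ := exists_isInducing_testAgainstNN (E := E)
  exact hf.secondCountableTopology

lemma measurable_PM_iff {Ω : Type*} {mΩ : MeasurableSpace Ω} {f : Ω → ProbabilityMeasure E} :
    Measurable f ↔ Measurable fun ω => (f ω : Measure E) :=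
  ⟨fun h => measurable_subtype_coe.comp h, fun h => h.subtype_mk⟩

lemma measurable_PM_toMeasure : Measurable fun η : ProbabilityMeasure E => (η : Measure E) :=
  measurable_subtype_coe

lemma measurable_PM_apply {A : Set E} (hA : MeasurableSet A) :
    Measurable fun η : ProbabilityMeasure E => (η : Measure E) A :=
  (Measure.measurable_coe hA).comp measurable_PM_toMeasure

/-- The evaluation σ-algebra on probability measures is the Borel σ-algebra of the weak
topology. -/
instance instBorelPM : BorelSpace (ProbabilityMeasure E) := by
  refine ⟨le_antisymm ?_ ?_⟩
  · -- evaluations at open sets are lower semicontinuous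
    have h : @Measurable _ _ (borel (ProbabilityMeasure E)) _
        (fun η : ProbabilityMeasure E => (η : Measure E)) := by
      let : MeasurableSpace (ProbabilityMeasure E) := borel _
      have : BorelSpace (ProbabilityMeasure E) := ⟨rfl⟩
      refine Measurable.measure_of_isPiSystem_of_isProbabilityMeasure
        (S := {s : Set E | IsOpen s}) (BorelSpace.measurable_eq) isPiSystem_isOpen ?_
      intro s hs
      apply LowerSemicontinuous.measurable
      rw [lowerSemicontinuous_iff_le_liminf]
      intro η
      exact ProbabilityMeasure.le_liminf_measure_open_of_tendsto tendsto_id hs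
    intro s hs
    obtain ⟨t, ht, rfl⟩ := hs
    exact h ht
  · obtain ⟨f, hf⟩ := exists_isInducing_testAgainstNN (E := E)
    rw [hf.eq_induced, borel_comap, ← BorelSpace.measurable_eq, ← measurable_iff_comap_le]
    apply measurable_pi_lambda
    intro k
    have : Measurable fun η : ProbabilityMeasure E => ∫⁻ x, f k x ∂(η : Measure E) :=
      (Measure.measurable_lintegral
        (measurable_coe_nnreal_ennreal.comp (f k).continuous.measurable)).comp
        measurable_PM_toMeasure
    exact this.ennreal_toNNReal

end ProbSpace

/-! ### The Lévy–Prokhorov metric -/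

section LPMetric

variable {E : Type*} [PseudoMetricSpace E] [SecondCountableTopology E] [MeasurableSpace E]
  [BorelSpace E]

/-- The Lévy–Prokhorov metric on probability measures, with the weak topology. -/
noncomputable instance instLPMetric : PseudoMetricSpace (ProbabilityMeasure E) :=
  (PseudoMetricSpace.induced (fun η : ProbabilityMeasure E => LevyProkhorov.ofMeasure η)
    inferInstance).replaceTopology
    (LevyProkhorov.probabilityMeasureHomeomorph (Ω := E)).isInducing.eq_induced

lemma dist_PM_def (a b : ProbabilityMeasure E) :
    dist a b = levyProkhorovDist (a : Measure E) (b : Measure E) := rfl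

/-- A one-sided criterion for closeness of two probability measures. -/
lemma dist_PM_le {a b : ProbabilityMeasure E} {δ κ ρ : ℝ} (hδ : δ ≤ ρ) (hκ : 2 * κ ≤ ρ)
    (hρ : 0 ≤ ρ) (hκ0 : 0 ≤ κ)
    (h : ∀ B, MeasurableSet B → (a : Measure E).real B * (1 - κ) ≤
      (b : Measure E).real {y | ∃ x ∈ B, dist y x ≤ δ} + κ) : dist a b ≤ ρ := by
  rw [dist_PM_def]
  refine levyProkhorovDist_le_of_forall_le _ _ hρ fun ε B hε hB => ?_
  have h1 := h B hB
  have h2 : (a : Measure E).real B ≤ 1 := measureReal_le_one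
  have h0 : 0 ≤ (a : Measure E).real B := measureReal_nonneg
  have h3 : (b : Measure E).real {y | ∃ x ∈ B, dist y x ≤ δ} ≤ (b : Measure E).real (thickening ε B) := by
    refine measureReal_mono ?_ (measure_ne_top _ _)
    rintro y ⟨x, hx, hyx⟩
    exact mem_thickening_iff.2 ⟨x, hx, by linarith⟩
  have h4 : (a : Measure E).real B ≤ (b : Measure E).real (thickening ε B) + ε := by nlinarith
  rw [← ofReal_measureReal (μ := (a : Measure E)), ← ofReal_measureReal (μ := (b : Measure E)),
    ← ENNReal.ofReal_add measureReal_nonneg (by linarith)]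
  exact ENNReal.ofReal_le_ofReal h4

end LPMetric

/-! ### Frequencies of times and equidistribution -/

/-- Along the filter `l` of time horizons `n`, the set `S` of times occupies at most the
proportion `c` of `[0, n]`. Outer measure is used, so that `S` may be arbitrary. -/
def UD (l : Filter ℕ) (S : Set ℝ) (c : ℝ) : Prop :=
  ∀ᶠ n : ℕ in l, volume (S ∩ Icc (0 : ℝ) n) ≤ ENNReal.ofReal (c * n)

lemma UD.mono {l : Filter ℕ} {S S' : Set ℝ} {c c' : ℝ} (h : UD l S c) (hS : S' ⊆ S)
    (hc : c ≤ c') : UD l S' c' := by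
  filter_upwards [h] with n hn
  refine (measure_mono (inter_subset_inter_left _ hS)).trans (hn.trans ?_)
  apply ENNReal.ofReal_le_ofReal
  gcongr

lemma UD.union {l : Filter ℕ} {S S' : Set ℝ} {c c' : ℝ} (h : UD l S c) (h' : UD l S' c')
    (hc : 0 ≤ c) (hc' : 0 ≤ c') : UD l (S ∪ S') (c + c') := by
  filter_upwards [h, h'] with n hn hn'
  rw [union_inter_distrib_right, add_mul, ENNReal.ofReal_add (by positivity) (by positivity)]
  exact (measure_union_le _ _).trans (add_le_add hn hn')

lemma UD.of_le {l l' : Filter ℕ} {S : Set ℝ} {c : ℝ} (h : UD l S c) (hl : l' ≤ l) : UD l' S c :=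
  h.filter_mono hl

lemma UD.shift {l : Filter ℕ} (hl : l ≤ atTop) {S : Set ℝ} {c c' : ℝ} (h : UD l S c)
    (hc0 : 0 ≤ c) (hc : c < c') (τ : ℝ) : UD l {t | t + τ ∈ S} c' := by
  have h1 : ∀ᶠ n : ℕ in l, |τ| ≤ (c' - c) * n := by
    apply hl
    have : Tendsto (fun n : ℕ => (c' - c) * (n : ℝ)) atTop atTop :=
      tendsto_natCast_atTop_atTop.const_mul_atTop (by linarith)
    exact this.eventually_ge_atTop _
  filter_upwards [h, h1] with n hn hn1
  have hsub : {t | t + τ ∈ S} ∩ Icc (0 : ℝ) n ⊆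
      (fun t => t + τ) ⁻¹' ((S ∩ Icc (0 : ℝ) n) ∪ (Icc (-|τ|) 0 ∩ Icc τ 0) ∪ (Icc (n : ℝ) (n + τ))) := by
    rintro t ⟨ht, ht0, htn⟩
    simp only [mem_preimage, mem_union, mem_inter_iff, mem_Icc]
    by_cases h1 : 0 ≤ t + τ
    · by_cases h2 : t + τ ≤ n
      · left; left; exact ⟨ht, h1, h2⟩
      · right; constructor <;> linarith
    · left; right
      push Not at h1
      have := neg_abs_le τ
      refine ⟨⟨by linarith, h1.le⟩, by linarith, h1.le⟩
  refine (measure_mono hsub).trans ?_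
  rw [measure_preimage_add_right]
  have h3 : volume (Icc (-|τ|) 0 ∩ Icc τ 0) + volume (Icc (n : ℝ) (n + τ)) ≤ ENNReal.ofReal |τ| := by
    rcases le_total 0 τ with h | h
    · have : volume (Icc (-|τ|) 0 ∩ Icc τ 0) = 0 := by
        refine le_antisymm ((measure_mono inter_subset_right).trans ?_) bot_le
        rw [Real.volume_Icc]; simp [h]
      rw [this, Real.volume_Icc, zero_add]
      apply ENNReal.ofReal_le_ofReal
      have := le_abs_self τ; linarith
    · have : volume (Icc (n : ℝ) (n + τ)) = 0 := by
        rw [Real.volume_Icc]; simp [h]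
      rw [this, add_zero]
      refine (measure_mono inter_subset_left).trans ?_
      rw [Real.volume_Icc]; simp
  calc volume ((S ∩ Icc (0 : ℝ) n) ∪ (Icc (-|τ|) 0 ∩ Icc τ 0) ∪ (Icc (n : ℝ) (n + τ)))
      ≤ volume (S ∩ Icc (0 : ℝ) n) + volume (Icc (-|τ|) 0 ∩ Icc τ 0) + volume (Icc (n : ℝ) (n + τ)) :=
        (measure_union_le _ _).trans (add_le_add (measure_union_le _ _) le_rfl)
    _ ≤ ENNReal.ofReal (c * n) + ENNReal.ofReal |τ| := by
        rw [add_assoc]; exact add_le_add hn h3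
    _ = ENNReal.ofReal (c * n + |τ|) := (ENNReal.ofReal_add (by positivity) (by positivity)).symm
    _ ≤ ENNReal.ofReal (c' * n) := by
        apply ENNReal.ofReal_le_ofReal; linarith

section Equi

variable {Y : Type*} [PseudoMetricSpace Y] [MeasurableSpace Y] [BorelSpace Y]

/-- The path `B` equidistributes for `P` along `l`: every open set is visited with at least the
frequency predicted by `P`. -/
def Equi (l : Filter ℕ) (B : ℝ → Y) (P : Measure Y) : Prop :=
  ∀ U : Set Y, IsOpen U → ∀ c : ℝ, P.real Uᶜ < c → UD l {t | B t ∉ U} c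

/-- Paths that stay close to each other most of the time equidistribute for the same measure. -/
lemma Equi.congr {l : Filter ℕ} {B A : ℝ → Y} {P : Measure Y} [IsFiniteMeasure P]
    (hB : Equi l B P) (h : ∀ ε > 0, ∀ c > 0, UD l {t | ε < dist (B t) (A t)} c) : Equi l A P := by
  intro U hU c hc
  have h1 : Tendsto (fun δ => P (cthickening δ Uᶜ)) (𝓝 0) (𝓝 (P Uᶜ)) :=
    tendsto_measure_cthickening_of_isClosed ⟨1, one_pos, measure_ne_top _ _⟩ hU.isClosed_compl
  have h2 : Tendsto (fun δ => P.real (cthickening δ Uᶜ)) (𝓝 0) (𝓝 (P.real Uᶜ)) :=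
    (ENNReal.tendsto_toReal (measure_ne_top _ _)).comp h1
  obtain ⟨δ, hδ, hδ0⟩ := (((h2.eventually_lt_const hc).filter_mono
    (nhdsWithin_le_nhds (s := Ioi 0))).and self_mem_nhdsWithin).exists
  have hδ0 : 0 < δ := hδ0
  obtain ⟨c1, hc1, hc2⟩ := exists_between hδ
  have hc10 : 0 ≤ c1 := measureReal_nonneg.trans hc1.le
  have h3 := hB (cthickening δ Uᶜ)ᶜ isClosed_cthickening.isOpen_compl c1 (by simpa using hc1)
  have h4 := h3.union (h δ hδ0 (c - c1) (by linarith)) hc10 (by linarith)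
  refine h4.mono ?_ (by linarith)
  intro t ht
  by_contra hcon
  simp only [mem_union, mem_ofPred_eq, not_or, not_lt, mem_compl_iff, not_not] at hcon
  exact hcon.1 (mem_cthickening_of_dist_le _ (A t) _ _ ht hcon.2)

lemma Equi.shift {l : Filter ℕ} (hl : l ≤ atTop) {B : ℝ → Y} {P : Measure Y} (hB : Equi l B P)
    (τ : ℝ) : Equi l (fun t => B (t + τ)) P := by
  intro U hU c hc
  obtain ⟨c1, hc1, hc2⟩ := exists_between hc
  exact (hB U hU c1 hc1).shift hl (measureReal_nonneg.trans hc1.le) hc2 τ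

lemma Equi.of_le {l l' : Filter ℕ} {B : ℝ → Y} {P : Measure Y} (hB : Equi l B P) (h : l' ≤ l) :
    Equi l' B P := fun U hU c hc => (hB U hU c hc).of_le h

/-- If both a path and its image under an almost everywhere continuous map equidistribute for
`P`, then the map preserves `P`. -/
lemma Equi.map_eq {l : Filter ℕ} [l.NeBot] (hl : l ≤ atTop) {A : ℝ → Y} {P : Measure Y}
    [IsProbabilityMeasure P] {Ψ : Y → Y} (hΨ : Measurable Ψ) (hc : ∀ᵐ y ∂P, ContinuousAt Ψ y)
    (h1 : Equi l A P) (h2 : Equi l (fun t => Ψ (A t)) P) : P.map Ψ = P := by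
  have key : ∀ U, IsOpen U → P.real (Ψ ⁻¹' U) ≤ P.real (closure U) := by
    intro U hU
    by_contra! hlt
    set V := interior (Ψ ⁻¹' U)
    have hV : P.real (Ψ ⁻¹' U) ≤ P.real V := by
      refine ENNReal.toReal_mono (measure_ne_top _ _) (measure_mono_ae ?_)
      filter_upwards [hc] with y hy hyU
      exact mem_interior_iff_mem_nhds.2 (hy (hU.mem_nhds hyU))
    have hVc : P.real Vᶜ = 1 - P.real V := probReal_compl_eq_one_sub isOpen_interior.measurableSet
    obtain ⟨ε, hε0, hε⟩ : ∃ ε > 0, P.real (closure U) + 3 * ε < P.real V :=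
      ⟨(P.real V - P.real (closure U)) / 4, by linarith, by linarith⟩
    have a1 := h1 V isOpen_interior (1 - P.real V + ε) (by linarith)
    have a2 := h2 (closure U)ᶜ isClosed_closure.isOpen_compl (P.real (closure U) + ε)
      (by rw [compl_compl]; linarith)
    have hV1 : P.real V ≤ 1 := measureReal_le_one
    have a3 := a1.union a2 (by linarith) (by positivity)
    have a4 : UD l univ (1 - ε) := by
      refine a3.mono ?_ (by linarith)
      intro t _
      by_cases h : A t ∈ V
      · right
        simp only [mem_ofPred_eq, mem_compl_iff, not_not]
        have h' : A t ∈ Ψ ⁻¹' U := interior_subset h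
        exact subset_closure h'
      · left; exact h
    obtain ⟨n, hn, hn1⟩ := (a4.and (hl (eventually_ge_atTop 1))).exists
    rw [univ_inter, Real.volume_Icc, sub_zero] at hn
    have hn1' : (1 : ℝ) ≤ n := by exact_mod_cast hn1
    have hn2 : (n : ℝ) ≤ (1 - ε) * n := by
      rw [← ENNReal.toReal_ofReal (show (0 : ℝ) ≤ n by positivity)]
      by_cases h : 0 ≤ (1 - ε) * (n : ℝ)
      · have := ENNReal.toReal_mono ENNReal.ofReal_ne_top hn
        rw [ENNReal.toReal_ofReal h] at this
        simpa using this
      · push Not at h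
        rw [ENNReal.ofReal_of_nonpos h.le] at hn
        simp only [nonpos_iff_eq_zero, ENNReal.ofReal_eq_zero] at hn
        linarith
    nlinarith
  have hPmap : IsProbabilityMeasure (P.map Ψ) := Measure.isProbabilityMeasure_map hΨ.aemeasurable
  have hF : ∀ F, IsClosed F → P.map Ψ F ≤ P F := by
    intro F hF
    have t1 : Tendsto (fun δ => P (cthickening δ F)) (𝓝[>] 0) (𝓝 (P F)) :=
      (tendsto_measure_cthickening_of_isClosed ⟨1, one_pos, measure_ne_top _ _⟩ hF).mono_left
        nhdsWithin_le_nhds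
    refine ge_of_tendsto t1 ?_
    filter_upwards [self_mem_nhdsWithin] with δ hδ
    have hδ : 0 < δ := hδ
    rw [Measure.map_apply hΨ hF.measurableSet]
    refine (measure_mono (preimage_mono (self_subset_thickening hδ F))).trans ?_
    have := key _ (isOpen_thickening (δ := δ) (E := F))
    rw [measureReal_def, measureReal_def, ENNReal.toReal_le_toReal (measure_ne_top _ _)
      (measure_ne_top _ _)] at this
    exact this.trans (measure_mono (closure_thickening_subset_cthickening δ F))
  have hle : ∀ A, MeasurableSet A → P.map Ψ A ≤ P A := by
    intro A hA
    rw [hA.measure_eq_iSup_isClosed_of_ne_top (measure_ne_top _ _)]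
    exact iSup_le fun K => iSup_le fun hKA => iSup_le fun hK => (hF K hK).trans (measure_mono hKA)
  ext A hA
  refine le_antisymm (hle A hA) ?_
  have h3 := hle Aᶜ hA.compl
  rw [prob_compl_eq_one_sub hA, prob_compl_eq_one_sub hA] at h3
  exact (ENNReal.sub_le_sub_iff_left prob_le_one ENNReal.one_ne_top).1 h3

end Equi

/-! ### Rescaled measures -/

section Resc

variable {X : Type*} [NormedAddCommGroup X] [NormedSpace ℝ X] [MeasurableSpace X] [BorelSpace X]

lemma two_rpow_pos (t : ℝ) : (0 : ℝ) < (2 : ℝ) ^ t := Real.rpow_pos_of_pos two_pos t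

lemma two_rpow_mul_neg (t : ℝ) : (2 : ℝ) ^ t * (2 : ℝ) ^ (-t) = 1 := by
  rw [← Real.rpow_add two_pos]; simp

lemma measurable_scal (x : X) (t : ℝ) : Measurable fun y : X => (2 : ℝ) ^ t • (y - x) :=
  (by fun_prop : Continuous fun y : X => (2 : ℝ) ^ t • (y - x)).measurable

lemma norm_scal_le_iff (x y : X) (t r : ℝ) :
    ‖(2 : ℝ) ^ t • (y - x)‖ ≤ r ↔ ‖y - x‖ ≤ (2 : ℝ) ^ (-t) * r := by
  rw [norm_smul, Real.norm_of_nonneg (two_rpow_pos t).le, Real.rpow_neg two_pos.le,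
    le_inv_mul_iff₀ (two_rpow_pos t)]

lemma scal_mem_closedBall_iff (x y : X) (t r : ℝ) :
    (2 : ℝ) ^ t • (y - x) ∈ closedBall (0 : X) r ↔ y ∈ closedBall x ((2 : ℝ) ^ (-t) * r) := by
  rw [mem_closedBall_zero_iff, mem_closedBall, dist_eq_norm, norm_scal_le_iff]

lemma resc_apply (μ : Measure X) (x : X) (t : ℝ) {A : Set X} (hA : MeasurableSet A) :
    resc μ x t A = (μ (closedBall x ((2 : ℝ) ^ (-t))))⁻¹ *
      μ {y | (2 : ℝ) ^ t • (y - x) ∈ A ∧ y ∈ closedBall x ((2 : ℝ) ^ (-t))} := by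
  rw [resc, Measure.smul_apply, Measure.restrict_apply hA,
    Measure.map_apply (measurable_scal x t) (hA.inter isClosed_closedBall.measurableSet),
    smul_eq_mul]
  congr 2
  ext y
  simp only [mem_preimage, mem_inter_iff, scal_mem_closedBall_iff, mul_one, mem_ofPred_eq]

lemma resc_isProb {μ : Measure X} [IsFiniteMeasure μ] {x : X} {t : ℝ}
    (h : μ (closedBall x ((2 : ℝ) ^ (-t))) ≠ 0) : IsProbabilityMeasure (resc μ x t) := by
  constructor
  rw [resc_apply _ _ _ MeasurableSet.univ]
  simp only [mem_univ, true_and, ofPred_mem_eq]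
  exact ENNReal.inv_mul_cancel h (measure_ne_top _ _)

lemma rescPM_coe {μ : Measure X} [IsFiniteMeasure μ] {x : X} {t : ℝ}
    (h : μ (closedBall x ((2 : ℝ) ^ (-t))) ≠ 0) : (rescPM μ x t : Measure X) = resc μ x t := by
  have e : rescPM μ x t = (⟨resc μ x t, resc_isProb h⟩ : ProbabilityMeasure X) :=
    dif_pos (resc_isProb h)
  rw [e]; rfl

lemma rescPM_bad {μ : Measure X} {x : X} {t : ℝ}
    (h : μ (closedBall x ((2 : ℝ) ^ (-t))) = 0) : (rescPM μ x t : Measure X) = Measure.dirac 0 := by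
  suffices h0 : ¬ IsProbabilityMeasure (resc μ x t) by
    have e : rescPM μ x t = (⟨Measure.dirac 0, Measure.dirac.isProbabilityMeasure⟩ :
        ProbabilityMeasure X) := dif_neg h0
    rw [e]; rfl
  intro h'
  have h1 := h'.measure_univ
  rw [resc_apply _ _ _ MeasurableSet.univ] at h1
  simp only [mem_univ, true_and, ofPred_mem_eq, h, mul_zero] at h1
  exact zero_ne_one h1

lemma rescPM_apply {μ : Measure X} [IsFiniteMeasure μ] {x : X} {t : ℝ}
    (h : μ (closedBall x ((2 : ℝ) ^ (-t))) ≠ 0) {A : Set X} (hA : MeasurableSet A) :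
    (rescPM μ x t : Measure X) A = (μ (closedBall x ((2 : ℝ) ^ (-t))))⁻¹ *
      μ {y | (2 : ℝ) ^ t • (y - x) ∈ A ∧ y ∈ closedBall x ((2 : ℝ) ^ (-t))} := by
  rw [rescPM_coe h, resc_apply _ _ _ hA]

lemma rescPM_real {μ : Measure X} [IsFiniteMeasure μ] {x : X} {t : ℝ}
    (h : μ (closedBall x ((2 : ℝ) ^ (-t))) ≠ 0) {A : Set X} (hA : MeasurableSet A) :
    (rescPM μ x t : Measure X).real A = 
      μ.real {y | (2 : ℝ) ^ t • (y - x) ∈ A ∧ y ∈ closedBall x ((2 : ℝ) ^ (-t))} / μ.real (closedBall x ((2 : ℝ) ^ (-t))) := by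
  rw [measureReal_def, rescPM_apply h hA, ENNReal.toReal_mul, ENNReal.toReal_inv]
  simp only [measureReal_def]
  rw [mul_comm]; rfl

lemma closedBall_pow_subset (x : X) {s t : ℝ} (h : s ≤ t) :
    closedBall x ((2 : ℝ) ^ (-t)) ⊆ closedBall x ((2 : ℝ) ^ (-s)) :=
  closedBall_subset_closedBall (Real.rpow_le_rpow_of_exponent_le one_le_two (by linarith))

lemma rescPM_ball {μ : Measure X} [IsFiniteMeasure μ] {x : X} {t s : ℝ} (hs : 0 ≤ s)
    (h : μ (closedBall x ((2 : ℝ) ^ (-t))) ≠ 0) :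
    (rescPM μ x t : Measure X) (closedBall 0 ((2 : ℝ) ^ (-s))) =
      (μ (closedBall x ((2 : ℝ) ^ (-t))))⁻¹ * μ (closedBall x ((2 : ℝ) ^ (-(t + s)))) := by
  rw [rescPM_apply h isClosed_closedBall.measurableSet]
  congr 2
  ext y
  simp only [scal_mem_closedBall_iff, mem_ofPred_eq]
  rw [← Real.rpow_add two_pos, neg_add]
  refine ⟨fun h => h.1, fun h => ⟨h, ?_⟩⟩
  rw [← neg_add] at h
  exact closedBall_pow_subset x (by linarith) h

lemma rescPM_closedBall_one (μ : Measure X) [IsFiniteMeasure μ] (x : X) (t : ℝ) :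
    (rescPM μ x t : Measure X) (closedBall 0 1) = 1 := by
  by_cases h : μ (closedBall x ((2 : ℝ) ^ (-t))) = 0
  · rw [rescPM_bad h]; simp
  · have := rescPM_ball (s := 0) le_rfl h
    simp only [neg_zero, Real.rpow_zero, add_zero] at this
    rw [this, ENNReal.inv_mul_cancel h (measure_ne_top _ _)]

/-- Magnifying twice. With the junk value at balls of measure zero, this holds without any
positivity assumption. -/
lemma rescPM_rescPM (μ : Measure X) [IsFiniteMeasure μ] (x : X) (t : ℝ) {s : ℝ} (hs : 0 ≤ s) :
    rescPM (rescPM μ x t : Measure X) 0 s = rescPM μ x (t + s) := by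
  apply Subtype.ext
  change (rescPM (rescPM μ x t : Measure X) 0 s : Measure X) = (rescPM μ x (t + s) : Measure X)
  by_cases h : μ (closedBall x ((2 : ℝ) ^ (-t))) = 0
  · have h' : μ (closedBall x ((2 : ℝ) ^ (-(t+s)))) = 0 :=
      measure_mono_null (closedBall_pow_subset x (by linarith)) h
    rw [rescPM_bad h', rescPM_bad h]
    have h1 : (Measure.dirac (0 : X)) (closedBall 0 ((2 : ℝ) ^ (-s))) = 1 := by
      rw [Measure.dirac_apply' _ isClosed_closedBall.measurableSet]
      simp [(two_rpow_pos _).le]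
    ext A hA
    rw [rescPM_apply (by simp [h1]) hA, h1, inv_one, one_mul, Measure.dirac_apply' _ hA,
      Measure.dirac_apply']
    · have h0 : (0 : X) ∈ closedBall (0 : X) ((2 : ℝ) ^ (-s)) := by simp [(two_rpow_pos _).le]
      by_cases hA0 : (0 : X) ∈ A
      · rw [indicator_of_mem hA0, indicator_of_mem]
        exact ⟨by simpa using hA0, h0⟩
      · rw [indicator_of_notMem hA0, indicator_of_notMem]
        exact fun h => hA0 (by simpa using h.1)
    · exact (measurable_scal 0 s hA).inter isClosed_closedBall.measurableSet
  by_cases h2 : μ (closedBall x ((2 : ℝ) ^ (-(t+s)))) = 0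
  · rw [rescPM_bad h2, rescPM_bad]
    rw [rescPM_ball hs h, h2, mul_zero]
  have h3 : (rescPM μ x t : Measure X) (closedBall 0 ((2 : ℝ) ^ (-s))) ≠ 0 := by
    rw [rescPM_ball hs h]
    exact mul_ne_zero (ENNReal.inv_ne_zero.2 (measure_ne_top _ _)) h2
  ext A hA
  have e0 : {y | (2 : ℝ) ^ s • (y - 0) ∈ A ∧ y ∈ closedBall 0 ((2 : ℝ) ^ (-s))} =
    ((fun y => (2 : ℝ) ^ s • (y - 0)) ⁻¹' A ∩ closedBall (0 : X) ((2 : ℝ) ^ (-s))) := rfl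
  rw [rescPM_apply h3 hA, rescPM_apply h2 hA, rescPM_ball hs h, e0,
    rescPM_apply h ((measurable_scal 0 s hA).inter isClosed_closedBall.measurableSet)]
  have e : {y | (2 : ℝ) ^ t • (y - x) ∈ ((fun y => (2 : ℝ) ^ s • (y - 0)) ⁻¹' A ∩ closedBall (0 : X) ((2 : ℝ) ^ (-s))) ∧
      y ∈ closedBall x ((2 : ℝ) ^ (-t))} = {y | (2 : ℝ) ^ (t + s) • (y - x) ∈ A ∧ y ∈ closedBall x ((2 : ℝ) ^ (-(t + s)))} := by
    ext y
    simp only [mem_ofPred_eq, mem_inter_iff, mem_preimage, sub_zero, scal_mem_closedBall_iff,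
      smul_smul]
    rw [← Real.rpow_add two_pos, ← Real.rpow_add two_pos, ← neg_add, add_comm s t]
    refine ⟨fun h => ⟨h.1.1, h.1.2⟩, fun h => ⟨⟨h.1, h.2⟩, closedBall_pow_subset x (by linarith) h.2⟩⟩
  rw [e, ENNReal.mul_inv (Or.inl (ENNReal.inv_ne_zero.2 (measure_ne_top _ _)))
    (Or.inl (ENNReal.inv_ne_top.2 h)), inv_inv, mul_comm (μ _) _, mul_assoc, ← mul_assoc (μ _) _ _,
    ENNReal.mul_inv_cancel h (measure_ne_top _ _), one_mul]

lemma stMap_rescPM (μ : Measure X) [IsFiniteMeasure μ] (x : X) (t : ℝ) {s : ℝ} (hs : 0 ≤ s) :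
    stMap s (rescPM μ x t) = rescPM μ x (t + s) := rescPM_rescPM μ x t hs

lemma stMap_stMap (η : ProbabilityMeasure X) (t : ℝ) {s : ℝ} (hs : 0 ≤ s) :
    stMap s (stMap t η) = stMap (t + s) η := rescPM_rescPM _ _ _ hs

section Meas

variable [SecondCountableTopology X]

lemma measurable_eval_family {S : Set ((ℝ × X × ProbabilityMeasure X) × X)} (hS : MeasurableSet S) :
    Measurable fun p : ℝ × X × ProbabilityMeasure X => (p.2.2 : Measure X) (Prod.mk p ⁻¹' S) := by
  let κ : ProbabilityTheory.Kernel (ℝ × X × ProbabilityMeasure X) X :=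
    ⟨fun p => (p.2.2 : Measure X), measurable_PM_toMeasure.comp (measurable_snd.comp measurable_snd)⟩
  have : ProbabilityTheory.IsFiniteKernel κ := ⟨⟨1, ENNReal.one_lt_top, fun p => by
    change (p.2.2 : Measure X) univ ≤ 1
    simp⟩⟩
  exact ProbabilityTheory.Kernel.measurable_kernel_prodMk_left (κ := κ) hS

/-- Rescaling depends measurably on the scale, the centre and the measure. -/
lemma measurable_rescPM :
    Measurable fun p : ℝ × X × ProbabilityMeasure X => rescPM (p.2.2 : Measure X) p.2.1 p.1 := by
  have hb : Measurable fun p : ℝ × X × ProbabilityMeasure X =>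
      (p.2.2 : Measure X) (closedBall p.2.1 ((2 : ℝ) ^ (-p.1))) := by
    refine measurable_eval_family (S := {q | dist q.2 q.1.2.1 ≤ (2 : ℝ) ^ (-q.1.1)}) ?_
    refine measurableSet_le (by fun_prop) ?_
    exact (by fun_prop : Measurable fun q : ((ℝ × X × ProbabilityMeasure X) × X) => (2:ℝ) ^ (-q.1.1))
  rw [measurable_PM_iff]
  refine Measure.measurable_of_measurable_coe _ fun A hA => ?_
  classical
  have e : (fun p : ℝ × X × ProbabilityMeasure X =>
      (rescPM (p.2.2 : Measure X) p.2.1 p.1 : Measure X) A) =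
      {p : ℝ × X × ProbabilityMeasure X | (p.2.2 : Measure X) (closedBall p.2.1 ((2 : ℝ) ^ (-p.1))) = 0}.piecewise
        (fun _ => Measure.dirac (0 : X) A) (fun p => ((p.2.2 : Measure X) (closedBall p.2.1 ((2 : ℝ) ^ (-p.1))))⁻¹ *
          (p.2.2 : Measure X) {y | (2 : ℝ) ^ p.1 • (y - p.2.1) ∈ A ∧ y ∈ closedBall p.2.1 ((2 : ℝ) ^ (-p.1))}) := by
    funext p
    by_cases h : (p.2.2 : Measure X) (closedBall p.2.1 ((2 : ℝ) ^ (-p.1))) = 0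
    · rw [piecewise_eq_of_mem _ _ _ (show p ∈ {p : ℝ × X × ProbabilityMeasure X |
        (p.2.2 : Measure X) (closedBall p.2.1 ((2 : ℝ) ^ (-p.1))) = 0} from h), rescPM_bad h]
    · rw [piecewise_eq_of_notMem _ _ _ (show p ∉ {p : ℝ × X × ProbabilityMeasure X |
        (p.2.2 : Measure X) (closedBall p.2.1 ((2 : ℝ) ^ (-p.1))) = 0} from h), rescPM_apply h hA]
  rw [e]
  refine Measurable.piecewise (hb (measurableSet_singleton 0)) measurable_const ?_
  refine hb.inv.mul ?_
  refine measurable_eval_family (S := {q | (2 : ℝ) ^ q.1.1 • (q.2 - q.1.2.1) ∈ A ∧ dist q.2 q.1.2.1 ≤ (2 : ℝ) ^ (-q.1.1)}) ?_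
  refine MeasurableSet.inter ?_ ?_
  · exact (by fun_prop : Measurable fun q : ((ℝ × X × ProbabilityMeasure X) × X) => (2 : ℝ) ^ q.1.1 • (q.2 - q.1.2.1)) hA
  · refine measurableSet_le (f := fun q : ((ℝ × X × ProbabilityMeasure X) × X) => dist q.2 q.1.2.1) (by fun_prop) ?_
    exact (by fun_prop : Measurable fun q : ((ℝ × X × ProbabilityMeasure X) × X) => (2:ℝ) ^ (-q.1.1))

lemma measurable_stMap_uncurry :
    Measurable fun p : ℝ × ProbabilityMeasure X => stMap p.1 p.2 := by
  have h : Measurable fun p : ℝ × ProbabilityMeasure X => (p.1, (0 : X), p.2) := by fun_prop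
  have h2 := measurable_rescPM.comp h
  exact h2

lemma measurable_stMap (t : ℝ) : Measurable (stMap (X := X) t) := by
  have h : Measurable fun η : ProbabilityMeasure X => (t, η) := by fun_prop
  have h2 := measurable_stMap_uncurry.comp h
  exact h2

lemma measurable_rescPM_left (η : ProbabilityMeasure X) (x : X) :
    Measurable fun t => rescPM (η : Measure X) x t := by
  have h : Measurable fun t : ℝ => (t, x, η) := by fun_prop
  have h2 := measurable_rescPM.comp h
  exact h2

end Meas

end Resc

/-! ### Rescaling product measures -/

section Prod

variable {X : Type*} [NormedAddCommGroup X] [NormedSpace ℝ X] [MeasurableSpace X] [BorelSpace X]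
  [SecondCountableTopology X]

lemma rescPM_prod {θ ν : Measure X} [IsFiniteMeasure θ] [IsFiniteMeasure ν] {a b : X} {t : ℝ}
    (ha : θ (closedBall a ((2 : ℝ) ^ (-t))) ≠ 0) (hb : ν (closedBall b ((2 : ℝ) ^ (-t))) ≠ 0) :
    (rescPM (θ.prod ν) (a, b) t : Measure (X × X)) =
      (rescPM θ a t : Measure X).prod (rescPM ν b t : Measure X) := by
  have e0 : (θ.prod ν) (closedBall (a, b) ((2 : ℝ) ^ (-t))) =
      θ (closedBall a ((2 : ℝ) ^ (-t))) * ν (closedBall b ((2 : ℝ) ^ (-t))) := by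
    rw [← closedBall_prod_same, Measure.prod_prod]
  have h0 : (θ.prod ν) (closedBall (a, b) ((2 : ℝ) ^ (-t))) ≠ 0 := by
    rw [e0]; exact mul_ne_zero ha hb
  symm
  refine Measure.prod_eq fun s u hs hu => ?_
  rw [rescPM_apply h0 (hs.prod hu), rescPM_apply ha hs, rescPM_apply hb hu, e0]
  have e1 : {y : X × X | (2 : ℝ) ^ t • (y - (a, b)) ∈ s ×ˢ u ∧ y ∈ closedBall (a, b) ((2 : ℝ) ^ (-t))} =
      {y | (2 : ℝ) ^ t • (y - a) ∈ s ∧ y ∈ closedBall a ((2 : ℝ) ^ (-t))} ×ˢ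
      {y | (2 : ℝ) ^ t • (y - b) ∈ u ∧ y ∈ closedBall b ((2 : ℝ) ^ (-t))} := by
    rw [← closedBall_prod_same]
    ext ⟨y1, y2⟩
    simp only [mem_ofPred_eq, mem_prod, Prod.smul_fst, Prod.smul_snd, Prod.fst_sub, Prod.snd_sub]
    tauto
  rw [e1, Measure.prod_prod, ENNReal.mul_inv (Or.inl ha) (Or.inr hb)]
  ring

/-- `η` is the product of its two marginals. -/
def IsProdPM (η : ProbabilityMeasure (X × X)) : Prop :=
  (η : Measure (X × X)) = (η : Measure (X × X)).fst.prod (η : Measure (X × X)).snd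

lemma isClosed_isProdPM : IsClosed {η : ProbabilityMeasure (X × X) | IsProdPM η} := by
  have h1 : Continuous fun η : ProbabilityMeasure (X × X) =>
      ((η.map measurable_fst.aemeasurable).prod (η.map measurable_snd.aemeasurable)) :=
    ProbabilityMeasure.continuous_prod.comp
      ((ProbabilityMeasure.continuous_map continuous_fst).prodMk
        (ProbabilityMeasure.continuous_map continuous_snd))
  have h2 := isClosed_eq continuous_id h1
  convert h2 using 1
  ext η
  simp only [mem_ofPred_eq, id]
  exact ⟨fun h => Subtype.ext h, fun h => congrArg Subtype.val h⟩

lemma IsProdPM.rescPM_eq {η : ProbabilityMeasure (X × X)} (h : IsProdPM η) {z : X × X} {t : ℝ}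
    (hz : (η : Measure (X × X)) (closedBall z ((2 : ℝ) ^ (-t))) ≠ 0) :
    (rescPM (η : Measure (X × X)) z t : Measure (X × X)) =
      (rescPM (η : Measure (X × X)).fst z.1 t : Measure X).prod
        (rescPM (η : Measure (X × X)).snd z.2 t : Measure X) := by
  have h' : (η : Measure (X × X)) = (η : Measure (X × X)).fst.prod (η : Measure (X × X)).snd := h
  have hz' := hz
  rw [h', show z = (z.1, z.2) from rfl, ← closedBall_prod_same, Measure.prod_prod] at hz'
  conv_lhs => rw [h', show z = (z.1, z.2) from rfl]
  exact rescPM_prod (left_ne_zero_of_mul hz') (right_ne_zero_of_mul hz')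

lemma IsProdPM.rescPM_fst {η : ProbabilityMeasure (X × X)} (h : IsProdPM η) {z : X × X} {t : ℝ}
    (hz : (η : Measure (X × X)) (closedBall z ((2 : ℝ) ^ (-t))) ≠ 0) :
    (rescPM (η : Measure (X × X)) z t : Measure (X × X)).fst =
      (rescPM (η : Measure (X × X)).fst z.1 t : Measure X) := by
  rw [h.rescPM_eq hz]; simp

lemma IsProdPM.rescPM_snd {η : ProbabilityMeasure (X × X)} (h : IsProdPM η) {z : X × X} {t : ℝ}
    (hz : (η : Measure (X × X)) (closedBall z ((2 : ℝ) ^ (-t))) ≠ 0) :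
    (rescPM (η : Measure (X × X)) z t : Measure (X × X)).snd =
      (rescPM (η : Measure (X × X)).snd z.2 t : Measure X) := by
  rw [h.rescPM_eq hz]; simp

lemma IsProdPM.rescPM_isProd {η : ProbabilityMeasure (X × X)} (h : IsProdPM η) {z : X × X} {t : ℝ}
    (hz : (η : Measure (X × X)) (closedBall z ((2 : ℝ) ^ (-t))) ≠ 0) :
    IsProdPM (rescPM (η : Measure (X × X)) z t) := by
  rw [IsProdPM, h.rescPM_fst hz, h.rescPM_snd hz, h.rescPM_eq hz]

end Prod

section Supp

variable {X : Type*} [NormedAddCommGroup X] [NormedSpace ℝ X] [MeasurableSpace X] [BorelSpace X]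

/-- `x` lies in the support of `μ`: every closed ball around `x` has positive measure. -/
def InSpt (μ : Measure X) (x : X) : Prop := ∀ t : ℝ, μ (closedBall x ((2 : ℝ) ^ (-t))) ≠ 0

lemma inSpt_of_nat {μ : Measure X} {x : X} (h : ∀ n : ℕ, μ (closedBall x ((2 : ℝ) ^ (-(n : ℝ)))) ≠ 0) :
    InSpt μ x := by
  intro t ht
  obtain ⟨n, hn⟩ := exists_nat_ge t
  exact h n (measure_mono_null (closedBall_pow_subset x hn) ht)

lemma inSpt_of_pos {μ : Measure X} {x : X} (h : ∀ r > 0, μ (closedBall x r) ≠ 0) : InSpt μ x :=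
  fun _ => h _ (two_rpow_pos _)

lemma InSpt.pos {μ : Measure X} {x : X} (h : InSpt μ x) {r : ℝ} (hr : 0 < r) :
    μ (closedBall x r) ≠ 0 := by
  have h1 : (2 : ℝ) ^ (-(-Real.logb 2 r)) = r := by
    rw [neg_neg, Real.rpow_logb two_pos (by norm_num) hr]
  rw [← h1]; exact h _

lemma ae_inSpt [SecondCountableTopology X] (μ : Measure X) : ∀ᵐ x ∂μ, InSpt μ x := by
  have h := μ.support_mem_ae
  filter_upwards [h] with x hx
  refine inSpt_of_pos fun r hr h0 => ?_
  have := (Measure.mem_support_iff_forall (μ := μ) (x := x)).1 hx _ (closedBall_mem_nhds x hr)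
  exact this.ne' h0

lemma InSpt.rescPM {μ : Measure X} [IsFiniteMeasure μ] {x : X} (h : InSpt μ x) (t : ℝ) :
    InSpt (rescPM μ x t : Measure X) 0 := by
  refine inSpt_of_nat fun n => ?_
  rw [rescPM_ball (by positivity) (h t)]
  exact mul_ne_zero (ENNReal.inv_ne_zero.2 (measure_ne_top _ _)) (h _)

variable [SecondCountableTopology X]

lemma measurableSet_inSpt : MeasurableSet {η : ProbabilityMeasure X | InSpt (η : Measure X) 0} := by
  have : {η : ProbabilityMeasure X | InSpt (η : Measure X) 0} =
      ⋂ n : ℕ, {η : ProbabilityMeasure X | (η : Measure X) (closedBall 0 ((2 : ℝ) ^ (-(n : ℝ)))) = 0}ᶜ := by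
    ext η
    simp only [mem_ofPred_eq, mem_iInter, mem_compl_iff]
    exact ⟨fun h n => h n, inSpt_of_nat⟩
  rw [this]
  exact MeasurableSet.iInter fun n => (measurable_PM_apply isClosed_closedBall.measurableSet
    (measurableSet_singleton 0)).compl

lemma ae_inSpt_of_invariant {P : Measure (ProbabilityMeasure X)} [IsFiniteMeasure P]
    (hP : ∀ t : ℝ, 0 ≤ t → P.map (stMap t) = P) :
    ∀ᵐ η : ProbabilityMeasure X ∂P, InSpt (η : Measure X) 0 := by
  set Bad : Set (ProbabilityMeasure X) := {η : ProbabilityMeasure X | InSpt (η : Measure X) 0}ᶜ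
  have hBad : MeasurableSet Bad := measurableSet_inSpt.compl
  have key : ∀ n : ℕ, ∀ᵐ η : ProbabilityMeasure X ∂P,
      (η : Measure X) (closedBall 0 ((2 : ℝ) ^ (-(n : ℝ)))) ≠ 0 := by
    intro n
    set Bn : Set (ProbabilityMeasure X) :=
      {η : ProbabilityMeasure X | (η : Measure X) (closedBall 0 ((2 : ℝ) ^ (-(n : ℝ)))) = 0}
    have hBn : MeasurableSet Bn :=
      measurable_PM_apply isClosed_closedBall.measurableSet (measurableSet_singleton 0)
    have h1 : stMap (n : ℝ) ⁻¹' Bad ⊆ Bad \ Bn := by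
      intro η hη
      have hη' : η ∉ Bn := by
        intro hB
        apply hη
        have hB' : (η : Measure X) (closedBall 0 ((2 : ℝ) ^ (-(n : ℝ)))) = 0 := hB
        change InSpt (rescPM (η : Measure X) 0 n : Measure X) 0
        rw [rescPM_bad hB']
        intro t
        rw [Measure.dirac_apply' _ isClosed_closedBall.measurableSet]
        simp [(two_rpow_pos _).le]
      refine ⟨fun h => hη ?_, hη'⟩
      exact InSpt.rescPM h n
    have h2 : P Bad ≤ P (Bad \ Bn) := by
      conv_lhs => rw [← hP n (by positivity), Measure.map_apply (measurable_stMap _) hBad]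
      exact measure_mono h1
    have h3 : Bn ⊆ Bad := fun η hη h => h _ hη
    rw [measure_sdiff h3 hBn.nullMeasurableSet (measure_ne_top _ _)] at h2
    have h4 : P Bn = 0 := by
      by_contra h5
      have h6 : P Bad ≠ 0 := fun h => h5 (measure_mono_null h3 h)
      exact absurd h2 (not_le.2 (ENNReal.sub_lt_self (measure_ne_top _ _) h6 h5))
    rw [ae_iff]
    convert h4 using 2
    ext η; simp [Bn]
  filter_upwards [ae_all_iff.2 key] with η hη using inSpt_of_nat hη

lemma ae_closedBall_of_invariant {P : Measure (ProbabilityMeasure X)}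
    (hP : ∀ t : ℝ, 0 ≤ t → P.map (stMap t) = P) :
    ∀ᵐ η : ProbabilityMeasure X ∂P, (η : Measure X) (closedBall 0 1) = 1 := by
  rw [← hP 0 le_rfl, ae_map_iff (measurable_stMap 0).aemeasurable]
  · exact Eventually.of_forall fun η => rescPM_closedBall_one _ _ _
  · exact measurable_PM_apply isClosed_closedBall.measurableSet (measurableSet_singleton 1)

end Supp

/-! ### Ergodic theory -/

section MaxErg

variable {Ω : Type*} [MeasurableSpace Ω] {P : Measure Ω} [IsFiniteMeasure P] {T : Ω → Ω} {g : Ω → ℝ}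

/-- The maximum of the Birkhoff sums of `g` of length at most `N`, defined recursively. -/
noncomputable def maxSum (T : Ω → Ω) (g : Ω → ℝ) : ℕ → Ω → ℝ
  | 0 => fun _ => 0
  | N + 1 => fun ω => max 0 (g ω + maxSum T g N (T ω))

lemma maxSum_nonneg (N : ℕ) (ω : Ω) : 0 ≤ maxSum T g N ω := by
  cases N with
  | zero => exact le_rfl
  | succ N => exact le_max_left _ _

lemma maxSum_mono (N : ℕ) (ω : Ω) : maxSum T g N ω ≤ maxSum T g (N + 1) ω := by
  induction N generalizing ω with
  | zero => exact maxSum_nonneg _ _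
  | succ N ih =>
    change max 0 _ ≤ max 0 _
    exact max_le_max le_rfl (by linarith [ih (T ω)])

lemma sum_le_maxSum (n : ℕ) (ω : Ω) : ∑ k ∈ Finset.range n, g (T^[k] ω) ≤ maxSum T g n ω := by
  induction n generalizing ω with
  | zero => simp [maxSum]
  | succ n ih =>
    rw [Finset.sum_range_succ']
    refine le_trans ?_ (le_max_right _ _)
    have := ih (T ω)
    simp only [Function.iterate_succ_apply, Function.iterate_zero_apply]
    linarith

lemma integrable_maxSum (hT : MeasurePreserving T P P) (hg : Integrable g P) (N : ℕ) :
    Integrable (maxSum T g N) P := by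
  induction N with
  | zero => exact integrable_zero _ _ _
  | succ N ih =>
    have h1 : Integrable (fun ω => g ω + maxSum T g N (T ω)) P :=
      hg.add (hT.integrable_comp_of_integrable ih)
    exact (integrable_zero _ _ _).sup h1

lemma measurable_maxSum (hT : Measurable T) (hg : Measurable g) (N : ℕ) :
    Measurable (maxSum T g N) := by
  induction N with
  | zero => exact measurable_const
  | succ N ih => exact measurable_const.max (hg.add (ih.comp hT))

/-- A form of the maximal ergodic lemma: if `∫ g < 0`, then on a set of positive measure all
Birkhoff sums of `g` are nonpositive. -/
lemma maximal_ergodic (hT : MeasurePreserving T P P) (hgm : Measurable g) (hg : Integrable g P)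
    (hneg : ∫ ω, g ω ∂P < 0) :
    P {ω | ∀ n, ∑ k ∈ Finset.range n, g (T^[k] ω) ≤ 0} ≠ 0 := by
  intro h0
  set E : ℕ → Set Ω := fun N => {ω | 0 < maxSum T g (N + 1) ω}
  have hE : ∀ N, MeasurableSet (E N) := fun N =>
    measurableSet_lt measurable_const (measurable_maxSum hT.measurable hgm _)
  have h1 : ∀ N, 0 ≤ ∫ ω in E N, g ω ∂P := by
    intro N
    have i1 := integrable_maxSum hT hg (N + 1)
    have i0 := integrable_maxSum hT hg N
    have i0T : Integrable (fun ω => maxSum T g N (T ω)) P := hT.integrable_comp_of_integrable i0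
    have e1 : ∫ ω in E N, g ω ∂P = ∫ ω in E N, (maxSum T g (N + 1) ω - maxSum T g N (T ω)) ∂P := by
      refine setIntegral_congr_fun (hE N) fun ω hω => ?_
      have hω' : 0 < max 0 (g ω + maxSum T g N (T ω)) := hω
      have h3 : maxSum T g (N + 1) ω = g ω + maxSum T g N (T ω) :=
        max_eq_right ((lt_max_iff.1 hω').resolve_left (lt_irrefl _)).le
      simp only [h3]; ring
    have e2 : ∫ ω in E N, maxSum T g (N + 1) ω ∂P = ∫ ω, maxSum T g (N + 1) ω ∂P := by
      apply setIntegral_eq_integral_of_forall_compl_eq_zero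
      intro ω hω
      exact le_antisymm (not_lt.1 hω) (maxSum_nonneg _ _)
    have e3 : ∫ ω in E N, maxSum T g N (T ω) ∂P ≤ ∫ ω, maxSum T g N (T ω) ∂P :=
      setIntegral_le_integral i0T (Eventually.of_forall fun ω => maxSum_nonneg _ _)
    have e4 : ∫ ω, maxSum T g N (T ω) ∂P = ∫ ω, maxSum T g N ω ∂P := by
      conv_rhs => rw [← hT.map_eq]
      rw [integral_map hT.aemeasurable]
      rw [hT.map_eq]; exact i0.aestronglyMeasurable
    have e5 : ∫ ω, maxSum T g N ω ∂P ≤ ∫ ω, maxSum T g (N + 1) ω ∂P :=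
      integral_mono i0 i1 fun ω => maxSum_mono N ω
    rw [e1, integral_sub i1.integrableOn i0T.integrableOn, e2]
    linarith
  have hmono : Monotone E := by
    refine monotone_nat_of_le_succ fun N ω hω => ?_
    exact lt_of_lt_of_le hω (maxSum_mono _ _)
  have h2 : Tendsto (fun N => ∫ ω in E N, g ω ∂P) atTop (𝓝 (∫ ω in ⋃ N, E N, g ω ∂P)) :=
    tendsto_setIntegral_of_monotone hE hmono hg.integrableOn
  have h3 : ∫ ω in ⋃ N, E N, g ω ∂P = ∫ ω, g ω ∂P := by
    apply setIntegral_eq_integral_of_ae_compl_eq_zero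
    have : ∀ᵐ ω ∂P, ¬ ∀ n, ∑ k ∈ Finset.range n, g (T^[k] ω) ≤ 0 := by
      rw [ae_iff]; simpa using h0
    filter_upwards [this] with ω hω hω2
    exfalso
    push Not at hω
    obtain ⟨n, hn⟩ := hω
    apply hω2
    rw [mem_iUnion]
    exact ⟨n, lt_of_lt_of_le hn ((sum_le_maxSum n ω).trans (maxSum_mono n ω))⟩
  rw [h3] at h2
  exact absurd (ge_of_tendsto' h2 h1) (not_le.2 hneg)

end MaxErg

section ErgFlow

variable {X : Type*} [NormedAddCommGroup X] [NormedSpace ℝ X] [MeasurableSpace X] [BorelSpace X]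
  [SecondCountableTopology X]

/-- For an ergodic fractal distribution, forward invariant sets of positive measure are conull. -/
lemma IsErgodicFD.zero_one {P : Measure (ProbabilityMeasure X)} (hP : IsErgodicFD P)
    {A : Set (ProbabilityMeasure X)} (hA : MeasurableSet A)
    (hinv : ∀ t : ℝ, 0 ≤ t → ∀ η ∈ A, stMap t η ∈ A) (hpos : P A ≠ 0) : P Aᶜ = 0 := by
  have hPp : IsProbabilityMeasure P := hP.1.1
  set A' : Set (ProbabilityMeasure X) := ⋃ n : ℕ, stMap (n : ℝ) ⁻¹' A
  have hm : ∀ n : ℕ, MeasurableSet (stMap (n : ℝ) ⁻¹' A) := fun n => measurable_stMap _ hA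
  have hmono : Monotone fun n : ℕ => stMap (n : ℝ) ⁻¹' A := by
    intro m n hmn η hη
    have h1 : (0 : ℝ) ≤ (n : ℝ) - m := by
      have : (m : ℝ) ≤ n := by exact_mod_cast hmn
      linarith
    have h2 := hinv _ h1 _ hη
    rw [stMap_stMap _ _ h1] at h2
    simpa using h2
  have hPn : ∀ n : ℕ, P (stMap (n : ℝ) ⁻¹' A) = P A := fun n => by
    rw [← Measure.map_apply (measurable_stMap _) hA, hP.1.2.1 n (by positivity)]
  have hPA : P A' = P A := by
    have h1 := tendsto_measure_iUnion_atTop (μ := P) hmono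
    simp only [Function.comp_def, hPn] at h1
    exact (tendsto_nhds_unique h1 tendsto_const_nhds)
  have hinv' : ∀ t : ℝ, 0 ≤ t → stMap t ⁻¹' A' = A' := by
    intro t ht
    ext η
    simp only [A', mem_preimage, mem_iUnion]
    constructor
    · rintro ⟨n, hn⟩
      rw [stMap_stMap _ _ (by positivity)] at hn
      obtain ⟨m, hm⟩ := exists_nat_ge (t + n)
      refine ⟨m, ?_⟩
      have h2 := hinv (m - (t + n)) (by linarith) _ hn
      rw [stMap_stMap _ _ (by linarith)] at h2
      simpa using h2
    · rintro ⟨n, hn⟩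
      refine ⟨n, ?_⟩
      have h2 := hinv t ht _ hn
      rw [stMap_stMap _ _ ht, add_comm] at h2
      rwa [stMap_stMap _ _ (by positivity)]
  rcases hP.2 A' (MeasurableSet.iUnion hm) hinv' with h | h
  · exact absurd (hPA ▸ h) hpos
  · rw [prob_compl_eq_zero_iff (MeasurableSet.iUnion hm)] at h
    rw [prob_compl_eq_zero_iff hA, ← hPA, h]

lemma iterate_stMap_one (n : ℕ) (η : ProbabilityMeasure X)
    (h0 : stMap 0 η = η) : (stMap 1)^[n] η = stMap (n : ℝ) η := by
  induction n with
  | zero => simp [h0]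
  | succ n ih => rw [Function.iterate_succ_apply', ih, stMap_stMap _ _ zero_le_one]; simp

lemma stMap_zero {η : ProbabilityMeasure X} (h : (η : Measure X) (closedBall 0 1) = 1) :
    stMap 0 η = η := by
  have h0 : (η : Measure X) (closedBall 0 ((2 : ℝ) ^ (-(0 : ℝ)))) = 1 := by simpa using h
  apply Subtype.ext
  change (rescPM (η : Measure X) 0 0 : Measure X) = (η : Measure X)
  ext A hA
  rw [rescPM_apply (by simp [h]) hA, h0, inv_one, one_mul]
  simp only [Real.rpow_zero, sub_zero, one_smul, neg_zero]
  have : {y | y ∈ A ∧ y ∈ closedBall (0 : X) 1} = A ∩ closedBall 0 1 := rfl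
  rw [this]
  refine measure_inter_conull ?_
  rw [measure_compl isClosed_closedBall.measurableSet (measure_ne_top _ _), h]
  simp

end ErgFlow

/-! ### Genericity for ergodic fractal distributions -/

section ErgEqui

variable {X : Type*} [NormedAddCommGroup X] [NormedSpace ℝ X] [MeasurableSpace X] [BorelSpace X]
  [SecondCountableTopology X]

/-- The amount of time in `[0, n)` that the magnification orbit of `η` spends outside `U`. -/
noncomputable def outTime (U : Set (ProbabilityMeasure X)) (n : ℕ) (η : ProbabilityMeasure X) : ℝ≥0∞ :=
  volume {t : ℝ | t ∈ Ico (0 : ℝ) n ∧ stMap t η ∉ U}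

lemma measurableSet_outTime {U : Set (ProbabilityMeasure X)} (hU : MeasurableSet U) (n : ℕ) :
    MeasurableSet {p : ProbabilityMeasure X × ℝ | p.2 ∈ Ico (0 : ℝ) n ∧ stMap p.2 p.1 ∉ U} := by
  have h : Measurable fun p : ProbabilityMeasure X × ℝ => stMap p.2 p.1 := by
    have := (measurable_stMap_uncurry (X := X)).comp measurable_swap
    exact this
  exact (measurable_snd measurableSet_Ico).inter (h hU.compl)

lemma measurable_outTime {U : Set (ProbabilityMeasure X)} (hU : MeasurableSet U) (n : ℕ) :
    Measurable (outTime U n) :=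
  measurable_measure_prodMk_left (measurableSet_outTime hU n)

lemma outTime_le (U : Set (ProbabilityMeasure X)) (n : ℕ) (η : ProbabilityMeasure X) :
    outTime U n η ≤ n := by
  refine (measure_mono (t := Ico (0 : ℝ) n) fun t ht => ht.1).trans ?_
  simp

lemma lintegral_outTime_one {P : Measure (ProbabilityMeasure X)} [IsProbabilityMeasure P]
    (hP : ∀ t : ℝ, 0 ≤ t → P.map (stMap t) = P) {U : Set (ProbabilityMeasure X)}
    (hU : MeasurableSet U) : ∫⁻ η, outTime U 1 η ∂P = P Uᶜ := by
  have h1 := Measure.prod_apply (μ := P) (ν := (volume : Measure ℝ)) (measurableSet_outTime hU 1)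
  have h2 := Measure.prod_apply_symm (μ := P) (ν := (volume : Measure ℝ)) (measurableSet_outTime hU 1)
  rw [h1] at h2
  have h3 : ∫⁻ η, outTime U 1 η ∂P = ∫⁻ η, volume (Prod.mk η ⁻¹' {p : ProbabilityMeasure X × ℝ |
    p.2 ∈ Ico (0 : ℝ) (1 : ℕ) ∧ stMap p.2 p.1 ∉ U}) ∂P := rfl
  rw [h3, h2]
  have h4 : ∀ t : ℝ, P ((fun η => (η, t)) ⁻¹' {p : ProbabilityMeasure X × ℝ |
    p.2 ∈ Ico (0 : ℝ) (1 : ℕ) ∧ stMap p.2 p.1 ∉ U}) = (Ico (0 : ℝ) 1).indicator (fun _ => P Uᶜ) t := by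
    intro t
    by_cases ht : t ∈ Ico (0 : ℝ) 1
    · rw [indicator_of_mem ht, ← hP t ht.1, Measure.map_apply (measurable_stMap t) hU.compl, hP t ht.1]
      congr 1
      ext η
      simp only [mem_preimage, mem_ofPred_eq, mem_compl_iff, Nat.cast_one, ht, true_and]
    · rw [indicator_of_notMem ht]
      convert measure_empty (μ := P)
      ext η
      simp only [mem_preimage, mem_ofPred_eq, Nat.cast_one, ht, false_and, mem_empty_iff_false]
  simp_rw [h4]
  rw [lintegral_indicator measurableSet_Ico]
  simp

lemma outTime_stMap (U : Set (ProbabilityMeasure X)) (n : ℕ) (η : ProbabilityMeasure X) {s : ℝ} :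
    outTime U n (stMap s η) = volume {t : ℝ | t ∈ Ico s (s + n) ∧ stMap t η ∉ U} := by
  rw [outTime, ← measure_preimage_add_right volume s {t : ℝ | t ∈ Ico s (s + n) ∧ stMap t η ∉ U}]
  congr 1
  ext t
  simp only [mem_ofPred_eq, mem_preimage, mem_Ico]
  constructor
  · rintro ⟨⟨h1, h2⟩, h3⟩
    rw [stMap_stMap _ _ h1, add_comm] at h3
    exact ⟨⟨by linarith, by linarith⟩, h3⟩
  · rintro ⟨⟨h1, h2⟩, h3⟩
    have h0 : 0 ≤ t := by linarith
    rw [stMap_stMap _ _ h0, add_comm]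
    exact ⟨⟨h0, by linarith⟩, h3⟩

/-- The maximal ergodic theorem and ergodicity bound the time spent outside `U`. -/
lemma IsErgodicFD.ae_outTime_le {P : Measure (ProbabilityMeasure X)} (hP : IsErgodicFD P)
    {U : Set (ProbabilityMeasure X)} (hU : MeasurableSet U) {c : ℝ} (hc : P.real Uᶜ < c) :
    ∀ᵐ η ∂P, ∃ C : ℕ, ∀ n : ℕ, outTime U n η ≤ ENNReal.ofReal (c * n + C) := by
  have hPp : IsProbabilityMeasure P := hP.1.1
  have hc0 : 0 ≤ c := measureReal_nonneg.trans hc.le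
  set A : Set (ProbabilityMeasure X) :=
    {η | ∃ C : ℕ, ∀ n : ℕ, outTime U n η ≤ ENNReal.ofReal (c * n + C)}
  have hA : MeasurableSet A := by
    have : A = ⋃ C : ℕ, ⋂ n : ℕ, {η | outTime U n η ≤ ENNReal.ofReal (c * n + C)} := by
      ext η; simp [A]
    rw [this]
    exact MeasurableSet.iUnion fun C => MeasurableSet.iInter fun n =>
      measurableSet_le (measurable_outTime hU n) measurable_const
  have hinv : ∀ t : ℝ, 0 ≤ t → ∀ η ∈ A, stMap t η ∈ A := by
    rintro s hs η ⟨C, hC⟩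
    obtain ⟨m, hm⟩ := exists_nat_ge s
    obtain ⟨m', hm'⟩ := exists_nat_ge (c * m)
    refine ⟨C + m', fun n => ?_⟩
    rw [outTime_stMap]
    have h1 : volume {t : ℝ | t ∈ Ico s (s + n) ∧ stMap t η ∉ U} ≤ outTime U (n + m) η := by
      refine measure_mono fun t ht => ⟨⟨hs.trans ht.1.1, ?_⟩, ht.2⟩
      have := ht.1.2
      push_cast; linarith
    refine h1.trans ((hC _).trans (ENNReal.ofReal_le_ofReal ?_))
    push_cast; nlinarith
  have hT : MeasurePreserving (stMap (X := X) 1) P P := ⟨measurable_stMap 1, hP.1.2.1 1 zero_le_one⟩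
  set g : ProbabilityMeasure X → ℝ := fun η => (outTime U 1 η).toReal - c
  have hgm : Measurable g := (measurable_outTime hU 1).ennreal_toReal.sub_const c
  have hbd : ∀ η, (outTime U 1 η).toReal ≤ 1 := fun η => by
    have := ENNReal.toReal_mono (by simp) (outTime_le U 1 η)
    simpa using this
  have hi : Integrable (fun η => (outTime U 1 η).toReal) P := by
    refine Integrable.of_bound (measurable_outTime hU 1).ennreal_toReal.aestronglyMeasurable 1
      (Eventually.of_forall fun η => ?_)
    rw [Real.norm_of_nonneg ENNReal.toReal_nonneg]; exact hbd η
  have hlt : ∀ η, outTime U 1 η < ∞ := fun η => (outTime_le U 1 η).trans_lt (by simp)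
  have hneg : ∫ η, g η ∂P < 0 := by
    rw [integral_sub hi (integrable_const c), integral_toReal (measurable_outTime hU 1).aemeasurable
      (Eventually.of_forall hlt), lintegral_outTime_one hP.1.2.1 hU]
    simp only [integral_const, probReal_univ, one_smul]
    exact sub_neg.2 hc
  have hmax := maximal_ergodic hT hgm (hi.sub (integrable_const c)) hneg
  have hpos : P A ≠ 0 := by
    intro h0
    apply hmax
    rw [← nonpos_iff_eq_zero]
    rw [← nonpos_iff_eq_zero] at h0
    refine le_trans (measure_mono_ae ?_) h0
    filter_upwards [ae_closedBall_of_invariant hP.1.2.1] with η hη hsum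
    refine ⟨0, fun n => ?_⟩
    have h1 : outTime U n η ≤ ENNReal.ofReal (∑ k ∈ Finset.range n, (outTime U 1 (stMap (k : ℝ) η)).toReal) := by
      induction n with
      | zero => simp [outTime]
      | succ n ih =>
        rw [Finset.sum_range_succ, ENNReal.ofReal_add (Finset.sum_nonneg fun _ _ => ENNReal.toReal_nonneg)
          ENNReal.toReal_nonneg, ENNReal.ofReal_toReal (hlt _).ne, outTime_stMap]
        refine le_trans ?_ (add_le_add_left ih _)
        refine le_trans (measure_mono ?_) (measure_union_le _ _)
        rintro t ⟨⟨h1, h2⟩, h3⟩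
        push_cast at h2
        by_cases ht : t < n
        · exact Or.inl ⟨⟨h1, ht⟩, h3⟩
        · exact Or.inr ⟨⟨not_lt.1 ht, by push_cast; linarith⟩, h3⟩
    refine h1.trans (ENNReal.ofReal_le_ofReal ?_)
    have h2 := hsum n
    simp only [g, Finset.sum_sub_distrib, Finset.sum_const, Finset.card_range, nsmul_eq_mul] at h2
    simp only [iterate_stMap_one _ _ (stMap_zero hη)] at h2
    push_cast; linarith
  have := hP.zero_one hA hinv hpos
  exact this

/-- Almost every measure is generic for an ergodic fractal distribution. -/
lemma IsErgodicFD.ae_equi {P : Measure (ProbabilityMeasure X)} (hP : IsErgodicFD P) :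
    ∀ᵐ η ∂P, Equi atTop (fun t => stMap t η) P := by
  classical
  have hPp : IsProbabilityMeasure P := hP.1.1
  set B := TopologicalSpace.countableBasis (ProbabilityMeasure X)
  have hB : B.Countable := TopologicalSpace.countable_countableBasis _
  have hBb : TopologicalSpace.IsTopologicalBasis B := TopologicalSpace.isBasis_countableBasis _
  have : Countable B := hB.to_subtype
  have key : ∀ s : Finset B, ∀ q : ℚ, P.real (⋃ b ∈ s, (b : Set (ProbabilityMeasure X)))ᶜ < q →
      ∀ᵐ η ∂P, ∃ C : ℕ, ∀ n : ℕ, outTime (⋃ b ∈ s, (b : Set (ProbabilityMeasure X))) n η ≤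
        ENNReal.ofReal (q * n + C) := by
    intro s q hq
    refine hP.ae_outTime_le ?_ hq
    exact (isOpen_biUnion fun b _ => hBb.isOpen b.2).measurableSet
  have key2 : ∀ᵐ η ∂P, ∀ s : Finset B, ∀ q : ℚ,
      P.real (⋃ b ∈ s, (b : Set (ProbabilityMeasure X)))ᶜ < q → ∃ C : ℕ, ∀ n : ℕ,
      outTime (⋃ b ∈ s, (b : Set (ProbabilityMeasure X))) n η ≤ ENNReal.ofReal (q * n + C) := by
    rw [ae_all_iff]; intro s
    rw [ae_all_iff]; intro q
    by_cases hq : P.real (⋃ b ∈ s, (b : Set (ProbabilityMeasure X)))ᶜ < q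
    · filter_upwards [key s q hq] with η hη _ using hη
    · exact Eventually.of_forall fun η h => absurd h hq
  filter_upwards [key2] with η hη U hU c hc
  obtain ⟨s, hs, hsU⟩ : ∃ s : Finset B, P.real (⋃ b ∈ s, (b : Set (ProbabilityMeasure X)))ᶜ < c ∧
      (⋃ b ∈ s, (b : Set (ProbabilityMeasure X))) ⊆ U := by
    set W : B → Set (ProbabilityMeasure X) := fun b => if (b : Set (ProbabilityMeasure X)) ⊆ U then b else ∅
    have hW : ⋃ b, W b = U := by
      apply subset_antisymm
      · refine iUnion_subset fun b => ?_
        simp only [W]; split_ifs with h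
        · exact h
        · exact empty_subset _
      · intro x hx
        obtain ⟨b, hb, hxb, hbU⟩ := hBb.exists_subset_of_mem_open hx hU
        rw [mem_iUnion]
        exact ⟨⟨b, hb⟩, by simp only [W, if_pos hbU]; exact hxb⟩
    have h1 : Tendsto (fun s : Finset B => P (⋃ b ∈ s, W b)) atTop (𝓝 (P (⋃ b, W b))) := by
      have : (⋃ b, W b) = ⋃ s : Finset B, ⋃ b ∈ s, W b := by
        rw [iUnion_eq_iUnion_finset]
      rw [this]
      exact tendsto_measure_iUnion_atTop fun s t hst => biUnion_subset_biUnion_left hst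
    rw [hW] at h1
    have h2 := (ENNReal.tendsto_toReal (measure_ne_top P U)).comp h1
    have h3 : 1 - c < P.real U := by
      rw [probReal_compl_eq_one_sub hU.measurableSet] at hc; linarith
    obtain ⟨s, hs⟩ := (h2.eventually_const_lt h3).exists
    refine ⟨s.filter (fun b : B => (b : Set (ProbabilityMeasure X)) ⊆ U), ?_, ?_⟩
    · rw [probReal_compl_eq_one_sub (Finset.measurableSet_biUnion _ fun (b : B) _ => (hBb.isOpen b.2).measurableSet)]
      have h4 : (⋃ b ∈ s, W b) ⊆ ⋃ b ∈ (s.filter (fun b : B => (b : Set (ProbabilityMeasure X)) ⊆ U) : Finset B), (b : Set (ProbabilityMeasure X)) := by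
        refine iUnion₂_subset fun b hb => ?_
        simp only [W]
        split_ifs with h
        · intro x hx
          exact mem_iUnion₂.2 ⟨b, Finset.mem_filter.2 ⟨hb, h⟩, hx⟩
        · exact empty_subset _
      have h5 : 1 - c < P.real (⋃ b ∈ s, W b) := hs
      have h6 := measureReal_mono (μ := P) h4 (measure_ne_top _ _)
      linarith
    · refine iUnion₂_subset fun b hb => ?_
      exact (Finset.mem_filter.1 hb).2
  obtain ⟨q, hq1, hq2⟩ := exists_rat_btwn hs
  obtain ⟨C, hC⟩ := hη s q hq1
  have h1 : ∀ᶠ n : ℕ in atTop, (C : ℝ) ≤ (c - q) * n := by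
    have : Tendsto (fun n : ℕ => (c - q) * (n : ℝ)) atTop atTop :=
      tendsto_natCast_atTop_atTop.const_mul_atTop (by linarith)
    exact this.eventually_ge_atTop _
  filter_upwards [h1] with n hn
  have h2 : {t | stMap t η ∉ U} ∩ Icc (0 : ℝ) n ⊆
      {t : ℝ | t ∈ Ico (0 : ℝ) n ∧ stMap t η ∉ ⋃ b ∈ s, (b : Set (ProbabilityMeasure X))} ∪ {(n : ℝ)} := by
    rintro t ⟨ht, h0, hn⟩
    rcases hn.lt_or_eq with h | h
    · exact Or.inl ⟨⟨h0, h⟩, fun h' => ht (hsU h')⟩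
    · exact Or.inr h
  refine (measure_mono h2).trans ((measure_union_le _ _).trans ?_)
  rw [Real.volume_singleton, add_zero]
  refine (hC n).trans (ENNReal.ofReal_le_ofReal ?_)
  linarith

end ErgEqui

/-! ### Decay of mass -/

lemma UD.of_bounded {l : Filter ℕ} (hl : l ≤ atTop) {S : Set ℝ} {M c : ℝ} (hS : S ⊆ Iic M) (hc : 0 < c) :
    UD l S c := by
  have h1 : ∀ᶠ n : ℕ in l, M ≤ c * n := by
    apply hl
    have : Tendsto (fun n : ℕ => c * (n : ℝ)) atTop atTop :=
      tendsto_natCast_atTop_atTop.const_mul_atTop hc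
    exact this.eventually_ge_atTop _
  filter_upwards [h1] with n hn
  refine (measure_mono (t := Icc 0 M) ?_).trans ?_
  · rintro t ⟨h1, h2⟩; exact ⟨h2.1, hS h1⟩
  · rw [Real.volume_Icc]; apply ENNReal.ofReal_le_ofReal; linarith

section Phi

variable {X : Type*} [NormedAddCommGroup X] [NormedSpace ℝ X] [MeasurableSpace X] [BorelSpace X]

/-- The decay `-log θ(B(z, 2^{-t}))` of the mass of balls around `z`. -/
noncomputable def phi (θ : Measure X) (z : X) (t : ℝ) : ℝ := -Real.log (θ.real (closedBall z ((2 : ℝ) ^ (-t))))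

lemma InSpt.real_pos {θ : Measure X} [IsFiniteMeasure θ] {z : X} (h : InSpt θ z) (t : ℝ) :
    0 < θ.real (closedBall z ((2 : ℝ) ^ (-t))) :=
  ENNReal.toReal_pos (h t) (measure_ne_top _ _)

lemma phi_nonneg (θ : Measure X) [IsProbabilityMeasure θ] (z : X) (t : ℝ) : 0 ≤ phi θ z t := by
  rw [phi, neg_nonneg]
  exact Real.log_nonpos measureReal_nonneg measureReal_le_one

lemma phi_mono {θ : Measure X} [IsFiniteMeasure θ] {z : X} (h : InSpt θ z) : Monotone (phi θ z) := by
  intro s t hst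
  rw [phi, phi, neg_le_neg_iff]
  exact Real.log_le_log (h.real_pos t) (measureReal_mono (closedBall_pow_subset z hst) (measure_ne_top _ _))

lemma exp_neg_phi {θ : Measure X} [IsFiniteMeasure θ] {z : X} (h : InSpt θ z) (t : ℝ) :
    Real.exp (-phi θ z t) = θ.real (closedBall z ((2 : ℝ) ^ (-t))) := by
  rw [phi, neg_neg, Real.exp_log (h.real_pos t)]

lemma phi_rescPM {θ : Measure X} [IsFiniteMeasure θ] {z : X} (h : InSpt θ z) (t : ℝ) {s : ℝ} (hs : 0 ≤ s) :
    phi (rescPM θ z t : Measure X) 0 s = phi θ z (t + s) - phi θ z t := by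
  rw [phi, phi, phi, measureReal_def, rescPM_ball hs (h t), ENNReal.toReal_mul, ENNReal.toReal_inv,
    ← measureReal_def, ← measureReal_def, Real.log_mul (inv_ne_zero (h.real_pos _).ne') (h.real_pos _).ne', Real.log_inv]
  ring

variable [SecondCountableTopology X]

lemma InSpt.fst {η : Measure (X × X)} {z : X × X} (h : InSpt η z) : InSpt η.fst z.1 := by
  intro t h0
  rw [Measure.fst_apply isClosed_closedBall.measurableSet] at h0
  refine h t (measure_mono_null ?_ h0)
  rw [show z = (z.1, z.2) from rfl, ← closedBall_prod_same]
  exact fun p hp => hp.1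

lemma InSpt.snd {η : Measure (X × X)} {z : X × X} (h : InSpt η z) : InSpt η.snd z.2 := by
  intro t h0
  rw [Measure.snd_apply isClosed_closedBall.measurableSet] at h0
  refine h t (measure_mono_null ?_ h0)
  rw [show z = (z.1, z.2) from rfl, ← closedBall_prod_same]
  exact fun p hp => hp.2

lemma measurable_phi_fst (t : ℝ) :
    Measurable fun η : ProbabilityMeasure (X × X) => phi (η : Measure (X × X)).fst 0 t := by
  unfold phi
  refine (Real.measurable_log.comp ?_).neg
  have : (fun η : ProbabilityMeasure (X × X) => ((η : Measure (X × X)).fst).real (closedBall 0 ((2 : ℝ) ^ (-t)))) =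
      fun η : ProbabilityMeasure (X × X) => ((η : Measure (X × X)) (Prod.fst ⁻¹' (closedBall 0 ((2 : ℝ) ^ (-t))))).toReal := by
    funext η
    rw [measureReal_def, Measure.fst_apply isClosed_closedBall.measurableSet]
  rw [this]
  exact (measurable_PM_apply (measurable_fst isClosed_closedBall.measurableSet)).ennreal_toReal

/-- The mean decay rate of the first marginal under one unit of magnification. -/
noncomputable def entD (P : Measure (ProbabilityMeasure (X × X))) : ℝ≥0∞ :=
  ∫⁻ η, ENNReal.ofReal (phi (η : Measure (X × X)).fst 0 1) ∂P

lemma phi_stMap_fst {η : ProbabilityMeasure (X × X)} (h1 : IsProdPM η) (h2 : InSpt (η : Measure (X × X)) 0)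
    (t : ℝ) {s : ℝ} (hs : 0 ≤ s) :
    phi (stMap t η : Measure (X × X)).fst 0 s =
      phi (η : Measure (X × X)).fst 0 (t + s) - phi (η : Measure (X × X)).fst 0 t := by
  have : (stMap t η : Measure (X × X)).fst = (rescPM (η : Measure (X × X)).fst 0 t : Measure X) :=
    h1.rescPM_fst (h2 t)
  rw [this]
  have h3 : InSpt (η : Measure (X × X)).fst 0 := h2.fst
  exact phi_rescPM h3 t hs

/-- By the maximal ergodic theorem, the mass of balls around the origin decays at rate at most `entD P`
for `P`-typical measures. -/
lemma IsErgodicFD.ae_phi_le {P : Measure (ProbabilityMeasure (X × X))} (hP : IsErgodicFD P)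
    (hprod : ∀ᵐ η ∂P, IsProdPM η) {c : ℝ} (hc : entD P < ENNReal.ofReal c) :
    ∀ᵐ η : ProbabilityMeasure (X × X) ∂P, ∃ C : ℕ, ∀ n : ℕ, phi (η : Measure (X × X)).fst 0 n ≤ c * n + C := by
  have hPp : IsProbabilityMeasure P := hP.1.1
  have hc0 : 0 ≤ c := by
    by_contra h
    rw [ENNReal.ofReal_of_nonpos (not_le.1 h).le] at hc
    exact absurd hc not_lt_bot
  set A : Set (ProbabilityMeasure (X × X)) :=
    {η | IsProdPM η} ∩ ({η | InSpt (η : Measure (X × X)) 0} ∩ {η | ∃ C : ℕ, ∀ n : ℕ, phi (η : Measure (X × X)).fst 0 n ≤ c * n + C})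
  have hA : MeasurableSet A := by
    refine isClosed_isProdPM.measurableSet.inter (measurableSet_inSpt.inter ?_)
    have : {η : ProbabilityMeasure (X × X) | ∃ C : ℕ, ∀ n : ℕ, phi (η : Measure (X × X)).fst 0 n ≤ c * n + C} =
        ⋃ C : ℕ, ⋂ n : ℕ, {η : ProbabilityMeasure (X × X) | phi (η : Measure (X × X)).fst 0 n ≤ c * n + C} := by
      ext η; simp
    rw [this]
    exact MeasurableSet.iUnion fun C => MeasurableSet.iInter fun n =>
      measurableSet_le (measurable_phi_fst n) measurable_const
  have hinv : ∀ t : ℝ, 0 ≤ t → ∀ η ∈ A, stMap t η ∈ A := by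
    rintro s hs η ⟨h1, h2, C, hC⟩
    refine ⟨h1.rescPM_isProd (h2 s), h2.rescPM s, ?_⟩
    obtain ⟨m, hm⟩ := exists_nat_ge s
    obtain ⟨m', hm'⟩ := exists_nat_ge (c * m)
    refine ⟨C + m', fun n => ?_⟩
    rw [phi_stMap_fst h1 h2 s (by positivity)]
    have h3 := phi_nonneg (η : Measure (X × X)).fst 0 s
    have h4 : InSpt (η : Measure (X × X)).fst 0 := h2.fst
    have h5 : phi (η : Measure (X × X)).fst 0 (s + n) ≤ phi (η : Measure (X × X)).fst 0 ((m + n : ℕ) : ℝ) :=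
      phi_mono h4 (by push_cast; linarith)
    have h6 := hC (m + n)
    push_cast at h6 h5 ⊢
    linarith
  have hT : MeasurePreserving (stMap (X := X × X) 1) P P := ⟨measurable_stMap 1, hP.1.2.1 1 zero_le_one⟩
  have hfin : ∫⁻ η, ENNReal.ofReal (phi (η : Measure (X × X)).fst 0 1) ∂P ≠ ∞ :=
    (hc.trans ENNReal.ofReal_lt_top).ne
  have hi : Integrable (fun η : ProbabilityMeasure (X × X) => phi (η : Measure (X × X)).fst 0 1) P := by
    refine ⟨(measurable_phi_fst 1).aestronglyMeasurable, ?_⟩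
    rw [hasFiniteIntegral_iff_ofReal (Eventually.of_forall fun η => phi_nonneg _ _ _)]
    exact hfin.lt_top
  set g : ProbabilityMeasure (X × X) → ℝ := fun η => phi (η : Measure (X × X)).fst 0 1 - c
  have hneg : ∫ η, g η ∂P < 0 := by
    rw [integral_sub hi (integrable_const c), integral_eq_lintegral_of_nonneg_ae
      (Eventually.of_forall fun η => phi_nonneg _ _ _) hi.1]
    simp only [integral_const, probReal_univ, one_smul]
    rw [sub_neg]
    have := (ENNReal.toReal_lt_toReal hfin ENNReal.ofReal_ne_top).2 hc
    rwa [ENNReal.toReal_ofReal hc0] at this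
  have hmax := maximal_ergodic hT ((measurable_phi_fst 1).sub_const c) (hi.sub (integrable_const c)) hneg
  have hpos : P A ≠ 0 := by
    intro h0
    apply hmax
    rw [← nonpos_iff_eq_zero]
    rw [← nonpos_iff_eq_zero] at h0
    refine le_trans (measure_mono_ae ?_) h0
    filter_upwards [ae_closedBall_of_invariant hP.1.2.1, ae_inSpt_of_invariant hP.1.2.1, hprod] with η hη h2 h1 hsum
    obtain ⟨C, hC⟩ := exists_nat_ge (phi (η : Measure (X × X)).fst 0 0)
    refine ⟨h1, h2, C, fun n => ?_⟩
    have h3 := hsum n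
    simp only [Finset.sum_sub_distrib, Finset.sum_const, Finset.card_range, nsmul_eq_mul] at h3
    simp only [iterate_stMap_one _ _ (stMap_zero hη), phi_stMap_fst h1 h2 _ zero_le_one] at h3
    have h4 := Finset.sum_range_sub (fun k : ℕ => phi (η : Measure (X × X)).fst 0 k) n
    push_cast at h4
    rw [h4] at h3
    linarith
  have h5 : ∀ᵐ η ∂P, η ∈ A := hP.zero_one hA hinv hpos
  filter_upwards [h5] with η hη using hη.2.2

/-- Points of `(-1,1)^{2d}` that are typical for a `P`-typical measure are generic for `P`, and
the first marginal decays there at a rate at most `entD P`. -/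
lemma IsErgodicFD.ae_generic {P : Measure (ProbabilityMeasure (X × X))} (hP : IsErgodicFD P)
    (hprod : ∀ᵐ η ∂P, IsProdPM η) :
    ∀ᵐ η : ProbabilityMeasure (X × X) ∂P, ∀ᵐ z ∂(η : Measure (X × X)), ‖z‖ < 1 →
      Equi atTop (fun t => rescPM (η : Measure (X × X)) z t) P ∧
      ∀ c : ℝ, entD P < ENNReal.ofReal c → ∃ C : ℝ, ∀ n : ℕ, phi (η : Measure (X × X)).fst z.1 n ≤ c * n + C := by
  have hPp : IsProbabilityMeasure P := hP.1.1
  have h1 : ∀ᵐ η : ProbabilityMeasure (X × X) ∂P, ∀ q : ℚ, entD P < ENNReal.ofReal q →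
      ∃ C : ℕ, ∀ n : ℕ, phi (η : Measure (X × X)).fst 0 n ≤ q * n + C := by
    rw [ae_all_iff]; intro q
    by_cases hq : entD P < ENNReal.ofReal q
    · filter_upwards [hP.ae_phi_le hprod hq] with η hη _ using hη
    · exact Eventually.of_forall fun η h => absurd h hq
  obtain ⟨A, hAsub, hAm, hA0⟩ := exists_measurable_superset_of_null (ae_iff.1 (hP.ae_equi.and h1))
  have h2 := hP.1.2.2 Aᶜ hAm.compl (by rwa [compl_compl])
  filter_upwards [h2, hprod] with η hη hpr
  filter_upwards [hη, ae_inSpt (η : Measure (X × X))] with z hz hspt hz1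
  obtain ⟨m, hm⟩ : ∃ m : ℕ, (2 : ℝ) ^ (-(m : ℝ)) < 1 - ‖z‖ := by
    have : Tendsto (fun m : ℕ => (2 : ℝ) ^ (-(m : ℝ))) atTop (𝓝 0) := by
      have h := tendsto_pow_atTop_nhds_zero_of_lt_one (r := (1 / 2 : ℝ)) (by norm_num) (by norm_num)
      refine h.congr fun m => ?_
      rw [Real.rpow_neg two_pos.le, Real.rpow_natCast]; simp
    exact (this.eventually_lt_const (by linarith)).exists
  have h3 := hz m (by positivity) (by
    refine closedBall_subset_closedBall' ?_
    rw [dist_zero_right]; linarith)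
  obtain ⟨h4, h5⟩ : Equi atTop (fun t => stMap t (rescPM (η : Measure (X × X)) z m)) P ∧
      ∀ q : ℚ, entD P < ENNReal.ofReal q →
      ∃ C : ℕ, ∀ n : ℕ, phi (rescPM (η : Measure (X × X)) z m : Measure (X × X)).fst 0 n ≤ q * n + C := by
    by_contra hcon
    exact h3 (hAsub hcon)
  refine ⟨(h4.shift le_rfl (-m)).congr fun ε hε c hc => ?_, fun c hc => ?_⟩
  · refine UD.of_bounded le_rfl (M := m) (fun t ht => ?_) hc
    by_contra htm
    simp only [mem_Iic, not_le] at htm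
    have ht' : ε < dist (stMap (t + -m) (rescPM (η : Measure (X × X)) z m)) (rescPM (η : Measure (X × X)) z t) := ht
    rw [stMap_rescPM _ _ _ (by linarith)] at ht'
    rw [show (m : ℝ) + (t + -m) = t by ring, dist_self] at ht'
    linarith
  · obtain ⟨q, hq1, hq2⟩ : ∃ q : ℚ, entD P < ENNReal.ofReal q ∧ (q : ℝ) < c := by
      have hc0 : 0 ≤ c := by
        by_contra h
        rw [ENNReal.ofReal_of_nonpos (not_le.1 h).le] at hc
        exact absurd hc not_lt_bot
      have := (ENNReal.lt_ofReal_iff_toReal_lt (ne_top_of_lt hc)).1 hc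
      obtain ⟨q, h1, h2⟩ := exists_rat_btwn this
      exact ⟨q, (ENNReal.lt_ofReal_iff_toReal_lt (ne_top_of_lt hc)).2 h1, h2⟩
    obtain ⟨C, hC⟩ := h5 q hq1
    refine ⟨C + phi (η : Measure (X × X)).fst z.1 m, fun n => ?_⟩
    have h6 := hC n
    rw [hpr.rescPM_fst (hspt _), phi_rescPM hspt.fst _ (by positivity)] at h6
    have h7 : phi (η : Measure (X × X)).fst z.1 n ≤ phi (η : Measure (X × X)).fst z.1 (m + n) :=
      phi_mono hspt.fst (by linarith [(Nat.cast_nonneg m : (0 : ℝ) ≤ m)])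
    have h8 : (q : ℝ) * n ≤ c * n := by gcongr
    linarith

end Phi

/-! ### Oscillation of the mass decay, and tangent distributions -/

/-- The total oscillation of a monotone nonnegative function is controlled by its final value. -/
lemma integral_osc_le {φ : ℝ → ℝ} (hm : Monotone φ) (h0 : ∀ t, 0 ≤ φ t) {a b T : ℝ} (ha : 0 ≤ a)
    (hb : 0 ≤ b) :
    ∫ t in (0 : ℝ)..T, (φ (t + a) - φ (t - b)) ≤ (a + b) * φ (T + a) := by
  have hi : ∀ u v, IntervalIntegrable φ volume u v := fun u v => hm.intervalIntegrable
  have i1 : IntervalIntegrable (fun t => φ (t + a)) volume 0 T :=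
    Monotone.intervalIntegrable fun s t h => hm (by linarith)
  have i2 : IntervalIntegrable (fun t => φ (t - b)) volume 0 T :=
    Monotone.intervalIntegrable fun s t h => hm (by linarith)
  rw [intervalIntegral.integral_sub i1 i2, intervalIntegral.integral_comp_add_right,
    intervalIntegral.integral_comp_sub_right]
  have e1 := intervalIntegral.integral_add_adjacent_intervals (hi (0 - b) (0 + a)) (hi (0 + a) (T + a))
  have e2 := intervalIntegral.integral_add_adjacent_intervals (hi (0 - b) (T - b)) (hi (T - b) (T + a))
  have e3 : 0 ≤ ∫ t in (0 - b)..(0 + a), φ t :=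
    intervalIntegral.integral_nonneg (by linarith) fun t _ => h0 t
  have e4 : ∫ t in (T - b)..(T + a), φ t ≤ ∫ t in (T - b)..(T + a), φ (T + a) :=
    intervalIntegral.integral_mono_on (by linarith) (hi _ _) intervalIntegrable_const
      fun t ht => hm ht.2
  rw [intervalIntegral.integral_const, smul_eq_mul] at e4
  have e5 : (T + a - (T - b)) = a + b := by ring
  rw [e5] at e4
  linarith

/-- A monotone function of linear growth has large oscillation on bounded windows only rarely. -/
lemma UD.osc {φ : ℝ → ℝ} (hm : Monotone φ) (h0 : ∀ t, 0 ≤ φ t) {a b C K c : ℝ} (ha : 0 ≤ a)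
    (hb : 0 ≤ b) (hK : 0 < K) {l : Filter ℕ} (hC : ∀ᶠ n : ℕ in l, φ (n + a) ≤ C * n)
    (hc : (a + b) * C ≤ c * K) : UD l {t | K < φ (t + a) - φ (t - b)} c := by
  filter_upwards [hC] with n hn
  have i1 : IntervalIntegrable (fun t => φ (t + a) - φ (t - b)) volume 0 n :=
    (Monotone.intervalIntegrable fun s t h => hm (by linarith)).sub
      (Monotone.intervalIntegrable fun s t h => hm (by linarith))
  have i2 : IntegrableOn (fun t => φ (t + a) - φ (t - b)) (Ioc 0 (n : ℝ)) volume :=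
    (intervalIntegrable_iff_integrableOn_Ioc_of_le (by positivity)).1 i1
  have hnn : ∀ t, 0 ≤ φ (t + a) - φ (t - b) := fun t => by
    have := hm (show t - b ≤ t + a by linarith); linarith
  have h1 := mul_meas_ge_le_integral_of_nonneg (Eventually.of_forall hnn) i2 K
  have h2 := integral_osc_le hm h0 (T := n) ha hb
  rw [intervalIntegral.integral_of_le (by positivity)] at h2
  have h3 : (volume.restrict (Ioc 0 (n : ℝ))).real {t | K ≤ φ (t + a) - φ (t - b)} ≤ c * n := by
    have h4 : (a + b) * φ (n + a) ≤ c * n * K := by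
      calc (a + b) * φ (n + a) ≤ (a + b) * (C * n) := by gcongr
        _ = (a + b) * C * n := by ring
        _ ≤ c * K * n := by gcongr
        _ = c * n * K := by ring
    have h5 := h1.trans (h2.trans h4)
    rw [mul_comm] at h5
    exact le_of_mul_le_mul_right h5 hK
  have hc0 : 0 ≤ c * n := measureReal_nonneg.trans h3
  have h6 : {t | K < φ (t + a) - φ (t - b)} ∩ Icc 0 (n : ℝ) ⊆
      ({t | K ≤ φ (t + a) - φ (t - b)} ∩ Ioc 0 (n : ℝ)) ∪ {0} := by
    rintro t ⟨ht, ht0, htn⟩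
    rcases ht0.lt_or_eq with h | h
    · have ht' : K < φ (t + a) - φ (t - b) := ht
      exact Or.inl ⟨ht'.le, h, htn⟩
    · exact Or.inr h.symm
  refine (measure_mono h6).trans ((measure_union_le _ _).trans ?_)
  rw [Real.volume_singleton, add_zero]
  have h7 : volume ({t | K ≤ φ (t + a) - φ (t - b)} ∩ Ioc 0 (n : ℝ)) ≤
      (volume.restrict (Ioc 0 (n : ℝ))) {t | K ≤ φ (t + a) - φ (t - b)} :=
    Measure.le_restrict_apply _ _
  refine h7.trans ?_
  rw [← ENNReal.ofReal_toReal (measure_ne_top (volume.restrict (Ioc 0 (n : ℝ))) _)]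
  exact ENNReal.ofReal_le_ofReal h3

section Tangent

variable {X : Type*} [NormedAddCommGroup X] [NormedSpace ℝ X] [MeasurableSpace X] [BorelSpace X]
  [SecondCountableTopology X]

/-- A tangent distribution is carried by the limits of the scenery. -/
lemma IsTangentDistribution.ae_mem_closure {θ : ProbabilityMeasure X} {z : X}
    {Q : Measure (ProbabilityMeasure X)} (hQ : IsTangentDistribution (θ : Measure X) z Q) (M : ℝ) :
    ∀ᵐ η ∂Q, η ∈ closure ((fun t => rescPM (θ : Measure X) z t) '' Ici M) := by
  obtain ⟨hQp, T, hT1, hT, hF⟩ := hQ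
  set F := closure ((fun t => rescPM (θ : Measure X) z t) '' Ici M)
  have hFne : F.Nonempty := ⟨_, subset_closure ⟨M, self_mem_Ici, rfl⟩⟩
  set f : BoundedContinuousFunction (ProbabilityMeasure X) ℝ :=
    BoundedContinuousFunction.ofNormedAddCommGroup (fun η => min 1 (infDist η F))
      (by fun_prop) 1 (fun η => by
        rw [Real.norm_of_nonneg (le_min zero_le_one infDist_nonneg)]; exact min_le_left _ _)
  have hf : ∀ η, f η = min 1 (infDist η F) := fun η => rfl
  have h0 : ∀ η, 0 ≤ f η := fun η => le_min zero_le_one infDist_nonneg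
  have h1 : ∫ η, f η ∂Q ≤ 0 := by
    have h2 : Tendsto (fun n => (T n)⁻¹ * max M 0) atTop (𝓝 0) := by
      have := hT.inv_tendsto_atTop.mul_const (max M 0)
      simpa using this
    refine le_of_tendsto_of_tendsto (hF f) h2 (Eventually.of_forall fun n => ?_)
    have hTn : 0 < T n := zero_lt_one.trans_le (hT1 n)
    change (T n)⁻¹ * _ ≤ (T n)⁻¹ * _
    gcongr
    have h3 : ∫ t in Ioc 0 (T n), f (rescPM (θ : Measure X) z t) ≤
        ∫ t in Ioc 0 (T n), (Ioo 0 (max M 0)).indicator (fun _ => (1 : ℝ)) t := by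
      refine integral_mono_of_nonneg (Eventually.of_forall fun t => h0 _) ?_ ?_
      · exact ((integrable_const 1).indicator measurableSet_Ioo)
      · refine (ae_restrict_mem measurableSet_Ioc).mono fun t ht => ?_
        by_cases htM : t < max M 0
        · have hm : t ∈ Ioo 0 (max M 0) := ⟨ht.1, htM⟩
          rw [indicator_of_mem hm]
          exact min_le_left _ _
        · have : rescPM (θ : Measure X) z t ∈ F :=
            subset_closure ⟨t, (le_max_left M 0).trans (not_lt.1 htM), rfl⟩
          change f _ ≤ _
          rw [hf, infDist_zero_of_mem this, min_eq_right zero_le_one]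
          exact indicator_nonneg (fun _ _ => zero_le_one) _
    refine h3.trans ?_
    rw [integral_indicator_const _ measurableSet_Ioo, smul_eq_mul, mul_one]
    rw [measureReal_def]
    refine (ENNReal.toReal_mono (by simp) (Measure.restrict_apply_le _ _)).trans ?_
    rw [Real.volume_Ioo, sub_zero, ENNReal.toReal_ofReal (le_max_right _ _)]
  have h2 : ∫ η, f η ∂Q = 0 := le_antisymm h1 (integral_nonneg h0)
  have hfi : Integrable f Q := f.integrable Q
  have h3 := (integral_eq_zero_iff_of_nonneg h0 hfi).1 h2
  filter_upwards [h3] with η hη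
  have h4 : min 1 (infDist η F) = 0 := hη
  have h5 : infDist η F = 0 := by
    rcases min_choice 1 (infDist η F) with h | h
    · rw [h] at h4; exact absurd h4 one_ne_zero
    · rw [h] at h4; exact h4
  have h6 := (mem_closure_iff_infDist_zero hFne).2 h5
  rwa [isClosed_closure.closure_eq] at h6

lemma IsTangentDistribution.ae_isProd {θ : ProbabilityMeasure (X × X)} (hθ : IsProdPM θ) {z : X × X}
    (hz : InSpt (θ : Measure (X × X)) z)
    {Q : Measure (ProbabilityMeasure (X × X))} (hQ : IsTangentDistribution (θ : Measure (X × X)) z Q) :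
    ∀ᵐ η ∂Q, IsProdPM η := by
  filter_upwards [hQ.ae_mem_closure 0] with η hη
  refine closure_minimal ?_ isClosed_isProdPM hη
  rintro _ ⟨t, _, rfl⟩
  exact hθ.rescPM_isProd (hz t)

/-- Almost every measure of a tangent distribution is a limit of magnifications. -/
lemma IsTangentDistribution.ae_exists_seq {θ : ProbabilityMeasure X} {z : X}
    {Q : Measure (ProbabilityMeasure X)} (hQ : IsTangentDistribution (θ : Measure X) z Q) :
    ∀ᵐ η ∂Q, ∃ t : ℕ → ℝ, (∀ n : ℕ, (n : ℝ) ≤ t n) ∧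
      Tendsto (fun n => rescPM (θ : Measure X) z (t n)) atTop (𝓝 η) := by
  filter_upwards [ae_all_iff.2 fun n : ℕ => hQ.ae_mem_closure n] with η hη
  have h1 : ∀ n : ℕ, ∃ t : ℝ, (n : ℝ) ≤ t ∧ dist η (rescPM (θ : Measure X) z t) < 1 / (n + 1) := by
    intro n
    obtain ⟨_, ⟨t, ht, rfl⟩, hd⟩ := Metric.mem_closure_iff.1 (hη n) (1 / (n + 1)) (by positivity)
    exact ⟨t, ht, hd⟩
  choose t ht hd using h1
  refine ⟨t, ht, ?_⟩
  rw [tendsto_iff_dist_tendsto_zero]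
  refine squeeze_zero (fun n => dist_nonneg) (fun n => ?_) tendsto_one_div_add_atTop_nhds_zero_nat
  rw [dist_comm]; exact (hd n).le

/-- The mean decay rate of a tangent distribution is at most the upper decay rate at the point. -/
lemma IsTangentDistribution.entD_le {θ : ProbabilityMeasure (X × X)} (hθ : IsProdPM θ) {z : X × X}
    (hz : InSpt (θ : Measure (X × X)) z)
    {Q : Measure (ProbabilityMeasure (X × X))} (hQ : IsTangentDistribution (θ : Measure (X × X)) z Q)
    (hspt : ∀ᵐ η : ProbabilityMeasure (X × X) ∂Q, InSpt (η : Measure (X × X)) 0)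
    {s : ℝ} (hs : ∀ ε > 0, ∀ᶠ n : ℕ in atTop, phi (θ : Measure (X × X)).fst z.1 n ≤ (s + ε) * n) :
    entD Q ≤ ENNReal.ofReal s := by
  obtain ⟨hQp, T, hT1, hT, hF⟩ := hQ
  set B : Set (X × X) := Prod.fst ⁻¹' (closedBall (0 : X) ((2 : ℝ) ^ (-(1 : ℝ))))
  have hB : IsClosed B := isClosed_closedBall.preimage continuous_fst
  have hBf : ∀ η : ProbabilityMeasure (X × X), (η : Measure (X × X)).fst.real (closedBall (0 : X) ((2 : ℝ) ^ (-(1 : ℝ)))) =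
      (η : Measure (X × X)).real B := by
    intro η
    rw [measureReal_def, Measure.fst_apply isClosed_closedBall.measurableSet, measureReal_def]
  let δ : ℕ → ℝ := fun k => 1 / ((k : ℝ) + 1)
  have hδ : ∀ k, 0 < δ k := fun k => by positivity
  let w : ℕ → ProbabilityMeasure (X × X) → ℝ := fun k η =>
    ((η.toFiniteMeasure.testAgainstNN (thickenedIndicator (hδ k) B) : ℝ≥0) : ℝ)
  have hwc : ∀ k, Continuous (w k) := fun k =>
    NNReal.continuous_coe.comp (ProbabilityMeasure.continuous_testAgainstNN_eval _)
  have hwlim : ∀ η : ProbabilityMeasure (X × X), Tendsto (fun k => w k η) atTop (𝓝 ((η : Measure (X × X)).real B)) := by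
    intro η
    have h1 := tendsto_lintegral_thickenedIndicator_of_isClosed (μ := (η : Measure (X × X))) hB hδ
      tendsto_one_div_add_atTop_nhds_zero_nat
    have h2 := (ENNReal.tendsto_toReal (measure_ne_top (η : Measure (X × X)) B)).comp h1
    exact h2
  have hwge : ∀ k η, ((η : ProbabilityMeasure (X × X)) : Measure (X × X)).real B ≤ w k η := by
    intro k η
    have h1 := measure_le_lintegral_thickenedIndicator (μ := (η : Measure (X × X))) hB.measurableSet (hδ k)
    exact ENNReal.toReal_mono (by
      refine ne_top_of_le_ne_top ENNReal.one_ne_top ((lintegral_mono (g := fun _ => 1) fun x => ?_).trans (by simp))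
      change ((thickenedIndicator (hδ k) B x : ℝ≥0) : ℝ≥0∞) ≤ 1
      exact_mod_cast thickenedIndicator_le_one (hδ k) B x) h1
  have hw1 : ∀ k η, w k η ≤ 1 := by
    intro k η
    have : (∫⁻ x, (thickenedIndicator (hδ k) B x : ℝ≥0∞) ∂(η : Measure (X × X))) ≤ 1 := by
      refine (lintegral_mono (g := fun _ => 1) fun x => ?_).trans (by simp)
      change ((thickenedIndicator (hδ k) B x : ℝ≥0) : ℝ≥0∞) ≤ 1
      exact_mod_cast thickenedIndicator_le_one (hδ k) B x
    exact ENNReal.toReal_mono ENNReal.one_ne_top this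
  let Fk : ℕ → ProbabilityMeasure (X × X) → ℝ := fun k η => -Real.log (max (w k η) (Real.exp (-k)))
  have hFk0 : ∀ k η, 0 ≤ Fk k η := by
    intro k η
    refine neg_nonneg.2 (Real.log_nonpos ((Real.exp_pos _).le.trans (le_max_right _ _)) (max_le (hw1 k η) ?_))
    exact Real.exp_le_one_iff.2 (by simp)
  have hFkk : ∀ k η, Fk k η ≤ k := by
    intro k η
    have : -(k : ℝ) ≤ Real.log (max (w k η) (Real.exp (-k))) := by
      rw [Real.le_log_iff_exp_le (lt_max_of_lt_right (Real.exp_pos _))]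
      exact le_max_right _ _
    simp only [Fk]; linarith
  have hFkc : ∀ k, Continuous (Fk k) := by
    intro k
    refine (Continuous.log ((hwc k).max continuous_const) fun η => ?_).neg
    exact (lt_max_of_lt_right (Real.exp_pos _)).ne'
  have hFkle : ∀ k (η : ProbabilityMeasure (X × X)), InSpt (η : Measure (X × X)) 0 →
      Fk k η ≤ phi (η : Measure (X × X)).fst 0 1 := by
    intro k η hη
    have h1 : InSpt (η : Measure (X × X)).fst 0 := hη.fst
    rw [phi, hBf]
    refine neg_le_neg (Real.log_le_log ?_ ((hwge k η).trans (le_max_left _ _)))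
    rw [← hBf]; exact h1.real_pos 1
  have hFklim : ∀ η : ProbabilityMeasure (X × X), InSpt (η : Measure (X × X)) 0 →
      Tendsto (fun k => Fk k η) atTop (𝓝 (phi (η : Measure (X × X)).fst 0 1)) := by
    intro η hη
    have h1 : InSpt (η : Measure (X × X)).fst 0 := hη.fst
    have h2 : 0 < (η : Measure (X × X)).real B := by rw [← hBf]; exact h1.real_pos 1
    rw [phi, hBf]
    refine (Tendsto.log ?_ h2.ne').neg
    have h3 : Tendsto (fun k : ℕ => Real.exp (-(k : ℝ))) atTop (𝓝 0) :=
      Real.tendsto_exp_neg_atTop_nhds_zero.comp tendsto_natCast_atTop_atTop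
    have := (hwlim η).max h3
    rwa [max_eq_left h2.le] at this
  have hθspt : InSpt (θ : Measure (X × X)).fst z.1 := hz.fst
  set φ := phi (θ : Measure (X × X)).fst z.1
  have hφm : Monotone φ := phi_mono hθspt
  have hφ0 : ∀ t, 0 ≤ φ t := fun t => phi_nonneg _ _ _
  have hFint : ∀ k, ∫ η, Fk k η ∂Q ≤ s := by
    intro k
    refine le_of_forall_pos_le_add fun ε hε => ?_
    set f : BoundedContinuousFunction (ProbabilityMeasure (X × X)) ℝ :=
      BoundedContinuousFunction.ofNormedAddCommGroup (Fk k) (hFkc k) k (fun η => by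
        rw [Real.norm_of_nonneg (hFk0 k η)]; exact hFkk k η)
    have h1 := hF f
    have h2 : Tendsto (fun n => (s + ε) * (1 + 2 * (T n)⁻¹)) atTop (𝓝 (s + ε)) := by
      have := ((hT.inv_tendsto_atTop.const_mul 2).const_add 1).const_mul (s + ε)
      simpa using this
    refine le_of_tendsto_of_tendsto h1 h2 ?_
    obtain ⟨N, hN⟩ := eventually_atTop.1 (hs ε hε)
    filter_upwards [hT.eventually_ge_atTop N] with n hn
    have hTn : 0 < T n := zero_lt_one.trans_le (hT1 n)
    have h3 : ∫ t in Ioc 0 (T n), f (rescPM (θ : Measure (X × X)) z t) ≤ φ (T n + 1) := by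
      have h4 := integral_osc_le hφm hφ0 (a := 1) (b := 0) (T := T n) zero_le_one le_rfl
      rw [intervalIntegral.integral_of_le hTn.le] at h4
      simp only [add_zero, one_mul, sub_zero] at h4
      refine le_trans (integral_mono_of_nonneg (Eventually.of_forall fun t => hFk0 k _) ?_ ?_) h4
      · refine (intervalIntegrable_iff_integrableOn_Ioc_of_le hTn.le).1 ?_
        exact (Monotone.intervalIntegrable fun s t h => hφm (by linarith)).sub hφm.intervalIntegrable
      · refine Eventually.of_forall fun t => ?_
        have h5 := hFkle k _ (hz.rescPM t)
        rw [hθ.rescPM_fst (hz t), phi_rescPM hθspt _ zero_le_one] at h5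
        exact h5
    have h5 : φ (T n + 1) ≤ (s + ε) * (T n + 2) := by
      have h6 : T n + 1 ≤ (⌈T n⌉₊ + 1 : ℕ) := by push_cast; linarith [Nat.le_ceil (T n)]
      have h7 : N ≤ ⌈T n⌉₊ + 1 := by
        have : (N : ℝ) ≤ (⌈T n⌉₊ + 1 : ℕ) := by push_cast; linarith [Nat.le_ceil (T n)]
        exact_mod_cast this
      have h8 := hN _ h7
      have h9 := hφ0 (⌈T n⌉₊ + 1 : ℕ)
      have h10 : ((⌈T n⌉₊ + 1 : ℕ) : ℝ) ≤ T n + 2 := by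
        push_cast; linarith [Nat.ceil_lt_add_one hTn.le]
      have h11 : 0 ≤ s + ε := by
        by_contra hneg
        have : (s + ε) * ((⌈T n⌉₊ + 1 : ℕ) : ℝ) < 0 := mul_neg_of_neg_of_pos (not_le.1 hneg) (by positivity)
        linarith
      calc φ (T n + 1) ≤ φ (⌈T n⌉₊ + 1 : ℕ) := hφm h6
        _ ≤ _ := h8
        _ ≤ _ := by gcongr
    calc (T n)⁻¹ * ∫ t in Ioc 0 (T n), f (rescPM (θ : Measure (X × X)) z t) ≤ (T n)⁻¹ * ((s + ε) * (T n + 2)) := by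
          gcongr; exact h3.trans h5
      _ = (s + ε) * (1 + 2 * (T n)⁻¹) := by field_simp
  have h1 : entD Q ≤ ∫⁻ η, liminf (fun k => ENNReal.ofReal (Fk k η)) atTop ∂Q := by
    refine lintegral_mono_ae ?_
    filter_upwards [hspt] with η hη
    exact ((ENNReal.continuous_ofReal.tendsto _).comp (hFklim η hη)).liminf_eq.ge
  refine h1.trans ((lintegral_liminf_le fun k => (hFkc k).measurable.ennreal_ofReal).trans ?_)
  refine liminf_le_of_frequently_le' (Frequently.of_forall fun k => ?_)
  have hi : Integrable (Fk k) Q := Integrable.of_bound (hFkc k).measurable.aestronglyMeasurable k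
    (Eventually.of_forall fun η => by rw [Real.norm_of_nonneg (hFk0 k η)]; exact hFkk k η)
  rw [← ofReal_integral_eq_lintegral_ofReal hi (Eventually.of_forall fun η => hFk0 k η)]
  exact ENNReal.ofReal_le_ofReal (hFint k)

end Tangent

/-! ### Hellinger affinity along refining partitions -/

section Hellinger

variable {Z ι : Type*} [MeasurableSpace Z] [Countable ι] [MeasurableSpace ι]
  [DiscreteMeasurableSpace ι]

/-- Borel–Cantelli: nonnegative functions with bounded integrals grow subexponentially a.e. -/
lemma ae_le_exp_of_lintegral_le {θ : Measure Z} {F : ℕ → Z → ℝ≥0∞} (hF : ∀ n, Measurable (F n))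
    {C : ℝ≥0∞} (hC : C ≠ ∞) (h : ∀ n, ∫⁻ z, F n z ∂θ ≤ C) :
    ∀ᵐ z ∂θ, ∀ ε > (0 : ℝ), ∀ᶠ n : ℕ in atTop, F n z ≤ ENNReal.ofReal (Real.exp (ε * n)) := by
  have key : ∀ ε > (0 : ℝ), ∀ᵐ z ∂θ, ∀ᶠ n : ℕ in atTop, F n z ≤ ENNReal.ofReal (Real.exp (ε * n)) := by
    intro ε hε
    have hr : Real.exp (-ε) < 1 := by
      rw [← Real.exp_zero]; exact Real.exp_lt_exp.2 (by linarith)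
    have h1 : ∑' n : ℕ, θ {z | ENNReal.ofReal (Real.exp (ε * n)) ≤ F n z} ≠ ∞ := by
      have h2 : ∀ n : ℕ, θ {z | ENNReal.ofReal (Real.exp (ε * n)) ≤ F n z} ≤
          C * ENNReal.ofReal (Real.exp (-ε)) ^ n := by
        intro n
        have hp : 0 < Real.exp (ε * n) := Real.exp_pos _
        refine (meas_ge_le_lintegral_div (hF n).aemeasurable (ENNReal.ofReal_pos.2 hp).ne'
          ENNReal.ofReal_ne_top).trans ?_
        rw [div_eq_mul_inv, ← ENNReal.ofReal_inv_of_pos hp, ← Real.exp_neg,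
          ← ENNReal.ofReal_pow (Real.exp_pos _).le, ← Real.exp_nat_mul]
        refine mul_le_mul' (h n) (le_of_eq ?_)
        congr 2; ring
      refine ne_top_of_le_ne_top ?_ (ENNReal.tsum_le_tsum h2)
      rw [ENNReal.tsum_mul_left, ENNReal.tsum_geometric]
      refine ENNReal.mul_ne_top hC (ENNReal.inv_ne_top.2 ?_)
      exact (tsub_pos_of_lt (by rw [← ENNReal.ofReal_one]; exact (ENNReal.ofReal_lt_ofReal_iff one_pos).2 hr)).ne'
    filter_upwards [ae_eventually_notMem h1] with z hz
    filter_upwards [hz] with n hn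
    exact (not_le.1 hn).le
  have h2 : ∀ᵐ z ∂θ, ∀ m : ℕ, ∀ᶠ n : ℕ in atTop,
      F n z ≤ ENNReal.ofReal (Real.exp ((1 / ((m : ℝ) + 1)) * n)) :=
    ae_all_iff.2 fun m => key _ (by positivity)
  filter_upwards [h2] with z hz ε hε
  obtain ⟨m, hm⟩ := exists_nat_one_div_lt hε
  filter_upwards [hz m] with n hn
  refine hn.trans (ENNReal.ofReal_le_ofReal (Real.exp_le_exp.2 ?_))
  gcongr

lemma lintegral_code (θ : Measure Z) {c : Z → ι} (hc : Measurable c) (F : ι → ℝ≥0∞) :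
    ∫⁻ z, F (c z) ∂θ = ∑' j, F j * θ (c ⁻¹' {j}) := by
  rw [← lintegral_map (Measurable.of_discrete : Measurable F) hc, lintegral_countable']
  congr 1; ext j
  rw [Measure.map_apply hc (measurableSet_singleton j)]

lemma lintegral_code_mul (θ : Measure Z) {c : Z → ι} (hc : Measurable c) (F : ι → ℝ≥0∞)
    {G : Z → ℝ≥0∞} (hG : Measurable G) :
    ∫⁻ z, F (c z) * G z ∂θ = ∑' j, F j * ∫⁻ z in c ⁻¹' {j}, G z ∂θ := by
  have h1 : ∫⁻ z, (F ∘ c) z ∂(θ.withDensity G) = _ := lintegral_code (θ.withDensity G) hc F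
  rw [lintegral_withDensity_eq_lintegral_mul _ hG ((Measurable.of_discrete : Measurable F).comp hc)] at h1
  simp only [Pi.mul_apply, Function.comp_apply, mul_comm (G _)] at h1
  rw [h1]
  congr 1; ext j
  rw [withDensity_apply _ (hc (measurableSet_singleton j))]

/-- Multiplying by a density `G` normalised by its averages over the cells of a partition does not
increase integrals of functions constant on cells. -/
lemma lintegral_cond_le (θ : Measure Z) {c : Z → ι} (hc : Measurable c) (F : ι → ℝ≥0∞)
    {G : Z → ℝ≥0∞} (hG : Measurable G) :
    ∫⁻ z, F (c z) * ((θ (c ⁻¹' {c z}) / ∫⁻ y in c ⁻¹' {c z}, G y ∂θ) * G z) ∂θ ≤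
      ∫⁻ z, F (c z) ∂θ := by
  have h1 := lintegral_code_mul θ hc
    (fun j => F j * (θ (c ⁻¹' {j}) / ∫⁻ y in c ⁻¹' {j}, G y ∂θ)) hG
  simp only [mul_assoc] at h1
  rw [h1, lintegral_code θ hc]
  refine ENNReal.tsum_le_tsum fun j => ?_
  gcongr
  rw [mul_comm]
  exact ENNReal.mul_div_le

/-- The square root of the ratio of the masses of a cell. -/
noncomputable def sqDens (θ₁ θ₂ : Measure Z) (c : Z → ι) (j : ι) : ℝ≥0∞ :=
  ENNReal.ofReal (√(θ₂.real (c ⁻¹' {j}) / θ₁.real (c ⁻¹' {j})))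

/-- The unnormalised Hellinger affinity of two measures inside a cell of the partition by `c`, with
respect to the finer partition by `c'`. -/
noncomputable def affin (θ₁ θ₂ : Measure Z) (c c' : Z → ι) (j : ι) : ℝ≥0∞ :=
  ∫⁻ z in c ⁻¹' {j}, sqDens θ₁ θ₂ c' (c' z) ∂θ₁

/-- The Hellinger affinity of the normalised restrictions to the cell of `z`. -/
noncomputable def hell (θ₁ θ₂ : Measure Z) (c c' : Z → ι) (z : Z) : ℝ :=
  (affin θ₁ θ₂ c c' (c z)).toReal / √(θ₁.real (c ⁻¹' {c z}) * θ₂.real (c ⁻¹' {c z}))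

variable {θ₁ θ₂ : Measure Z} [IsFiniteMeasure θ₁] [IsFiniteMeasure θ₂]

lemma lintegral_sqDens_le {c : Z → ι} (hc : Measurable c) (S : Set ι) :
    ∫⁻ z in c ⁻¹' S, sqDens θ₁ θ₂ c (c z) ∂θ₁ ≤
      ENNReal.ofReal (√(θ₁.real (c ⁻¹' S) * θ₂.real (c ⁻¹' S))) := by
  have hS : MeasurableSet (c ⁻¹' S) := hc (MeasurableSet.of_discrete)
  have hm : Measurable fun z => sqDens θ₁ θ₂ c (c z) :=
    (Measurable.of_discrete : Measurable (sqDens θ₁ θ₂ c)).comp hc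
  have h1 := ENNReal.lintegral_mul_le_Lp_mul_Lq (θ₁.restrict (c ⁻¹' S)) Real.HolderConjugate.two_two
    hm.aemeasurable (aemeasurable_const (b := (1 : ℝ≥0∞)))
  simp only [Pi.mul_apply, mul_one, ENNReal.one_rpow, lintegral_const,
    Measure.restrict_apply_univ, one_mul] at h1
  refine h1.trans ?_
  have h2 : ∫⁻ z in c ⁻¹' S, sqDens θ₁ θ₂ c (c z) ^ (2 : ℝ) ∂θ₁ ≤ θ₂ (c ⁻¹' S) := by
    rw [lintegral_code (θ₁.restrict (c ⁻¹' S)) hc (fun j => sqDens θ₁ θ₂ c j ^ (2 : ℝ))]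
    have h3 : θ₂ (c ⁻¹' S) = ∑' j, (θ₂.restrict (c ⁻¹' S)) (c ⁻¹' {j}) := by
      have := lintegral_code (θ₂.restrict (c ⁻¹' S)) hc (fun _ => 1)
      simpa using this
    rw [h3]
    refine ENNReal.tsum_le_tsum fun j => ?_
    rw [Measure.restrict_apply (hc (measurableSet_singleton j)),
      Measure.restrict_apply (hc (measurableSet_singleton j))]
    by_cases hj : j ∈ S
    · have h4 : c ⁻¹' {j} ∩ c ⁻¹' S = c ⁻¹' {j} := by
        rw [← preimage_inter, inter_eq_left.2 (singleton_subset_iff.2 hj)]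
      rw [h4, sqDens, ENNReal.ofReal_rpow_of_nonneg (Real.sqrt_nonneg _) (by norm_num),
        Real.rpow_two, Real.sq_sqrt (by positivity)]
      rw [← ofReal_measureReal (μ := θ₁), ← ENNReal.ofReal_mul (by positivity),
        ← ofReal_measureReal (μ := θ₂)]
      refine ENNReal.ofReal_le_ofReal ?_
      by_cases h5 : θ₁.real (c ⁻¹' {j}) = 0
      · rw [h5]; simp
      · rw [div_mul_cancel₀ _ h5]
    · have h4 : c ⁻¹' {j} ∩ c ⁻¹' S = ∅ := by
        rw [← preimage_inter, singleton_inter_eq_empty.2 hj, preimage_empty]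
      rw [h4]; simp
  calc (∫⁻ z in c ⁻¹' S, sqDens θ₁ θ₂ c (c z) ^ (2 : ℝ) ∂θ₁) ^ ((1 : ℝ) / 2) * θ₁ (c ⁻¹' S) ^ ((1 : ℝ) / 2)
      ≤ (θ₂ (c ⁻¹' S)) ^ ((1 : ℝ) / 2) * θ₁ (c ⁻¹' S) ^ ((1 : ℝ) / 2) := by gcongr
    _ = ENNReal.ofReal (√(θ₁.real (c ⁻¹' S) * θ₂.real (c ⁻¹' S))) := by
      rw [← ofReal_measureReal (μ := θ₁), ← ofReal_measureReal (μ := θ₂),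
        ENNReal.ofReal_rpow_of_nonneg measureReal_nonneg (by norm_num),
        ENNReal.ofReal_rpow_of_nonneg measureReal_nonneg (by norm_num),
        ← ENNReal.ofReal_mul (by positivity), ← Real.sqrt_eq_rpow, ← Real.sqrt_eq_rpow,
        Real.sqrt_mul measureReal_nonneg, mul_comm]

lemma affin_le {c c' : Z → ι} (hc' : Measurable c') {κ : ι → ι} (hκ : ∀ z, c z = κ (c' z)) (j : ι) :
    affin θ₁ θ₂ c c' j ≤ ENNReal.ofReal (√(θ₁.real (c ⁻¹' {j}) * θ₂.real (c ⁻¹' {j}))) := by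
  have h : c ⁻¹' {j} = c' ⁻¹' (κ ⁻¹' {j}) := by ext z; simp [hκ]
  rw [affin, h]
  exact lintegral_sqDens_le hc' _

lemma sqrt_affinity_bound {p q : ℝ} (hp : 0 ≤ p) (hp1 : p ≤ 1) (hq : 0 ≤ q) (hq1 : q ≤ 1) :
    (p - q) ^ 2 ≤ 8 * (1 - (√(p * q) + √((1 - p) * (1 - q)))) := by
  rw [Real.sqrt_mul hp, Real.sqrt_mul (by linarith)]
  set a := √p
  set b := √q
  set x := √(1 - p)
  set y := √(1 - q)
  have ha : a ^ 2 = p := Real.sq_sqrt hp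
  have hb : b ^ 2 = q := Real.sq_sqrt hq
  have hx : x ^ 2 = 1 - p := Real.sq_sqrt (by linarith)
  have hy : y ^ 2 = 1 - q := Real.sq_sqrt (by linarith)
  have h1 : 1 - (a * b + x * y) = ((a - b) ^ 2 + (x - y) ^ 2) / 2 := by nlinarith
  have ha0 : 0 ≤ a := Real.sqrt_nonneg _
  have hb0 : 0 ≤ b := Real.sqrt_nonneg _
  have h2 : (a + b) ^ 2 ≤ 4 := by nlinarith [sq_nonneg (a - b)]
  have h3 : (p - q) ^ 2 = (a - b) ^ 2 * (a + b) ^ 2 := by rw [← ha, ← hb]; ring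
  rw [h1, h3]
  nlinarith [sq_nonneg (a - b), sq_nonneg (x - y)]

/-- The Hellinger affinity controls the total variation distance on the finer partition. -/
lemma sq_sub_le_hell {c c' : Z → ι} (hc' : Measurable c') {κ : ι → ι}
    (hκ : ∀ z, c z = κ (c' z)) {z : Z} (h1 : θ₁.real (c ⁻¹' {c z}) ≠ 0)
    (h2 : θ₂.real (c ⁻¹' {c z}) ≠ 0) (S : Set ι) :
    (θ₁.real (c ⁻¹' {c z} ∩ c' ⁻¹' S) / θ₁.real (c ⁻¹' {c z}) -
      θ₂.real (c ⁻¹' {c z} ∩ c' ⁻¹' S) / θ₂.real (c ⁻¹' {c z})) ^ 2 ≤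
      8 * (1 - hell θ₁ θ₂ c c' z) := by
  set D := c ⁻¹' {c z}
  have hD : D = c' ⁻¹' (κ ⁻¹' {c z}) := by ext y; simp [D, hκ]
  set x := θ₁.real D
  set y := θ₂.real D
  have hx : 0 < x := lt_of_le_of_ne measureReal_nonneg (Ne.symm h1)
  have hy : 0 < y := lt_of_le_of_ne measureReal_nonneg (Ne.symm h2)
  have hA : MeasurableSet (c' ⁻¹' S) := hc' MeasurableSet.of_discrete
  have e1 : θ₁.real (D ∩ c' ⁻¹' S) + θ₁.real (D ∩ c' ⁻¹' Sᶜ) = x := by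
    rw [preimage_compl, ← sdiff_eq]; exact measureReal_inter_add_sdiff hA
  have e2 : θ₂.real (D ∩ c' ⁻¹' S) + θ₂.real (D ∩ c' ⁻¹' Sᶜ) = y := by
    rw [preimage_compl, ← sdiff_eq]; exact measureReal_inter_add_sdiff hA
  set P := θ₁.real (D ∩ c' ⁻¹' S)
  set P' := θ₁.real (D ∩ c' ⁻¹' Sᶜ)
  set Q := θ₂.real (D ∩ c' ⁻¹' S)
  set Q' := θ₂.real (D ∩ c' ⁻¹' Sᶜ)
  have hP : 0 ≤ P := measureReal_nonneg
  have hP' : 0 ≤ P' := measureReal_nonneg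
  have hQ : 0 ≤ Q := measureReal_nonneg
  have hQ' : 0 ≤ Q' := measureReal_nonneg
  have hJ : (affin θ₁ θ₂ c c' (c z)).toReal ≤ √(P * Q) + √(P' * Q') := by
    refine ENNReal.toReal_le_of_le_ofReal (by positivity) ?_
    rw [ENNReal.ofReal_add (by positivity) (by positivity), affin]
    change ∫⁻ z in D, _ ∂θ₁ ≤ _
    rw [← lintegral_inter_add_sdiff _ D hA]
    have i1 := lintegral_sqDens_le (θ₁ := θ₁) (θ₂ := θ₂) hc' (κ ⁻¹' {c z} ∩ S)
    have i2 := lintegral_sqDens_le (θ₁ := θ₁) (θ₂ := θ₂) hc' (κ ⁻¹' {c z} ∩ Sᶜ)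
    rw [preimage_inter, ← hD] at i1 i2
    rw [sdiff_eq, ← preimage_compl]
    exact add_le_add i1 i2
  have hs := sqrt_affinity_bound (p := P / x) (q := Q / y) (by positivity)
    ((div_le_one hx).2 (by linarith)) (by positivity) ((div_le_one hy).2 (by linarith))
  refine hs.trans ?_
  have e3 : 1 - P / x = P' / x := by field_simp; linarith
  have e4 : 1 - Q / y = Q' / y := by field_simp; linarith
  have h3 : hell θ₁ θ₂ c c' z ≤ √(P / x * (Q / y)) + √((1 - P / x) * (1 - Q / y)) := by
    rw [e3, e4, div_mul_div_comm, div_mul_div_comm, Real.sqrt_div (by positivity),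
      Real.sqrt_div (by positivity), ← add_div, hell]
    exact div_le_div_of_nonneg_right hJ (Real.sqrt_nonneg _)
  linarith

lemma hell_le_one {c c' : Z → ι} (hc' : Measurable c') {κ : ι → ι}
    (hκ : ∀ z, c z = κ (c' z)) (z : Z) : hell θ₁ θ₂ c c' z ≤ 1 :=
  div_le_one_of_le₀ (ENNReal.toReal_le_of_le_ofReal (Real.sqrt_nonneg _) (affin_le hc' hκ _))
    (Real.sqrt_nonneg _)

/-- The one-step martingale ratio. -/
noncomputable def hellR (θ₁ θ₂ : Measure Z) (c c' : Z → ι) (z : Z) : ℝ≥0∞ :=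
  (θ₁ (c ⁻¹' {c z}) / affin θ₁ θ₂ c c' (c z)) * sqDens θ₁ θ₂ c' (c' z)

/-- The products of the normalised square root densities form a supermartingale: their integrals stay
bounded by the total mass. -/
lemma hellR_prod_aux {c : ℕ → Z → ι} (hc : ∀ n, Measurable (c n)) {κ : ℕ → ι → ι}
    (hκ : ∀ n z, c n z = κ n (c (n + 1) z)) (N : ℕ) :
    (∃ F : ι → ℝ≥0∞, ∀ z, ∏ n ∈ Finset.range N, hellR θ₁ θ₂ (c n) (c (n + 1)) z = F (c N z)) ∧
    ∫⁻ z, ∏ n ∈ Finset.range N, hellR θ₁ θ₂ (c n) (c (n + 1)) z ∂θ₁ ≤ θ₁ univ := by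
  induction N with
  | zero => exact ⟨⟨fun _ => 1, fun z => by simp⟩, by simp⟩
  | succ N ih =>
    obtain ⟨⟨F, hF⟩, hI⟩ := ih
    simp only [Finset.prod_range_succ, hF] at hI ⊢
    refine ⟨⟨fun j => F (κ N j) * ((θ₁ (c N ⁻¹' {κ N j}) / affin θ₁ θ₂ (c N) (c (N + 1)) (κ N j)) *
      sqDens θ₁ θ₂ (c (N + 1)) j), fun z => by simp only [hellR, ← hκ]⟩, ?_⟩
    exact (lintegral_cond_le θ₁ (hc N) F
      ((Measurable.of_discrete : Measurable (sqDens θ₁ θ₂ (c (N + 1)))).comp (hc (N + 1)))).trans hI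

lemma ae_hellR_prod_le {c : ℕ → Z → ι} (hc : ∀ n, Measurable (c n)) {κ : ℕ → ι → ι}
    (hκ : ∀ n z, c n z = κ n (c (n + 1) z)) :
    ∀ᵐ z ∂θ₁, ∀ ε > (0 : ℝ), ∀ᶠ N : ℕ in atTop,
      ∏ n ∈ Finset.range N, hellR θ₁ θ₂ (c n) (c (n + 1)) z ≤ ENNReal.ofReal (Real.exp (ε * N)) := by
  refine ae_le_exp_of_lintegral_le (fun N => ?_) (measure_ne_top θ₁ univ)
    fun N => (hellR_prod_aux (θ₂ := θ₂) hc hκ N).2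
  obtain ⟨F, hF⟩ := (hellR_prod_aux (θ₁ := θ₁) (θ₂ := θ₂) hc hκ N).1
  simp only [hF]
  exact (Measurable.of_discrete : Measurable F).comp (hc N)

/-- Along refining partitions, the sum of the Hellinger distances between the two measures inside the
cells of a point is controlled by the decay of the ratio of the masses of these cells, up to a
sublinear error. -/
lemma ae_sum_hell_le {c : ℕ → Z → ι} (hc : ∀ n, Measurable (c n)) {κ : ℕ → ι → ι}
    (hκ : ∀ n z, c n z = κ n (c (n + 1) z)) :
    ∀ᵐ z ∂θ₁, (∀ n, 0 < θ₁.real (c n ⁻¹' {c n z})) → (∀ n, 0 < θ₂.real (c n ⁻¹' {c n z})) →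
      ∀ ε > (0 : ℝ), ∀ᶠ N : ℕ in atTop,
        ∑ n ∈ Finset.range N, (1 - hell θ₁ θ₂ (c n) (c (n + 1)) z) ≤
          ε * N + (Real.log (θ₂.real (c 0 ⁻¹' {c 0 z}) / θ₁.real (c 0 ⁻¹' {c 0 z}))) / 2
            - (Real.log (θ₂.real (c N ⁻¹' {c N z}) / θ₁.real (c N ⁻¹' {c N z}))) / 2 := by
  filter_upwards [ae_hellR_prod_le (θ₁ := θ₁) (θ₂ := θ₂) hc hκ] with z hz h1 h2 ε hε
  filter_upwards [hz ε hε] with N hN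
  set x : ℕ → ℝ := fun n => θ₁.real (c n ⁻¹' {c n z})
  set y : ℕ → ℝ := fun n => θ₂.real (c n ⁻¹' {c n z})
  set J : ℕ → ℝ := fun n => (affin θ₁ θ₂ (c n) (c (n + 1)) (c n z)).toReal
  have hJt : ∀ n, affin θ₁ θ₂ (c n) (c (n + 1)) (c n z) ≠ ∞ := fun n =>
    ne_top_of_le_ne_top ENNReal.ofReal_ne_top (affin_le (hc _) (hκ n) _)
  have hJpos : ∀ n, 0 < J n := by
    intro n
    refine ENNReal.toReal_pos ?_ (hJt n)
    have h3 : c (n + 1) ⁻¹' {c (n + 1) z} ⊆ c n ⁻¹' {c n z} := by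
      intro w hw
      have : c (n + 1) w = c (n + 1) z := hw
      change c n w = c n z
      rw [hκ, hκ n z, this]
    have h4 : ∫⁻ w in c (n + 1) ⁻¹' {c (n + 1) z}, sqDens θ₁ θ₂ (c (n + 1)) (c (n + 1) w) ∂θ₁ =
        sqDens θ₁ θ₂ (c (n + 1)) (c (n + 1) z) * θ₁ (c (n + 1) ⁻¹' {c (n + 1) z}) := by
      rw [← setLIntegral_const]
      refine setLIntegral_congr_fun (hc _ (measurableSet_singleton _)) fun w hw => ?_
      have : c (n + 1) w = c (n + 1) z := hw
      simp only [this]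
    have h5 : affin θ₁ θ₂ (c n) (c (n + 1)) (c n z) ≥
        sqDens θ₁ θ₂ (c (n + 1)) (c (n + 1) z) * θ₁ (c (n + 1) ⁻¹' {c (n + 1) z}) := by
      rw [← h4]; exact lintegral_mono_set h3
    intro h0
    rw [h0] at h5
    rcases mul_eq_zero.1 (le_antisymm h5 (zero_le)) with h | h
    · rw [sqDens, ENNReal.ofReal_eq_zero] at h
      exact absurd h (not_le.2 (Real.sqrt_pos.2 (div_pos (h2 _) (h1 _))))
    · exact (h1 (n + 1)).ne' (by rw [measureReal_def, h, ENNReal.toReal_zero])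
  have hR : ∀ n, hellR θ₁ θ₂ (c n) (c (n + 1)) z =
      ENNReal.ofReal (x n / J n * √(y (n + 1) / x (n + 1))) := by
    intro n
    rw [hellR, sqDens, ENNReal.ofReal_mul (div_nonneg (h1 n).le (hJpos n).le),
      ENNReal.ofReal_div_of_pos (hJpos n), ofReal_measureReal, ENNReal.ofReal_toReal (hJt n)]
  have hRp : ∀ n, 0 < x n / J n * √(y (n + 1) / x (n + 1)) := fun n =>
    mul_pos (div_pos (h1 n) (hJpos n)) (Real.sqrt_pos.2 (div_pos (h2 _) (h1 _)))
  simp only [hR] at hN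
  rw [← ENNReal.ofReal_prod_of_nonneg fun n _ => (hRp n).le,
    ENNReal.ofReal_le_ofReal_iff (Real.exp_pos _).le] at hN
  have hlog := Real.log_le_log (Finset.prod_pos fun n _ => hRp n) hN
  rw [Real.log_exp, Real.log_prod fun n _ => (hRp n).ne'] at hlog
  have hterm : ∀ n, 1 - hell θ₁ θ₂ (c n) (c (n + 1)) z ≤ Real.log (x n / J n * √(y (n + 1) / x (n + 1)))
      - (Real.log (y (n + 1) / x (n + 1)) / 2 - Real.log (y n / x n) / 2) := by
    intro n
    have hxy : 0 < √(x n * y n) := Real.sqrt_pos.2 (mul_pos (h1 n) (h2 n))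
    have h3 : Real.log (hell θ₁ θ₂ (c n) (c (n + 1)) z) ≤ hell θ₁ θ₂ (c n) (c (n + 1)) z - 1 :=
      Real.log_le_sub_one_of_pos (div_pos (hJpos n) hxy)
    have h4 : Real.log (hell θ₁ θ₂ (c n) (c (n + 1)) z) =
        Real.log (J n) - (Real.log (x n) + Real.log (y n)) / 2 := by
      change Real.log (J n / √(x n * y n)) = _
      rw [Real.log_div (hJpos n).ne' hxy.ne', Real.log_sqrt (mul_pos (h1 n) (h2 n)).le,
        Real.log_mul (h1 n).ne' (h2 n).ne']
    have h5 : Real.log (x n / J n * √(y (n + 1) / x (n + 1))) =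
        Real.log (x n) - Real.log (J n) + Real.log (y (n + 1) / x (n + 1)) / 2 := by
      rw [Real.log_mul (div_pos (h1 n) (hJpos n)).ne' (Real.sqrt_pos.2 (div_pos (h2 _) (h1 _))).ne',
        Real.log_div (h1 n).ne' (hJpos n).ne', Real.log_sqrt (div_pos (h2 _) (h1 _)).le]
    have h6 : Real.log (y n / x n) = Real.log (y n) - Real.log (x n) :=
      Real.log_div (h2 n).ne' (h1 n).ne'
    rw [h5, h6]; linarith
  refine (Finset.sum_le_sum fun n _ => hterm n).trans ?_
  rw [Finset.sum_sub_distrib, Finset.sum_range_sub (fun n => Real.log (y n / x n) / 2)]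
  change _ - (Real.log (y N / x N) / 2 - Real.log (y 0 / x 0) / 2) ≤
    ε * N + Real.log (y 0 / x 0) / 2 - Real.log (y N / x N) / 2
  linarith

end Hellinger

/-! ### Shifted dyadic grids -/

section Grid

variable {d : ℕ}

/-- The index of the level-`n` dyadic cube containing `z`, in the grid whose `i`-th coordinate is
shifted by `1/3` when `σ i` is true. -/
noncomputable def gcode (σ : Fin d → Bool) (n : ℕ) (z : Euc d) : Fin d → ℤ :=
  fun i => ⌊(2 : ℝ) ^ n * (z i - if σ i then 1 / 3 else 0)⌋

/-- The level-`n` cube of the grid `σ` containing `z`. -/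
def gcell (σ : Fin d → Bool) (n : ℕ) (z : Euc d) : Set (Euc d) :=
  gcode σ n ⁻¹' {gcode σ n z}

lemma measurable_gcode (σ : Fin d → Bool) (n : ℕ) : Measurable (gcode σ n) := by
  refine measurable_pi_iff.2 fun i => Int.measurable_floor.comp ?_
  exact ((measurable_pi_apply i).sub measurable_const).const_mul _

lemma measurableSet_gcell (σ : Fin d → Bool) (n : ℕ) (z : Euc d) : MeasurableSet (gcell σ n z) :=
  measurable_gcode σ n (measurableSet_singleton _)

lemma mem_gcell_self (σ : Fin d → Bool) (n : ℕ) (z : Euc d) : z ∈ gcell σ n z := rfl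

lemma gcode_div (σ : Fin d → Bool) (n k : ℕ) (z : Euc d) :
    gcode σ n z = (fun j : Fin d → ℤ => fun i => j i / ((2 ^ k : ℕ) : ℤ)) (gcode σ (n + k) z) := by
  ext i
  simp only [gcode]
  rw [← Int.floor_div_natCast]
  congr 1
  push_cast
  rw [pow_add]
  field_simp

lemma gcell_anti (σ : Fin d → Bool) {n m : ℕ} (h : n ≤ m) (z : Euc d) :
    gcell σ m z ⊆ gcell σ n z := by
  obtain ⟨k, rfl⟩ := Nat.exists_eq_add_of_le h
  intro y hy
  have : gcode σ (n + k) y = gcode σ (n + k) z := hy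
  change gcode σ n y = gcode σ n z
  rw [gcode_div σ n k y, gcode_div σ n k z, this]

lemma two_rpow_neg_nat (n : ℕ) : (2 : ℝ) ^ (-(n : ℝ)) = ((2 : ℝ) ^ n)⁻¹ := by
  rw [Real.rpow_neg two_pos.le, Real.rpow_natCast]

lemma dist_le_of_gcode_eq {σ : Fin d → Bool} {n : ℕ} {y z : Euc d} (h : gcode σ n y = gcode σ n z) :
    dist y z ≤ (2 : ℝ) ^ (-(n : ℝ)) := by
  rw [two_rpow_neg_nat]
  refine (dist_pi_le_iff (by positivity)).2 fun i => ?_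
  have h1 := congrFun h i
  simp only [gcode] at h1
  have h2 := Int.abs_sub_lt_one_of_floor_eq_floor h1
  rw [← mul_sub, abs_mul, abs_of_pos (by positivity : (0 : ℝ) < 2 ^ n), sub_sub_sub_cancel_right] at h2
  rw [Real.dist_eq, inv_eq_one_div, le_div_iff₀ (by positivity), mul_comm]
  exact h2.le

lemma gcell_subset_closedBall (σ : Fin d → Bool) (n : ℕ) (z : Euc d) :
    gcell σ n z ⊆ closedBall z ((2 : ℝ) ^ (-(n : ℝ))) := fun _ hy => dist_le_of_gcode_eq hy

/-- An integer multiple of a power of two is never too close to a third of an integer. -/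
lemma third_far (n : ℕ) (m : ℤ) : (1 : ℝ) / 3 ≤ |(2 : ℝ) ^ n / 3 - m| := by
  have h3 : ¬ (3 : ℤ) ∣ (2 : ℤ) ^ n := fun h => by
    have := Int.Prime.dvd_pow' (p := 3) (by norm_num) h
    norm_num at this
  have h4 : (2 : ℤ) ^ n - 3 * m ≠ 0 := fun h => h3 ⟨m, by linarith⟩
  have h5 : (1 : ℝ) ≤ |((2 : ℤ) ^ n - 3 * m : ℤ)| := by exact_mod_cast Int.one_le_abs h4
  have h6 : (2 : ℝ) ^ n / 3 - m = (((2 : ℤ) ^ n - 3 * m : ℤ) : ℝ) / 3 := by push_cast; ring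
  rw [h6, abs_div, abs_of_pos (by norm_num : (0 : ℝ) < 3)]
  push_cast at h5 ⊢
  linarith

/-- Every point is well inside its cube in one of the shifted grids. -/
lemma exists_deep (n : ℕ) (z : Euc d) :
    ∃ σ : Fin d → Bool, closedBall z ((2 : ℝ) ^ (-(n : ℝ)) / 8) ⊆ gcell σ n z := by
  have key : ∀ x : ℝ, ∃ b : Bool, ∀ y : ℝ, |y - x| ≤ ((2 : ℝ) ^ n)⁻¹ / 8 →
      ⌊(2 : ℝ) ^ n * (y - if b then 1 / 3 else 0)⌋ = ⌊(2 : ℝ) ^ n * (x - if b then 1 / 3 else 0)⌋ := by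
    intro x
    have hp : (0 : ℝ) < 2 ^ n := by positivity
    -- a number at distance more than `1/8` from every integer keeps its floor
    have stable : ∀ u v : ℝ, (∀ m : ℤ, 1 / 8 < |u - m|) → |v - u| ≤ 1 / 8 → ⌊v⌋ = ⌊u⌋ := by
      intro u v hu hv
      rw [Int.floor_eq_iff]
      have a1 := hu ⌊u⌋
      have a2 := hu (⌊u⌋ + 1)
      have b1 := Int.floor_le u
      have b2 := Int.lt_floor_add_one u
      rw [abs_of_nonneg (by linarith)] at a1
      push_cast at a2
      rw [abs_of_neg (by linarith)] at a2
      have := abs_le.1 hv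
      constructor <;> linarith
    have dist : ∀ y s : ℝ, |y - x| ≤ ((2 : ℝ) ^ n)⁻¹ / 8 → |2 ^ n * (y - s) - 2 ^ n * (x - s)| ≤ 1 / 8 := by
      intro y s hy
      rw [← mul_sub, sub_sub_sub_cancel_right, abs_mul, abs_of_pos hp]
      calc 2 ^ n * |y - x| ≤ 2 ^ n * (((2 : ℝ) ^ n)⁻¹ / 8) := by gcongr
        _ = 1 / 8 := by field_simp
    by_cases h : ∀ m : ℤ, 1 / 8 < |2 ^ n * (x - 0) - m|
    · refine ⟨false, fun y hy => ?_⟩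
      simp only [Bool.false_eq_true, if_false]
      exact stable _ _ h (dist y 0 hy)
    · push Not at h
      obtain ⟨m, hm⟩ := h
      refine ⟨true, fun y hy => ?_⟩
      simp only [if_true]
      refine stable _ _ (fun m' => ?_) (dist y _ hy)
      have h1 := third_far n (m - m')
      have h2 : (2 : ℝ) ^ n / 3 - ((m - m' : ℤ) : ℝ) =
          (2 ^ n * (x - 0) - m) - (2 ^ n * (x - 1 / 3) - m') := by push_cast; ring
      rw [h2] at h1
      have h3 := abs_sub (2 ^ n * (x - 0) - (m : ℝ)) (2 ^ n * (x - 1 / 3) - m')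
      linarith
  choose b hb using fun i => key (z i)
  refine ⟨b, fun y hy => ?_⟩
  change gcode b n y = gcode b n z
  ext i
  refine hb i (y i) ?_
  rw [← two_rpow_neg_nat, ← Real.dist_eq]
  exact (dist_le_pi_dist y z i).trans hy

lemma gcode_near {σ : Fin d → Bool} {n : ℕ} {y z : Euc d} (h : dist y z ≤ (2 : ℝ) ^ (-(n : ℝ))) (i : Fin d) :
    gcode σ n y i - gcode σ n z i ∈ ({-1, 0, 1} : Finset ℤ) := by
  rw [two_rpow_neg_nat] at h
  have h1 : |y i - z i| ≤ ((2 : ℝ) ^ n)⁻¹ := by rw [← Real.dist_eq]; exact (dist_le_pi_dist y z i).trans h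
  have hp : (0 : ℝ) < 2 ^ n := by positivity
  set s : ℝ := if σ i then 1 / 3 else 0
  have h2 : |2 ^ n * (y i - s) - 2 ^ n * (z i - s)| ≤ 1 := by
    rw [← mul_sub, sub_sub_sub_cancel_right, abs_mul, abs_of_pos hp]
    calc 2 ^ n * |y i - z i| ≤ 2 ^ n * ((2 : ℝ) ^ n)⁻¹ := by gcongr
      _ = 1 := by field_simp
  have h3 := abs_le.1 h2
  have a1 := Int.floor_le (2 ^ n * (y i - s))
  have a2 := Int.lt_floor_add_one (2 ^ n * (y i - s))
  have a3 := Int.floor_le (2 ^ n * (z i - s))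
  have a4 := Int.lt_floor_add_one (2 ^ n * (z i - s))
  change ⌊2 ^ n * (y i - s)⌋ - ⌊2 ^ n * (z i - s)⌋ ∈ _
  set p := ⌊2 ^ n * (y i - s)⌋
  set q := ⌊2 ^ n * (z i - s)⌋
  have b1 : ((p - q : ℤ) : ℝ) < 2 := by push_cast; linarith
  have b2 : (-2 : ℝ) < ((p - q : ℤ) : ℝ) := by push_cast; linarith
  have b1' : p - q < 2 := by exact_mod_cast b1
  have b2' : -2 < p - q := by exact_mod_cast b2
  simp only [Finset.mem_insert, Finset.mem_singleton]
  omega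

/-- At almost every point, the mass of the dyadic cell is at most subexponentially smaller than the
mass which any other measure gives to the ball of the same size. -/
lemma ae_ball_le_gcell (α θ : Measure (Euc d)) [IsFiniteMeasure α] [IsFiniteMeasure θ] (σ : Fin d → Bool) :
    ∀ᵐ z ∂θ, ∀ ε > (0 : ℝ), ∀ᶠ T : ℕ in atTop,
      α.real (closedBall z ((2 : ℝ) ^ (-(T : ℝ)))) ≤ Real.exp (ε * T) * θ.real (gcell σ T z) := by
  let V : Finset (Fin d → ℤ) := Fintype.piFinset fun _ => {-1, 0, 1}
  let A : ℕ → (Fin d → ℤ) → ℝ≥0∞ := fun T j => ∑ v ∈ V, α (gcode σ T ⁻¹' {j + v})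
  have hAsum : ∀ T, ∑' j, A T j = V.card * α univ := by
    intro T
    simp only [A]
    rw [Summable.tsum_finsetSum fun _ _ => ENNReal.summable]
    have : ∀ v ∈ V, ∑' j, α (gcode σ T ⁻¹' {j + v}) = α univ := by
      intro v _
      have e := (Equiv.addRight v).tsum_eq (fun j => α (gcode σ T ⁻¹' {j}))
      simp only [Equiv.coe_addRight] at e
      rw [e]
      have := lintegral_code α (measurable_gcode σ T) (fun _ => 1)
      simpa using this.symm
    rw [Finset.sum_congr rfl this, Finset.sum_const, nsmul_eq_mul]
  have h1 := ae_le_exp_of_lintegral_le (θ := θ)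
    (F := fun T z => A T (gcode σ T z) / θ (gcode σ T ⁻¹' {gcode σ T z}))
    (fun T => (Measurable.of_discrete : Measurable fun j => A T j / θ (gcode σ T ⁻¹' {j})).comp
      (measurable_gcode σ T))
    (C := V.card * α univ) (ENNReal.mul_ne_top (by simp) (measure_ne_top _ _)) (fun T => by
      rw [lintegral_code θ (measurable_gcode σ T) (fun j => A T j / θ (gcode σ T ⁻¹' {j})), ← hAsum T]
      refine ENNReal.tsum_le_tsum fun j => ?_
      rw [mul_comm]; exact ENNReal.mul_div_le)
  filter_upwards [h1] with z hz ε hε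
  filter_upwards [hz ε hε] with T hT
  have h2 : α (closedBall z ((2 : ℝ) ^ (-(T : ℝ)))) ≤ A T (gcode σ T z) := by
    refine le_trans (measure_mono ?_) (measure_biUnion_finset_le V fun v => gcode σ T ⁻¹' {gcode σ T z + v})
    intro y hy
    refine mem_iUnion₂.2 ⟨gcode σ T y - gcode σ T z, ?_, ?_⟩
    · exact Fintype.mem_piFinset.2 fun i => gcode_near hy i
    · change gcode σ T y = _
      abel
  have h3 : A T (gcode σ T z) ≤ ENNReal.ofReal (Real.exp (ε * T)) * θ (gcell σ T z) := by
    refine (ENNReal.div_le_iff_le_mul (Or.inr ENNReal.ofReal_ne_top) (Or.inl (measure_ne_top _ _))).1 hT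
  have h4 := ENNReal.toReal_mono (ENNReal.mul_ne_top ENNReal.ofReal_ne_top (measure_ne_top _ _)) (h2.trans h3)
  rwa [ENNReal.toReal_mul, ENNReal.toReal_ofReal (Real.exp_pos _).le] at h4

/-- Every measure on `ℝ^d` has finite upper local dimension almost everywhere. -/
lemma ae_phi_le_linear (θ : Measure (Euc d)) [IsFiniteMeasure θ] :
    ∀ᵐ z ∂θ, ∀ᶠ T : ℕ in atTop, phi θ z T ≤ (d + 1 : ℝ) * T := by
  have h1 : ∀ᵐ z ∂θ, ∀ m : ℕ, ∀ ε > (0 : ℝ), ∀ᶠ T : ℕ in atTop,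
      (volume.restrict (closedBall (0 : Euc d) m)).real (closedBall z ((2 : ℝ) ^ (-(T : ℝ)))) ≤
        Real.exp (ε * T) * θ.real (gcell (fun _ => false) T z) := by
    refine ae_all_iff.2 fun m => ?_
    have : IsFiniteMeasure (volume.restrict (closedBall (0 : Euc d) m)) :=
      ⟨by rw [Measure.restrict_apply_univ]; exact measure_closedBall_lt_top⟩
    exact ae_ball_le_gcell _ θ _
  filter_upwards [h1, ae_inSpt θ] with z hz hspt
  obtain ⟨m, hm⟩ := exists_nat_ge (‖z‖ + 1)
  filter_upwards [hz m (1 / 4) (by norm_num)] with T hT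
  have h2T : (0 : ℝ) < 2 ^ (-(T : ℝ)) := two_rpow_pos _
  have hsub : closedBall z ((2 : ℝ) ^ (-(T : ℝ))) ⊆ closedBall (0 : Euc d) m := by
    refine closedBall_subset_closedBall' ?_
    have : (2 : ℝ) ^ (-(T : ℝ)) ≤ 1 := Real.rpow_le_one_of_one_le_of_nonpos one_le_two (by simp)
    rw [dist_zero_right]; linarith
  rw [measureReal_restrict_apply isClosed_closedBall.measurableSet, inter_eq_left.2 hsub,
    measureReal_def, Real.volume_pi_closedBall _ h2T.le, Fintype.card_fin,
    ENNReal.toReal_ofReal (by positivity)] at hT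
  have h3 : θ.real (gcell (fun _ => false) T z) ≤ θ.real (closedBall z ((2 : ℝ) ^ (-(T : ℝ)))) :=
    measureReal_mono (gcell_subset_closedBall _ T z) (measure_ne_top _ _)
  rw [← exp_neg_phi hspt] at h3
  have h4 : Real.exp (-(T : ℝ)) ≤ 2 ^ (-(T : ℝ)) := by
    rw [Real.rpow_def_of_pos two_pos, Real.exp_le_exp]
    have := Real.log_two_lt_d9
    nlinarith [(Nat.cast_nonneg T : (0 : ℝ) ≤ T)]
  have h5 : Real.exp (-(d * T : ℝ)) ≤ (2 * 2 ^ (-(T : ℝ))) ^ d := by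
    have : Real.exp (-(d * T : ℝ)) = Real.exp (-(T : ℝ)) ^ d := by
      rw [← Real.exp_nat_mul]; congr 1; ring
    rw [this]
    refine pow_le_pow_left₀ (Real.exp_pos _).le (h4.trans ?_) d
    linarith
  have h6 : Real.exp (-(d * T : ℝ)) ≤ Real.exp (1 / 4 * T - phi θ z T) := by
    refine h5.trans (hT.trans ?_)
    rw [sub_eq_add_neg, Real.exp_add]
    gcongr
  have h7 := Real.exp_le_exp.1 h6
  nlinarith [(Nat.cast_nonneg T : (0 : ℝ) ≤ T)]

end Grid

/-! ### Synchronisation of the sceneries of two measures -/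

section Sync

variable {d : ℕ} {θ₁ θ₂ : Measure (Euc d)} [IsProbabilityMeasure θ₁] [IsProbabilityMeasure θ₂]

lemma ae_gcell_pos (θ : Measure (Euc d)) [IsFiniteMeasure θ] :
    ∀ᵐ z ∂θ, ∀ σ n, 0 < θ.real (gcell σ n z) := by
  refine ae_all_iff.2 fun σ => ae_all_iff.2 fun n => ?_
  have h1 : ∀ᵐ z ∂θ, ∀ j : Fin d → ℤ, θ (gcode σ n ⁻¹' {j}) = 0 → z ∉ gcode σ n ⁻¹' {j} := by
    refine ae_all_iff.2 fun j => ?_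
    by_cases hj : θ (gcode σ n ⁻¹' {j}) = 0
    · exact (measure_eq_zero_iff_ae_notMem.1 hj).mono fun z hz _ => hz
    · exact Eventually.of_forall fun z h => absurd h hj
  filter_upwards [h1] with z hz
  exact ENNReal.toReal_pos (fun h => hz _ h rfl) (measure_ne_top _ _)

/-- The cells of `z` have `θ₂`-mass not exponentially smaller than their `θ₁`-mass, along `l`. -/
def SubexpAt (l : Filter ℕ) (θ₁ θ₂ : Measure (Euc d)) (z : Euc d) : Prop :=
  ∀ (σ : Fin d → Bool) (k : ℕ), ∀ ε > (0 : ℝ), ∀ᶠ N : ℕ in l, ∀ N' : ℕ, N ≤ N' → N' ≤ N + k →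
    Real.exp (-(ε * N)) * θ₁.real (gcell σ N' z) ≤ θ₂.real (gcell σ N' z)

lemma sum_range_mul_eq (g : ℕ → ℝ) (k J : ℕ) :
    ∑ n ∈ Finset.range (k * J), g n = ∑ r ∈ Finset.range k, ∑ j ∈ Finset.range J, g (r + k * j) := by
  induction J with
  | zero => simp
  | succ J ih =>
    rw [Nat.mul_succ, Finset.sum_range_add, ih]
    simp only [Finset.sum_range_succ, Finset.sum_add_distrib]
    congr 1
    exact Finset.sum_congr rfl fun r _ => by rw [add_comm]

/-- Along scales at which `θ₂` gives the cells of a `θ₁`-typical point at least subexponentially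
comparable mass, the proportion of levels where the two measures are far apart in Hellinger
distance tends to zero. -/
lemma ae_hell_count :
    ∀ᵐ z ∂θ₁, ∀ l : Filter ℕ, l.NeBot → l ≤ atTop → SubexpAt l θ₁ θ₂ z →
      (∀ σ n, 0 < θ₂.real (gcell σ n z)) ∧
      ∀ (σ : Fin d → Bool) (k : ℕ), 0 < k → ∀ δ > (0 : ℝ), ∀ c > (0 : ℝ), ∀ᶠ N : ℕ in l,
        (((Finset.range N).filter fun n =>
          δ < 1 - hell θ₁ θ₂ (gcode σ n) (gcode σ (n + k)) z).card : ℝ) ≤ c * N := by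
  have h1 : ∀ᵐ z ∂θ₁, ∀ (σ : Fin d → Bool) (k r : ℕ),
      (∀ n, 0 < θ₁.real (gcell σ (r + k * n) z)) → (∀ n, 0 < θ₂.real (gcell σ (r + k * n) z)) →
      ∀ ε > (0 : ℝ), ∀ᶠ N : ℕ in atTop,
        ∑ n ∈ Finset.range N, (1 - hell θ₁ θ₂ (gcode σ (r + k * n)) (gcode σ (r + k * n + k)) z) ≤
          ε * N + (Real.log (θ₂.real (gcell σ (r + k * 0) z) / θ₁.real (gcell σ (r + k * 0) z))) / 2
            - (Real.log (θ₂.real (gcell σ (r + k * N) z) / θ₁.real (gcell σ (r + k * N) z))) / 2 := by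
    refine ae_all_iff.2 fun σ => ae_all_iff.2 fun k => ae_all_iff.2 fun r => ?_
    have e : ∀ n, r + k * (n + 1) = r + k * n + k := fun n => by ring
    have h := ae_sum_hell_le (θ₁ := θ₁) (θ₂ := θ₂) (c := fun n => gcode σ (r + k * n))
      (κ := fun _ => fun j : Fin d → ℤ => fun i => j i / ((2 ^ k : ℕ) : ℤ))
      (fun n => measurable_gcode σ _) (fun n z => by
        simp only [Nat.mul_succ, ← add_assoc]
        exact gcode_div σ (r + k * n) k z)
    simp only [e] at h
    exact h
  filter_upwards [h1, ae_gcell_pos θ₁] with z hz hp1 l hlb hl hsub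
  have hp2 : ∀ σ n, 0 < θ₂.real (gcell σ n z) := by
    intro σ n
    obtain ⟨N, hN, hnN⟩ := ((hsub σ 0 1 one_pos).and (hl (eventually_ge_atTop n))).exists
    have h2 := hN N le_rfl le_rfl
    have h3 : 0 < θ₂.real (gcell σ N z) := (mul_pos (Real.exp_pos _) (hp1 σ N)).trans_le h2
    exact h3.trans_le (measureReal_mono (gcell_anti σ hnN z) (measure_ne_top _ _))
  refine ⟨hp2, fun σ k hk δ hδ c hc => ?_⟩
  have hk' : (0 : ℝ) < k := by exact_mod_cast hk
  set ε := c * δ / (6 * k) with hε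
  have hεp : 0 < ε := by positivity
  set g : ℕ → ℝ := fun n => 1 - hell θ₁ θ₂ (gcode σ n) (gcode σ (n + k)) z with hg
  have hg0 : ∀ n, 0 ≤ g n := fun n =>
    sub_nonneg.2 (hell_le_one (κ := fun j : Fin d → ℤ => fun i => j i / ((2 ^ k : ℕ) : ℤ)) (measurable_gcode σ _) (gcode_div σ n k) z)
  set C0 : ℕ → ℝ := fun r => |Real.log (θ₂.real (gcell σ (r + k * 0) z) / θ₁.real (gcell σ (r + k * 0) z))|
  set C := ∑ r ∈ Finset.range k, C0 r
  have hJ : Tendsto (fun N : ℕ => N / k + 1) atTop atTop :=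
    tendsto_atTop_mono (fun N => Nat.le_succ _) (Nat.tendsto_div_const_atTop hk.ne')
  have h2 : ∀ᶠ N : ℕ in l, ∀ r ∈ Finset.range k,
      ∑ j ∈ Finset.range (N / k + 1), g (r + k * j) ≤ ε * ((N / k + 1 : ℕ) : ℝ) + C0 r / 2 + ε * N / 2 := by
    refine (Finset.eventually_all _).2 fun r hr => ?_
    have e1 := hl (hJ.eventually (hz σ k r (fun n => hp1 _ _) (fun n => hp2 _ _) ε hεp))
    filter_upwards [e1, hsub σ (2 * k) ε hεp] with N hN hN2
    have hr' := Finset.mem_range.1 hr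
    have h3 := Nat.div_add_mod N k
    have h4 := Nat.mod_lt N hk
    have h5 := hN2 (r + k * (N / k + 1)) (by rw [Nat.mul_succ]; omega) (by rw [Nat.mul_succ]; omega)
    have h6 : -(ε * N) ≤ Real.log (θ₂.real (gcell σ (r + k * (N / k + 1)) z) /
        θ₁.real (gcell σ (r + k * (N / k + 1)) z)) := by
      rw [Real.le_log_iff_exp_le (div_pos (hp2 _ _) (hp1 _ _)), le_div_iff₀ (hp1 _ _)]
      exact h5
    have h7 : Real.log (θ₂.real (gcell σ (r + k * 0) z) / θ₁.real (gcell σ (r + k * 0) z)) ≤ C0 r := le_abs_self _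
    refine hN.trans ?_
    linarith
  have h3 : ∀ᶠ N : ℕ in l, C * 2 + c * δ ≤ c * δ * N := by
    have : Tendsto (fun N : ℕ => c * δ * (N : ℝ)) atTop atTop :=
      tendsto_natCast_atTop_atTop.const_mul_atTop (by positivity)
    exact hl (this.eventually_ge_atTop _)
  filter_upwards [h2, h3] with N hN hN3
  have h4 : ∑ n ∈ Finset.range N, g n ≤ k * (ε * ((N : ℝ) + 1)) + C / 2 + k * (ε * N / 2) := by
    have h5 : N ≤ k * (N / k + 1) := by
      have := Nat.div_add_mod N k
      have := Nat.mod_lt N hk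
      rw [Nat.mul_succ]; omega
    calc ∑ n ∈ Finset.range N, g n ≤ ∑ n ∈ Finset.range (k * (N / k + 1)), g n :=
          Finset.sum_le_sum_of_subset_of_nonneg (Finset.range_subset_range.2 h5) fun n _ _ => hg0 n
      _ = _ := sum_range_mul_eq g k _
      _ ≤ ∑ r ∈ Finset.range k, (ε * ((N / k + 1 : ℕ) : ℝ) + C0 r / 2 + ε * N / 2) := Finset.sum_le_sum hN
      _ = k * (ε * ((N / k + 1 : ℕ) : ℝ)) + C / 2 + k * (ε * N / 2) := by
        simp only [Finset.sum_add_distrib, Finset.sum_const, Finset.card_range, nsmul_eq_mul, C, Finset.sum_div]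
      _ ≤ _ := by
        have : ((N / k + 1 : ℕ) : ℝ) ≤ (N : ℝ) + 1 := by
          push_cast
          have : ((N / k : ℕ) : ℝ) ≤ N := by exact_mod_cast Nat.div_le_self N k
          linarith
        gcongr
  have h6 : ((((Finset.range N).filter fun n => δ < g n).card : ℝ)) * δ ≤ ∑ n ∈ Finset.range N, g n := by
    calc ((((Finset.range N).filter fun n => δ < g n).card : ℝ)) * δ
        = ∑ n ∈ (Finset.range N).filter fun n => δ < g n, δ := by simp
      _ ≤ ∑ n ∈ (Finset.range N).filter fun n => δ < g n, g n :=
        Finset.sum_le_sum fun n hn => (Finset.mem_filter.1 hn).2.le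
      _ ≤ _ := Finset.sum_le_sum_of_subset_of_nonneg (Finset.filter_subset _ _) fun n _ _ => hg0 n
  have h7 : k * ε = c * δ / 6 := by rw [hε]; field_simp
  have h8 : ((((Finset.range N).filter fun n => δ < g n).card : ℝ)) * δ ≤ c * N * δ := by
    refine h6.trans (h4.trans ?_)
    have e1 : k * (ε * ((N : ℝ) + 1)) = c * δ / 6 * (N + 1) := by rw [← mul_assoc, h7]
    have e2 : k * (ε * (N : ℝ) / 2) = c * δ / 6 * N / 2 := by rw [← h7]; ring
    rw [e1, e2]
    nlinarith
  exact le_of_mul_le_mul_right h8 hδ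

lemma UD.of_count {l : Filter ℕ} {B : ℕ → Prop} [DecidablePred B] {c : ℝ}
    (h : ∀ᶠ N : ℕ in l, (((Finset.range N).filter B).card : ℝ) ≤ c * N) :
    UD l {τ | 5 ≤ τ ∧ B (⌊τ⌋₊ - 4)} c := by
  filter_upwards [h] with N hN
  have h1 : {τ : ℝ | 5 ≤ τ ∧ B (⌊τ⌋₊ - 4)} ∩ Icc 0 (N : ℝ) ⊆
      ⋃ n ∈ (Finset.range N).filter B, Icc ((n : ℝ) + 4) ((n : ℝ) + 5) := by
    rintro τ ⟨⟨h5, hB⟩, h0, hτN⟩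
    have h2 : 5 ≤ ⌊τ⌋₊ := Nat.le_floor (by exact_mod_cast h5)
    have h3 : ⌊τ⌋₊ ≤ N := by
      have := Nat.floor_le h0
      exact_mod_cast this.trans hτN
    refine mem_iUnion₂.2 ⟨⌊τ⌋₊ - 4, Finset.mem_filter.2 ⟨Finset.mem_range.2 (by omega), hB⟩, ?_⟩
    rw [Nat.cast_sub (by omega)]
    have := Nat.floor_le h0
    have := Nat.lt_floor_add_one τ
    push_cast
    constructor <;> linarith
  refine (measure_mono h1).trans ((measure_biUnion_finset_le _ _).trans ?_)
  have h2 : ∀ n : ℕ, volume (Icc ((n : ℝ) + 4) ((n : ℝ) + 5)) = 1 := fun n => by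
    rw [Real.volume_Icc]; norm_num
  simp only [h2, Finset.sum_const, nsmul_eq_mul, mul_one]
  rw [← ENNReal.ofReal_natCast]
  exact ENNReal.ofReal_le_ofReal hN

/-- If two measures are close in total variation on a fine partition of a cell deeply containing a
ball around `z`, and the first has little mass near the boundary of the ball, then their
magnifications are close. -/
lemma dist_rescPM_le_of_hell {z : Euc d} (hz1 : InSpt θ₁ z) (hz2 : InSpt θ₂ z) {τ : ℝ} {n k : ℕ} {σ : Fin d → Bool}
    (hn : (n : ℝ) + 4 ≤ τ) (hn' : τ ≤ n + 5)
    (hdeep : closedBall z ((2 : ℝ) ^ (-(n : ℝ)) / 8) ⊆ gcell σ n z)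
    {δ δ' ε K κ₀ ρ : ℝ} (hδ : 0 < δ) (hδ1 : δ ≤ 1) (hδ' : 0 < δ') (hδδ : 1 + δ ≤ 2 ^ δ') (hδδ' : 2 ^ (-δ') + δ ≤ 1)
    (hk : (2 : ℝ) ^ (5 - (k : ℝ)) ≤ δ) (hε : 0 ≤ ε)
    (hh : 8 * (1 - hell θ₁ θ₂ (gcode σ n) (gcode σ (n + k)) z) ≤ ε ^ 2)
    (hK : phi θ₁ z τ - phi θ₁ z (τ - 5) ≤ K) (hκ : phi θ₁ z (τ + δ') - phi θ₁ z (τ - δ') ≤ κ₀)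
    (hρ : δ ≤ ρ) (hρ' : 2 * (Real.exp κ₀ - 1 + ε * Real.exp K) ≤ ρ) :
    dist (rescPM θ₁ z τ) (rescPM θ₂ z τ) ≤ ρ := by
  set r := (2 : ℝ) ^ (-τ) with hr
  have hr0 : 0 < r := two_rpow_pos _
  set D := gcell σ n z with hD
  set B := closedBall z r with hB
  have hDm : MeasurableSet D := measurableSet_gcell _ _ _
  have hBm : MeasurableSet B := isClosed_closedBall.measurableSet
  have hn8 : 2 * r ≤ (2 : ℝ) ^ (-(n : ℝ)) / 8 := by
    have h1 : (2 : ℝ) ^ (-(n : ℝ)) / 8 = 2 * 2 ^ (-((n : ℝ) + 4)) := by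
      rw [neg_add, Real.rpow_add two_pos]; norm_num; ring
    rw [h1]
    have : r ≤ 2 ^ (-((n : ℝ) + 4)) := Real.rpow_le_rpow_of_exponent_le one_le_two (by linarith)
    linarith
  have hBpD : closedBall z (2 * r) ⊆ D := (closedBall_subset_closedBall hn8).trans hdeep
  have hBD : B ⊆ D := (closedBall_subset_closedBall (by linarith)).trans hBpD
  have hkr : (2 : ℝ) ^ (-((n + k : ℕ) : ℝ)) ≤ δ * r := by
    have h1 : (2 : ℝ) ^ (-((n + k : ℕ) : ℝ)) = 2 ^ (5 - (k : ℝ)) * 2 ^ (-((n : ℝ) + 5)) := by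
      rw [← Real.rpow_add two_pos]; congr 1; push_cast; ring
    rw [h1]
    have : (2 : ℝ) ^ (-((n : ℝ) + 5)) ≤ r := Real.rpow_le_rpow_of_exponent_le one_le_two (by linarith)
    gcongr
  have hb1 : 0 < θ₁.real B := hz1.real_pos τ
  have hb2 : 0 < θ₂.real B := hz2.real_pos τ
  have hd1 : 0 < θ₁.real D := hb1.trans_le (measureReal_mono hBD (measure_ne_top _ _))
  have hd2 : 0 < θ₂.real D := hb2.trans_le (measureReal_mono hBD (measure_ne_top _ _))
  -- closeness on unions of fine cells
  have hTV : ∀ S : Set (Fin d → ℤ),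
      |θ₁.real (D ∩ gcode σ (n + k) ⁻¹' S) / θ₁.real D - θ₂.real (D ∩ gcode σ (n + k) ⁻¹' S) / θ₂.real D| ≤ ε := by
    intro S
    refine abs_le_of_sq_le_sq ?_ hε
    exact (sq_sub_le_hell (κ := fun j : Fin d → ℤ => fun i => j i / ((2 ^ k : ℕ) : ℤ)) (measurable_gcode σ (n + k)) (gcode_div σ n k) hd1.ne' hd2.ne' S).trans hh
  have hnear : ∀ {y x : Euc d}, gcode σ (n + k) y = gcode σ (n + k) x → dist y x ≤ δ * r := fun h =>
    (dist_le_of_gcode_eq h).trans hkr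
  set Bp := closedBall z ((2 : ℝ) ^ (-(τ - δ'))) with hBp
  set Bm := closedBall z ((2 : ℝ) ^ (-(τ + δ'))) with hBm'
  have hBp_eq : (2 : ℝ) ^ (-(τ - δ')) = r * 2 ^ δ' := by
    rw [hr, ← Real.rpow_add two_pos]; congr 1; ring
  have hBm_eq : (2 : ℝ) ^ (-(τ + δ')) = r * 2 ^ (-δ') := by
    rw [hr, ← Real.rpow_add two_pos]; congr 1; ring
  have hphi := fun t => exp_neg_phi hz1 t
  have hmono := phi_mono hz1
  have q1 : θ₁.real Bp ≤ Real.exp κ₀ * θ₁.real B := by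
    rw [hBp, hB, ← hphi, ← hphi, ← Real.exp_add, Real.exp_le_exp]
    have := hmono (show τ ≤ τ + δ' by linarith)
    linarith
  have q2 : θ₁.real B ≤ Real.exp κ₀ * θ₁.real Bm := by
    rw [hBm', hB, ← hphi, ← hphi, ← Real.exp_add, Real.exp_le_exp]
    have := hmono (show τ - δ' ≤ τ by linarith)
    linarith
  have q3 : θ₁.real D ≤ Real.exp K * θ₁.real B := by
    have h1 : D ⊆ closedBall z ((2 : ℝ) ^ (-(τ - 5))) :=
      (gcell_subset_closedBall σ n z).trans (closedBall_pow_subset z (by linarith))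
    refine (measureReal_mono h1 (measure_ne_top _ _)).trans ?_
    rw [hB, ← hphi, ← hphi, ← Real.exp_add, Real.exp_le_exp]
    linarith
  have hκ0 : 0 ≤ κ₀ := by have := hmono (show τ - δ' ≤ τ + δ' by linarith); linarith
  have hexp1 : 1 ≤ Real.exp κ₀ := Real.one_le_exp hκ0
  have hκp : 0 ≤ Real.exp κ₀ - 1 + ε * Real.exp K := by
    have : 0 ≤ ε * Real.exp K := by positivity
    linarith
  rw [dist_comm]
  refine dist_PM_le hρ hρ' (by linarith) hκp fun A hA => ?_
  rw [rescPM_real (hz2 τ) hA]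
  set A' := {y | (2 : ℝ) ^ τ • (y - z) ∈ A ∧ y ∈ closedBall z ((2 : ℝ) ^ (-τ))} with hA'
  set E := D ∩ gcode σ (n + k) ⁻¹' (gcode σ (n + k) '' A') with hE
  have hEm : MeasurableSet E := hDm.inter (measurable_gcode σ _ MeasurableSet.of_discrete)
  have hA'E : A' ⊆ E := fun y hy => ⟨hBD hy.2, y, hy, rfl⟩
  have hEBp : E ⊆ Bp := by
    rintro y ⟨_, x, hx, hxy⟩
    have h1 := hnear hxy.symm
    have h2 : dist x z ≤ r := hx.2
    rw [hBp, mem_closedBall, hBp_eq]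
    calc dist y z ≤ dist y x + dist x z := dist_triangle _ _ _
      _ ≤ r * (1 + δ) := by linarith
      _ ≤ r * 2 ^ δ' := by gcongr
  -- the part of the cells inside the ball, magnified
  set V := {v : Euc d | z + r • v ∈ E ∩ B} with hV
  have hVm : MeasurableSet V := by
    have : Measurable fun v : Euc d => z + r • v := by fun_prop
    exact this (hEm.inter hBm)
  have hrr : ∀ y : Euc d, z + r • ((2 : ℝ) ^ τ • (y - z)) = y := fun y => by
    rw [smul_smul, hr, ← Real.rpow_add two_pos, neg_add_cancel, Real.rpow_zero, one_smul, add_sub_cancel]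
  have hVsub : V ⊆ {y | ∃ x ∈ A, dist y x ≤ δ} := by
    rintro v ⟨⟨_, x, hx, hxy⟩, _⟩
    refine ⟨_, hx.1, ?_⟩
    have h1 := hnear hxy.symm
    have h2 : dist (z + r • v) x = r * dist v ((2 : ℝ) ^ τ • (x - z)) := by
      conv_lhs => rw [← hrr x]
      rw [dist_add_left, dist_smul₀, Real.norm_of_nonneg hr0.le]
    rw [h2, mul_comm δ] at h1
    exact le_of_mul_le_mul_left h1 hr0
  have hVval : (rescPM θ₁ z τ : Measure (Euc d)).real V = θ₁.real (E ∩ B) / θ₁.real B := by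
    rw [rescPM_real (hz1 τ) hVm]
    congr 2
    ext y
    simp only [hV, mem_ofPred_eq, hrr]
    exact ⟨fun h => h.1, fun h => ⟨h, h.2⟩⟩
  refine le_trans ?_ (add_le_add_left (measureReal_mono hVsub (measure_ne_top _ _)) _)
  rw [hVval]
  -- comparison of the numerators
  have s1 : θ₂.real A' / θ₂.real D ≤ θ₁.real E / θ₁.real D + ε := by
    have h1 := abs_le.1 (hTV (gcode σ (n + k) '' A'))
    have h2 : θ₂.real A' / θ₂.real D ≤ θ₂.real E / θ₂.real D := by
      gcongr; exact measure_ne_top _ _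
    rw [← hE] at h1
    linarith [h1.1]
  have s2 : θ₁.real E ≤ θ₁.real (E ∩ B) + (Real.exp κ₀ - 1) * θ₁.real B := by
    have h1 : θ₁.real E = θ₁.real (E ∩ B) + θ₁.real (E \ B) := (measureReal_inter_add_sdiff hBm).symm
    have h2 : θ₁.real (E \ B) ≤ θ₁.real (Bp \ B) := measureReal_mono (sdiff_subset_sdiff_left hEBp) (measure_ne_top _ _)
    have hBBp : B ⊆ Bp := closedBall_pow_subset z (by linarith)
    have h3 : θ₁.real (Bp \ B) = θ₁.real Bp - θ₁.real B := measureReal_sdiff hBBp hBm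
    linarith
  -- comparison of the denominators
  have s3 : θ₁.real Bm / θ₁.real D - ε ≤ θ₂.real B / θ₂.real D := by
    set F := D ∩ gcode σ (n + k) ⁻¹' (gcode σ (n + k) '' Bm) with hF
    have h1 := abs_le.1 (hTV (gcode σ (n + k) '' Bm))
    rw [← hF] at h1
    have hFB : F ⊆ B := by
      rintro y ⟨_, x, hx, hxy⟩
      have h1 := hnear hxy.symm
      have h2 : dist x z ≤ r * 2 ^ (-δ') := by rw [← hBm_eq]; exact hx
      rw [hB, mem_closedBall]
      calc dist y z ≤ dist y x + dist x z := dist_triangle _ _ _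
        _ ≤ r * (2 ^ (-δ') + δ) := by linarith
        _ ≤ r * 1 := by gcongr
        _ = r := mul_one r
    have hBmB : Bm ⊆ B := closedBall_pow_subset z (by linarith)
    have hBmF : Bm ⊆ F := fun y hy => ⟨hBD (hBmB hy), y, hy, rfl⟩
    have h2 : θ₁.real Bm / θ₁.real D ≤ θ₁.real F / θ₁.real D := by
      gcongr; exact measure_ne_top _ _
    have h3 : θ₂.real F / θ₂.real D ≤ θ₂.real B / θ₂.real D := by
      gcongr; exact measure_ne_top _ _
    linarith [h1.2]
  set a := θ₂.real A' / θ₂.real B with ha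
  have ha0 : 0 ≤ a := by positivity
  have hA'B : A' ⊆ B := fun y hy => hy.2
  have ha1 : a ≤ 1 := (div_le_one hb2).2 (measureReal_mono hA'B (measure_ne_top _ _))
  have e1 : a * (θ₂.real B / θ₂.real D) = θ₂.real A' / θ₂.real D := by
    rw [ha]; field_simp
  have s4 : a * (θ₁.real Bm - ε * θ₁.real D) ≤
      θ₁.real (E ∩ B) + (Real.exp κ₀ - 1) * θ₁.real B + ε * θ₁.real D := by
    have h1 : a * (θ₁.real Bm / θ₁.real D - ε) ≤ θ₁.real E / θ₁.real D + ε := by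
      calc _ ≤ a * (θ₂.real B / θ₂.real D) := by gcongr
        _ ≤ _ := by rw [e1]; exact s1
    have h2 := mul_le_mul_of_nonneg_right h1 hd1.le
    have e2 : a * (θ₁.real Bm / θ₁.real D - ε) * θ₁.real D = a * (θ₁.real Bm - ε * θ₁.real D) := by
      field_simp
    have e3 : (θ₁.real E / θ₁.real D + ε) * θ₁.real D = θ₁.real E + ε * θ₁.real D := by
      field_simp
    rw [e2, e3] at h2
    linarith
  have s5 : a * (1 - (Real.exp κ₀ - 1 + ε * Real.exp K)) * θ₁.real B ≤
      θ₁.real (E ∩ B) + (Real.exp κ₀ - 1 + ε * Real.exp K) * θ₁.real B := by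
    have h1 : (2 - Real.exp κ₀) * θ₁.real B ≤ θ₁.real Bm := by
      have h3 : 0 < Real.exp κ₀ := Real.exp_pos _
      have h4 : (2 - Real.exp κ₀) * Real.exp κ₀ ≤ 1 := by nlinarith [sq_nonneg (Real.exp κ₀ - 1)]
      by_cases h5 : 0 ≤ 2 - Real.exp κ₀
      · calc (2 - Real.exp κ₀) * θ₁.real B ≤ (2 - Real.exp κ₀) * (Real.exp κ₀ * θ₁.real Bm) := by gcongr
          _ = ((2 - Real.exp κ₀) * Real.exp κ₀) * θ₁.real Bm := by ring
          _ ≤ 1 * θ₁.real Bm := by gcongr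
          _ = _ := one_mul _
      · exact (mul_nonpos_of_nonpos_of_nonneg (not_le.1 h5).le hb1.le).trans measureReal_nonneg
    have h2 : ε * θ₁.real D ≤ ε * (Real.exp K * θ₁.real B) := by gcongr
    calc a * (1 - (Real.exp κ₀ - 1 + ε * Real.exp K)) * θ₁.real B
        = a * ((2 - Real.exp κ₀) * θ₁.real B - ε * (Real.exp K * θ₁.real B)) := by ring
      _ ≤ a * (θ₁.real Bm - ε * θ₁.real D) := by gcongr
      _ ≤ _ := s4
      _ ≤ θ₁.real (E ∩ B) + (Real.exp κ₀ - 1) * θ₁.real B + ε * (Real.exp K * θ₁.real B) := by gcongr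
      _ = _ := by ring
  have e4 : θ₁.real (E ∩ B) / θ₁.real B + (Real.exp κ₀ - 1 + ε * Real.exp K) =
      (θ₁.real (E ∩ B) + (Real.exp κ₀ - 1 + ε * Real.exp K) * θ₁.real B) / θ₁.real B := by
    field_simp
  rw [e4, le_div_iff₀ hb1]
  exact s5

/-- At almost every point of `θ₁`, along times at which the masses of cells are comparable up to a
subexponential factor, the magnifications of `θ₁` and `θ₂` are close at most scales. -/
theorem ae_sync (θ₁ θ₂ : Measure (Euc d)) [IsProbabilityMeasure θ₁] [IsProbabilityMeasure θ₂] :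
    ∀ᵐ z ∂θ₁, ∀ l : Filter ℕ, l.NeBot → l ≤ atTop → SubexpAt l θ₁ θ₂ z → InSpt θ₂ z →
      (∃ C : ℝ, ∀ᶠ N : ℕ in l, phi θ₁ z (N + 1) ≤ C * N) →
      ∀ ε > 0, ∀ c > 0, UD l {t | ε < dist (rescPM θ₁ z t) (rescPM θ₂ z t)} c := by
  classical
  filter_upwards [ae_hell_count (θ₁ := θ₁) (θ₂ := θ₂), ae_inSpt θ₁] with z hz hz1 l hlb hl hsub hz2 ⟨C₀, hC₀⟩ ρ hρ c hc
  obtain ⟨_, hcount⟩ := hz l hlb hl hsub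
  -- constants
  set C := max C₀ 1
  have hC1 : 1 ≤ C := le_max_right _ _
  have hC : ∀ᶠ N : ℕ in l, phi θ₁ z (N + 1) ≤ C * N := hC₀.mono fun N hN =>
    hN.trans (by gcongr; exact le_max_left _ _)
  set κ₀ := Real.log (1 + ρ / 4) with hκ₀
  have hκ₀p : 0 < κ₀ := Real.log_pos (by linarith)
  have hexpκ : Real.exp κ₀ = 1 + ρ / 4 := Real.exp_log (by linarith)
  set c' := c / 8 with hc'
  have hc'p : 0 < c' := by positivity
  set K := 5 * C / c' with hK
  have hKp : 0 < K := by positivity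
  set ε := ρ / 4 * Real.exp (-K) with hε
  have hεp : 0 < ε := by positivity
  have hεK : ε * Real.exp K = ρ / 4 := by rw [hε, mul_assoc, ← Real.exp_add]; simp
  set δ' := min 1 (c' * κ₀ / (2 * C)) with hδ'
  have hδ'p : 0 < δ' := lt_min one_pos (by positivity)
  have hδ'1 : δ' ≤ 1 := min_le_left _ _
  have hδ'C : (δ' + δ') * C ≤ c' * κ₀ := by
    have : δ' ≤ c' * κ₀ / (2 * C) := min_le_right _ _
    rw [le_div_iff₀ (by positivity)] at this
    linarith
  have h2δ : (1 : ℝ) < 2 ^ δ' := Real.one_lt_rpow one_lt_two hδ'p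
  have h2δ' : (2 : ℝ) ^ (-δ') < 1 := Real.rpow_lt_one_of_one_lt_of_neg one_lt_two (by linarith)
  set δ := min (min 1 ρ) (min ((2 : ℝ) ^ δ' - 1) (1 - 2 ^ (-δ'))) with hδ
  have hδp : 0 < δ := lt_min (lt_min one_pos hρ) (lt_min (by linarith) (by linarith))
  have hδ1 : δ ≤ 1 := (min_le_left _ _).trans (min_le_left _ _)
  have hδρ : δ ≤ ρ := (min_le_left _ _).trans (min_le_right _ _)
  have hδa : 1 + δ ≤ 2 ^ δ' := by
    have : δ ≤ (2 : ℝ) ^ δ' - 1 := (min_le_right _ _).trans (min_le_left _ _)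
    linarith
  have hδb : 2 ^ (-δ') + δ ≤ 1 := by
    have : δ ≤ 1 - (2 : ℝ) ^ (-δ') := (min_le_right _ _).trans (min_le_right _ _)
    linarith
  obtain ⟨k, hk0, hk⟩ : ∃ k : ℕ, 0 < k ∧ (2 : ℝ) ^ (5 - (k : ℝ)) ≤ δ := by
    obtain ⟨k, hk⟩ := exists_nat_ge (5 - Real.logb 2 δ)
    refine ⟨k + 1, Nat.succ_pos _, ?_⟩
    rw [← Real.rpow_logb two_pos (by norm_num) hδp]
    refine Real.rpow_le_rpow_of_exponent_le one_le_two ?_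
    push_cast
    linarith
  set δh := ε ^ 2 / 8 with hδh
  have hδhp : 0 < δh := by positivity
  set m : ℝ := (Fintype.card (Fin d → Bool) : ℝ) with hm
  have hmp : 0 < m := by rw [hm]; exact_mod_cast Fintype.card_pos
  -- the exceptional times
  have u1 : UD l {t | K < phi θ₁ z (t + 0) - phi θ₁ z (t - 5)} c' := by
    refine UD.osc (phi_mono hz1) (phi_nonneg _ _) le_rfl (by norm_num) hKp (C := C) ?_ ?_
    · filter_upwards [hC] with N hN
      exact (phi_mono hz1 (by linarith)).trans hN
    · rw [hK]; field_simp; linarith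
  have u2 : UD l {t | κ₀ < phi θ₁ z (t + δ') - phi θ₁ z (t - δ')} c' := by
    refine UD.osc (phi_mono hz1) (phi_nonneg _ _) hδ'p.le hδ'p.le hκ₀p (C := C) ?_ hδ'C
    filter_upwards [hC] with N hN
    exact (phi_mono hz1 (by linarith)).trans hN
  have u3 : UD l {τ | 5 ≤ τ ∧ ∃ σ : Fin d → Bool,
      δh < 1 - hell θ₁ θ₂ (gcode σ (⌊τ⌋₊ - 4)) (gcode σ (⌊τ⌋₊ - 4 + k)) z} c' := by
    refine UD.of_count (B := fun n => ∃ σ : Fin d → Bool,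
      δh < 1 - hell θ₁ θ₂ (gcode σ n) (gcode σ (n + k)) z) ?_
    have h1 : ∀ᶠ N : ℕ in l, ∀ σ : Fin d → Bool, (((Finset.range N).filter fun n =>
          δh < 1 - hell θ₁ θ₂ (gcode σ n) (gcode σ (n + k)) z).card : ℝ) ≤ c' / m * N :=
      eventually_all.2 fun σ => hcount σ k hk0 δh hδhp _ (by positivity)
    filter_upwards [h1] with N hN
    have h2 : ((Finset.range N).filter fun n => ∃ σ : Fin d → Bool,
        δh < 1 - hell θ₁ θ₂ (gcode σ n) (gcode σ (n + k)) z) ⊆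
        Finset.univ.biUnion fun σ : Fin d → Bool => (Finset.range N).filter fun n =>
          δh < 1 - hell θ₁ θ₂ (gcode σ n) (gcode σ (n + k)) z := by
      intro n hn
      obtain ⟨h3, σ, h4⟩ := Finset.mem_filter.1 hn
      exact Finset.mem_biUnion.2 ⟨σ, Finset.mem_univ _, Finset.mem_filter.2 ⟨h3, h4⟩⟩
    have h3 := (Finset.card_le_card h2).trans Finset.card_biUnion_le
    have h4 : (((Finset.range N).filter fun n => ∃ σ : Fin d → Bool,
        δh < 1 - hell θ₁ θ₂ (gcode σ n) (gcode σ (n + k)) z).card : ℝ) ≤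
        ∑ σ : Fin d → Bool, (((Finset.range N).filter fun n =>
          δh < 1 - hell θ₁ θ₂ (gcode σ n) (gcode σ (n + k)) z).card : ℝ) := by exact_mod_cast h3
    refine h4.trans ((Finset.sum_le_sum fun σ _ => hN σ).trans (le_of_eq ?_))
    rw [Finset.sum_const, Finset.card_univ, nsmul_eq_mul, ← hm]
    field_simp
  have u4 : UD l (Iic (5 : ℝ)) c' := UD.of_bounded hl subset_rfl hc'p
  have hU := ((u1.union u2 hc'p.le hc'p.le).union u3 (by linarith) hc'p.le).union u4 (by linarith) hc'p.le
  refine hU.mono (fun τ hτ => ?_) (by rw [hc']; linarith)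
  by_contra hcon
  simp only [mem_union, mem_ofPred_eq, mem_Iic, not_or, not_lt, not_and, not_exists, not_le, add_zero] at hcon
  obtain ⟨⟨⟨g1, g2⟩, g3⟩, g4⟩ := hcon
  have h5 : 5 ≤ ⌊τ⌋₊ := Nat.le_floor (by exact_mod_cast g4.le)
  obtain ⟨σ, hσ⟩ := exists_deep (⌊τ⌋₊ - 4) z
  have hcast : ((⌊τ⌋₊ - 4 : ℕ) : ℝ) = (⌊τ⌋₊ : ℝ) - 4 := by rw [Nat.cast_sub (by omega)]; norm_num
  have hfl := Nat.floor_le (show (0 : ℝ) ≤ τ by linarith)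
  have hfl' := Nat.lt_floor_add_one τ
  have := dist_rescPM_le_of_hell hz1 hz2 (n := ⌊τ⌋₊ - 4) (k := k) (σ := σ) (τ := τ)
    (by rw [hcast]; linarith) (by rw [hcast]; linarith) hσ hδp hδ1 hδ'p hδa hδb hk hεp.le
    (by have := g3 g4.le σ; rw [hδh] at this; linarith) g1 g2 hδρ
    (by rw [hexpκ, hεK]; linarith)
  exact absurd hτ (not_lt.2 this)

end Sync

/-! ### Conformal linear maps -/

section ConformalAlgebra

open scoped Matrix

variable {d : ℕ}

/-- The Euclidean norm on `ℝ^d`, whose ambient norm is the maximum norm. -/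
noncomputable def n2 (e : Euc d) : ℝ := ‖WithLp.toLp 2 e‖

lemma n2_nonneg (e : Euc d) : 0 ≤ n2 e := norm_nonneg _

lemma n2_sq (e : Euc d) : n2 e ^ 2 = e ⬝ᵥ e := by
  rw [n2, EuclideanSpace.norm_sq_eq, dotProduct]
  simp [sq]

lemma n2_add_le (e e' : Euc d) : n2 (e + e') ≤ n2 e + n2 e' := by
  simp only [n2, WithLp.toLp_add]; exact norm_add_le _ _

lemma n2_neg (e : Euc d) : n2 (-e) = n2 e := by
  simp only [n2, WithLp.toLp_neg, norm_neg]

lemma norm_le_n2 (e : Euc d) : ‖e‖ ≤ n2 e := by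
  refine (pi_norm_le_iff_of_nonneg (n2_nonneg e)).2 fun i => ?_
  refine abs_le_of_sq_le_sq ?_ (n2_nonneg e) |> fun h => by simpa using h
  rw [n2_sq, dotProduct, sq]
  exact Finset.single_le_sum (f := fun i => e i * e i) (fun j _ => mul_self_nonneg _) (Finset.mem_univ i)

lemma n2_le (e : Euc d) : n2 e ≤ Real.sqrt d * ‖e‖ := by
  refine le_of_sq_le_sq ?_ (by positivity)
  rw [n2_sq, mul_pow, Real.sq_sqrt (by positivity), dotProduct]
  calc ∑ i, e i * e i ≤ ∑ _i : Fin d, ‖e‖ ^ 2 := Finset.sum_le_sum fun i _ => by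
        rw [← sq, ← sq_abs]; gcongr; exact norm_le_pi_norm e i
    _ = d * ‖e‖ ^ 2 := by simp

/-- `A` is a conformal linear map with scaling factor `c`, that is, `c⁻¹ A` is orthogonal. -/
def IsCf (A : Euc d →L[ℝ] Euc d) (c : ℝ) : Prop :=
  0 < c ∧ (LinearMap.toMatrix' (A : Euc d →ₗ[ℝ] Euc d))ᵀ * LinearMap.toMatrix' (A : Euc d →ₗ[ℝ] Euc d)
    = c ^ 2 • (1 : Matrix (Fin d) (Fin d) ℝ)

lemma toMatrix'_mulVec_clm (A : Euc d →L[ℝ] Euc d) (e : Euc d) :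
    (LinearMap.toMatrix' (A : Euc d →ₗ[ℝ] Euc d)).mulVec e = A e :=
  LinearMap.toMatrix'_mulVec (A : Euc d →ₗ[ℝ] Euc d) e

lemma IsCf.n2_eq {A : Euc d →L[ℝ] Euc d} {c : ℝ} (h : IsCf A c) (e : Euc d) :
    n2 (A e) = c * n2 e := by
  have h1 : n2 (A e) ^ 2 = (c * n2 e) ^ 2 := by
    rw [n2_sq, mul_pow, n2_sq, ← toMatrix'_mulVec_clm, Matrix.dotProduct_mulVec, Matrix.vecMul_mulVec,
      ← Matrix.mulVec_transpose, Matrix.transpose_mul, Matrix.transpose_transpose, h.2]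
    simp [Matrix.smul_mulVec]
  exact (pow_left_inj₀ (n2_nonneg _) (mul_nonneg h.1.le (n2_nonneg _)) two_ne_zero).1 h1

lemma IsCf.comp {A B : Euc d →L[ℝ] Euc d} {a b : ℝ} (hA : IsCf A a) (hB : IsCf B b) :
    IsCf (A.comp B) (a * b) := by
  refine ⟨mul_pos hA.1 hB.1, ?_⟩
  have e : LinearMap.toMatrix' ((A.comp B : Euc d →L[ℝ] Euc d) : Euc d →ₗ[ℝ] Euc d) =
      LinearMap.toMatrix' (A : Euc d →ₗ[ℝ] Euc d) * LinearMap.toMatrix' (B : Euc d →ₗ[ℝ] Euc d) := by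
    rw [← LinearMap.toMatrix'_comp]; rfl
  rw [e, Matrix.transpose_mul, Matrix.mul_assoc, ← Matrix.mul_assoc _ᵀ _ (LinearMap.toMatrix' (B : Euc d →ₗ[ℝ] Euc d)),
    hA.2]
  simp only [Matrix.smul_mul, Matrix.one_mul, Matrix.mul_smul, hB.2, smul_smul]
  ring_nf

lemma IsCf.smul {A : Euc d →L[ℝ] Euc d} {a b : ℝ} (hA : IsCf A a) (hb : 0 < b) :
    IsCf (b • A) (b * a) := by
  refine ⟨mul_pos hb hA.1, ?_⟩
  have e : LinearMap.toMatrix' ((b • A : Euc d →L[ℝ] Euc d) : Euc d →ₗ[ℝ] Euc d) =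
      b • LinearMap.toMatrix' (A : Euc d →ₗ[ℝ] Euc d) := by
    rw [← map_smul]; rfl
  rw [e, Matrix.transpose_smul, Matrix.smul_mul, Matrix.mul_smul, hA.2, smul_smul, smul_smul]
  ring_nf

lemma isCf_of_orth {A : Euc d →L[ℝ] Euc d} {c : ℝ} (hc : 0 < c) {O : Matrix (Fin d) (Fin d) ℝ}
    (hO : O ∈ Matrix.orthogonalGroup (Fin d) ℝ) (h : (A : Euc d →ₗ[ℝ] Euc d) = c • O.mulVecLin) :
    IsCf A c := by
  refine ⟨hc, ?_⟩
  have e : LinearMap.toMatrix' (A : Euc d →ₗ[ℝ] Euc d) = c • O := by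
    rw [h, map_smul, ← Matrix.toLin'_apply', LinearMap.toMatrix'_toLin']
  have hO' : Oᵀ * O = 1 := (Matrix.mem_orthogonalGroup_iff' (Fin d) ℝ).1 hO
  rw [e, Matrix.transpose_smul, Matrix.smul_mul, Matrix.mul_smul, hO', smul_smul, sq]

lemma IsCf.exists_orth {A : Euc d →L[ℝ] Euc d} {c : ℝ} (h : IsCf A c) :
    ∃ c : ℝ, 0 < c ∧ ∃ O ∈ Matrix.orthogonalGroup (Fin d) ℝ,
      (A : Euc d →ₗ[ℝ] Euc d) = c • O.mulVecLin := by
  have hc := h.1.ne'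
  refine ⟨c, h.1, c⁻¹ • LinearMap.toMatrix' (A : Euc d →ₗ[ℝ] Euc d), ?_, ?_⟩
  · refine (Matrix.mem_orthogonalGroup_iff' (Fin d) ℝ).2 ?_
    show (_)ᵀ * _ = _
    rw [Matrix.transpose_smul, Matrix.smul_mul, Matrix.mul_smul, h.2, smul_smul, smul_smul]
    rw [show c⁻¹ * c⁻¹ * c ^ 2 = 1 by field_simp, one_smul]
  · ext e
    simp [hc]

lemma IsCf.abs_det {A : Euc d →L[ℝ] Euc d} {c : ℝ} (h : IsCf A c) :
    |LinearMap.det (A : Euc d →ₗ[ℝ] Euc d)| = c ^ d := by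
  have h1 : (LinearMap.det (A : Euc d →ₗ[ℝ] Euc d)) ^ 2 = (c ^ d) ^ 2 := by
    rw [← LinearMap.det_toMatrix', sq]
    nth_rw 1 [← Matrix.det_transpose]
    rw [← Matrix.det_mul, h.2]
    simp
    ring
  have h2 := (sq_eq_sq_iff_abs_eq_abs _ _).1 h1
  rwa [abs_of_pos (pow_pos h.1 d)] at h2

lemma IsCf.confScale (hd : 1 ≤ d) {f : Euc d → Euc d} {x : Euc d} {c : ℝ} (h : IsCf (fderiv ℝ f x) c) :
    confScale f x = c := by
  rw [_root_.confScale, h.abs_det, ← Real.rpow_natCast, ← Real.rpow_mul h.1.le,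
    mul_inv_cancel₀ (by exact_mod_cast (by lia : d ≠ 0)), Real.rpow_one]

lemma IsConformalMapOn.isCf (hd : 1 ≤ d) {f : Euc d → Euc d} {U : Set (Euc d)}
    (hf : IsConformalMapOn d f U) {x : Euc d} (hx : x ∈ U) :
    IsCf (fderiv ℝ f x) (confScale f x) := by
  obtain ⟨c, hc, O, hO, h⟩ := hf.2.2.2.1 x hx
  have := isCf_of_orth hc hO h
  rwa [this.confScale hd]

/-- Uniform limits of conformal linear maps with scaling factors bounded below are conformal. -/
lemma isCf_of_tendsto {A : ℕ → Euc d →L[ℝ] Euc d} {A₀ : Euc d →L[ℝ] Euc d} {c : ℕ → ℝ} {a : ℝ}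
    (hd : 1 ≤ d) (ha : 0 < a) (hac : ∀ n, a ≤ c n) (h : ∀ n, IsCf (A n) (c n)) (hA : Tendsto A atTop (𝓝 A₀)) :
    ∃ c₀, a ≤ c₀ ∧ IsCf A₀ c₀ := by
  set T : (Euc d →L[ℝ] Euc d) → Matrix (Fin d) (Fin d) ℝ :=
    fun A => LinearMap.toMatrix' (A : Euc d →ₗ[ℝ] Euc d) with hT
  have hTc : Continuous T := by
    refine continuous_matrix fun i j => ?_
    simp only [hT, LinearMap.toMatrix'_apply]
    have : Continuous fun A : Euc d →L[ℝ] Euc d => A (Pi.single j 1) i := by fun_prop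
    exact this
  have h1 : Tendsto (fun n => (T (A n))ᵀ * T (A n)) atTop (𝓝 ((T A₀)ᵀ * T A₀)) := by
    have : Continuous fun A => (T A)ᵀ * T A := by fun_prop
    exact (this.tendsto A₀).comp hA
  have h2 : (fun n => (T (A n))ᵀ * T (A n)) = fun n => c n ^ 2 • (1 : Matrix (Fin d) (Fin d) ℝ) := by
    funext n; exact (h n).2
  rw [h2] at h1
  have i0 : Fin d := ⟨0, hd⟩
  have h3 : Tendsto (fun n => c n ^ 2) atTop (𝓝 (((T A₀)ᵀ * T A₀) i0 i0)) := by
    have := ((continuous_apply_apply i0 i0).tendsto ((T A₀)ᵀ * T A₀)).comp h1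
    refine this.congr fun n => ?_
    show (c n ^ 2 • (1 : Matrix (Fin d) (Fin d) ℝ)) i0 i0 = _
    simp [Matrix.smul_apply]
  set b := ((T A₀)ᵀ * T A₀) i0 i0 with hb
  have hb1 : a ^ 2 ≤ b := ge_of_tendsto' h3 fun n => by gcongr; exact hac n
  have hb0 : 0 ≤ b := (sq_nonneg a).trans hb1
  refine ⟨Real.sqrt b, Real.le_sqrt_of_sq_le hb1, ha.trans_le (Real.le_sqrt_of_sq_le hb1), ?_⟩
  rw [Real.sq_sqrt hb0]
  exact tendsto_nhds_unique h1 (h3.smul_const _)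

/-- A map bounded in the Euclidean norm is bounded in the maximum norm. -/
lemma opNorm_le_of_n2 {A : Euc d →L[ℝ] Euc d} {c : ℝ} (hc : 0 ≤ c) (h : ∀ e, n2 (A e) ≤ c * n2 e) :
    ‖A‖ ≤ Real.sqrt d * c := by
  refine A.opNorm_le_bound (by positivity) fun e => ?_
  calc ‖A e‖ ≤ n2 (A e) := norm_le_n2 _
    _ ≤ c * n2 e := h e
    _ ≤ c * (Real.sqrt d * ‖e‖) := by gcongr; exact n2_le e
    _ = _ := by ring

lemma n2_le_of_opNorm (A : Euc d →L[ℝ] Euc d) (e : Euc d) : n2 (A e) ≤ Real.sqrt d * ‖A‖ * n2 e := by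
  calc n2 (A e) ≤ Real.sqrt d * ‖A e‖ := n2_le _
    _ ≤ Real.sqrt d * (‖A‖ * n2 e) := by
      gcongr; exact (A.le_opNorm e).trans (by gcongr; exact norm_le_n2 e)
    _ = _ := by ring

lemma IsCf.opNorm_le {A : Euc d →L[ℝ] Euc d} {c : ℝ} (h : IsCf A c) : ‖A‖ ≤ Real.sqrt d * c :=
  opNorm_le_of_n2 h.1.le fun e => (h.n2_eq e).le

lemma IsCf.le_norm {A : Euc d →L[ℝ] Euc d} {c : ℝ} (h : IsCf A c) (e : Euc d) :
    c * ‖e‖ ≤ Real.sqrt d * ‖A e‖ :=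
  calc c * ‖e‖ ≤ c * n2 e := by have := h.1.le; gcongr; exact norm_le_n2 e
    _ = n2 (A e) := (h.n2_eq e).symm
    _ ≤ _ := n2_le _

end ConformalAlgebra

/-- Uniform quantitative data of a conformal iterated function system: an invariant cube of radius
`R < 1`, a contraction ratio `r`, a common Hölder exponent `α` and constant `H`, and a lower bound `m`
for the scaling factors on the invariant cube. -/
structure CfSys {d : ℕ} (Φ : ConformalIFS d) where
  R : ℝ
  r : ℝ
  α : ℝ
  H : ℝ
  m : ℝ
  R_pos : 0 < R
  R_lt : R < 1
  r_pos : 0 < r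
  r_lt : r < 1
  α_pos : 0 < α
  H_nonneg : 0 ≤ H
  m_pos : 0 < m
  maps : ∀ i, ∀ x ∈ ball (0 : Euc d) 1, Φ.funs i x ∈ ball (0 : Euc d) R
  le_r : ∀ i, ∀ x ∈ ball (0 : Euc d) 1, confScale (Φ.funs i) x ≤ r
  m_le : ∀ i, ∀ x ∈ closedBall (0 : Euc d) R, m ≤ confScale (Φ.funs i) x
  holder : ∀ i, ∀ x ∈ ball (0 : Euc d) 1, ∀ y ∈ ball (0 : Euc d) 1,
    ‖fderiv ℝ (Φ.funs i) x - fderiv ℝ (Φ.funs i) y‖ ≤ H * ‖x - y‖ ^ α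

lemma exists_cfSys {d : ℕ} (hd : 1 ≤ d) (Φ : ConformalIFS d) : Nonempty (CfSys Φ) := by
  have hne : Nonempty (Fin Φ.n) := ⟨⟨0, by have := Φ.two_le; lia⟩⟩
  -- the radius
  have hR : ∀ i, ∃ R : ℝ, R < 1 ∧ ∀ x ∈ ball (0 : Euc d) 1, ‖Φ.funs i x‖ < R := by
    intro i
    have hcl := (Φ.conf i).2.1
    have hcpt : IsCompact (closure (Φ.funs i '' ball (0 : Euc d) 1)) :=
      isCompact_of_isClosed_isBounded isClosed_closure (isBounded_ball.subset hcl)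
    have hne' : (closure (Φ.funs i '' ball (0 : Euc d) 1)).Nonempty :=
      ⟨Φ.funs i 0, subset_closure ⟨0, by simp, rfl⟩⟩
    obtain ⟨y, hy, hmax⟩ := hcpt.exists_isMaxOn hne' continuous_norm.continuousOn
    have hy1 : ‖y‖ < 1 := by simpa using hcl hy
    refine ⟨(‖y‖ + 1) / 2, by linarith, fun x hx => ?_⟩
    have := hmax (subset_closure ⟨x, hx, rfl⟩)
    simp only [mem_ofPred_eq] at this
    linarith
  choose R0 hR0 hR1 using hR
  obtain ⟨iR, hiR⟩ := Finite.exists_max R0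
  set R := R0 iR
  have hRpos : 0 < R := (norm_nonneg _).trans_lt (hR1 iR 0 (by simp))
  -- the contraction ratio
  choose r0 hr0 hr1 using Φ.contr
  obtain ⟨ir, hir⟩ := Finite.exists_max r0
  have hcf : ∀ i, ∀ x ∈ ball (0 : Euc d) 1, IsCf (fderiv ℝ (Φ.funs i) x) (confScale (Φ.funs i) x) :=
    fun i x hx => (Φ.conf i).isCf hd hx
  have hrpos : 0 < r0 ir := ((hcf ir 0 (by simp)).1).trans_le (hr1 ir 0 (by simp))
  -- Hölder data
  have hH := fun i => (Φ.conf i).2.2.2.2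
  choose C a ha hC using hH
  obtain ⟨ia, hia⟩ := Finite.exists_min a
  set H : ℝ := ∑ i, (C i : ℝ) * 2 ^ (a i : ℝ)
  -- lower bound
  have hm : ∀ i, ∃ m : ℝ, 0 < m ∧ ∀ x ∈ closedBall (0 : Euc d) R, m ≤ confScale (Φ.funs i) x := by
    intro i
    have hsub : closedBall (0 : Euc d) R ⊆ ball 0 1 := closedBall_subset_ball (hR0 iR)
    have hc : ContinuousOn (fun x => fderiv ℝ (Φ.funs i) x) (ball 0 1) := (hC i).continuousOn (ha i)
    have hc2 : ContinuousOn (confScale (Φ.funs i)) (closedBall (0 : Euc d) R) := by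
      have hdet : Continuous fun A : Euc d →L[ℝ] Euc d => LinearMap.det (A : Euc d →ₗ[ℝ] Euc d) :=
        ContinuousLinearMap.continuous_det
      exact ((hdet.comp_continuousOn (hc.mono hsub)).abs).rpow_const fun x _ => Or.inr (by positivity)
    obtain ⟨y, hy, hmin⟩ := (isCompact_closedBall (0 : Euc d) R).exists_isMinOn ⟨0, by simp [hRpos.le]⟩ hc2
    exact ⟨_, (hcf i y (hsub hy)).1, fun x hx => hmin hx⟩
  choose m0 hm0 hm1 using hm
  obtain ⟨im, him⟩ := Finite.exists_min m0
  refine ⟨⟨R, r0 ir, a ia, H, m0 im, hRpos, hR0 iR, hrpos, hr0 ir, by exact_mod_cast ha ia,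
    Finset.sum_nonneg fun i _ => by positivity, hm0 im, fun i x hx => by simpa using (hR1 i x hx).trans_le (hiR i),
    fun i x hx => (hr1 i x hx).trans (hir i), fun i x hx => (him i).trans (hm1 i x hx), fun i x hx y hy => ?_⟩⟩
  have h1 := (hC i).dist_le hx hy
  rw [dist_eq_norm, dist_eq_norm] at h1
  have hxy : ‖x - y‖ ≤ 2 := by
    have h2 := norm_sub_le x y
    simp only [mem_ball, dist_zero_right] at hx hy
    linarith
  have h2 : ‖x - y‖ ^ (a i : ℝ) ≤ 2 ^ (a i : ℝ) * ‖x - y‖ ^ (a ia : ℝ) := by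
    have e : ‖x - y‖ ^ (a i : ℝ) = 2 ^ (a i : ℝ) * (‖x - y‖ / 2) ^ (a i : ℝ) := by
      rw [← Real.mul_rpow (by norm_num) (by positivity)]; congr 1; ring
    rw [e]
    gcongr
    calc (‖x - y‖ / 2) ^ (a i : ℝ) ≤ (‖x - y‖ / 2) ^ (a ia : ℝ) :=
          Real.rpow_le_rpow_of_exponent_ge_of_imp (by positivity) (by linarith) (by exact_mod_cast hia i)
            (fun _ h => absurd h (by exact_mod_cast (ha i).ne'))
      _ ≤ _ := by gcongr; linarith [norm_nonneg (x - y)]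
  calc _ ≤ (C i : ℝ) * ‖x - y‖ ^ (a i : ℝ) := h1
    _ ≤ C i * (2 ^ (a i : ℝ) * ‖x - y‖ ^ (a ia : ℝ)) := by gcongr
    _ = (C i * 2 ^ (a i : ℝ)) * ‖x - y‖ ^ (a ia : ℝ) := by ring
    _ ≤ _ := by
      gcongr
      exact Finset.single_le_sum (f := fun i => (C i : ℝ) * 2 ^ (a i : ℝ)) (fun j _ => by positivity) (Finset.mem_univ i)

/-! ### Compositions along words -/

/-- The composition `f_{i₁} ∘ ⋯ ∘ f_{iₖ}` along the word `i₁ ⋯ iₖ`. -/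
def fw {d : ℕ} (Φ : ConformalIFS d) : List (Fin Φ.n) → Euc d → Euc d
  | [] => id
  | i :: w => Φ.funs i ∘ fw Φ w

/-- The scaling factor of `fw Φ w`, as a product of scaling factors along the orbit. -/
noncomputable def cw {d : ℕ} (Φ : ConformalIFS d) : List (Fin Φ.n) → Euc d → ℝ
  | [], _ => 1
  | i :: w, u => confScale (Φ.funs i) (fw Φ w u) * cw Φ w u

lemma fw_append {d : ℕ} (Φ : ConformalIFS d) (w : List (Fin Φ.n)) (i : Fin Φ.n) (u : Euc d) :
    fw Φ (w ++ [i]) u = fw Φ w (Φ.funs i u) := by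
  induction w with
  | nil => rfl
  | cons j w ih => simp only [List.cons_append, fw, Function.comp_apply, ih]

lemma cw_append {d : ℕ} (Φ : ConformalIFS d) (w : List (Fin Φ.n)) (i : Fin Φ.n) (u : Euc d) :
    cw Φ (w ++ [i]) u = cw Φ w (Φ.funs i u) * confScale (Φ.funs i) u := by
  induction w with
  | nil => simp [cw, fw]
  | cons j w ih => simp only [List.cons_append, cw, ih, fw_append]; ring

lemma holder_comp {d : ℕ} {A B : Euc d → Euc d →L[ℝ] Euc d} {f : Euc d → Euc d} {U V : Set (Euc d)}
    {L H₁ M₁ H₂ M₂ α : ℝ} (hα : 0 < α) (hH₁ : 0 ≤ H₁) (hL : 0 ≤ L) (hM₁ : 0 ≤ M₁)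
    (hf : MapsTo f U V) (hfL : ∀ x ∈ U, ∀ y ∈ U, ‖f x - f y‖ ≤ L * ‖x - y‖)
    (hA : ∀ x ∈ V, ∀ y ∈ V, ‖A x - A y‖ ≤ H₁ * ‖x - y‖ ^ α) (hAM : ∀ x ∈ V, ‖A x‖ ≤ M₁)
    (hB : ∀ x ∈ U, ∀ y ∈ U, ‖B x - B y‖ ≤ H₂ * ‖x - y‖ ^ α) (hBM : ∀ x ∈ U, ‖B x‖ ≤ M₂)
    {x y : Euc d} (hx : x ∈ U) (hy : y ∈ U) :
    ‖(A (f x)).comp (B x) - (A (f y)).comp (B y)‖ ≤ (H₁ * L ^ α * M₂ + M₁ * H₂) * ‖x - y‖ ^ α := by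
  have e : (A (f x)).comp (B x) - (A (f y)).comp (B y) =
      (A (f x) - A (f y)).comp (B x) + (A (f y)).comp (B x - B y) := by
    ext1 v; simp
  rw [e]
  have hM₂ : 0 ≤ M₂ := (norm_nonneg _).trans (hBM x hx)
  calc _ ≤ ‖(A (f x) - A (f y)).comp (B x)‖ + ‖(A (f y)).comp (B x - B y)‖ := norm_add_le _ _
    _ ≤ ‖A (f x) - A (f y)‖ * ‖B x‖ + ‖A (f y)‖ * ‖B x - B y‖ := by
      gcongr <;> exact ContinuousLinearMap.opNorm_comp_le _ _
    _ ≤ (H₁ * (L * ‖x - y‖) ^ α) * M₂ + M₁ * (H₂ * ‖x - y‖ ^ α) := by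
      gcongr
      · exact (hA _ (hf hx) _ (hf hy)).trans (by gcongr; exact hfL x hx y hy)
      · exact hBM x hx
      · exact hAM _ (hf hy)
      · exact hB x hx y hy
    _ = _ := by rw [Real.mul_rpow hL (norm_nonneg _)]; ring

namespace CfSys

variable {d : ℕ} {Φ : ConformalIFS d}

lemma ball_R_subset (S : CfSys Φ) : ball (0 : Euc d) S.R ⊆ ball 0 1 := ball_subset_ball S.R_lt.le

lemma closedBall_R_subset (S : CfSys Φ) : closedBall (0 : Euc d) S.R ⊆ ball 0 1 := closedBall_subset_ball S.R_lt

lemma fw_mem (S : CfSys Φ) (w : List (Fin Φ.n)) {u : Euc d} (hu : u ∈ ball (0 : Euc d) 1) : fw Φ w u ∈ ball (0 : Euc d) 1 := by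
  induction w with
  | nil => exact hu
  | cons i w ih => exact S.ball_R_subset (S.maps i _ ih)

lemma fw_mem_R (S : CfSys Φ) (w : List (Fin Φ.n)) {u : Euc d} (hu : u ∈ closedBall (0 : Euc d) S.R) :
    fw Φ w u ∈ closedBall (0 : Euc d) S.R := by
  cases w with
  | nil => exact hu
  | cons i w => exact ball_subset_closedBall (S.maps i _ (S.fw_mem w (S.closedBall_R_subset hu)))

lemma diffAt (S : CfSys Φ) (hd : 1 ≤ d) (w : List (Fin Φ.n)) {u : Euc d} (hu : u ∈ ball (0 : Euc d) 1) :
    DifferentiableAt ℝ (fw Φ w) u ∧ IsCf (fderiv ℝ (fw Φ w) u) (cw Φ w u) := by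
  induction w with
  | nil =>
    refine ⟨differentiableAt_id, ?_⟩
    simp only [fw, cw, fderiv_id]
    refine ⟨one_pos, ?_⟩
    simp
  | cons i w ih =>
    have h1 := (Φ.conf i).2.2.1 _ (S.fw_mem w hu)
    refine ⟨h1.comp u ih.1, ?_⟩
    simp only [fw, cw]
    rw [fderiv_comp u h1 ih.1]
    exact ((Φ.conf i).isCf hd (S.fw_mem w hu)).comp ih.2

lemma fderiv_cons (S : CfSys Φ) (hd : 1 ≤ d) (i : Fin Φ.n) (w : List (Fin Φ.n)) {u : Euc d} (hu : u ∈ ball (0 : Euc d) 1) :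
    fderiv ℝ (fw Φ (i :: w)) u = (fderiv ℝ (Φ.funs i) (fw Φ w u)).comp (fderiv ℝ (fw Φ w) u) := by
  simp only [fw]
  exact fderiv_comp u ((Φ.conf i).2.2.1 _ (S.fw_mem w hu)) (S.diffAt hd w hu).1

lemma cw_pos (S : CfSys Φ) (hd : 1 ≤ d) (w : List (Fin Φ.n)) {u : Euc d} (hu : u ∈ ball (0 : Euc d) 1) : 0 < cw Φ w u :=
  (S.diffAt hd w hu).2.1

lemma cw_le (S : CfSys Φ) (hd : 1 ≤ d) (w : List (Fin Φ.n)) {u : Euc d} (hu : u ∈ ball (0 : Euc d) 1) :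
    cw Φ w u ≤ S.r ^ w.length := by
  induction w with
  | nil => simp [cw]
  | cons i w ih =>
    simp only [cw, List.length_cons, pow_succ']
    have := S.le_r i _ (S.fw_mem w hu)
    have := S.r_pos
    have := (S.cw_pos hd w hu).le
    gcongr

lemma lip_of_le (S : CfSys Φ) (hd : 1 ≤ d) (w : List (Fin Φ.n)) {V : Set (Euc d)} (hV : V ⊆ ball (0 : Euc d) 1) (hVc : Convex ℝ V)
    {c : ℝ} (hc : ∀ u ∈ V, cw Φ w u ≤ c)
    {u u' : Euc d} (hu : u ∈ V) (hu' : u' ∈ V) :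
    ‖fw Φ w u - fw Φ w u'‖ ≤ Real.sqrt d * c * ‖u - u'‖ := by
  refine hVc.norm_image_sub_le_of_norm_hasFDerivWithin_le
    (f := fw Φ w) (f' := fderiv ℝ (fw Φ w)) (fun x hx => ?_) (fun x hx => ?_) hu' hu
  · exact (S.diffAt hd w (hV hx)).1.hasFDerivAt.hasFDerivWithinAt
  · exact ((S.diffAt hd w (hV hx)).2.opNorm_le).trans (by gcongr; exact hc x hx)

lemma lip (S : CfSys Φ) (hd : 1 ≤ d) (w : List (Fin Φ.n)) {u u' : Euc d} (hu : u ∈ ball (0 : Euc d) 1)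
    (hu' : u' ∈ ball (0 : Euc d) 1) :
    ‖fw Φ w u - fw Φ w u'‖ ≤ Real.sqrt d * S.r ^ w.length * ‖u - u'‖ :=
  S.lip_of_le hd w subset_rfl (convex_ball 0 1) (fun _ hx => S.cw_le hd w hx) hu hu'

/-- On the whole open cube, derivatives of compositions are Hölder continuous, with a constant that
depends on the word. -/
lemma holder_word (S : CfSys Φ) (hd : 1 ≤ d) (w : List (Fin Φ.n)) :
    ∃ C : ℝ, 0 ≤ C ∧ ∀ u ∈ ball (0 : Euc d) 1, ∀ u' ∈ ball (0 : Euc d) 1,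
      ‖fderiv ℝ (fw Φ w) u - fderiv ℝ (fw Φ w) u'‖ ≤ C * ‖u - u'‖ ^ S.α := by
  induction w with
  | nil => exact ⟨0, le_rfl, fun u _ u' _ => by simp [fw]⟩
  | cons i w ih =>
    obtain ⟨C, hC0, hC⟩ := ih
    have hb : ∀ (w : List (Fin Φ.n)), ∀ u ∈ ball (0 : Euc d) 1, ‖fderiv ℝ (fw Φ w) u‖ ≤ Real.sqrt d * 1 := by
      intro w u hu
      refine (S.diffAt hd w hu).2.opNorm_le.trans ?_
      gcongr
      exact (S.cw_le hd w hu).trans (pow_le_one₀ S.r_pos.le S.r_lt.le)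
    have hb1 : ∀ u ∈ ball (0 : Euc d) 1, ‖fderiv ℝ (Φ.funs i) u‖ ≤ Real.sqrt d * 1 := by
      intro u hu
      exact hb [i] u hu
    have hL : ∀ x ∈ ball (0 : Euc d) 1, ∀ y ∈ ball (0 : Euc d) 1,
        ‖fw Φ w x - fw Φ w y‖ ≤ (Real.sqrt d * S.r ^ w.length) * ‖x - y‖ := fun x hx y hy => S.lip hd w hx hy
    have := S.r_pos.le
    refine ⟨S.H * (Real.sqrt d * S.r ^ w.length) ^ S.α * (Real.sqrt d * 1) + (Real.sqrt d * 1) * C,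
      by have := S.H_nonneg; positivity, fun u hu u' hu' => ?_⟩
    rw [S.fderiv_cons hd i w hu, S.fderiv_cons hd i w hu']
    exact holder_comp (A := fderiv ℝ (Φ.funs i)) (B := fderiv ℝ (fw Φ w)) S.α_pos S.H_nonneg (by positivity) (by positivity)
      (fun x hx => S.fw_mem w hx) hL (S.holder i) hb1 hC (hb w) hu hu'

/-- Bounded distortion: on the invariant cube the derivatives of all compositions are Hölder continuous
relative to their size, with a constant independent of the word. -/
lemma distortion (S : CfSys Φ) (hd : 1 ≤ d) :
    ∃ B : ℝ, 0 ≤ B ∧ ∀ w : List (Fin Φ.n), ∀ u ∈ closedBall (0 : Euc d) S.R, ∀ u' ∈ closedBall (0 : Euc d) S.R, ∀ e,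
      n2 ((fderiv ℝ (fw Φ w) u' - fderiv ℝ (fw Φ w) u) e) ≤ B * cw Φ w u * ‖u' - u‖ ^ S.α * n2 e := by
  have hH := S.H_nonneg
  have hm := S.m_pos
  have hr := S.r_pos
  have hα := S.α_pos
  set q := S.r ^ S.α with hq
  have hq0 : 0 < q := Real.rpow_pos_of_pos hr _
  have hq1 : q < 1 := Real.rpow_lt_one hr.le S.r_lt hα
  set D : ℝ := 2 ^ S.α with hD
  have hD0 : 0 < D := by positivity
  set K := Real.sqrt d * S.H * Real.sqrt d ^ S.α / S.m with hK
  have hK0 : 0 ≤ K := by positivity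
  let Bn : ℕ → ℝ := fun n => Nat.rec 0 (fun n b => b + K * q ^ n * (1 + D * b)) n
  have hBs : ∀ n, Bn (n + 1) = Bn n + K * q ^ n * (1 + D * Bn n) := fun n => rfl
  have hB0 : ∀ n, 0 ≤ Bn n := by
    intro n
    induction n with
    | zero => exact le_rfl
    | succ n ih => rw [hBs]; positivity
  have hBle : ∀ n, 1 + D * Bn n ≤ Real.exp (D * K * ∑ k ∈ Finset.range n, q ^ k) := by
    intro n
    induction n with
    | zero => simp [Bn]
    | succ n ih =>
      rw [hBs, Finset.sum_range_succ, mul_add (D * K), Real.exp_add]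
      have h1 : D * K * q ^ n + 1 ≤ Real.exp (D * K * q ^ n) := Real.add_one_le_exp _
      calc _ = (1 + D * Bn n) * (D * K * q ^ n + 1) := by ring
        _ ≤ _ := by have := hB0 n; gcongr
  have hsum : ∀ n, ∑ k ∈ Finset.range n, q ^ k ≤ (1 - q)⁻¹ := fun n => by
    rw [← tsum_geometric_of_lt_one hq0.le hq1]
    exact (summable_geometric_of_lt_one hq0.le hq1).sum_le_tsum _ fun k _ => by positivity
  set B := Real.exp (D * K * (1 - q)⁻¹) / D with hB
  have hBB : ∀ n, Bn n ≤ B := fun n => by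
    rw [hB, le_div_iff₀ hD0]
    have h1 : Real.exp (D * K * ∑ k ∈ Finset.range n, q ^ k) ≤ Real.exp (D * K * (1 - q)⁻¹) := by
      gcongr; exact hsum n
    linarith [hBle n]
  refine ⟨B, by positivity, ?_⟩
  suffices h : ∀ w : List (Fin Φ.n), ∀ u ∈ closedBall (0 : Euc d) S.R, ∀ u' ∈ closedBall (0 : Euc d) S.R, ∀ e,
      n2 ((fderiv ℝ (fw Φ w) u' - fderiv ℝ (fw Φ w) u) e) ≤ Bn w.length * cw Φ w u * ‖u' - u‖ ^ S.α * n2 e by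
    intro w u hu u' hu' e
    refine (h w u hu u' hu' e).trans ?_
    have := S.cw_pos hd w (S.closedBall_R_subset hu)
    have := n2_nonneg e
    gcongr
    exact hBB _
  intro w
  induction w with
  | nil => intro u _ u' _ e; simp [fw, Bn, n2]
  | cons i w ih =>
    intro u hu u' hu' e
    have hub := S.closedBall_R_subset hu
    have hub' := S.closedBall_R_subset hu'
    set n := w.length
    have hcu := S.cw_pos hd w hub
    have hne := n2_nonneg e
    set y := fw Φ w u
    set y' := fw Φ w u'
    have hy : y ∈ closedBall (0 : Euc d) S.R := S.fw_mem_R w hu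
    have hy' : y' ∈ closedBall (0 : Euc d) S.R := S.fw_mem_R w hu'
    have hxD : ‖u' - u‖ ^ S.α ≤ D := by
      rw [hD]; gcongr
      have := norm_sub_le u' u
      simp only [mem_closedBall, dist_zero_right] at hu hu'
      linarith [S.R_lt]
    have hyy : ‖y' - y‖ ^ S.α ≤ Real.sqrt d ^ S.α * q ^ n * ‖u' - u‖ ^ S.α := by
      have h1 : ‖y' - y‖ ≤ Real.sqrt d * S.r ^ n * ‖u' - u‖ := S.lip hd w hub' hub
      calc _ ≤ (Real.sqrt d * S.r ^ n * ‖u' - u‖) ^ S.α := by gcongr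
        _ = _ := by
          rw [Real.mul_rpow (by positivity) (norm_nonneg _), Real.mul_rpow (by positivity) (by positivity), hq,
            ← Real.rpow_natCast, ← Real.rpow_natCast, ← Real.rpow_mul hr.le, ← Real.rpow_mul hr.le, mul_comm S.α]
    set v := fderiv ℝ (fw Φ w) u' e
    have hv : n2 v ≤ (1 + D * Bn n) * cw Φ w u * n2 e := by
      have e1 : v = fderiv ℝ (fw Φ w) u e + (fderiv ℝ (fw Φ w) u' - fderiv ℝ (fw Φ w) u) e := by simp [v]
      calc n2 v ≤ n2 (fderiv ℝ (fw Φ w) u e) + n2 ((fderiv ℝ (fw Φ w) u' - fderiv ℝ (fw Φ w) u) e) := by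
            rw [e1]; exact n2_add_le _ _
        _ ≤ cw Φ w u * n2 e + Bn n * cw Φ w u * D * n2 e := by
          refine add_le_add ((S.diffAt hd w hub).2.n2_eq e).le ((ih u hu u' hu' e).trans ?_)
          have := hB0 n
          gcongr
        _ = _ := by ring
    have e2 : (fderiv ℝ (fw Φ (i :: w)) u' - fderiv ℝ (fw Φ (i :: w)) u) e =
        (fderiv ℝ (Φ.funs i) y' - fderiv ℝ (Φ.funs i) y) v +
          fderiv ℝ (Φ.funs i) y ((fderiv ℝ (fw Φ w) u' - fderiv ℝ (fw Φ w) u) e) := by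
      rw [S.fderiv_cons hd i w hub, S.fderiv_cons hd i w hub']
      simp [v, y, y']
    have hc := (Φ.conf i).isCf hd (S.closedBall_R_subset hy)
    have hcm : S.m ≤ confScale (Φ.funs i) y := S.m_le i y hy
    have t1 : n2 ((fderiv ℝ (Φ.funs i) y' - fderiv ℝ (Φ.funs i) y) v) ≤
        K * q ^ n * (1 + D * Bn n) * (confScale (Φ.funs i) y * cw Φ w u) * ‖u' - u‖ ^ S.α * n2 e := by
      have h0 := hB0 n
      calc _ ≤ Real.sqrt d * ‖fderiv ℝ (Φ.funs i) y' - fderiv ℝ (Φ.funs i) y‖ * n2 v := n2_le_of_opNorm _ _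
        _ ≤ Real.sqrt d * (S.H * (Real.sqrt d ^ S.α * q ^ n * ‖u' - u‖ ^ S.α)) * ((1 + D * Bn n) * cw Φ w u * n2 e) := by
          have := n2_nonneg v
          gcongr
          exact (S.holder i y' (S.closedBall_R_subset hy') y (S.closedBall_R_subset hy)).trans (by gcongr)
        _ = K * q ^ n * (1 + D * Bn n) * (S.m * cw Φ w u) * ‖u' - u‖ ^ S.α * n2 e := by
          rw [hK]; field_simp
        _ ≤ _ := by gcongr
    have t2 : n2 (fderiv ℝ (Φ.funs i) y ((fderiv ℝ (fw Φ w) u' - fderiv ℝ (fw Φ w) u) e)) ≤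
        Bn n * (confScale (Φ.funs i) y * cw Φ w u) * ‖u' - u‖ ^ S.α * n2 e := by
      rw [hc.n2_eq]
      calc _ ≤ confScale (Φ.funs i) y * (Bn n * cw Φ w u * ‖u' - u‖ ^ S.α * n2 e) := by
            have := hc.1; gcongr; exact ih u hu u' hu' e
        _ = _ := by ring
    rw [e2, List.length_cons, hBs]
    simp only [cw]
    refine (n2_add_le _ _).trans ((add_le_add t1 t2).trans (le_of_eq ?_))
    ring

/-- Bounded distortion: the scaling factor of a word varies by a bounded factor only, uniformly over
words. -/
lemma cw_le_cw (S : CfSys Φ) (hd : 1 ≤ d) :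
    ∃ E : ℝ, 1 ≤ E ∧ ∀ w : List (Fin Φ.n), ∀ u ∈ closedBall (0 : Euc d) S.R, ∀ u' ∈ closedBall (0 : Euc d) S.R,
      cw Φ w u' ≤ E * cw Φ w u := by
  obtain ⟨B, hB0, hB⟩ := S.distortion hd
  refine ⟨1 + B * 2 ^ S.α, by have : (0:ℝ) ≤ B * 2 ^ S.α := by positivity
                              linarith, fun w u hu u' hu' => ?_⟩
  have hub := S.closedBall_R_subset hu
  have hub' := S.closedBall_R_subset hu'
  have hcu := S.cw_pos hd w hub
  set e : Euc d := Pi.single ⟨0, hd⟩ 1 with he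
  have hne : 0 < n2 e := lt_of_lt_of_le (by simp [he]) (norm_le_n2 e)
  have hxD : ‖u' - u‖ ^ S.α ≤ 2 ^ S.α := by
    have := S.α_pos
    gcongr
    have := norm_sub_le u' u
    simp only [mem_closedBall, dist_zero_right] at hu hu'
    linarith [S.R_lt]
  have e1 : fderiv ℝ (fw Φ w) u' e = fderiv ℝ (fw Φ w) u e + (fderiv ℝ (fw Φ w) u' - fderiv ℝ (fw Φ w) u) e := by simp
  have h1 := n2_add_le (fderiv ℝ (fw Φ w) u e) ((fderiv ℝ (fw Φ w) u' - fderiv ℝ (fw Φ w) u) e)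
  rw [← e1, (S.diffAt hd w hub).2.n2_eq, (S.diffAt hd w hub').2.n2_eq] at h1
  have h2 := hB w u hu u' hu' e
  have h3 : B * cw Φ w u * ‖u' - u‖ ^ S.α * n2 e ≤ B * cw Φ w u * 2 ^ S.α * n2 e := by gcongr
  refine le_of_mul_le_mul_right ?_ hne
  linarith

end CfSys

/-! ### Self-conformal measures -/

/-- `μ` is the self-conformal measure of `Φ` with weights `p`. -/
structure SelfConf {d : ℕ} (Φ : ConformalIFS d) (μ : Measure (Euc d)) (p : Fin Φ.n → ℝ≥0∞) : Prop where
  prob : IsProbabilityMeasure μ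
  null : μ (ball (0 : Euc d) 1)ᶜ = 0
  pos : ∀ i, 0 < p i
  sum : ∑ i, p i = 1
  eq : μ = ∑ i, p i • μ.map (Φ.funs i)

/-- If a weighted average of the `a i` is smaller than that of the `b i`, this is the case for some `i`. -/
lemma exists_lt_of_avg {ι : Type*} [Fintype ι] {p a b : ι → ℝ≥0∞} (hp : ∑ i, p i = 1) {ε : ℝ≥0∞}
    (h : ∑ i, p i * a i + ε < ∑ i, p i * b i) : ∃ i, a i + ε < b i := by
  by_contra! hc
  refine absurd h (not_lt.2 ?_)
  calc ∑ i, p i * b i ≤ ∑ i, p i * (a i + ε) := by gcongr with i; exact hc i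
    _ = _ := by simp only [mul_add, Finset.sum_add_distrib, ← Finset.sum_mul, hp, one_mul]

namespace SelfConf

variable {d : ℕ} {Φ : ConformalIFS d} {μ : Measure (Euc d)} {p : Fin Φ.n → ℝ≥0∞}

lemma ae_ball (h : SelfConf Φ μ p) : ∀ᵐ u ∂μ, u ∈ ball (0 : Euc d) 1 := h.null

lemma aemeas (hd : 1 ≤ d) (h : SelfConf Φ μ p) (S : CfSys Φ) (w : List (Fin Φ.n)) : AEMeasurable (fw Φ w) μ := by
  have h1 : ContinuousOn (fw Φ w) (ball 0 1) := fun u hu => (S.diffAt hd w hu).1.continuousAt.continuousWithinAt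
  have h2 := h1.aemeasurable (μ := μ) isOpen_ball.measurableSet
  rwa [Measure.restrict_eq_self_of_ae_mem h.ae_ball] at h2

lemma aemeas_fun (hd : 1 ≤ d) (h : SelfConf Φ μ p) (S : CfSys Φ) (i : Fin Φ.n) : AEMeasurable (Φ.funs i) μ :=
  h.aemeas hd S [i]

lemma le (h : SelfConf Φ μ p) (i : Fin Φ.n) : p i • μ.map (Φ.funs i) ≤ μ := by
  refine Measure.le_iff'.2 fun s => ?_
  conv_rhs => rw [h.eq]
  rw [Measure.finsetSum_apply]
  exact Finset.single_le_sum (f := fun i => (p i • μ.map (Φ.funs i)) s) (fun j _ => zero_le) (Finset.mem_univ i)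

lemma ac (h : SelfConf Φ μ p) (i : Fin Φ.n) : μ.map (Φ.funs i) ≪ μ := by
  intro s hs
  have h1 : p i * μ.map (Φ.funs i) s ≤ μ s := h.le i s
  rw [hs] at h1
  exact (mul_eq_zero.1 (le_antisymm h1 zero_le)).resolve_left (h.pos i).ne'

lemma lintegral_eq (hd : 1 ≤ d) (h : SelfConf Φ μ p) (S : CfSys Φ) {g : Euc d → ℝ≥0∞} (hg : AEMeasurable g μ) :
    ∫⁻ u, g u ∂μ = ∑ i, p i * ∫⁻ u, g (Φ.funs i u) ∂μ := by
  conv_lhs => rw [h.eq]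
  rw [lintegral_finsetSum_measure]
  refine Finset.sum_congr rfl fun i _ => ?_
  rw [lintegral_smul_measure, smul_eq_mul, lintegral_map' (hg.mono_ac (h.ac i)) (h.aemeas_fun hd S i)]

lemma measure_eq (hd : 1 ≤ d) (h : SelfConf Φ μ p) (S : CfSys Φ) {A : Set (Euc d)} (hA : MeasurableSet A) :
    μ A = ∑ i, p i * μ (Φ.funs i ⁻¹' A) := by
  conv_lhs => rw [h.eq]
  rw [Measure.finsetSum_apply]
  refine Finset.sum_congr rfl fun i _ => ?_
  rw [Measure.smul_apply, smul_eq_mul, Measure.map_apply_of_aemeasurable (h.aemeas_fun hd S i) hA]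

lemma ae_comp (hd : 1 ≤ d) (h : SelfConf Φ μ p) (S : CfSys Φ) (i : Fin Φ.n) {P : Euc d → Prop} (hP : ∀ᵐ u ∂μ, P u) :
    ∀ᵐ u ∂μ, P (Φ.funs i u) :=
  ae_of_ae_map (h.aemeas_fun hd S i) ((h.ac i).ae_le hP)

lemma ae_ball_R (hd : 1 ≤ d) (h : SelfConf Φ μ p) (S : CfSys Φ) : ∀ᵐ u ∂μ, u ∈ ball (0 : Euc d) S.R := by
  show μ (ball (0 : Euc d) S.R)ᶜ = 0
  rw [h.measure_eq hd S isOpen_ball.measurableSet.compl]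
  refine Finset.sum_eq_zero fun i _ => mul_eq_zero_of_right _ ?_
  refine measure_mono_null (t := (ball (0 : Euc d) 1)ᶜ) ?_ h.null
  intro u hu hub
  exact hu (S.maps i u hub)

lemma lintegral_word (hd : 1 ≤ d) (h : SelfConf Φ μ p) (S : CfSys Φ) {g : Euc d → ℝ≥0∞} (hg : Measurable g)
    (w : List (Fin Φ.n)) :
    ∫⁻ u, g (fw Φ w u) ∂μ = ∑ i, p i * ∫⁻ u, g (fw Φ (w ++ [i]) u) ∂μ := by
  simp only [fw_append]
  exact h.lintegral_eq hd S (hg.comp_aemeasurable (h.aemeas hd S w))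

/-- If two self-conformal measures gave `f` different integrals, the gap would persist along arbitrarily
long words `w`; but `f ∘ f_w` is nearly constant for long `w`. -/
lemma lintegral_le_of_two (hd : 1 ≤ d) {μ₁ μ₂ : Measure (Euc d)} (h₁ : SelfConf Φ μ₁ p) (h₂ : SelfConf Φ μ₂ p)
    (S : CfSys Φ) (f : BoundedContinuousFunction (Euc d) ℝ≥0) : ∫⁻ u, f u ∂μ₂ ≤ ∫⁻ u, f u ∂μ₁ := by
  refine ENNReal.le_of_forall_pos_le_add fun ε hε _ => ?_
  by_contra! hlt
  have hfm : Measurable fun u => (f u : ℝ≥0∞) := f.continuous.measurable.coe_nnreal_ennreal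
  have := h₁.prob
  have := h₂.prob
  -- descending along words while preserving the gap
  have hdesc : ∀ n : ℕ, ∃ w : List (Fin Φ.n), w.length = n ∧
      ∫⁻ u, f (fw Φ w u) ∂μ₁ + ε < ∫⁻ u, f (fw Φ w u) ∂μ₂ := by
    intro n
    induction n with
    | zero => exact ⟨[], rfl, by simpa [fw] using hlt⟩
    | succ n ih =>
      obtain ⟨w, hw, hlt⟩ := ih
      rw [h₁.lintegral_word hd S hfm w, h₂.lintegral_word hd S hfm w] at hlt
      obtain ⟨i, hi⟩ := exists_lt_of_avg h₁.sum hlt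
      exact ⟨w ++ [i], by simp [hw], hi⟩
  have huc : UniformContinuousOn f (closedBall (0 : Euc d) S.R) :=
    (isCompact_closedBall _ _).uniformContinuousOn_of_continuous f.continuous.continuousOn
  obtain ⟨δ, hδ, hδf⟩ := Metric.uniformContinuousOn_iff.1 huc (ε / 2) (by positivity)
  obtain ⟨n, hn⟩ : ∃ n : ℕ, Real.sqrt d * S.r ^ n * 1 < δ := by
    have h1 : Tendsto (fun n : ℕ => Real.sqrt d * S.r ^ n * 1) atTop (𝓝 (Real.sqrt d * 0 * 1)) :=
      ((tendsto_pow_atTop_nhds_zero_of_lt_one S.r_pos.le S.r_lt).const_mul _).mul_const _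
    rw [mul_zero, zero_mul] at h1
    exact (h1.eventually_lt_const hδ).exists
  obtain ⟨w, hw, hlt⟩ := hdesc n
  have h0 : (0 : Euc d) ∈ closedBall (0 : Euc d) S.R := by simp [S.R_pos.le]
  have hclose : ∀ u ∈ ball (0 : Euc d) S.R, dist (f (fw Φ w u)) (f (fw Φ w 0)) < ε / 2 := by
    intro u hu
    refine hδf _ (S.fw_mem_R w (ball_subset_closedBall hu)) _ (S.fw_mem_R w h0) ?_
    rw [dist_eq_norm]
    refine lt_of_le_of_lt (S.lip hd w (S.ball_R_subset hu) (S.closedBall_R_subset h0)) ?_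
    rw [hw]
    refine lt_of_le_of_lt ?_ hn
    have := S.r_pos.le
    have hu' : ‖u‖ ≤ 1 := by
      have : ‖u‖ < S.R := by simpa using hu
      linarith [S.R_lt]
    gcongr
    simpa using hu'
  have hε2 : (0 : ℝ) ≤ ε := ε.2
  have u1 : ∫⁻ u, f (fw Φ w u) ∂μ₂ ≤ f (fw Φ w 0) + (ε / 2 : ℝ≥0) := by
    calc _ ≤ ∫⁻ _u, ((f (fw Φ w 0) + ε / 2 : ℝ≥0) : ℝ≥0∞) ∂μ₂ := by
          refine lintegral_mono_ae ?_
          filter_upwards [h₂.ae_ball_R hd S] with u hu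
          have h2 := abs_lt.1 (by simpa [NNReal.dist_eq] using hclose u hu)
          have : (f (fw Φ w u) : ℝ) ≤ (f (fw Φ w 0) + ε / 2 : ℝ≥0) := by push_cast; linarith [h2.2]
          exact_mod_cast this
      _ = _ := by simp
  have u2 : (f (fw Φ w 0) : ℝ≥0∞) ≤ ∫⁻ u, f (fw Φ w u) ∂μ₁ + (ε / 2 : ℝ≥0) := by
    calc (f (fw Φ w 0) : ℝ≥0∞) = ∫⁻ _u, (f (fw Φ w 0) : ℝ≥0∞) ∂μ₁ := by simp
      _ ≤ ∫⁻ u, ((f (fw Φ w u) : ℝ≥0∞) + (ε / 2 : ℝ≥0)) ∂μ₁ := by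
          refine lintegral_mono_ae ?_
          filter_upwards [h₁.ae_ball_R hd S] with u hu
          have h2 := abs_lt.1 (by simpa [NNReal.dist_eq] using hclose u hu)
          have : (f (fw Φ w 0) : ℝ) ≤ (f (fw Φ w u) + ε / 2 : ℝ≥0) := by push_cast; linarith [h2.1]
          exact_mod_cast this
      _ = _ := by rw [lintegral_add_right _ measurable_const]; simp
  refine absurd hlt (not_lt.2 (u1.trans ?_))
  calc (f (fw Φ w 0) : ℝ≥0∞) + (ε / 2 : ℝ≥0) ≤ (∫⁻ u, f (fw Φ w u) ∂μ₁ + (ε / 2 : ℝ≥0)) + (ε / 2 : ℝ≥0) := by gcongr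
    _ = _ := by rw [add_assoc, ← ENNReal.coe_add, add_halves]

lemma unique (hd : 1 ≤ d) {μ₁ μ₂ : Measure (Euc d)} (h₁ : SelfConf Φ μ₁ p) (h₂ : SelfConf Φ μ₂ p)
    (S : CfSys Φ) : μ₁ = μ₂ := by
  have := h₁.prob
  have := h₂.prob
  exact ext_of_forall_lintegral_eq_of_IsFiniteMeasure fun f =>
    le_antisymm (lintegral_le_of_two hd h₂ h₁ S f) (lintegral_le_of_two hd h₁ h₂ S f)

/-- The self-conformal measure is ergodic: sets that are forward invariant under all the maps of the
system are trivial. -/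
lemma zero_one (hd : 1 ≤ d) (h : SelfConf Φ μ p) (S : CfSys Φ) {E : Set (Euc d)} (hE : MeasurableSet E)
    (hinv : ∀ i, ∀ᵐ u ∂μ, u ∈ E → Φ.funs i u ∈ E) : μ E = 0 ∨ μ Eᶜ = 0 := by
  by_cases h0 : μ E = 0
  · exact Or.inl h0
  right
  have := h.prob
  have hsum : ∑ i, p i * μ (Φ.funs i ⁻¹' E \ E) = 0 := by
    have h1 : μ E + ∑ i, p i * μ (Φ.funs i ⁻¹' E \ E) ≤ μ E + 0 := by
      calc μ E + ∑ i, p i * μ (Φ.funs i ⁻¹' E \ E) = ∑ i, p i * (μ E + μ (Φ.funs i ⁻¹' E \ E)) := by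
            simp only [mul_add, Finset.sum_add_distrib, ← Finset.sum_mul, h.sum, one_mul]
        _ ≤ ∑ i, p i * μ (Φ.funs i ⁻¹' E) := by
          gcongr with i
          rw [← measure_inter_add_sdiff (Φ.funs i ⁻¹' E) hE]
          gcongr ?_ + _
          refine measure_mono_ae ?_
          filter_upwards [hinv i] with u hu huE
          exact ⟨hu huE, huE⟩
        _ = μ E + 0 := by rw [← h.measure_eq hd S hE, add_zero]
    exact le_antisymm ((ENNReal.add_le_add_iff_left (measure_ne_top _ _)).1 h1) zero_le
  have hiff : ∀ i, ∀ᵐ u ∂μ, u ∈ E ↔ Φ.funs i u ∈ E := by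
    intro i
    have h2 : μ (Φ.funs i ⁻¹' E \ E) = 0 :=
      (mul_eq_zero.1 ((Finset.sum_eq_zero_iff.1 hsum) i (Finset.mem_univ i))).resolve_left (h.pos i).ne'
    filter_upwards [hinv i, measure_eq_zero_iff_ae_notMem.1 h2] with u hu hu2
    exact ⟨hu, fun hf => by_contra fun hn => hu2 ⟨hf, hn⟩⟩
  set ρ := ProbabilityTheory.cond μ E with hρ
  have hac : ρ ≪ μ := ProbabilityTheory.cond_absolutelyContinuous
  have hρs : SelfConf Φ ρ p := by
    refine ⟨ProbabilityTheory.cond_isProbabilityMeasure h0, hac h.null, h.pos, h.sum, ?_⟩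
    ext A hA
    rw [Measure.finsetSum_apply, ProbabilityTheory.cond_apply hE, h.measure_eq hd S (hE.inter hA), Finset.mul_sum]
    refine Finset.sum_congr rfl fun i _ => ?_
    rw [Measure.smul_apply, smul_eq_mul,
      Measure.map_apply_of_aemeasurable ((h.aemeas_fun hd S i).mono_ac hac) hA, ProbabilityTheory.cond_apply hE]
    have : μ (Φ.funs i ⁻¹' (E ∩ A)) = μ (E ∩ Φ.funs i ⁻¹' A) := by
      refine measure_congr ?_
      filter_upwards [hiff i] with u hu
      exact propext ⟨fun h => ⟨hu.2 h.1, h.2⟩, fun h => ⟨hu.1 h.1, h.2⟩⟩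
    rw [this]; ring
  have hEq := unique hd hρs h S
  rw [← hEq, hρ, ProbabilityTheory.cond_apply hE]
  simp

lemma ball_ge (hd : 1 ≤ d) (h : SelfConf Φ μ p) (S : CfSys Φ) (i : Fin Φ.n) {u : Euc d} (hu : u ∈ ball (0 : Euc d) 1)
    (t : ℝ) {k : ℝ} (hk : Real.sqrt d ≤ 2 ^ k) :
    p i * μ (closedBall u ((2 : ℝ) ^ (-(t + k)))) ≤ μ (closedBall (Φ.funs i u) ((2 : ℝ) ^ (-t))) := by
  refine le_trans ?_ (h.le i _)
  rw [Measure.smul_apply, smul_eq_mul, Measure.map_apply_of_aemeasurable (h.aemeas_fun hd S i) measurableSet_closedBall]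
  gcongr 1
  refine measure_mono_ae ?_
  filter_upwards [h.ae_ball] with v hv hvu
  change dist _ _ ≤ _ at hvu
  change dist _ _ ≤ _
  rw [dist_eq_norm] at hvu ⊢
  have h1 := S.lip hd [i] hv hu
  calc _ ≤ Real.sqrt d * S.r ^ 1 * ‖v - u‖ := h1
    _ ≤ 2 ^ k * 1 * 2 ^ (-(t + k)) := by
      have := S.r_pos.le
      gcongr
      simpa using S.r_lt.le
    _ = _ := by rw [mul_one, ← Real.rpow_add two_pos]; congr 1; ring

lemma measurable_phi {θ : Measure (Euc d)} [IsFiniteMeasure θ] (t : ℝ) : Measurable fun z => phi θ z t := by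
  unfold phi
  refine (Real.measurable_log.comp ?_).neg
  refine ENNReal.measurable_toReal.comp ?_
  exact measurable_measure_prodMk_left (ν := θ) (s := {q : Euc d × Euc d | dist q.2 q.1 ≤ (2 : ℝ) ^ (-t)})
    (measurableSet_le (by fun_prop) measurable_const)

/-- The upper local dimension of a self-conformal measure (in units of `log 2`) is almost surely constant. -/
lemma exists_dim (hd : 1 ≤ d) (h : SelfConf Φ μ p) (S : CfSys Φ) :
    ∃ s : ℝ, (∀ᵐ u ∂μ, ∀ ε > 0, ∀ᶠ n : ℕ in atTop, phi μ u n ≤ (s + ε) * n) ∧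
      (∀ᵐ u ∂μ, ∀ ε > 0, ∃ᶠ n : ℕ in atTop, (s - ε) * n ≤ phi μ u n) := by
  have := h.prob
  set E : ℝ → Set (Euc d) := fun c => {u | ∀ k : ℕ, ∀ᶠ n : ℕ in atTop, phi μ u n ≤ (c + 1 / ((k : ℝ) + 1)) * n} with hEdef
  have hEm : ∀ c, MeasurableSet (E c) := by
    intro c
    simp only [hEdef, eventually_atTop, ofPred_forall, ofPred_exists]
    exact MeasurableSet.iInter fun k => MeasurableSet.iUnion fun N => MeasurableSet.iInter fun n =>
      MeasurableSet.iInter fun _ => measurableSet_le (measurable_phi _) measurable_const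
  have hEε : ∀ c, ∀ u ∈ E c, ∀ ε > 0, ∀ᶠ n : ℕ in atTop, phi μ u n ≤ (c + ε) * n := by
    intro c u hu ε hε
    obtain ⟨k, hk⟩ := exists_nat_one_div_lt hε
    filter_upwards [hu k] with n hn
    refine hn.trans ?_
    gcongr
  have hinv : ∀ c i, ∀ᵐ u ∂μ, u ∈ E c → Φ.funs i u ∈ E c := by
    intro c i
    obtain ⟨k, hk⟩ := pow_unbounded_of_one_lt (Real.sqrt d) one_lt_two
    have hk' : Real.sqrt d ≤ (2 : ℝ) ^ (k : ℝ) := by rw [Real.rpow_natCast]; exact hk.le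
    filter_upwards [h.ae_ball, ae_inSpt μ] with u hub huS huE j
    set ε : ℝ := 1 / ((j : ℝ) + 1) with hε
    have hεp : 0 < ε := by positivity
    have h1 := hEε c u huE (ε / 2) (by positivity)
    have h2 : ∀ᶠ n : ℕ in atTop, phi μ u ((n + k : ℕ) : ℝ) ≤ (c + ε / 2) * ((n + k : ℕ) : ℝ) :=
      (tendsto_add_atTop_nat k).eventually h1
    set C := -Real.log (p i).toReal
    have hpi : p i ≠ ∞ := ((ENNReal.sum_lt_top.1 (by rw [h.sum]; exact ENNReal.one_lt_top)) i (Finset.mem_univ i)).ne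
    have hpp : 0 < (p i).toReal := ENNReal.toReal_pos (h.pos i).ne' hpi
    have h3 : ∀ᶠ n : ℕ in atTop, (c + ε / 2) * k + C ≤ ε / 2 * n := by
      have : Tendsto (fun n : ℕ => ε / 2 * (n : ℝ)) atTop atTop := tendsto_natCast_atTop_atTop.const_mul_atTop (by positivity)
      exact this.eventually_ge_atTop _
    filter_upwards [h2, h3] with n hn2 hn3
    have hb := h.ball_ge hd S i hub n hk'
    have hb' : (p i).toReal * μ.real (closedBall u ((2 : ℝ) ^ (-((n : ℝ) + k)))) ≤
        μ.real (closedBall (Φ.funs i u) ((2 : ℝ) ^ (-(n : ℝ)))) := by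
      rw [measureReal_def, measureReal_def, ← ENNReal.toReal_mul]
      exact ENNReal.toReal_mono (measure_ne_top _ _) hb
    have hp := huS.real_pos ((n : ℝ) + k)
    have h4 : phi μ (Φ.funs i u) n ≤ C + phi μ u ((n : ℝ) + k) := by
      have := Real.log_le_log (mul_pos hpp hp) hb'
      rw [Real.log_mul hpp.ne' hp.ne'] at this
      simp only [phi, C]
      linarith
    push_cast at hn2
    calc _ ≤ C + (c + ε / 2) * (n + k) := by linarith
      _ ≤ _ := by linarith
  have hlin : μ (E (d + 1))ᶜ = 0 := by
    have : ∀ᵐ u ∂μ, u ∈ E (d + 1) := by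
      filter_upwards [ae_phi_le_linear μ] with u hu k
      filter_upwards [hu] with n hn
      refine hn.trans (mul_le_mul_of_nonneg_right ?_ (Nat.cast_nonneg n))
      have : (0 : ℝ) ≤ 1 / ((k : ℝ) + 1) := by positivity
      linarith
    exact this
  set T := {c : ℝ | μ (E c)ᶜ = 0} with hT
  have hTne : T.Nonempty := ⟨_, hlin⟩
  have hTb : ∀ c ∈ T, 0 ≤ c := by
    intro c hc
    by_contra! hneg
    have hc' : ∀ᵐ u ∂μ, u ∈ E c := hc
    obtain ⟨u, hu⟩ := hc'.exists
    have h1 := hEε c u hu (-c / 2) (by linarith)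
    obtain ⟨n, hn, hn1⟩ := (h1.and (eventually_ge_atTop 1)).exists
    have hn1' : (1 : ℝ) ≤ n := by exact_mod_cast hn1
    have := phi_nonneg μ u n
    nlinarith
  have hmono : ∀ {c c'}, c ≤ c' → E c ⊆ E c' := by
    intro c c' hcc u hu k
    filter_upwards [hu k] with n hn
    exact hn.trans (by gcongr)
  have hbdd : BddBelow T := ⟨0, fun c hc => hTb c hc⟩
  refine ⟨sInf T, ?_, ?_⟩
  · have h1 : ∀ k : ℕ, ∀ᵐ u ∂μ, u ∈ E (sInf T + 1 / ((k : ℝ) + 1)) := by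
      intro k
      have hk : (0 : ℝ) < 1 / ((k : ℝ) + 1) := by positivity
      obtain ⟨c, hc, hck⟩ := exists_lt_of_csInf_lt hTne (lt_add_of_pos_right (sInf T) hk)
      have : ∀ᵐ u ∂μ, u ∈ E c := hc
      filter_upwards [this] with u hu using hmono hck.le hu
    filter_upwards [ae_all_iff.2 h1] with u hu ε hε
    obtain ⟨k, hk⟩ := exists_nat_one_div_lt (half_pos hε)
    filter_upwards [hEε _ u (hu k) (ε / 2) (half_pos hε)] with n hn
    refine hn.trans (mul_le_mul_of_nonneg_right ?_ (Nat.cast_nonneg n))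
    linarith
  · have h1 : ∀ k : ℕ, ∀ᵐ u ∂μ, u ∉ E (sInf T - 1 / ((k : ℝ) + 1)) := by
      intro k
      have hk : (0 : ℝ) < 1 / ((k : ℝ) + 1) := by positivity
      have hnot : sInf T - 1 / ((k : ℝ) + 1) ∉ T := fun hm => by
        have := csInf_le hbdd hm
        linarith
      have := (h.zero_one hd S (hEm _) (hinv (sInf T - 1 / ((k : ℝ) + 1)))).resolve_right hnot
      exact measure_eq_zero_iff_ae_notMem.1 this
    filter_upwards [ae_all_iff.2 h1] with u hu ε hε
    obtain ⟨k, hk⟩ := exists_nat_one_div_lt hε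
    have h2 := hu k
    simp only [hEdef, mem_ofPred_eq, not_forall, not_eventually] at h2
    obtain ⟨j, hj⟩ := h2
    refine hj.mono fun n hn => ?_
    rw [not_le] at hn
    refine le_trans ?_ hn.le
    have : (0 : ℝ) < 1 / ((j : ℝ) + 1) := by positivity
    refine mul_le_mul_of_nonneg_right ?_ (Nat.cast_nonneg n)
    linarith

end SelfConf

/-! ### Compactness of conformal maps -/

/-- A null set can be detected by an increasing sequence of bounded continuous functions with small
integrals, which tends to infinity on the null set. -/
lemma exists_detecting {X : Type*} [MetricSpace X] [MeasurableSpace X] [BorelSpace X]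
    (ρ : Measure X) [IsProbabilityMeasure ρ] {N : Set X} (hN : ρ N = 0) {ε : ℝ≥0∞} (hε : 0 < ε) (hε1 : ε < 1) :
    ∃ F : ℕ → BoundedContinuousFunction X ℝ≥0, (∀ y, Monotone fun M => F M y) ∧
      (∀ M, ∫⁻ y, F M y ∂ρ ≤ ε) ∧ ∀ y ∈ N, ∀ C : ℕ, ∃ M, (C : ℝ≥0) ≤ F M y := by
  obtain ⟨δ, hδ, hsum⟩ := ENNReal.exists_pos_sum_of_countable hε.ne' ℕ
  have hU : ∀ m, ∃ U, N ⊆ U ∧ IsOpen U ∧ ρ U < δ m := fun m => by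
    obtain ⟨U, h1, h2, h3⟩ := N.exists_isOpen_lt_of_lt (μ := ρ) (δ m) (by rw [hN]; exact_mod_cast hδ m)
    exact ⟨U, h1, h2, h3⟩
  choose U hNU hUo hUm using hU
  have hne : ∀ m, (U m)ᶜ.Nonempty := by
    intro m
    by_contra h
    have hu : U m = univ := by simpa [not_nonempty_iff_eq_empty] using h
    have h1 := hUm m
    rw [hu, measure_univ] at h1
    have h2 : (δ m : ℝ≥0∞) ≤ ∑' m, (δ m : ℝ≥0∞) := ENNReal.le_tsum m
    exact absurd (h1.trans_le h2) (not_lt.2 (hsum.trans hε1).le)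
  set f : ℕ → ℕ → X → ℝ≥0 := fun m k y => min 1 (k * infNndist y (U m)ᶜ) with hf
  have hfc : ∀ m k, Continuous (f m k) := fun m k =>
    continuous_const.min (continuous_const.mul (continuous_infNndist_pt _))
  have hf1 : ∀ m k y, f m k y ≤ 1 := fun m k y => min_le_left _ _
  have hfm : ∀ m y, Monotone fun k => f m k y := fun m y k k' hk => by
    simp only [hf]; gcongr
  have hfU : ∀ m k y, (f m k y : ℝ≥0∞) ≤ (U m).indicator 1 y := by
    intro m k y
    by_cases hy : y ∈ U m
    · simp only [hy, indicator_of_mem, Pi.one_apply]; exact_mod_cast hf1 m k y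
    · have : infNndist y (U m)ᶜ = 0 := by
        rw [← NNReal.coe_eq_zero, coe_infNndist]; exact infDist_zero_of_mem hy
      simp [hf, this]
  refine ⟨fun M => BoundedContinuousFunction.mkOfBound ⟨fun y => ∑ m ∈ Finset.range M, f m M y,
    continuous_finsetSum _ fun m _ => hfc m M⟩ M fun x y => ?_, fun y M M' hM => ?_, fun M => ?_, fun y hy C => ?_⟩
  · have hb : ∀ z, ∑ m ∈ Finset.range M, f m M z ≤ M := fun z => by
      calc _ ≤ ∑ m ∈ Finset.range M, (1 : ℝ≥0) := Finset.sum_le_sum fun m _ => hf1 m M z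
        _ = M := by simp
    simp only [ContinuousMap.coe_mk, NNReal.dist_eq]
    have h1 : ((∑ m ∈ Finset.range M, f m M x : ℝ≥0) : ℝ) ≤ M := by exact_mod_cast hb x
    have h2 : ((∑ m ∈ Finset.range M, f m M y : ℝ≥0) : ℝ) ≤ M := by exact_mod_cast hb y
    rw [abs_le]
    constructor <;> linarith [NNReal.coe_nonneg (∑ m ∈ Finset.range M, f m M x), NNReal.coe_nonneg (∑ m ∈ Finset.range M, f m M y)]
  · simp only [BoundedContinuousFunction.mkOfBound_coe, ContinuousMap.coe_mk]
    calc ∑ m ∈ Finset.range M, f m M y ≤ ∑ m ∈ Finset.range M, f m M' y := Finset.sum_le_sum fun m _ => hfm m y hM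
      _ ≤ _ := Finset.sum_le_sum_of_subset (Finset.range_mono hM)
  · simp only [BoundedContinuousFunction.mkOfBound_coe, ContinuousMap.coe_mk, ENNReal.ofNNReal_finsetSum]
    rw [lintegral_finsetSum _ fun m _ => (hfc m M).measurable.coe_nnreal_ennreal]
    calc ∑ m ∈ Finset.range M, ∫⁻ y, f m M y ∂ρ ≤ ∑ m ∈ Finset.range M, (δ m : ℝ≥0∞) := by
          refine Finset.sum_le_sum fun m _ => ?_
          refine (lintegral_mono (hfU m M)).trans ?_
          rw [lintegral_indicator_one (hUo m).measurableSet]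
          exact (hUm m).le
      _ ≤ ∑' m, (δ m : ℝ≥0∞) := ENNReal.sum_le_tsum _
      _ ≤ ε := hsum.le
  · have hev : ∀ m, ∀ᶠ k : ℕ in atTop, f m k y = 1 := by
      intro m
      have hpos : 0 < infNndist y (U m)ᶜ := by
        rw [← NNReal.coe_pos, coe_infNndist]
        refine ((hUo m).isClosed_compl.notMem_iff_infDist_pos (hne m)).1 ?_
        simpa using hNU m hy
      have : Tendsto (fun k : ℕ => (k : ℝ≥0) * infNndist y (U m)ᶜ) atTop atTop :=
        tendsto_natCast_atTop_atTop.atTop_mul_const hpos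
      filter_upwards [this.eventually_ge_atTop 1] with k hk
      exact min_eq_left hk
    have hall : ∀ᶠ k : ℕ in atTop, ∀ m ∈ Finset.range C, f m k y = 1 :=
      (Finset.eventually_all _).2 fun m _ => hev m
    obtain ⟨M, hM, hMC⟩ := (hall.and (eventually_ge_atTop C)).exists
    refine ⟨M, ?_⟩
    simp only [BoundedContinuousFunction.mkOfBound_coe, ContinuousMap.coe_mk]
    calc (C : ℝ≥0) = ∑ m ∈ Finset.range C, f m M y := by rw [Finset.sum_congr rfl hM]; simp
      _ ≤ _ := Finset.sum_le_sum_of_subset (Finset.range_mono hMC)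

/-- Compactness of families of maps with uniformly conformal, uniformly Hölder continuous derivatives. -/
lemma exists_limit_map {d : ℕ} (hd : 1 ≤ d) {R α H a b : ℝ} (hα : 0 < α) (ha : 0 < a)
    {G : ℕ → Euc d → Euc d} {G' : ℕ → Euc d → Euc d →L[ℝ] Euc d} {c : ℕ → Euc d → ℝ}
    (hder : ∀ n, ∀ u ∈ closedBall (0 : Euc d) R, HasFDerivAt (G n) (G' n u) u)
    (hcf : ∀ n, ∀ u ∈ closedBall (0 : Euc d) R, IsCf (G' n u) (c n u))
    (hac : ∀ n, ∀ u ∈ closedBall (0 : Euc d) R, a ≤ c n u) (hcb : ∀ n, ∀ u ∈ closedBall (0 : Euc d) R, c n u ≤ b)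
    (hhol : ∀ n, ∀ u ∈ closedBall (0 : Euc d) R, ∀ u' ∈ closedBall (0 : Euc d) R,
      ‖G' n u - G' n u'‖ ≤ H * ‖u - u'‖ ^ α)
    (hmaps : ∀ n, ∀ u ∈ closedBall (0 : Euc d) R, ‖G n u‖ ≤ 1 / 2) :
    ∃ ψ : ℕ → ℕ, StrictMono ψ ∧ ∃ g : Euc d → Euc d,
      (∀ u ∈ closedBall (0 : Euc d) R, Tendsto (fun n => G (ψ n) u) atTop (𝓝 (g u))) ∧
      (∀ u ∈ closedBall (0 : Euc d) R, ‖g u‖ ≤ 1 / 2) ∧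
      (∀ u ∈ ball (0 : Euc d) R, DifferentiableAt ℝ g u ∧ ‖fderiv ℝ g u‖ ≤ Real.sqrt d * b ∧
        ∃ c₀, a ≤ c₀ ∧ IsCf (fderiv ℝ g u) c₀) ∧
      ∀ u ∈ ball (0 : Euc d) R, ∀ u' ∈ ball (0 : Euc d) R, ‖fderiv ℝ g u - fderiv ℝ g u'‖ ≤ H * ‖u - u'‖ ^ α := by
  classical
  set W := closedBall (0 : Euc d) R with hW
  have hWc : CompactSpace W := isCompact_iff_compactSpace.1 (isCompact_closedBall _ _)
  have hG'b : ∀ n, ∀ u ∈ W, ‖G' n u‖ ≤ Real.sqrt d * b := fun n u hu =>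
    (hcf n u hu).opNorm_le.trans (by gcongr; exact hcb n u hu)
  have hGlip : ∀ n, ∀ u ∈ W, ∀ u' ∈ W, ‖G n u - G n u'‖ ≤ Real.sqrt d * b * ‖u - u'‖ := fun n u hu u' hu' =>
    (convex_closedBall (0 : Euc d) R).norm_image_sub_le_of_norm_hasFDerivWithin_le
      (fun x hx => (hder n x hx).hasFDerivWithinAt) (fun x hx => hG'b n x hx) hu' hu
  set β : ℝ → ℝ := fun s => max (Real.sqrt d * b * s) (H * |s| ^ α) with hβ
  have hβlim : Tendsto β (𝓝 0) (𝓝 0) := by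
    have hc : Continuous β := by
      refine (continuous_const.mul continuous_id).max (continuous_const.mul ?_)
      exact continuous_abs.rpow_const fun _ => Or.inr hα.le
    have := hc.tendsto 0
    simpa [hβ, Real.zero_rpow hα.ne'] using this
  have hmod : ∀ n (u u' : W), dist (G n u, G' n u) (G n u', G' n u') ≤ β (dist u u') := by
    intro n u u'
    rw [Prod.dist_eq]
    simp only [dist_eq_norm, Subtype.dist_eq, hβ, abs_norm]
    exact max_le_max (hGlip n u u.2 u' u'.2) (hhol n u u.2 u' u'.2)
  have hcont : ∀ n, Continuous fun u : W => (G n u, G' n u) := by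
    intro n
    have := equicontinuous_of_continuity_modulus β hβlim (fun (_ : Unit) (u : W) => (G n u, G' n u))
      (fun x y _ => hmod n x y)
    exact this.continuous ()
  set F : ℕ → BoundedContinuousFunction W (Euc d × (Euc d →L[ℝ] Euc d)) := fun n =>
    BoundedContinuousFunction.mkOfCompact ⟨fun u : W => (G n u, G' n u), hcont n⟩ with hF
  have hFa : ∀ n u, F n u = (G n u, G' n u) := fun n u => rfl
  have hcpt : IsCompact (closure (range F)) := by
    refine BoundedContinuousFunction.arzela_ascoli
      (closedBall (0 : Euc d) (1 / 2) ×ˢ closedBall (0 : Euc d →L[ℝ] Euc d) (Real.sqrt d * b))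
      ((isCompact_closedBall _ _).prod ?_) _ ?_ ?_
    · have := FiniteDimensional.proper ℝ (Euc d →L[ℝ] Euc d)
      exact isCompact_closedBall _ _
    · rintro _ u ⟨n, rfl⟩
      rw [hFa]
      exact ⟨by simpa using hmaps n u u.2, by simpa using hG'b n u u.2⟩
    · refine equicontinuous_of_continuity_modulus β hβlim _ ?_
      rintro u u' ⟨_, n, rfl⟩
      exact hmod n u u'
  obtain ⟨f, -, ψ, hψ, hlim⟩ := hcpt.tendsto_subseq (x := F) fun n => subset_closure ⟨n, rfl⟩
  have hpt : ∀ u : W, Tendsto (fun n => F (ψ n) u) atTop (𝓝 (f u)) := fun u =>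
    ((continuous_eval_const (F := BoundedContinuousFunction W (Euc d × (Euc d →L[ℝ] Euc d))) u).tendsto f).comp hlim
  set g : Euc d → Euc d := fun u => if hu : u ∈ W then (f ⟨u, hu⟩).1 else 0 with hg
  set g' : Euc d → Euc d →L[ℝ] Euc d := fun u => if hu : u ∈ W then (f ⟨u, hu⟩).2 else 0 with hg'
  have hgl : ∀ u ∈ W, Tendsto (fun n => G (ψ n) u) atTop (𝓝 (g u)) := by
    intro u hu
    have := (continuous_fst.tendsto _).comp (hpt ⟨u, hu⟩)
    simpa [hg, hu, hFa, Function.comp_def] using this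
  have hg'l : ∀ u ∈ W, Tendsto (fun n => G' (ψ n) u) atTop (𝓝 (g' u)) := by
    intro u hu
    have := (continuous_snd.tendsto _).comp (hpt ⟨u, hu⟩)
    simpa [hg', hu, hFa, Function.comp_def] using this
  have hunif : TendstoUniformlyOn (fun n => G' (ψ n)) g' atTop (ball 0 R) := by
    have h1 := BoundedContinuousFunction.tendsto_iff_tendstoUniformly.1 hlim
    rw [Metric.tendstoUniformly_iff] at h1
    rw [Metric.tendstoUniformlyOn_iff]
    intro ε hε
    filter_upwards [h1 ε hε] with n hn u hu
    have hu' := ball_subset_closedBall hu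
    have h2 := hn ⟨u, hu'⟩
    simp only [Function.comp_apply, hFa, Prod.dist_eq] at h2
    have h3 := lt_of_le_of_lt (le_max_right _ _) h2
    have e : g' u = (f ⟨u, hu'⟩).2 := dif_pos hu'
    rw [e]; exact h3
  have hgd : ∀ u ∈ ball (0 : Euc d) R, HasFDerivAt g (g' u) u := fun u hu =>
    hasFDerivAt_of_tendstoUniformlyOn isOpen_ball hunif
      (fun n x hx => hder (ψ n) x (ball_subset_closedBall hx)) (fun x hx => hgl x (ball_subset_closedBall hx)) hu
  refine ⟨ψ, hψ, g, hgl, fun u hu => ?_, fun u hu => ⟨(hgd u hu).differentiableAt, ?_, ?_⟩, fun u hu u' hu' => ?_⟩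
  · exact le_of_tendsto ((hgl u hu).norm) (Eventually.of_forall fun n => hmaps _ u hu)
  · rw [(hgd u hu).fderiv]
    exact le_of_tendsto ((hg'l u (ball_subset_closedBall hu)).norm)
      (Eventually.of_forall fun n => hG'b _ u (ball_subset_closedBall hu))
  · rw [(hgd u hu).fderiv]
    exact isCf_of_tendsto hd ha (fun n => hac (ψ n) u (ball_subset_closedBall hu))
      (fun n => hcf (ψ n) u (ball_subset_closedBall hu)) (hg'l u (ball_subset_closedBall hu))
  · rw [(hgd u hu).fderiv, (hgd u' hu').fderiv]
    exact le_of_tendsto (((hg'l u (ball_subset_closedBall hu)).sub (hg'l u' (ball_subset_closedBall hu'))).norm)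
      (Eventually.of_forall fun n => hhol _ u (ball_subset_closedBall hu) u' (ball_subset_closedBall hu'))

/-! ### Conformal maps into tangent measures -/

namespace SelfConf

variable {d : ℕ} {Φ : ConformalIFS d} {μ : Measure (Euc d)} {p : Fin Φ.n → ℝ≥0∞}

/-- Inside a ball of radius `2^{-T}`, a cylinder of comparable size can be chosen on which the
average of a given function is not much larger than the average over the ball. -/
lemma descent (hd : 1 ≤ d) (h : SelfConf Φ μ p) (S : CfSys Φ) {E : ℝ} (hE1 : 1 ≤ E)
    (hE : ∀ w : List (Fin Φ.n), ∀ u ∈ closedBall (0 : Euc d) S.R, ∀ u' ∈ closedBall (0 : Euc d) S.R,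
      cw Φ w u' ≤ E * cw Φ w u)
    {x : Euc d} (hx : InSpt μ x) {T : ℝ} (hT : 0 ≤ T) {φ : Euc d → ℝ≥0∞} (hφ : Measurable φ) {A : ℝ≥0∞}
    (hlt : ∫⁻ y, φ y ∂(rescPM μ x T : Measure (Euc d)) < A * (rescPM μ x T : Measure (Euc d)) (closedBall 0 (1 / 4)))
    {ε₀ : ℝ} (hε₀ : ε₀ = 1 / (8 * Real.sqrt d * E)) :
    ∃ w : List (Fin Φ.n), S.m / E * (ε₀ * 2 ^ (-T)) ≤ cw Φ w 0 ∧ cw Φ w 0 ≤ ε₀ * 2 ^ (-T) ∧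
      (∀ u ∈ closedBall (0 : Euc d) S.R, ‖fw Φ w u - x‖ ≤ (2 : ℝ) ^ (-T) * (1 / 2)) ∧
      ∫⁻ u, φ ((2 : ℝ) ^ T • (fw Φ w u - x)) ∂μ ≤ A := by
  have := h.prob
  have hsd : (1 : ℝ) ≤ Real.sqrt d := by
    rw [Real.one_le_sqrt]; exact_mod_cast hd
  have hE0 : 0 < E := by linarith
  have hε₀p : 0 < ε₀ := by rw [hε₀]; positivity
  have hε₀1 : ε₀ < 1 := by
    rw [hε₀, div_lt_one (by positivity)]; nlinarith
  have h2T := two_rpow_pos (-T)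
  have hx0 := hx T
  set g : Euc d → ℝ≥0∞ := (closedBall x ((2 : ℝ) ^ (-T))).indicator fun y => φ ((2 : ℝ) ^ T • (y - x)) with hg
  set g₂ : Euc d → ℝ≥0∞ := (closedBall x ((2 : ℝ) ^ (-T) * (1 / 4))).indicator 1 with hg₂
  have hgm : Measurable g := (hφ.comp (measurable_scal x T)).indicator measurableSet_closedBall
  have hg₂m : Measurable g₂ := measurable_one.indicator measurableSet_closedBall
  -- the initial inequality
  have h0 : ∫⁻ u, g u ∂μ < A * ∫⁻ u, g₂ u ∂μ := by
    set Z := μ (closedBall x ((2 : ℝ) ^ (-T))) with hZ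
    have e1 : ∫⁻ y, φ y ∂(rescPM μ x T : Measure (Euc d)) = Z⁻¹ * ∫⁻ u, g u ∂μ := by
      rw [rescPM_coe hx0, resc, lintegral_smul_measure, smul_eq_mul, Measure.restrict_map (measurable_scal x T) measurableSet_closedBall,
        lintegral_map hφ (measurable_scal x T), hg, lintegral_indicator measurableSet_closedBall]
      congr 2
      have : (fun y : Euc d => (2 : ℝ) ^ T • (y - x)) ⁻¹' closedBall 0 1 = closedBall x ((2 : ℝ) ^ (-T)) := by
        ext y
        rw [mem_preimage, scal_mem_closedBall_iff, mul_one]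
      rw [this]
    have e2 : (rescPM μ x T : Measure (Euc d)) (closedBall 0 (1 / 4)) = Z⁻¹ * ∫⁻ u, g₂ u ∂μ := by
      rw [rescPM_apply hx0 measurableSet_closedBall, hg₂, lintegral_indicator_one measurableSet_closedBall]
      congr 2
      ext y
      rw [mem_ofPred_eq, scal_mem_closedBall_iff]
      refine ⟨fun h => h.1, fun h => ⟨h, closedBall_subset_closedBall ?_ h⟩⟩
      linarith
    rw [e1, e2, mul_left_comm] at hlt
    exact lt_of_mul_lt_mul_left' hlt
  have hR0 : (0 : Euc d) ∈ closedBall (0 : Euc d) S.R := by simp [S.R_pos.le]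
  have hdesc : ∀ n : ℕ, (∃ w : List (Fin Φ.n), S.m / E * (ε₀ * 2 ^ (-T)) ≤ cw Φ w 0 ∧ cw Φ w 0 ≤ ε₀ * 2 ^ (-T) ∧
      ∫⁻ u, g (fw Φ w u) ∂μ < A * ∫⁻ u, g₂ (fw Φ w u) ∂μ) ∨
      ∃ w : List (Fin Φ.n), w.length = n ∧ ε₀ * 2 ^ (-T) < cw Φ w 0 ∧
        ∫⁻ u, g (fw Φ w u) ∂μ < A * ∫⁻ u, g₂ (fw Φ w u) ∂μ := by
    intro n
    induction n with
    | zero =>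
      refine Or.inr ⟨[], rfl, ?_, by simpa [fw] using h0⟩
      have : (2 : ℝ) ^ (-T) ≤ 1 := Real.rpow_le_one_of_one_le_of_nonpos one_le_two (by linarith)
      simp only [cw]
      nlinarith
    | succ n ih =>
      rcases ih with hs | ⟨w, hw, hcw, hlt⟩
      · exact Or.inl hs
      rw [h.lintegral_word hd S hgm w, h.lintegral_word hd S hg₂m w, Finset.mul_sum] at hlt
      have hlt' : ∑ i, p i * ∫⁻ u, g (fw Φ (w ++ [i]) u) ∂μ + 0 <
          ∑ i, p i * (A * ∫⁻ u, g₂ (fw Φ (w ++ [i]) u) ∂μ) := by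
        rw [add_zero]
        refine hlt.trans_eq (Finset.sum_congr rfl fun i _ => by rw [mul_left_comm])
      obtain ⟨i, hi⟩ := exists_lt_of_avg h.sum hlt'
      rw [add_zero] at hi
      by_cases hc : cw Φ (w ++ [i]) 0 ≤ ε₀ * 2 ^ (-T)
      · refine Or.inl ⟨w ++ [i], ?_, hc, hi⟩
        rw [cw_append]
        have hfi : Φ.funs i 0 ∈ closedBall (0 : Euc d) S.R :=
          ball_subset_closedBall (S.maps i 0 (S.closedBall_R_subset hR0))
        have h1 := hE w _ hfi _ hR0
        have h2 := S.m_le i 0 hR0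
        have h3 : (ε₀ * 2 ^ (-T)) / E ≤ cw Φ w (Φ.funs i 0) := by
          rw [div_le_iff₀ hE0]; linarith
        calc S.m / E * (ε₀ * 2 ^ (-T)) = (ε₀ * 2 ^ (-T)) / E * S.m := by ring
          _ ≤ _ := by
            have := S.m_pos.le
            have := S.cw_pos hd w (S.closedBall_R_subset hfi)
            gcongr
      · exact Or.inr ⟨w ++ [i], by simp [hw], not_le.1 hc, hi⟩
  obtain ⟨w, hw1, hw2, hw3⟩ : ∃ w : List (Fin Φ.n), S.m / E * (ε₀ * 2 ^ (-T)) ≤ cw Φ w 0 ∧ cw Φ w 0 ≤ ε₀ * 2 ^ (-T) ∧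
      ∫⁻ u, g (fw Φ w u) ∂μ < A * ∫⁻ u, g₂ (fw Φ w u) ∂μ := by
    obtain ⟨n, hn⟩ := exists_pow_lt_of_lt_one (mul_pos hε₀p h2T) S.r_lt
    rcases hdesc n with hs | ⟨w, hw, hcw, -⟩
    · exact hs
    · have := S.cw_le hd w (S.closedBall_R_subset hR0)
      rw [hw] at this
      linarith
  refine ⟨w, hw1, hw2, ?_⟩
  -- the cylinder meets the smaller ball
  have hpos : ∫⁻ u, g₂ (fw Φ w u) ∂μ ≠ 0 := by
    intro h0
    rw [h0, mul_zero] at hw3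
    exact not_lt_zero hw3
  have hle1 : ∫⁻ u, g₂ (fw Φ w u) ∂μ ≤ 1 := by
    calc _ ≤ ∫⁻ _u, 1 ∂μ := lintegral_mono fun u => by
          refine indicator_le_indicator_of_subset (subset_univ _) (fun _ => zero_le) _ |>.trans ?_
          simp
      _ = 1 := by simp
  obtain ⟨u₀, hu₀R, hu₀⟩ : ∃ u ∈ ball (0 : Euc d) S.R, fw Φ w u ∈ closedBall x ((2 : ℝ) ^ (-T) * (1 / 4)) := by
    by_contra! hcon
    refine hpos ?_
    refine lintegral_eq_zero_of_ae_eq_zero ?_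
    filter_upwards [h.ae_ball_R hd S] with u hu
    exact indicator_of_notMem (hcon u hu) _
  have hsub : ∀ u ∈ closedBall (0 : Euc d) S.R, ‖fw Φ w u - x‖ ≤ (2 : ℝ) ^ (-T) * (1 / 2) := by
    intro u hu
    have h1 := S.lip_of_le hd w S.closedBall_R_subset (convex_closedBall 0 S.R) (c := E * (ε₀ * 2 ^ (-T)))
      (fun v hv => (hE w 0 hR0 v hv).trans (by gcongr)) hu (ball_subset_closedBall hu₀R)
    have h2 : ‖u - u₀‖ ≤ 2 := by
      have a1 : ‖u‖ ≤ S.R := by simpa using hu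
      have a2 : ‖u₀‖ < S.R := by simpa using hu₀R
      have := norm_sub_le u u₀
      linarith [S.R_lt]
    rw [mem_closedBall, dist_eq_norm] at hu₀
    calc ‖fw Φ w u - x‖ = ‖(fw Φ w u - fw Φ w u₀) + (fw Φ w u₀ - x)‖ := by congr 1; abel
      _ ≤ ‖fw Φ w u - fw Φ w u₀‖ + ‖fw Φ w u₀ - x‖ := norm_add_le _ _
      _ ≤ Real.sqrt d * (E * (ε₀ * 2 ^ (-T))) * 2 + 2 ^ (-T) * (1 / 4) := by
        refine add_le_add (h1.trans ?_) hu₀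
        gcongr
      _ = _ := by rw [hε₀]; field_simp; ring
  refine ⟨hsub, ?_⟩
  calc ∫⁻ u, φ ((2 : ℝ) ^ T • (fw Φ w u - x)) ∂μ = ∫⁻ u, g (fw Φ w u) ∂μ := by
        refine lintegral_congr_ae ?_
        filter_upwards [h.ae_ball_R hd S] with u hu
        have : fw Φ w u ∈ closedBall x ((2 : ℝ) ^ (-T)) := by
          rw [mem_closedBall, dist_eq_norm]
          have := hsub u (ball_subset_closedBall hu)
          linarith
        simp [hg, this]
    _ ≤ A * 1 := hw3.le.trans (by gcongr)
    _ = A := mul_one A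

lemma ae_word (hd : 1 ≤ d) (h : SelfConf Φ μ p) (S : CfSys Φ) (w : List (Fin Φ.n)) {P : Euc d → Prop} (hP : ∀ᵐ u ∂μ, P u) :
    ∀ᵐ u ∂μ, P (fw Φ w u) := by
  induction w generalizing P with
  | nil => exact hP
  | cons i w ih => exact ih (h.ae_comp hd S i hP)

/-- For every null set `N` of a weak limit of magnifications of `μ` at a point, some map with conformal,
Hölder continuous derivative sends `μ`-a.e. point outside `N`. -/
lemma exists_limit (hd : 1 ≤ d) (h : SelfConf Φ μ p) (S : CfSys Φ) {x : Euc d} (hx : InSpt μ x)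
    {t : ℕ → ℝ} (ht : ∀ n : ℕ, (n : ℝ) ≤ t n) {μ' : ProbabilityMeasure (Euc d)}
    (hlim : Tendsto (fun n => rescPM μ x (t n)) atTop (𝓝 μ')) (hμ' : InSpt (μ' : Measure (Euc d)) 0)
    {N : Set (Euc d)} (hN : (μ' : Measure (Euc d)) N = 0) :
    ∃ g : Euc d → Euc d, (∀ᵐ u ∂μ, g u ∉ N) ∧ ∃ a > 0, ∃ b H : ℝ, 0 ≤ b ∧ 0 ≤ H ∧
      (∀ u ∈ ball (0 : Euc d) S.R, ‖g u‖ ≤ 1 / 2 ∧ DifferentiableAt ℝ g u ∧ ‖fderiv ℝ g u‖ ≤ b ∧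
        ∃ c₀, a ≤ c₀ ∧ IsCf (fderiv ℝ g u) c₀) ∧
      ∀ u ∈ ball (0 : Euc d) S.R, ∀ u' ∈ ball (0 : Euc d) S.R,
        ‖fderiv ℝ g u - fderiv ℝ g u'‖ ≤ H * ‖u - u'‖ ^ S.α := by
  have := h.prob
  obtain ⟨E, hE1, hE⟩ := S.cw_le_cw hd
  obtain ⟨B, hB0, hB⟩ := S.distortion hd
  set m₀ := (μ' : Measure (Euc d)) (ball 0 (1 / 4)) with hm₀
  have hm₀p : m₀ ≠ 0 := by
    intro h0
    refine hμ'.pos (r := 1 / 8) (by norm_num) (measure_mono_null ?_ h0)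
    exact closedBall_subset_ball (by norm_num)
  have hm₀1 : m₀ ≤ 1 := prob_le_one
  have hm₀t : m₀ ≠ ∞ := ne_top_of_le_ne_top ENNReal.one_ne_top hm₀1
  have hhalf : m₀ / 2 < m₀ := ENNReal.half_lt_self hm₀p hm₀t
  obtain ⟨F, hFm, hFi, hFN⟩ := exists_detecting (μ' : Measure (Euc d)) hN (ENNReal.half_pos hm₀p) (hhalf.trans_le hm₀1)
  have hsel : ∀ M : ℕ, ∃ n : ℕ, ∫⁻ y, F M y ∂(rescPM μ x (t n) : Measure (Euc d)) <
      4 * (rescPM μ x (t n) : Measure (Euc d)) (closedBall 0 (1 / 4)) := by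
    intro M
    have h1 := (ProbabilityMeasure.tendsto_iff_forall_lintegral_tendsto.1 hlim) (F M)
    have h2 := h1.eventually_lt_const ((hFi M).trans_lt hhalf)
    have h3 := ProbabilityMeasure.le_liminf_measure_open_of_tendsto hlim (isOpen_ball (x := (0 : Euc d)) (ε := 1 / 4))
    have h4 : m₀ / 4 < m₀ := by
      refine ENNReal.div_lt_of_lt_mul ?_
      calc m₀ = m₀ * 1 := (mul_one _).symm
        _ < m₀ * 4 := by rw [ENNReal.mul_lt_mul_iff_right hm₀p hm₀t]; norm_num
    have h5 := eventually_lt_of_lt_liminf (h4.trans_le h3)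
    obtain ⟨n, hn2, hn5⟩ := (h2.and h5).exists
    refine ⟨n, hn2.trans_le ?_⟩
    calc m₀ = 4 * (m₀ / 4) := (ENNReal.mul_div_cancel (by norm_num) (by norm_num)).symm
      _ ≤ _ := by gcongr; exact hn5.le.trans (measure_mono ball_subset_closedBall)
  choose n hn using hsel
  have hT : ∀ M, 0 ≤ t (n M) := fun M => (Nat.cast_nonneg _).trans (ht _)
  set ε₀ : ℝ := 1 / (8 * Real.sqrt d * E) with hε₀
  have hsd : (1 : ℝ) ≤ Real.sqrt d := by
    rw [Real.one_le_sqrt]; exact_mod_cast hd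
  have hE0 : 0 < E := by linarith
  have hε₀p : 0 < ε₀ := by rw [hε₀]; positivity
  choose w hw1 hw2 hw3 hw4 using fun M => h.descent hd S hE1 hE hx (hT M)
    (F M).continuous.measurable.coe_nnreal_ennreal (hn M) hε₀
  have hR0 : (0 : Euc d) ∈ closedBall (0 : Euc d) S.R := by simp [S.R_pos.le]
  set G : ℕ → Euc d → Euc d := fun M u => (2 : ℝ) ^ t (n M) • (fw Φ (w M) u - x) with hG
  set G' : ℕ → Euc d → Euc d →L[ℝ] Euc d := fun M u => (2 : ℝ) ^ t (n M) • fderiv ℝ (fw Φ (w M)) u with hG'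
  set c : ℕ → Euc d → ℝ := fun M u => (2 : ℝ) ^ t (n M) * cw Φ (w M) u with hc
  have hmp := S.m_pos
  have hcb : ∀ M, ∀ u ∈ closedBall (0 : Euc d) S.R, c M u ≤ E * ε₀ := by
    intro M u hu
    have h1 := hE (w M) 0 hR0 u hu
    calc c M u ≤ (2 : ℝ) ^ t (n M) * (E * (ε₀ * 2 ^ (-t (n M)))) := by
          simp only [hc]; gcongr; exact h1.trans (by gcongr; exact hw2 M)
      _ = E * ε₀ * ((2 : ℝ) ^ t (n M) * 2 ^ (-t (n M))) := by ring
      _ = _ := by rw [two_rpow_mul_neg, mul_one]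
  have hca : ∀ M, ∀ u ∈ closedBall (0 : Euc d) S.R, S.m / E * ε₀ / E ≤ c M u := by
    intro M u hu
    have h1 := hE (w M) u hu 0 hR0
    have h2 : S.m / E * (ε₀ * 2 ^ (-t (n M))) / E ≤ cw Φ (w M) u := by
      rw [div_le_iff₀ hE0]; linarith [hw1 M]
    calc S.m / E * ε₀ / E = S.m / E * ε₀ / E * ((2 : ℝ) ^ t (n M) * 2 ^ (-t (n M))) := by rw [two_rpow_mul_neg, mul_one]
      _ = (2 : ℝ) ^ t (n M) * (S.m / E * (ε₀ * 2 ^ (-t (n M))) / E) := by ring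
      _ ≤ _ := by simp only [hc]; gcongr
  obtain ⟨ψ, hψ, g, hg1, hg2, hg3, hg4⟩ := exists_limit_map (R := S.R) (H := Real.sqrt d * (B * (E * ε₀))) (a := S.m / E * ε₀ / E)
    (b := E * ε₀) (G := G) (G' := G') (c := c) hd S.α_pos (by positivity)
    (fun M u hu => ((S.diffAt hd (w M) (S.closedBall_R_subset hu)).1.hasFDerivAt.sub_const x).const_smul
      ((2 : ℝ) ^ t (n M)))
    (fun M u hu => (S.diffAt hd (w M) (S.closedBall_R_subset hu)).2.smul (two_rpow_pos _))
    hca hcb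
    (fun M u hu u' hu' => by
      have h1 : ∀ e, n2 ((G' M u - G' M u') e) ≤ B * (E * ε₀) * ‖u - u'‖ ^ S.α * n2 e := by
        intro e
        have h2 := hB (w M) u' hu' u hu e
        have e1 : (G' M u - G' M u') e = (2 : ℝ) ^ t (n M) • ((fderiv ℝ (fw Φ (w M)) u - fderiv ℝ (fw Φ (w M)) u') e) := by
          exact (smul_sub ((2 : ℝ) ^ t (n M)) (fderiv ℝ (fw Φ (w M)) u e) (fderiv ℝ (fw Φ (w M)) u' e)).symm
        have e2 : ∀ (b : ℝ) (v : Euc d), 0 < b → n2 (b • v) = b * n2 v := by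
          intro b v hb
          simp only [n2]
          rw [WithLp.toLp_smul, norm_smul, Real.norm_of_nonneg hb.le]
        rw [e1, e2 _ _ (two_rpow_pos _)]
        have h3 := hcb M u' hu'
        have hn2 := n2_nonneg e
        calc _ ≤ (2 : ℝ) ^ t (n M) * (B * cw Φ (w M) u' * ‖u - u'‖ ^ S.α * n2 e) := by gcongr
          _ = B * c M u' * ‖u - u'‖ ^ S.α * n2 e := by simp only [hc]; ring
          _ ≤ _ := by gcongr
      refine (opNorm_le_of_n2 (by positivity) h1).trans_eq (by ring))
    (fun M u hu => (norm_scal_le_iff _ _ _ _).2 (hw3 M u hu))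
  refine ⟨g, ?_, S.m / E * ε₀ / E, by positivity, Real.sqrt d * (E * ε₀), Real.sqrt d * (B * (E * ε₀)), by positivity, by positivity,
    fun u hu => ⟨hg2 u (ball_subset_closedBall hu), hg3 u hu⟩, hg4⟩
  -- passing to the limit in the integrals
  have hGm : ∀ M, AEMeasurable (G M) μ := fun M => ((h.aemeas hd S (w M)).sub_const x).const_smul ((2 : ℝ) ^ t (n M))
  have hpt : ∀ᵐ u ∂μ, Tendsto (fun n => G (ψ n) u) atTop (𝓝 (g u)) := by
    filter_upwards [h.ae_ball_R hd S] with u hu using hg1 u (ball_subset_closedBall hu)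
  have hgm : AEMeasurable g μ := aemeasurable_of_tendsto_metrizable_ae atTop (fun n => hGm (ψ n)) hpt
  have hk : ∀ k, ∫⁻ u, F k (g u) ∂μ ≤ 4 := by
    intro k
    have h1 : Tendsto (fun n => ∫⁻ u, F k (G (ψ n) u) ∂μ) atTop (𝓝 (∫⁻ u, F k (g u) ∂μ)) := by
      refine tendsto_lintegral_of_dominated_convergence' (fun _ => (nndist (F k) 0 : ℝ≥0∞))
        (fun n => (F k).continuous.measurable.coe_nnreal_ennreal.comp_aemeasurable (hGm (ψ n))) (fun n => ?_) ?_ ?_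
      · refine Eventually.of_forall fun u => ?_
        have h2 : nndist (F k (G (ψ n) u)) 0 ≤ nndist (F k) 0 := BoundedContinuousFunction.dist_coe_le_dist (g := 0) _
        have h3 : F k (G (ψ n) u) ≤ nndist (F k) 0 := by
          refine le_trans (le_of_eq ?_) h2
          ext; simp [NNReal.dist_eq]
        exact ENNReal.coe_le_coe.2 h3
      · exact (lintegral_const_lt_top ENNReal.coe_ne_top).ne
      · filter_upwards [hpt] with u hu
        exact ENNReal.tendsto_coe.2 (((F k).continuous.tendsto _).comp hu)
    refine le_of_tendsto h1 ?_
    filter_upwards [eventually_ge_atTop k] with n hn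
    refine le_trans (lintegral_mono fun u => ?_) (hw4 (ψ n))
    exact ENNReal.coe_le_coe.2 (hFm _ (hn.trans (hψ.id_le n)))
  have hsup : ∫⁻ u, ⨆ k, (F k (g u) : ℝ≥0∞) ∂μ ≤ 4 := by
    rw [lintegral_iSup' (f := fun k u => (F k (g u) : ℝ≥0∞))
      (fun k => (F k).continuous.measurable.coe_nnreal_ennreal.comp_aemeasurable hgm)
      (Eventually.of_forall fun u k k' hkk => ENNReal.coe_le_coe.2 (hFm _ hkk))]
    exact iSup_le hk
  have hfin := ae_lt_top' (f := fun u => ⨆ k, (F k (g u) : ℝ≥0∞)) (AEMeasurable.iSup fun k => (F k).continuous.measurable.coe_nnreal_ennreal.comp_aemeasurable hgm)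
    (ne_top_of_le_ne_top (by norm_num) hsup)
  filter_upwards [hfin] with u hu huN
  obtain ⟨C, hC⟩ := ENNReal.exists_nat_gt hu.ne
  obtain ⟨M, hM⟩ := hFN _ huN C
  have : (C : ℝ≥0∞) ≤ F M (g u) := by exact_mod_cast hM
  exact absurd (hC.trans_le (this.trans (le_iSup (fun k => (F k (g u) : ℝ≥0∞)) M))) (lt_irrefl _)

end SelfConf

namespace CfSys

variable {d : ℕ} {Φ : ConformalIFS d}

lemma fw_injOn (S : CfSys Φ) (w : List (Fin Φ.n)) : InjOn (fw Φ w) (ball (0 : Euc d) 1) := by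
  induction w with
  | nil => exact fun x _ y _ h => h
  | cons i w ih =>
    intro x hx y hy h
    exact ih hx hy ((Φ.conf i).1 (S.fw_mem w hx) (S.fw_mem w hy) h)

end CfSys

/-- A map whose derivative is close to a fixed conformal linear map is injective. -/
lemma injOn_of_fderiv_close {d : ℕ} {g : Euc d → Euc d} {V : Set (Euc d)} (hV : Convex ℝ V)
    {b : Euc d} (hb : b ∈ V) {a ε : ℝ} (hε : Real.sqrt d * ε < a)
    (hg : ∀ u ∈ V, DifferentiableAt ℝ g u) (hc : ∃ c, a ≤ c ∧ IsCf (fderiv ℝ g b) c)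
    (hosc : ∀ u ∈ V, ‖fderiv ℝ g u - fderiv ℝ g b‖ ≤ ε) : InjOn g V := by
  intro x hx y hy h
  obtain ⟨c, hac, hc⟩ := hc
  have h1 := hV.norm_image_sub_le_of_norm_hasFDerivWithin_le' (f := g) (f' := fderiv ℝ g) (φ := fderiv ℝ g b)
    (C := ε) (fun u hu => (hg u hu).hasFDerivAt.hasFDerivWithinAt) hosc hx hy
  rw [h, sub_self, zero_sub, norm_neg] at h1
  have h2 := hc.le_norm (y - x)
  have h3 : a * ‖y - x‖ ≤ Real.sqrt d * ε * ‖y - x‖ := by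
    calc a * ‖y - x‖ ≤ c * ‖y - x‖ := by gcongr
      _ ≤ _ := h2
      _ ≤ Real.sqrt d * (ε * ‖y - x‖) := by gcongr
      _ = _ := by ring
  by_contra hne
  have : 0 < ‖y - x‖ := norm_pos_iff.2 (sub_ne_zero.2 (Ne.symm hne))
  nlinarith

namespace SelfConf

variable {d : ℕ} {Φ : ConformalIFS d} {μ : Measure (Euc d)} {p : Fin Φ.n → ℝ≥0∞}

/-- A conformal map that sends `μ` into the complement of a null set of a tangent measure of `μ`. -/
lemma exists_conformal (hd : 1 ≤ d) (h : SelfConf Φ μ p) (S : CfSys Φ) {x : Euc d} (hx : InSpt μ x)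
    {t : ℕ → ℝ} (ht : ∀ n : ℕ, (n : ℝ) ≤ t n) {μ' : ProbabilityMeasure (Euc d)}
    (hlim : Tendsto (fun n => rescPM μ x (t n)) atTop (𝓝 μ')) (hμ' : InSpt (μ' : Measure (Euc d)) 0)
    {N : Set (Euc d)} (hN : (μ' : Measure (Euc d)) N = 0) :
    ∃ g : Euc d → Euc d, IsConformalMapOn d g (ball 0 1) ∧ (∀ u ∈ ball (0 : Euc d) 1, ‖g u‖ < 1) ∧
      ∀ᵐ u ∂μ, g u ∉ N := by
  obtain ⟨g, hgN, a, ha, b, H, hb, hH, hg, hgH⟩ := exists_limit hd h S hx ht hlim hμ' hN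
  have hα := S.α_pos
  have hr := S.r_pos
  -- a radius at which the derivative of `g` oscillates by less than its lower bound
  obtain ⟨ρ, hρ, hρa⟩ : ∃ ρ > 0, Real.sqrt d * (H * ρ ^ S.α) < a := by
    have h1 : Tendsto (fun ρ : ℝ => Real.sqrt d * (H * ρ ^ S.α)) (𝓝[>] 0) (𝓝 (Real.sqrt d * (H * 0 ^ S.α))) := by
      refine Tendsto.mono_left ?_ nhdsWithin_le_nhds
      exact ((((Real.continuous_rpow_const hα.le).tendsto 0).const_mul H).const_mul _)
    rw [Real.zero_rpow hα.ne', mul_zero, mul_zero] at h1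
    obtain ⟨ρ, h2, h3⟩ := ((h1.eventually (gt_mem_nhds ha)).and self_mem_nhdsWithin).exists
    exact ⟨ρ, h3, h2⟩
  obtain ⟨n, hn⟩ : ∃ n : ℕ, Real.sqrt d * S.r ^ n < ρ := by
    have h1 : Tendsto (fun n : ℕ => Real.sqrt d * S.r ^ n) atTop (𝓝 (Real.sqrt d * 0)) :=
      (tendsto_pow_atTop_nhds_zero_of_lt_one hr.le S.r_lt).const_mul _
    rw [mul_zero] at h1
    exact (h1.eventually (gt_mem_nhds hρ)).exists
  have hΦ := Φ.two_le
  set v : List (Fin Φ.n) := List.replicate (n + 1) ⟨0, by omega⟩ with hv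
  have hlen : v.length = n + 1 := by simp [hv]
  have hmR : ∀ u ∈ ball (0 : Euc d) 1, fw Φ v u ∈ ball (0 : Euc d) S.R := by
    intro u hu
    rw [hv, List.replicate_succ]
    exact S.maps _ _ (S.fw_mem _ hu)
  have hL : ∀ x ∈ ball (0 : Euc d) 1, ∀ y ∈ ball (0 : Euc d) 1,
      ‖fw Φ v x - fw Φ v y‖ ≤ Real.sqrt d * S.r ^ (n + 1) * ‖x - y‖ := by
    intro x hx y hy
    have := S.lip hd v hx hy
    rwa [hlen] at this
  have hrn : Real.sqrt d * S.r ^ (n + 1) ≤ Real.sqrt d * S.r ^ n := by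
    rw [pow_succ]
    have := S.r_lt
    have : S.r ^ n * S.r ≤ S.r ^ n * 1 := by gcongr
    nlinarith [Real.sqrt_nonneg d]
  have h0 : (0 : Euc d) ∈ ball (0 : Euc d) 1 := mem_ball_self one_pos
  set b0 := fw Φ v 0 with hb0
  set V := ball (0 : Euc d) S.R ∩ ball b0 ρ with hVd
  have hmV : MapsTo (fw Φ v) (ball 0 1) V := by
    intro u hu
    refine ⟨hmR u hu, ?_⟩
    rw [mem_ball, dist_eq_norm]
    refine (hL u hu 0 h0).trans_lt ?_
    rw [mem_ball_zero_iff] at hu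
    rw [sub_zero]
    calc Real.sqrt d * S.r ^ (n + 1) * ‖u‖ ≤ Real.sqrt d * S.r ^ (n + 1) * 1 := by gcongr
      _ < ρ := by linarith
  have hVinj : InjOn g V := by
    refine injOn_of_fderiv_close ((convex_ball _ _).inter (convex_ball _ _)) (b := b0) (hmV h0) hρa
      (fun u hu => (hg u hu.1).2.1) (hg b0 (hmV h0).1).2.2.2 (fun u hu => ?_)
    refine (hgH u hu.1 b0 (hmV h0).1).trans ?_
    have := hu.2
    rw [mem_ball, dist_eq_norm] at this
    gcongr
  have hfd : ∀ u ∈ ball (0 : Euc d) 1, fderiv ℝ (g ∘ fw Φ v) u = (fderiv ℝ g (fw Φ v u)).comp (fderiv ℝ (fw Φ v) u) :=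
    fun u hu => fderiv_comp u (hg _ (hmR u hu)).2.1 (S.diffAt hd v hu).1
  refine ⟨g ∘ fw Φ v, ⟨?_, ?_, ?_, ?_, ?_⟩, ?_, ?_⟩
  · exact hVinj.comp (S.fw_injOn v) hmV
  · have : closure ((g ∘ fw Φ v) '' ball 0 1) ⊆ closedBall 0 (1 / 2) := by
      refine closure_minimal ?_ isClosed_closedBall
      rintro _ ⟨u, hu, rfl⟩
      rw [mem_closedBall_zero_iff]
      exact (hg _ (hmR u hu)).1
    exact this.trans (closedBall_subset_ball (by norm_num))
  · exact fun u hu => (hg _ (hmR u hu)).2.1.comp u (S.diffAt hd v hu).1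
  · intro u hu
    obtain ⟨c, hac, hc⟩ := (hg _ (hmR u hu)).2.2.2
    have := hc.comp (S.diffAt hd v hu).2
    rw [← hfd u hu] at this
    exact this.exists_orth
  · obtain ⟨C, hC0, hC⟩ := S.holder_word hd v
    have key := fun x (hx : x ∈ ball (0 : Euc d) 1) y (hy : y ∈ ball (0 : Euc d) 1) =>
      holder_comp (A := fderiv ℝ g) (B := fderiv ℝ (fw Φ v)) (f := fw Φ v) (U := ball 0 1) (V := ball 0 S.R)
      (L := Real.sqrt d * S.r ^ (n + 1)) (M₂ := Real.sqrt d * S.r ^ (n + 1)) hα hH (by positivity) hb hmR hL hgH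
      (fun x hx => (hg x hx).2.2.1) hC (fun x hx => by
        refine (S.diffAt hd v hx).2.opNorm_le.trans ?_
        have := S.cw_le hd v hx
        rw [hlen] at this
        gcongr) hx hy
    set M := H * (Real.sqrt d * S.r ^ (n + 1)) ^ S.α * (Real.sqrt d * S.r ^ (n + 1)) + b * C with hM
    have hM0 : 0 ≤ M := by positivity
    refine ⟨M.toNNReal, S.α.toNNReal, Real.toNNReal_pos.2 hα, fun x hx y hy => ?_⟩
    simp only
    rw [edist_dist, edist_dist, dist_eq_norm, dist_eq_norm, hfd x hx, hfd y hy,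
      Real.coe_toNNReal _ hα.le, ENNReal.ofReal_rpow_of_nonneg (norm_nonneg _) hα.le]
    change _ ≤ ENNReal.ofReal M * _
    rw [← ENNReal.ofReal_mul hM0]
    exact ENNReal.ofReal_le_ofReal (key x hx y hy)
  · intro u hu
    exact (hg _ (hmR u hu)).1.trans_lt (by norm_num)
  · exact h.ae_word hd S v hgN

end SelfConf

/-! ### Linearization -/

section Lin

variable {X : Type*} [NormedAddCommGroup X] [NormedSpace ℝ X] [MeasurableSpace X] [BorelSpace X]
  [SecondCountableTopology X] {Ω : Type*} [MeasurableSpace Ω]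

lemma real_map_of_ae {μ : Measure Ω} {G : Ω → X} (hG : AEMeasurable G μ) {A : Set X}
    (hA : MeasurableSet A) : (μ.map G).real A = μ.real {u | G u ∈ A} := by
  rw [measureReal_def, measureReal_def, Measure.map_apply_of_aemeasurable hG hA]; rfl

lemma real_mono_ae {μ : Measure Ω} [IsFiniteMeasure μ] {A B : Set Ω} (h : ∀ᵐ u ∂μ, u ∈ A → u ∈ B) :
    μ.real A ≤ μ.real B :=
  ENNReal.toReal_mono (measure_ne_top _ _) (measure_mono_ae h)

/-- Two maps that agree to first order at the relevant scale, one of which gives little mass to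
the boundary of the ball of radius `2^{-T}`, have close magnified images. -/
lemma dist_rescPM_map_le {μ : Measure Ω} [IsProbabilityMeasure μ] {G₀ G₁ : Ω → X}
    (h₀ : AEMeasurable G₀ μ) (h₁ : AEMeasurable G₁ μ) {x₀ x₁ : X} {T a κ ε' ρ : ℝ} (ha : 0 ≤ a)
    (hκ : 0 ≤ κ) (hκ1 : κ < 1) (hε' : 0 ≤ ε') (hεa : ε' ≤ 1 - 2 ^ (-a)) (hρ : 2 ^ a * ε' ≤ ρ) (hκρ : 2 * κ ≤ ρ)
    (hx₁ : InSpt (μ.map G₁) x₁)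
    (hclose : ∀ᵐ u ∂μ, (‖G₀ u - x₀‖ ≤ 2 ^ (-T) ∨ ‖G₁ u - x₁‖ ≤ 2 ^ (-(T - a))) →
      ‖(G₀ u - x₀) - (G₁ u - x₁)‖ ≤ ε' * ‖G₁ u - x₁‖)
    (hosc : (1 - κ) * (μ.map G₁).real (closedBall x₁ (2 ^ (-(T - a)))) ≤
      (μ.map G₁).real (closedBall x₁ (2 ^ (-(T + a))))) :
    dist (rescPM (μ.map G₁) x₁ T) (rescPM (μ.map G₀) x₀ T) ≤ ρ := by
  haveI : IsProbabilityMeasure (μ.map G₀) := Measure.isProbabilityMeasure_map h₀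
  haveI : IsProbabilityMeasure (μ.map G₁) := Measure.isProbabilityMeasure_map h₁
  have p1 := two_rpow_pos (-T)
  have p2 := two_rpow_pos a
  have p3 := two_rpow_pos (-a)
  have e1 : (2 : ℝ) ^ (-(T - a)) = 2 ^ (-T) * 2 ^ a := by rw [← Real.rpow_add two_pos]; congr 1; ring
  have e2 : (2 : ℝ) ^ (-(T + a)) = 2 ^ (-T) * 2 ^ (-a) := by rw [← Real.rpow_add two_pos]; congr 1; ring
  have e3 : (2 : ℝ) ^ a * 2 ^ (-a) = 1 := by rw [← Real.rpow_add two_pos]; simp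
  have e4 : (2 : ℝ) ^ (-a) ≤ 1 := Real.rpow_le_one_of_one_le_of_nonpos (by norm_num) (by linarith)
  have e5 : 1 + ε' ≤ (2 : ℝ) ^ a := by nlinarith [sq_nonneg ((2 : ℝ) ^ a - 1)]
  set m := (2 : ℝ) ^ (-T) with hm
  set Fm := {u | ‖G₁ u - x₁‖ ≤ m * 2 ^ (-a)} with hFm
  set Fp := {u | ‖G₁ u - x₁‖ ≤ m * 2 ^ a} with hFp
  set E₀ := {u | ‖G₀ u - x₀‖ ≤ m} with hE₀
  set E₁ := {u | ‖G₁ u - x₁‖ ≤ m} with hE₁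
  have bal : ∀ (G : Ω → X) (hG : AEMeasurable G μ) (x : X) (r : ℝ),
      (μ.map G).real (closedBall x r) = μ.real {u | ‖G u - x‖ ≤ r} := by
    intro G hG x r
    rw [real_map_of_ae hG measurableSet_closedBall]
    simp only [mem_closedBall, dist_eq_norm]
  rw [e1, e2, bal G₁ h₁, bal G₁ h₁] at hosc
  have hFmpos : 0 < μ.real Fm := by
    have := hx₁.real_pos (T + a)
    rwa [e2, bal G₁ h₁] at this
  have hma : m * 2 ^ (-a) ≤ m := by nlinarith
  have hma' : m ≤ m * 2 ^ a := by nlinarith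
  have hmm : m * 2 ^ (-a) ≤ m * 2 ^ a := hma.trans hma'
  rw [e1] at hclose
  have i1 : ∀ᵐ u ∂μ, u ∈ Fm → u ∈ E₀ := by
    filter_upwards [hclose] with u hu hf
    simp only [hFm, hE₀, mem_ofPred_eq] at hf ⊢
    have h2 := hu (Or.inr (hf.trans hmm))
    have h3 : ‖G₀ u - x₀‖ ≤ ‖(G₀ u - x₀) - (G₁ u - x₁)‖ + ‖G₁ u - x₁‖ := by
      simpa using norm_add_le ((G₀ u - x₀) - (G₁ u - x₁)) (G₁ u - x₁)
    calc ‖G₀ u - x₀‖ ≤ (1 + ε') * ‖G₁ u - x₁‖ := by linarith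
      _ ≤ 2 ^ a * (m * 2 ^ (-a)) := by gcongr
      _ = m * (2 ^ a * 2 ^ (-a)) := by ring
      _ = m := by rw [e3, mul_one]
  have i2 : ∀ᵐ u ∂μ, u ∈ E₀ → u ∈ Fp := by
    filter_upwards [hclose] with u hu hf
    simp only [hFp, hE₀, mem_ofPred_eq] at hf ⊢
    have h2 := hu (Or.inl hf)
    have h3 : ‖G₁ u - x₁‖ ≤ ‖(G₀ u - x₀) - (G₁ u - x₁)‖ + ‖G₀ u - x₀‖ := by
      have := norm_sub_le (G₀ u - x₀) ((G₀ u - x₀) - (G₁ u - x₁))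
      rw [sub_sub_cancel] at this
      linarith
    have h4 : 2 ^ (-a) * ‖G₁ u - x₁‖ ≤ m := by nlinarith [norm_nonneg (G₁ u - x₁)]
    calc ‖G₁ u - x₁‖ = (2 ^ a * 2 ^ (-a)) * ‖G₁ u - x₁‖ := by rw [e3, one_mul]
      _ = 2 ^ a * (2 ^ (-a) * ‖G₁ u - x₁‖) := by ring
      _ ≤ 2 ^ a * m := by gcongr
      _ = _ := mul_comm _ _
  have i3 : μ.real Fm ≤ μ.real E₀ := real_mono_ae i1
  have i4 : μ.real E₀ ≤ μ.real Fp := real_mono_ae i2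
  have i5 : μ.real Fm ≤ μ.real E₁ := real_mono_ae (ae_of_all _ fun u hu => le_trans hu hma)
  have nz : ∀ (G : Ω → X) (hG : AEMeasurable G μ) (x : X), 0 < μ.real {u | ‖G u - x‖ ≤ m} →
      (μ.map G) (closedBall x m) ≠ 0 := by
    intro G hG x h hz
    rw [← bal G hG, measureReal_def, hz] at h
    simp at h
  have rr : ∀ (G : Ω → X) (hG : AEMeasurable G μ) (x : X), 0 < μ.real {u | ‖G u - x‖ ≤ m} → ∀ A, MeasurableSet A →
      (rescPM (μ.map G) x T : Measure X).real A * μ.real {u | ‖G u - x‖ ≤ m} =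
        μ.real {u | (2 : ℝ) ^ T • (G u - x) ∈ A ∧ ‖G u - x‖ ≤ m} := by
    intro G hG x h A hA
    rw [rescPM_real (nz G hG x h) hA, ← hm, bal G hG, div_mul_cancel₀ _ h.ne', real_map_of_ae hG]
    · simp only [mem_ofPred_eq, mem_closedBall, dist_eq_norm]
    · exact (measurable_scal x T hA).inter measurableSet_closedBall
  refine dist_PM_le (δ := ρ) (κ := κ) le_rfl hκρ (by linarith) hκ fun B hB => ?_
  set b := (rescPM (μ.map G₀) x₀ T : Measure X) with hb
  set D := {y | ∃ x ∈ B, dist y x ≤ ρ} with hD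
  have hbD : b.real D = b.real (toMeasurable b D) := by
    rw [measureReal_def, measureReal_def, measure_toMeasurable]
  rw [hbD]
  have q1 := rr G₁ h₁ x₁ (hFmpos.trans_le i5) B hB
  have q0 := rr G₀ h₀ x₀ (hFmpos.trans_le i3) (toMeasurable b D) (measurableSet_toMeasurable _ _)
  have j1 : μ.real {u | (2 : ℝ) ^ T • (G₁ u - x₁) ∈ B ∧ ‖G₁ u - x₁‖ ≤ m} ≤
      μ.real {u | (2 : ℝ) ^ T • (G₀ u - x₀) ∈ toMeasurable b D ∧ ‖G₀ u - x₀‖ ≤ m} + μ.real (Fp \ Fm) := by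
    refine le_trans (real_mono_ae ?_) (measureReal_union_le _ _)
    filter_upwards [i1, hclose] with u hu hc hmem
    by_cases hf : u ∈ Fm
    · left
      refine ⟨subset_toMeasurable _ _ ⟨_, hmem.1, ?_⟩, hu hf⟩
      rw [dist_eq_norm, ← smul_sub, norm_smul, Real.norm_of_nonneg (two_rpow_pos _).le]
      have h2 := hc (Or.inr (le_trans hf hmm))
      calc (2 : ℝ) ^ T * ‖(G₀ u - x₀) - (G₁ u - x₁)‖ ≤ 2 ^ T * (ε' * (m * 2 ^ a)) := by
            gcongr
            exact h2.trans (by gcongr; exact le_trans hf hmm)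
        _ = (2 ^ T * 2 ^ (-T)) * (2 ^ a * ε') := by rw [hm]; ring
        _ = 2 ^ a * ε' := by rw [two_rpow_mul_neg, one_mul]
        _ ≤ ρ := hρ
    · right
      exact ⟨le_trans hmem.2 hma', hf⟩
  have hFmm : NullMeasurableSet Fm μ := by
    have : Fm = (fun u => ‖G₁ u - x₁‖) ⁻¹' (Iic (m * 2 ^ (-a))) := rfl
    rw [this]
    exact (h₁.sub_const x₁).norm.nullMeasurableSet_preimage measurableSet_Iic
  have j2 : μ.real (Fp \ Fm) = μ.real Fp - μ.real Fm := by
    have hsub : Fm ⊆ Fp := fun u hu => le_trans hu hmm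
    rw [measureReal_def, measure_sdiff hsub hFmm (measure_ne_top _ _),
      ENNReal.toReal_sub_of_le (measure_mono hsub) (measure_ne_top _ _)]
    rfl
  have k1 : 0 ≤ (rescPM (μ.map G₁) x₁ T : Measure X).real B := measureReal_nonneg
  have k2 : 0 ≤ b.real (toMeasurable b D) := measureReal_nonneg
  set y := μ.real Fp with hy
  have hypos : 0 < y := hFmpos.trans_le (i3.trans i4)
  refine le_of_mul_le_mul_right ?_ hypos
  have i6 : (1 - κ) * y ≤ μ.real E₁ := hosc.trans i5
  calc (rescPM (μ.map G₁) x₁ T : Measure X).real B * (1 - κ) * y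
      = (rescPM (μ.map G₁) x₁ T : Measure X).real B * ((1 - κ) * y) := by ring
    _ ≤ (rescPM (μ.map G₁) x₁ T : Measure X).real B * μ.real E₁ := by gcongr
    _ ≤ b.real (toMeasurable b D) * μ.real E₀ + (y - μ.real Fm) := by rw [q1, q0, ← j2]; exact j1
    _ ≤ b.real (toMeasurable b D) * y + κ * y := by
        have : b.real (toMeasurable b D) * μ.real E₀ ≤ b.real (toMeasurable b D) * y := by gcongr
        linarith
    _ = _ := by ring

/-- Maps that agree to first order at a point have magnified images that are close at most
scales. -/
lemma UD.linearize {l : Filter ℕ} (hl : l ≤ atTop) {μ : Measure Ω} [IsProbabilityMeasure μ] {G₀ G₁ : Ω → X}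
    (h₀ : AEMeasurable G₀ μ) (h₁ : AEMeasurable G₁ μ) {x₀ x₁ : X} (hx₁ : InSpt (μ.map G₁) x₁)
    (hC : ∃ C, ∀ᶠ n : ℕ in l, phi (μ.map G₁) x₁ (n + 1) ≤ C * n)
    (hclose : ∀ ε > 0, ∃ δ > 0, ∀ᵐ u ∂μ, (‖G₀ u - x₀‖ ≤ δ ∨ ‖G₁ u - x₁‖ ≤ δ) →
      ‖(G₀ u - x₀) - (G₁ u - x₁)‖ ≤ ε * ‖G₁ u - x₁‖) {ρ : ℝ} (hρ : 0 < ρ) {c : ℝ} (hc : 0 < c) :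
    UD l {T | ρ < dist (rescPM (μ.map G₁) x₁ T) (rescPM (μ.map G₀) x₀ T)} c := by
  haveI : IsProbabilityMeasure (μ.map G₁) := Measure.isProbabilityMeasure_map h₁
  obtain ⟨C, hC⟩ := hC
  set C' := max C 1 with hC'
  have hC'1 : 1 ≤ C' := le_max_right _ _
  set K := min (ρ / 2) (1 / 2) with hK
  have hK0 : 0 < K := by positivity
  have hK1 : K ≤ 1 / 2 := min_le_right _ _
  set a := min 1 (c / 2 * K / (2 * C')) with ha
  have ha0 : 0 < a := by positivity
  have ha1 : a ≤ 1 := min_le_left _ _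
  have ha2 : (a + a) * C' ≤ c / 2 * K := by
    have : a ≤ c / 2 * K / (2 * C') := min_le_right _ _
    rw [le_div_iff₀ (by positivity)] at this
    linarith
  have p2 := two_rpow_pos a
  have hlt : (2 : ℝ) ^ (-a) < 1 := Real.rpow_lt_one_of_one_lt_of_neg (by norm_num) (by linarith)
  set ε' := min (1 - 2 ^ (-a)) (ρ / 2 ^ a) with hε'
  have hε0 : 0 < ε' := lt_min (by linarith) (by positivity)
  obtain ⟨δ, hδ, hcl⟩ := hclose ε' hε0
  have hosc : UD l {t | K < phi (μ.map G₁) x₁ (t + a) - phi (μ.map G₁) x₁ (t - a)} (c / 2) := by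
    refine UD.osc (phi_mono hx₁) (phi_nonneg _ _) ha0.le ha0.le hK0 (C := C') ?_ ha2
    filter_upwards [hC] with n hn
    refine (phi_mono hx₁ (by linarith)).trans (hn.trans ?_)
    gcongr
    exact le_max_left _ _
  have hbd : UD l (Iic (a - Real.logb 2 δ)) (c / 2) := UD.of_bounded hl subset_rfl (by positivity)
  refine (hosc.union hbd (by positivity) (by positivity)).mono ?_ (by linarith)
  intro T hT
  by_contra hnot
  simp only [mem_union, mem_ofPred_eq, mem_Iic, not_or, not_lt, not_le] at hnot
  rw [mem_ofPred_eq] at hT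
  refine absurd hT (not_lt.2 ?_)
  have hTδ : (2 : ℝ) ^ (-(T - a)) ≤ δ := by
    calc (2 : ℝ) ^ (-(T - a)) ≤ 2 ^ (Real.logb 2 δ) := by gcongr <;> linarith
      _ = δ := Real.rpow_logb two_pos (by norm_num) hδ
  have hTδ' : (2 : ℝ) ^ (-T) ≤ δ := le_trans (by gcongr <;> linarith) hTδ
  refine dist_rescPM_map_le h₀ h₁ (a := a) (κ := K) (ε' := ε') ha0.le hK0.le (by linarith) hε0.le (min_le_left _ _)
    ?_ ?_ hx₁ ?_ ?_
  · have : ε' ≤ ρ / 2 ^ a := min_le_right _ _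
    rwa [le_div_iff₀ p2, mul_comm] at this
  · have : K ≤ ρ / 2 := min_le_left _ _
    linarith
  · filter_upwards [hcl] with u hu hor
    exact hu (hor.imp (fun h => h.trans hTδ') (fun h => h.trans hTδ))
  · rw [← exp_neg_phi hx₁, ← exp_neg_phi hx₁]
    have h2 : 1 - K ≤ Real.exp (-K) := by linarith [Real.add_one_le_exp (-K)]
    calc (1 - K) * Real.exp (-phi (μ.map G₁) x₁ (T - a)) ≤ Real.exp (-K) * Real.exp (-phi (μ.map G₁) x₁ (T - a)) := by gcongr
      _ = Real.exp (-K + -phi (μ.map G₁) x₁ (T - a)) := (Real.exp_add _ _).symm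
      _ ≤ _ := Real.exp_le_exp.2 (by linarith [hnot.1])

end Lin

/-! ### First order comparison of measures -/

section Calc

variable {X : Type*} [NormedAddCommGroup X] [NormedSpace ℝ X]

/-- The inverse of an injective map on a compact set is Lipschitz at the image of a point where the
derivative is bounded below. -/
lemma exists_inverse_lipschitz {W : Set X} (hW : IsCompact W) {G : X → X} (hG : ContinuousOn G W)
    (hinj : InjOn G W) {u : X} (hu : u ∈ W) {A : X →L[ℝ] X} (hA : HasFDerivAt G A u) {c : ℝ} (hc : 0 < c)
    (hAc : ∀ e, c * ‖e‖ ≤ ‖A e‖) : ∃ C > 0, ∀ u' ∈ W, ‖u' - u‖ ≤ C * ‖G u' - G u‖ := by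
  have h1 : ∀ᶠ u' in 𝓝 u, ‖G u' - G u - A (u' - u)‖ ≤ c / 2 * ‖u' - u‖ :=
    hA.isLittleO.def (by positivity)
  obtain ⟨r, hr, h2⟩ := Metric.eventually_nhds_iff_ball.1 h1
  have hcp : IsCompact (W \ ball u r) := hW.diff isOpen_ball
  have hcont : ContinuousOn (fun u' => ‖G u' - G u‖) (W \ ball u r) :=
    ((hG.mono sdiff_subset).sub continuousOn_const).norm
  obtain ⟨m, hm, hmin⟩ : ∃ m > 0, ∀ u' ∈ W \ ball u r, m ≤ ‖G u' - G u‖ := by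
    rcases (W \ ball u r).eq_empty_or_nonempty with he | hne
    · exact ⟨1, one_pos, fun u' hu' => by rw [he] at hu'; exact absurd hu' (notMem_empty _)⟩
    · obtain ⟨v, hv, hmin⟩ := hcp.exists_isMinOn hne hcont
      refine ⟨‖G v - G u‖, ?_, fun u' hu' => hmin hu'⟩
      refine norm_pos_iff.2 (sub_ne_zero.2 fun h => ?_)
      have := hinj hv.1 hu h
      rw [this] at hv
      exact hv.2 (mem_ball_self hr)
  obtain ⟨D, hD⟩ := hW.isBounded.subset_closedBall u
  refine ⟨2 / c + |D| / m, by positivity, fun u' hu' => ?_⟩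
  by_cases hb : u' ∈ ball u r
  · have h3 := h2 u' hb
    have h4 : ‖A (u' - u)‖ ≤ ‖G u' - G u‖ + ‖G u' - G u - A (u' - u)‖ := by
      have := norm_sub_le (G u' - G u) (G u' - G u - A (u' - u))
      rwa [sub_sub_cancel] at this
    have h5 := hAc (u' - u)
    have h6 : ‖u' - u‖ ≤ 2 / c * ‖G u' - G u‖ := by
      rw [div_mul_eq_mul_div, le_div_iff₀ hc]; linarith
    have h7 : 0 ≤ |D| / m * ‖G u' - G u‖ := by positivity
    linarith
  · have h3 := hmin u' ⟨hu', hb⟩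
    have h4 : ‖u' - u‖ ≤ |D| := by
      have := hD hu'
      rw [mem_closedBall, dist_eq_norm] at this
      exact this.trans (le_abs_self D)
    have h5 : |D| ≤ |D| / m * ‖G u' - G u‖ := by
      rw [div_mul_eq_mul_div, le_div_iff₀ hm]; gcongr
    have h6 : 0 ≤ 2 / c * ‖G u' - G u‖ := by positivity
    linarith

/-- Two injective maps with the same invertible derivative at `u` agree to first order near `u`; by
compactness, the condition of being near `u` can be expressed in terms of the images. -/
lemma first_order_close {W : Set X} (hW : IsCompact W) {G₀ G₁ : X → X} (hG₀ : ContinuousOn G₀ W)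
    (hG₁ : ContinuousOn G₁ W) (hi₀ : InjOn G₀ W) (hi₁ : InjOn G₁ W) {u : X} (hu : u ∈ W) {A : X →L[ℝ] X}
    (hA₀ : HasFDerivAt G₀ A u) (hA₁ : HasFDerivAt G₁ A u) {c : ℝ} (hc : 0 < c)
    (hAc : ∀ e, c * ‖e‖ ≤ ‖A e‖) : ∀ ε > 0, ∃ δ > 0, ∀ u' ∈ W, (‖G₀ u' - G₀ u‖ ≤ δ ∨ ‖G₁ u' - G₁ u‖ ≤ δ) →
      ‖(G₀ u' - G₀ u) - (G₁ u' - G₁ u)‖ ≤ ε * ‖G₁ u' - G₁ u‖ := by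
  intro ε hε
  obtain ⟨C₀, hC₀, h₀⟩ := exists_inverse_lipschitz hW hG₀ hi₀ hu hA₀ hc hAc
  obtain ⟨C₁, hC₁, h₁⟩ := exists_inverse_lipschitz hW hG₁ hi₁ hu hA₁ hc hAc
  have h2 : ∀ᶠ u' in 𝓝 u, ‖(G₀ - G₁) u' - (G₀ - G₁) u - (A - A) (u' - u)‖ ≤ ε / C₁ * ‖u' - u‖ :=
    (hA₀.sub hA₁).isLittleO.def (by positivity)
  obtain ⟨r, hr, h3⟩ := Metric.eventually_nhds_iff_ball.1 h2
  refine ⟨r / (2 * (C₀ + C₁)), by positivity, fun u' hu' hor => ?_⟩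
  have hub : u' ∈ ball u r := by
    rw [mem_ball, dist_eq_norm]
    rcases hor with h | h
    · have := h₀ u' hu'
      rw [le_div_iff₀ (by positivity)] at h
      nlinarith [norm_nonneg (G₀ u' - G₀ u)]
    · have := h₁ u' hu'
      rw [le_div_iff₀ (by positivity)] at h
      nlinarith [norm_nonneg (G₁ u' - G₁ u)]
  have h4 := h3 u' hub
  have e : (G₀ - G₁) u' - (G₀ - G₁) u - (A - A) (u' - u) = (G₀ u' - G₀ u) - (G₁ u' - G₁ u) := by
    simp only [Pi.sub_apply, sub_self, zero_apply]; abel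
  rw [e] at h4
  refine h4.trans ?_
  calc ε / C₁ * ‖u' - u‖ ≤ ε / C₁ * (C₁ * ‖G₁ u' - G₁ u‖) := by gcongr; exact h₁ u' hu'
    _ = _ := by field_simp

end Calc

section Prod

variable {X : Type*} [NormedAddCommGroup X] [NormedSpace ℝ X] [MeasurableSpace X] [BorelSpace X]
  [SecondCountableTopology X]

lemma dist_prod_le {α β ν : ProbabilityMeasure X} {a b : ProbabilityMeasure (X × X)}
    (ha : (a : Measure (X × X)) = (α : Measure X).prod (ν : Measure X))
    (hb : (b : Measure (X × X)) = (β : Measure X).prod (ν : Measure X)) : dist a b ≤ dist α β := by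
  rw [dist_PM_def, dist_PM_def, ha, hb]
  refine levyProkhorovDist_le_of_forall_le _ _ ENNReal.toReal_nonneg fun ε B hε hB => ?_
  have hε0 : 0 < ε := lt_of_le_of_lt ENNReal.toReal_nonneg hε
  have hlt : levyProkhorovEDist (α : Measure X) (β : Measure X) < ENNReal.ofReal ε :=
    (ENNReal.lt_ofReal_iff_toReal_lt (levyProkhorovEDist_ne_top _ _)).2 hε
  rw [Measure.prod_apply_symm hB, Measure.prod_apply_symm isOpen_thickening.measurableSet]
  calc ∫⁻ y, (α : Measure X) ((fun x => (x, y)) ⁻¹' B) ∂(ν : Measure X)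
      ≤ ∫⁻ y, ((β : Measure X) ((fun x => (x, y)) ⁻¹' (thickening ε B)) + ENNReal.ofReal ε) ∂(ν : Measure X) := by
        refine lintegral_mono fun y => ?_
        refine (left_measure_le_of_levyProkhorovEDist_lt hlt (measurable_prodMk_right hB)).trans ?_
        gcongr
        rw [ENNReal.toReal_ofReal hε0.le]
        intro x hx
        obtain ⟨x', hx', hd⟩ := mem_thickening_iff.1 hx
        refine mem_thickening_iff.2 ⟨(x', y), hx', ?_⟩
        rw [Prod.dist_eq]
        simpa using hd
    _ = _ := by
        rw [lintegral_add_right _ measurable_const]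
        simp

end Prod

section Resc

variable {X Y : Type*} [NormedAddCommGroup X] [NormedSpace ℝ X] [MeasurableSpace X] [BorelSpace X]
  [NormedAddCommGroup Y] [NormedSpace ℝ Y] [MeasurableSpace Y] [BorelSpace Y]

lemma InSpt.map {η : Measure X} {z : X} (h : InSpt η z) (M : X →L[ℝ] Y) : InSpt (η.map M) (M z) := by
  refine inSpt_of_pos fun r hr => ?_
  rw [Measure.map_apply M.continuous.measurable measurableSet_closedBall]
  have h1 : M ⁻¹' (closedBall (M z) r) ∈ 𝓝 z := M.continuous.continuousAt (closedBall_mem_nhds _ hr)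
  obtain ⟨s, hs, h2⟩ := Metric.nhds_basis_closedBall.mem_iff.1 h1
  exact fun h3 => h.pos hs (measure_mono_null h2 h3)

/-- Magnification commutes with a linear map, as long as the magnified linear image of the unit
ball covers the unit ball. -/
lemma rescPM_map_rescPM {η : Measure X} [IsFiniteMeasure η] {z : X} (hz : InSpt η z) (M : X →L[ℝ] Y) (t : ℝ) {τ : ℝ}
    (hM : ∀ p, ‖M p‖ ≤ 2 ^ (-τ) → ‖p‖ ≤ 1) :
    rescPM ((rescPM η z t : Measure X).map M) 0 τ = rescPM (η.map M) (M z) (t + τ) := by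
  have hMm : Measurable M := M.continuous.measurable
  have h1 : InSpt ((rescPM η z t : Measure X).map M) 0 := by
    have := (hz.rescPM t).map M
    rwa [map_zero] at this
  haveI : IsProbabilityMeasure ((rescPM η z t : Measure X).map M) := Measure.isProbabilityMeasure_map hMm.aemeasurable
  have key : ∀ S : Set Y, MeasurableSet S → S ⊆ closedBall 0 (2 ^ (-τ)) →
      ((rescPM η z t : Measure X).map M) S = (η (closedBall z ((2 : ℝ) ^ (-t))))⁻¹ * η {p | (2 : ℝ) ^ t • (M p - M z) ∈ S} := by
    intro S hS hsub
    rw [Measure.map_apply hMm hS, rescPM_apply (hz t) (hMm hS)]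
    congr 2
    ext p
    simp only [mem_ofPred_eq, mem_preimage, map_smul, map_sub, and_iff_left_iff_imp]
    intro hp
    have h3 := hM ((2 : ℝ) ^ t • (p - z)) (by simpa using hsub hp)
    rw [norm_scal_le_iff, mul_one] at h3
    rwa [mem_closedBall, dist_eq_norm]
  have eb : ∀ p, (2 : ℝ) ^ t • (M p - M z) ∈ closedBall (0 : Y) (2 ^ (-τ)) ↔ M p ∈ closedBall (M z) (2 ^ (-(t + τ))) := by
    intro p
    rw [mem_closedBall_zero_iff, norm_scal_le_iff, mem_closedBall, dist_eq_norm, ← Real.rpow_add two_pos]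
    ring_nf
  have hb := key (closedBall 0 (2 ^ (-τ))) measurableSet_closedBall subset_rfl
  simp only [eb] at hb
  apply Subtype.ext
  change (rescPM ((rescPM η z t : Measure X).map M) 0 τ : Measure Y) = (rescPM (η.map M) (M z) (t + τ) : Measure Y)
  ext A hA
  have hm1 : MeasurableSet {y : Y | (2 : ℝ) ^ τ • (y - 0) ∈ A ∧ y ∈ closedBall 0 ((2 : ℝ) ^ (-τ))} :=
    (measurable_scal 0 τ hA).inter measurableSet_closedBall
  have hm2 : MeasurableSet {y : Y | (2 : ℝ) ^ (t + τ) • (y - M z) ∈ A ∧ y ∈ closedBall (M z) ((2 : ℝ) ^ (-(t + τ)))} :=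
    (measurable_scal (M z) (t + τ) hA).inter measurableSet_closedBall
  rw [rescPM_apply (h1 τ) hA, rescPM_apply (hz.map M (t + τ)) hA, key _ hm1 (fun y hy => hy.2), hb,
    Measure.map_apply hMm hm2, Measure.map_apply hMm measurableSet_closedBall]
  have e3 : {p | (2 : ℝ) ^ t • (M p - M z) ∈ {y : Y | (2 : ℝ) ^ τ • (y - 0) ∈ A ∧ y ∈ closedBall 0 ((2 : ℝ) ^ (-τ))}} =
      M ⁻¹' {y : Y | (2 : ℝ) ^ (t + τ) • (y - M z) ∈ A ∧ y ∈ closedBall (M z) ((2 : ℝ) ^ (-(t + τ)))} := by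
    ext p
    simp only [mem_ofPred_eq, mem_preimage, eb, sub_zero, smul_smul]
    rw [← Real.rpow_add two_pos, add_comm τ t]
  rw [e3]
  have n1 : η (closedBall z ((2 : ℝ) ^ (-t))) ≠ 0 := hz t
  have n2 : η (closedBall z ((2 : ℝ) ^ (-t))) ≠ ∞ := measure_ne_top _ _
  rw [ENNReal.mul_inv (Or.inl (ENNReal.inv_ne_zero.2 n2)) (Or.inl (ENNReal.inv_ne_top.2 n1)), inv_inv,
    mul_comm (η _), mul_assoc, ← mul_assoc (η _), ENNReal.mul_inv_cancel n1 n2, one_mul]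
  rfl

end Resc

/-! ### The operation S_t (L, I) -/

section Cont

variable {X : Type*} [NormedAddCommGroup X] [NormedSpace ℝ X] [MeasurableSpace X] [BorelSpace X]
  [SecondCountableTopology X]

/-- Magnification is continuous at measures that give positive mass to the ball and none to the
sphere. -/
lemma continuousAt_stMap {ζ : ProbabilityMeasure X} {τ : ℝ}
    (hb : (ζ : Measure X) (closedBall 0 ((2 : ℝ) ^ (-τ))) ≠ 0)
    (hs : (ζ : Measure X) {y | ‖y‖ = (2 : ℝ) ^ (-τ)} = 0) : ContinuousAt (stMap τ) ζ := by
  have hfr : (ζ : Measure X) (frontier (closedBall 0 ((2 : ℝ) ^ (-τ)))) = 0 := by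
    refine measure_mono_null (fun y hy => ?_) hs
    have := frontier_closedBall_subset_sphere hy
    rwa [mem_sphere_zero_iff_norm] at this
  have hball : Tendsto (fun ζ' : ProbabilityMeasure X => (ζ' : Measure X) (closedBall 0 ((2 : ℝ) ^ (-τ)))) (𝓝 ζ)
      (𝓝 ((ζ : Measure X) (closedBall 0 ((2 : ℝ) ^ (-τ))))) :=
    ProbabilityMeasure.tendsto_measure_of_null_frontier_of_tendsto' tendsto_id hfr
  have hev : ∀ᶠ ζ' : ProbabilityMeasure X in 𝓝 ζ, (ζ' : Measure X) (closedBall 0 ((2 : ℝ) ^ (-τ))) ≠ 0 :=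
    hball.eventually_ne hb
  refine tendsto_of_forall_isClosed_limsup_le' fun F hF => ?_
  set F' : Set X := {y | (2 : ℝ) ^ τ • (y - 0) ∈ F ∧ y ∈ closedBall 0 ((2 : ℝ) ^ (-τ))} with hF'
  have hF'c : IsClosed F' :=
    (hF.preimage (by fun_prop : Continuous fun y : X => (2 : ℝ) ^ τ • (y - 0))).inter isClosed_closedBall
  have hl1 : limsup (fun ζ' : ProbabilityMeasure X => (ζ' : Measure X) F') (𝓝 ζ) ≤ (ζ : Measure X) F' :=
    ProbabilityMeasure.limsup_measure_closed_le_of_tendsto tendsto_id hF'c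
  have hl2 : limsup (fun ζ' : ProbabilityMeasure X => ((ζ' : Measure X) (closedBall 0 ((2 : ℝ) ^ (-τ))))⁻¹) (𝓝 ζ) =
      ((ζ : Measure X) (closedBall 0 ((2 : ℝ) ^ (-τ))))⁻¹ :=
    (tendsto_inv_iff.2 hball).limsup_eq
  have hev' : (fun ζ' : ProbabilityMeasure X => (stMap τ ζ' : Measure X) F) =ᶠ[𝓝 ζ]
      ((fun ζ' : ProbabilityMeasure X => ((ζ' : Measure X) (closedBall 0 ((2 : ℝ) ^ (-τ))))⁻¹) *
        fun ζ' : ProbabilityMeasure X => (ζ' : Measure X) F') := by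
    filter_upwards [hev] with ζ' hζ'
    exact rescPM_apply hζ' hF.measurableSet
  rw [limsup_congr hev']
  have hne : ((ζ : Measure X) (closedBall 0 ((2 : ℝ) ^ (-τ))))⁻¹ ≠ ∞ := ENNReal.inv_ne_top.2 hb
  have hne0 : ((ζ : Measure X) (closedBall 0 ((2 : ℝ) ^ (-τ))))⁻¹ ≠ 0 := ENNReal.inv_ne_zero.2 (measure_ne_top _ _)
  refine (ENNReal.limsup_mul_le' (by rw [hl2]; exact Or.inl hne0) (by rw [hl2]; exact Or.inl hne)).trans ?_
  rw [hl2]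
  have : (stMap τ ζ : Measure X) F = ((ζ : Measure X) (closedBall 0 ((2 : ℝ) ^ (-τ))))⁻¹ * (ζ : Measure X) F' :=
    rescPM_apply hb hF.measurableSet
  rw [this]
  gcongr

end Cont

section StLI

variable {d : ℕ}

/-- The linear map `(u, v) ↦ (L u, v)`. -/
noncomputable def linI (L : Matrix (Fin d) (Fin d) ℝ) : Euc d × Euc d →L[ℝ] Euc d × Euc d :=
  (LinearMap.toContinuousLinearMap L.mulVecLin).prodMap (ContinuousLinearMap.id ℝ (Euc d))

lemma linI_apply (L : Matrix (Fin d) (Fin d) ℝ) (p : Euc d × Euc d) : linI L p = (L.mulVec p.1, p.2) := rfl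

/-- The push-forward under `(u, v) ↦ (L u, v)`. -/
noncomputable def mapI (L : Matrix (Fin d) (Fin d) ℝ) (η : ProbabilityMeasure (Euc d × Euc d)) :
    ProbabilityMeasure (Euc d × Euc d) := η.map (linI L).continuous.aemeasurable

lemma mapI_coe (L : Matrix (Fin d) (Fin d) ℝ) (η : ProbabilityMeasure (Euc d × Euc d)) :
    (mapI L η : Measure (Euc d × Euc d)) = (η : Measure (Euc d × Euc d)).map (linI L) := rfl

lemma continuous_mapI (L : Matrix (Fin d) (Fin d) ℝ) : Continuous (mapI L) :=
  ProbabilityMeasure.continuous_map (linI L).continuous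

lemma measurable_mapI (L : Matrix (Fin d) (Fin d) ℝ) : Measurable (mapI L) :=
  (continuous_mapI L).measurable

lemma StLI_eq (L : Matrix (Fin d) (Fin d) ℝ) (t : ℝ) (η : ProbabilityMeasure (Euc d × Euc d)) :
    StLI L t η = stMap t (mapI L η) := by
  rw [StLI, stMap]
  rfl

lemma measurable_StLI (L : Matrix (Fin d) (Fin d) ℝ) (t : ℝ) : Measurable (StLI L t) := by
  have e : StLI L t = stMap t ∘ mapI L := funext fun η => StLI_eq L t η
  rw [e]
  exact (measurable_stMap t).comp (measurable_mapI L)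

lemma StLI_add (L : Matrix (Fin d) (Fin d) ℝ) (τ : ℝ) {s : ℝ} (hs : 0 ≤ s) (η : ProbabilityMeasure (Euc d × Euc d)) :
    StLI L (τ + s) η = stMap s (StLI L τ η) := by
  rw [StLI_eq, StLI_eq, stMap_stMap _ _ hs]

lemma map_StLI_of_le {P : Measure (ProbabilityMeasure (Euc d × Euc d))}
    (hP : ∀ t : ℝ, 0 ≤ t → P.map (stMap t) = P) {L : Matrix (Fin d) (Fin d) ℝ} {τ t : ℝ} (h : P.map (StLI L τ) = P)
    (ht : τ ≤ t) : P.map (StLI L t) = P := by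
  have e : StLI L t = stMap (t - τ) ∘ StLI L τ := by
    funext η
    rw [Function.comp_apply, ← StLI_add _ _ (by linarith)]
    congr 1
    ring
  rw [e, ← Measure.map_map (measurable_stMap _) (measurable_StLI _ _), h, hP _ (by linarith)]

/-- Invariance under a linear map gives invariance under its inverse. -/
lemma map_StLI_inv {P : Measure (ProbabilityMeasure (Euc d × Euc d))} [IsFiniteMeasure P]
    (hP : ∀ t : ℝ, 0 ≤ t → P.map (stMap t) = P) {L : Matrix (Fin d) (Fin d) ℝ} (hL : IsUnit L.det) {τ t : ℝ}
    (hτt : 0 ≤ τ + t)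
    (h : P.map (StLI L τ) = P) (ht : ∀ p, ‖linI L⁻¹ p‖ ≤ 2 ^ (-t) → ‖p‖ ≤ 1) : P.map (StLI L⁻¹ t) = P := by
  have hae := ae_inSpt_of_invariant hP
  have e : ∀ᵐ η ∂P, (StLI L⁻¹ t ∘ StLI L τ) η = stMap (τ + t) η := by
    filter_upwards [hae] with η hη
    have h0 : InSpt ((η : Measure (Euc d × Euc d)).map (linI L)) 0 := by
      have := hη.map (linI L)
      rwa [map_zero] at this
    haveI : IsProbabilityMeasure ((η : Measure (Euc d × Euc d)).map (linI L)) :=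
      Measure.isProbabilityMeasure_map (linI L).continuous.aemeasurable
    have h1 := rescPM_map_rescPM h0 (linI L⁻¹) τ ht
    rw [Measure.map_map (linI L⁻¹).continuous.measurable (linI L).continuous.measurable, map_zero] at h1
    have h2 : (linI L⁻¹ ∘ linI L : Euc d × Euc d → Euc d × Euc d) = id := by
      funext p
      simp only [Function.comp_apply, linI_apply, Matrix.mulVec_mulVec, Matrix.nonsing_inv_mul L hL, Matrix.one_mulVec, id]
    rw [h2, Measure.map_id] at h1
    exact h1
  calc P.map (StLI L⁻¹ t) = (P.map (StLI L τ)).map (StLI L⁻¹ t) := by rw [h]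
    _ = P.map (StLI L⁻¹ t ∘ StLI L τ) := Measure.map_map (measurable_StLI _ _) (measurable_StLI _ _)
    _ = P.map (stMap (τ + t)) := Measure.map_congr e
    _ = P := hP _ hτt

/-- Every interval contains a time `τ` for which `S_τ (L, I)` is continuous `P`-almost everywhere. -/
lemma exists_ae_continuousAt_StLI {P : Measure (ProbabilityMeasure (Euc d × Euc d))} [IsFiniteMeasure P]
    (hP : ∀ᵐ η : ProbabilityMeasure (Euc d × Euc d) ∂P, InSpt (η : Measure (Euc d × Euc d)) 0) (L : Matrix (Fin d) (Fin d) ℝ) {a b : ℝ} (hab : a < b) :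
    ∃ τ ∈ Ioo a b, ∀ᵐ η ∂P, ContinuousAt (StLI L τ) η := by
  set m := P.bind (fun η : ProbabilityMeasure (Euc d × Euc d) => (η : Measure (Euc d × Euc d))) with hm
  haveI : IsFiniteMeasure m := by
    refine ⟨?_⟩
    rw [hm, Measure.bind_apply MeasurableSet.univ measurable_PM_toMeasure.aemeasurable]
    simp
  set As : ℝ → Set (Euc d × Euc d) := fun τ => {p | ‖linI L p‖ = (2 : ℝ) ^ (-τ)} with hAs
  have hmeas : ∀ τ, MeasurableSet (As τ) := fun τ =>
    ((isClosed_singleton (x := (2 : ℝ) ^ (-τ))).preimage (linI L).continuous.norm).measurableSet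
  have hcount := Measure.countable_meas_pos_of_disjoint_iUnion (μ := m) hmeas (by
    intro s t hst
    refine Set.disjoint_left.2 fun p hp hp' => hst ?_
    have h1 : (2 : ℝ) ^ (-s) = 2 ^ (-t) := (show ‖linI L p‖ = _ from hp).symm.trans hp'
    have h2 := (Real.rpow_right_inj two_pos (by norm_num)).1 h1
    linarith)
  obtain ⟨τ, hτ, hτ0⟩ : ∃ τ ∈ Ioo a b, m (As τ) = 0 := by
    by_contra! hne
    have : Ioo a b ⊆ {τ | 0 < m (As τ)} := fun τ hτ => pos_iff_ne_zero.2 (hne τ hτ)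
    exact (Cardinal.Real.Ioo_countable_iff.1 (hcount.mono this)).not_gt hab
  refine ⟨τ, hτ, ?_⟩
  rw [hm, Measure.bind_apply (hmeas τ) measurable_PM_toMeasure.aemeasurable,
    lintegral_eq_zero_iff (measurable_PM_apply (hmeas τ))] at hτ0
  filter_upwards [hτ0, hP] with η h1 h2
  have e : StLI L τ = stMap τ ∘ mapI L := funext fun η => StLI_eq L τ η
  rw [e]
  refine ContinuousAt.comp ?_ (continuous_mapI L).continuousAt
  have hz : InSpt ((η : Measure (Euc d × Euc d)).map (linI L)) 0 := by
    have := h2.map (linI L)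
    rwa [map_zero] at this
  rw [← mapI_coe] at hz
  refine continuousAt_stMap (hz τ) ?_
  have hms : MeasurableSet {y : Euc d × Euc d | ‖y‖ = (2 : ℝ) ^ (-τ)} :=
    ((isClosed_singleton (x := (2 : ℝ) ^ (-τ))).preimage continuous_norm).measurableSet
  rw [mapI_coe, Measure.map_apply (linI L).continuous.measurable hms]
  exact h1

end StLI

/-! ### Typical points -/

section Good

variable {d : ℕ} {Φ : ConformalIFS d} {μ ν : Measure (Euc d)} {p : Fin Φ.n → ℝ≥0∞}

/-- The point `(a, b)` is typical for the measure `η` drawn from the ergodic fractal distribution `P`: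
the scenery of `η` at `(a, b)` equidistributes for `P`, the first marginal decays at `a` at rate at
most `entD P`, and dyadic cells around `a` carry, up to subexponential factors, as much mass as balls. -/
structure GoodPt (η : ProbabilityMeasure (Euc d × Euc d)) (P : Measure (ProbabilityMeasure (Euc d × Euc d)))
    (b a : Euc d) : Prop where
  spt : InSpt (η : Measure (Euc d × Euc d)).fst a
  equi : Equi atTop (fun t => rescPM (η : Measure (Euc d × Euc d)) (a, b) t) P
  phi_le : ∀ c : ℝ, entD P < ENNReal.ofReal c →
    ∃ C : ℝ, ∀ n : ℕ, phi (η : Measure (Euc d × Euc d)).fst a n ≤ c * n + C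
  cell : ∀ σ : Fin d → Bool, ∀ ε > (0 : ℝ), ∀ᶠ T : ℕ in atTop,
    (η : Measure (Euc d × Euc d)).fst.real (closedBall a ((2 : ℝ) ^ (-(T : ℝ)))) ≤
      Real.exp (ε * T) * (η : Measure (Euc d × Euc d)).fst.real (gcell σ T a)

/-- An ergodic fractal distribution `P` carried by product measures that are limits of the scenery
of `μ × ν` admits a product measure `η`, a point `b` in the support of its second marginal, and a
conformal map `g` sending `μ`-a.e. point to a typical point of the slice at height `b`. -/
lemma SelfConf.exists_good (hd : 1 ≤ d) (h : SelfConf Φ μ p) (S : CfSys Φ) (hν : IsProbabilityMeasure ν)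
    {x y : Euc d} (hx : InSpt μ x) (hy : InSpt ν y)
    {P : Measure (ProbabilityMeasure (Euc d × Euc d))} (hP : IsErgodicFD P)
    (hprod : ∀ᵐ η ∂P, IsProdPM η)
    (hseq : ∀ᵐ η ∂P, ∃ t : ℕ → ℝ, (∀ n : ℕ, (n : ℝ) ≤ t n) ∧
      Tendsto (fun n => rescPM (μ.prod ν) (x, y) (t n)) atTop (𝓝 η)) :
    ∃ η : ProbabilityMeasure (Euc d × Euc d), IsProdPM η ∧
      ∃ b, InSpt (η : Measure (Euc d × Euc d)).snd b ∧
      ∃ g : Euc d → Euc d, IsConformalMapOn d g (ball 0 1) ∧ ∀ᵐ u ∂μ, GoodPt η P b (g u) := by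
  have hPp : IsProbabilityMeasure P := hP.1.1
  have hμp := h.prob
  have hspt := ae_inSpt_of_invariant hP.1.2.1
  obtain ⟨η, ⟨hgen, hη0⟩, hηp, t, ht, hlim⟩ := (((hP.ae_generic hprod).and hspt).and (hprod.and hseq)).exists
  have hηp' : (η : Measure (Euc d × Euc d)) =
    (η : Measure (Euc d × Euc d)).fst.prod (η : Measure (Euc d × Euc d)).snd := hηp
  have h1 : ∀ᵐ b ∂(η : Measure (Euc d × Euc d)).snd, ∀ᵐ a ∂(η : Measure (Euc d × Euc d)).fst,
      ‖((a, b) : Euc d × Euc d)‖ < 1 →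
      Equi atTop (fun t => rescPM (η : Measure (Euc d × Euc d)) (a, b) t) P ∧
      ∀ c : ℝ, entD P < ENNReal.ofReal c →
        ∃ C : ℝ, ∀ n : ℕ, phi (η : Measure (Euc d × Euc d)).fst a n ≤ c * n + C := by
    have h2 := hgen
    rw [hηp'] at h2
    have h3 := (Measure.measurePreserving_swap (μ := (η : Measure (Euc d × Euc d)).snd)
      (ν := (η : Measure (Euc d × Euc d)).fst)).quasiMeasurePreserving.ae h2
    have h4 := Measure.ae_ae_of_ae_prod h3
    rw [← hηp'] at h4
    exact h4
  obtain ⟨b, hb1, hb2, hb3⟩ : ∃ b ∈ closedBall (0 : Euc d) ((2 : ℝ) ^ (-(1 : ℝ))),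
      (∀ᵐ a ∂(η : Measure (Euc d × Euc d)).fst, ‖((a, b) : Euc d × Euc d)‖ < 1 →
      Equi atTop (fun t => rescPM (η : Measure (Euc d × Euc d)) (a, b) t) P ∧
      ∀ c : ℝ, entD P < ENNReal.ofReal c →
        ∃ C : ℝ, ∀ n : ℕ, phi (η : Measure (Euc d × Euc d)).fst a n ≤ c * n + C) ∧
      InSpt (η : Measure (Euc d × Euc d)).snd b :=
    Measure.exists_mem_of_measure_ne_zero_of_ae (hη0.snd 1)
      (ae_restrict_of_ae (h1.and (ae_inSpt (η : Measure (Euc d × Euc d)).snd)))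
  have hbn : ‖b‖ < 1 := by
    refine (mem_closedBall_zero_iff.1 hb1).trans_lt ?_
    rw [Real.rpow_neg_one]; norm_num
  set μ' : ProbabilityMeasure (Euc d) := η.map measurable_fst.aemeasurable with hμ'
  have hμ'c : (μ' : Measure (Euc d)) = (η : Measure (Euc d × Euc d)).fst := rfl
  have hN : (μ' : Measure (Euc d)) {a | ¬ (‖a‖ < 1 → GoodPt η P b a)} = 0 := by
    rw [hμ'c]
    refine ae_iff.1 ?_
    filter_upwards [hb2, ae_inSpt (η : Measure (Euc d × Euc d)).fst,
      ae_all_iff.2 fun σ : Fin d → Bool => ae_ball_le_gcell (η : Measure (Euc d × Euc d)).fst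
        (η : Measure (Euc d × Euc d)).fst σ] with a ha1 ha2 ha3 ha
    have := ha1 (by rw [Prod.norm_mk]; exact max_lt ha hbn)
    exact ⟨ha2, this.1, this.2, ha3⟩
  have hlim' : Tendsto (fun n => rescPM μ x (t n)) atTop (𝓝 μ') := by
    have h5 := ((ProbabilityMeasure.continuous_map (continuous_fst (X := Euc d) (Y := Euc d))).tendsto η).comp hlim
    refine h5.congr fun n => ?_
    refine Subtype.ext ?_
    change (rescPM (μ.prod ν) (x, y) (t n) : Measure (Euc d × Euc d)).fst = (rescPM μ x (t n) : Measure (Euc d))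
    rw [rescPM_prod (hx _) (hy _)]
    simp
  obtain ⟨g, hg1, hg2, hg3⟩ := h.exists_conformal hd S hx ht hlim' hη0.fst hN
  refine ⟨η, hηp, b, hb3, g, hg1, ?_⟩
  filter_upwards [hg3, h.ae_ball] with u hu1 hu2
  by_contra hne
  exact hu1 fun H => hne (H (hg2 u hu2))

end Good

/-! ### Transfer of equidistribution -/

section Transfer

variable {d : ℕ} {μ : Measure (Euc d)}

lemma phi_le_phi_map [IsProbabilityMeasure μ] {G : Euc d → Euc d} (hG : AEMeasurable G μ) {u : Euc d}
    (hspt : InSpt (μ.map G) (G u)) {k : ℕ} (hk : ∀ᵐ u' ∂μ, ‖u' - u‖ ≤ 2 ^ k * ‖G u' - G u‖) (t : ℝ) :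
    phi μ u t ≤ phi (μ.map G) (G u) (t + k) := by
  haveI : IsProbabilityMeasure (μ.map G) := Measure.isProbabilityMeasure_map hG
  rw [phi, phi, neg_le_neg_iff]
  refine Real.log_le_log (hspt.real_pos _) ?_
  rw [measureReal_def, measureReal_def, Measure.map_apply_of_aemeasurable hG isClosed_closedBall.measurableSet]
  refine ENNReal.toReal_mono (measure_ne_top _ _) (measure_mono_ae ?_)
  filter_upwards [hk] with u' hu' hmem
  have h1 : ‖G u' - G u‖ ≤ (2 : ℝ) ^ (-(t + k)) := by
    rw [← dist_eq_norm]; exact hmem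
  change dist u' u ≤ _
  rw [dist_eq_norm]
  calc ‖u' - u‖ ≤ 2 ^ k * ‖G u' - G u‖ := hu'
    _ ≤ 2 ^ k * (2 : ℝ) ^ (-(t + k)) := by gcongr
    _ = _ := by
      rw [← Real.rpow_natCast, ← Real.rpow_add two_pos]; congr 1; ring

/-- Times at which the lower bound nearly holds can be selected simultaneously for all `ε`. -/
lemma exists_filter_of_frequently {φ : ℕ → ℝ} {s : ℝ} (h : ∀ ε > 0, ∃ᶠ n : ℕ in atTop, (s - ε) * n ≤ φ n) :
    ∃ l : Filter ℕ, l.NeBot ∧ l ≤ atTop ∧ ∀ ε > 0, ∀ᶠ n : ℕ in l, (s - ε) * n ≤ φ n := by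
  obtain ⟨e, he, h1⟩ := extraction_forall_of_frequently
    (P := fun (j n : ℕ) => (s - 1 / ((j : ℝ) + 1)) * n ≤ φ n) fun j => h _ (by positivity)
  refine ⟨map e atTop, inferInstance, he.tendsto_atTop, fun ε hε => ?_⟩
  rw [eventually_map]
  obtain ⟨j₀, hj₀⟩ := exists_nat_one_div_lt hε
  filter_upwards [eventually_ge_atTop j₀] with j hj
  refine le_trans ?_ (h1 j)
  have : 1 / ((j : ℝ) + 1) ≤ ε := le_trans (by gcongr) hj₀.le
  gcongr

variable {η : ProbabilityMeasure (Euc d × Euc d)} {P : Measure (ProbabilityMeasure (Euc d × Euc d))} {b : Euc d}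

/-- The mean decay rate of `P` is at least that of `μ`: otherwise, `η` would give the cells of
`G_* μ`-typical points more mass than `G_* μ` by an exponential factor, contradicting that both
are finite measures. -/
lemma ofReal_le_entD [IsProbabilityMeasure μ] {G : Euc d → Euc d} (hG : AEMeasurable G μ)
    (hgood : ∀ᵐ u ∂μ, GoodPt η P b (G u)) {s : ℝ}
    (hs : ∀ᵐ u ∂μ, ∀ ε > 0, ∃ᶠ n : ℕ in atTop, (s - ε) * n ≤ phi μ u n)
    (hlip : ∀ᵐ u ∂μ, ∃ k : ℕ, ∀ᵐ u' ∂μ, ‖u' - u‖ ≤ 2 ^ k * ‖G u' - G u‖) :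
    ENNReal.ofReal s ≤ entD P := by
  by_contra! hlt
  obtain ⟨c, hc0, hc1, hc2⟩ := ENNReal.lt_iff_exists_real_btwn.1 hlt
  have hcs : c < s := (ENNReal.ofReal_lt_ofReal_iff_of_nonneg hc0).1 hc2
  haveI : IsProbabilityMeasure (μ.map G) := Measure.isProbabilityMeasure_map hG
  set σ : Fin d → Bool := fun _ => false
  obtain ⟨u, ⟨hu1, hu2, k, hk⟩, hu3, hu4⟩ := ((hgood.and (hs.and hlip)).and
    ((ae_of_ae_map hG (ae_inSpt (μ.map G))).and
    (ae_of_ae_map hG (ae_ball_le_gcell (η : Measure (Euc d × Euc d)).fst (μ.map G) σ)))).exists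
  obtain ⟨C, hC⟩ := hu1.phi_le c hc1
  set ε := (s - c) / 4 with hε
  have hε0 : 0 < ε := by rw [hε]; linarith
  have h1 : ∀ᶠ n : ℕ in atTop, phi μ u n ≤ (c + ε) * (n + k) + C := by
    filter_upwards [(tendsto_add_atTop_nat k).eventually (hu4 ε hε0)] with n hn
    have h2 : phi μ u n ≤ phi (μ.map G) (G u) ((n + k : ℕ) : ℝ) := by
      push_cast; exact phi_le_phi_map hG hu3 hk n
    have h3 : phi (μ.map G) (G u) ((n + k : ℕ) : ℝ) ≤
        phi (η : Measure (Euc d × Euc d)).fst (G u) ((n + k : ℕ) : ℝ) + ε * ((n + k : ℕ) : ℝ) := by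
      have h4 : (η : Measure (Euc d × Euc d)).fst.real (closedBall (G u) ((2 : ℝ) ^ (-((n + k : ℕ) : ℝ)))) ≤
          Real.exp (ε * ((n + k : ℕ) : ℝ)) * (μ.map G).real (closedBall (G u) ((2 : ℝ) ^ (-((n + k : ℕ) : ℝ)))) :=
        hn.trans (mul_le_mul_of_nonneg_left
          (measureReal_mono (gcell_subset_closedBall σ _ _) (measure_ne_top _ _)) (Real.exp_pos _).le)
      have h5 := Real.log_le_log (hu1.spt.real_pos _) h4
      rw [Real.log_mul (Real.exp_pos _).ne' (hu3.real_pos _).ne', Real.log_exp] at h5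
      rw [phi, phi]
      linarith
    have h6 := hC (n + k)
    push_cast at h2 h3 h6 ⊢
    linarith
  obtain ⟨n₀, hn₀⟩ := exists_nat_gt (((c + ε) * k + C) / (2 * ε))
  obtain ⟨n, hn1, hn2, hn3⟩ := ((hu2 ε hε0).and_eventually (h1.and (eventually_ge_atTop n₀))).exists
  have hn4 : (n₀ : ℝ) ≤ n := by exact_mod_cast hn3
  rw [div_lt_iff₀ (by positivity)] at hn₀
  have h7 : (n₀ : ℝ) * (2 * ε) ≤ n * (2 * ε) := by gcongr
  have h8 : s = c + 4 * ε := by rw [hε]; ring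
  rw [h8] at hn1
  nlinarith

/-- The cells around a typical point of `η` carry at least as much mass as those of `θ`, up to
subexponential factors, along scales at which `θ` decays at the maximal rate. -/
lemma GoodPt.subexpAt {θ : Measure (Euc d)} [IsProbabilityMeasure θ] {z : Euc d} (hg : GoodPt η P b z)
    (hz : InSpt θ z) {s : ℝ} (hs0 : 0 ≤ s) (hent : entD P ≤ ENNReal.ofReal s) {l : Filter ℕ} (hl : l ≤ atTop)
    (hls : ∀ ε > 0, ∀ᶠ N : ℕ in l, (s - ε) * N ≤ phi θ z N) :
    SubexpAt l θ (η : Measure (Euc d × Euc d)).fst z := by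
  intro σ k ε hε
  set e := min (ε / 8) 1 with he
  have he0 : 0 < e := by positivity
  have he1 : e ≤ ε / 8 := min_le_left _ _
  obtain ⟨C, hC⟩ := hg.phi_le (s + e) (hent.trans_lt ((ENNReal.ofReal_lt_ofReal_iff (by linarith)).2 (by linarith)))
  obtain ⟨T₀, hT₀⟩ := eventually_atTop.1 (hg.cell σ e he0)
  obtain ⟨N₀, hN₀⟩ := exists_nat_gt (((s + 2 * e) * k + C) / (4 * e))
  filter_upwards [hls e he0, hl (eventually_ge_atTop T₀), hl (eventually_ge_atTop N₀)] with N h1 h2 h3 N' h4 h5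
  have h6 := hT₀ N' (h2.trans h4)
  have h7 : θ.real (gcell σ N' z) ≤ Real.exp (-((s - e) * N)) := by
    calc θ.real (gcell σ N' z) ≤ θ.real (closedBall z ((2 : ℝ) ^ (-(N' : ℝ)))) :=
          measureReal_mono (gcell_subset_closedBall σ _ _) (measure_ne_top _ _)
      _ = Real.exp (-phi θ z N') := (exp_neg_phi hz _).symm
      _ ≤ _ := by
        have := phi_mono hz (show (N : ℝ) ≤ N' by exact_mod_cast h4)
        exact Real.exp_le_exp.2 (by linarith)
  have h8 : Real.exp (-((s + e) * N' + C)) ≤ Real.exp (e * N') * (η : Measure (Euc d × Euc d)).fst.real (gcell σ N' z) := by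
    refine le_trans ?_ h6
    rw [← exp_neg_phi hg.spt]
    exact Real.exp_le_exp.2 (by linarith [hC N'])
  have h9 : Real.exp (-((s + 2 * e) * N' + C)) ≤ (η : Measure (Euc d × Euc d)).fst.real (gcell σ N' z) := by
    have : Real.exp (-((s + 2 * e) * N' + C)) = Real.exp (-(e * N')) * Real.exp (-((s + e) * N' + C)) := by
      rw [← Real.exp_add]; congr 1; ring
    rw [this]
    calc _ ≤ Real.exp (-(e * N')) * (Real.exp (e * N') * (η : Measure (Euc d × Euc d)).fst.real (gcell σ N' z)) := by
          gcongr
      _ = _ := by rw [← mul_assoc, ← Real.exp_add]; simp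
  refine le_trans ?_ h9
  calc Real.exp (-(ε * N)) * θ.real (gcell σ N' z) ≤ Real.exp (-(ε * N)) * Real.exp (-((s - e) * N)) := by gcongr
    _ = Real.exp (-(ε * N) + -((s - e) * N)) := (Real.exp_add _ _).symm
    _ ≤ _ := by
      refine Real.exp_le_exp.2 ?_
      have h10 : (N' : ℝ) ≤ N + k := by exact_mod_cast h5
      have h11 : (s + 2 * e) * N' ≤ (s + 2 * e) * (N + k) := by gcongr
      rw [div_lt_iff₀ (by positivity)] at hN₀
      have h12 : (N₀ : ℝ) ≤ N := by exact_mod_cast h3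
      have h13 : (N₀ : ℝ) * (4 * e) ≤ N * (4 * e) := by gcongr
      have h14 : 8 * e * N ≤ ε * N := by
        have : (0 : ℝ) ≤ N := Nat.cast_nonneg _
        nlinarith
      nlinarith

lemma ae_phi_succ_le {θ : Measure (Euc d)} [IsProbabilityMeasure θ] :
    ∀ᵐ z ∂θ, ∃ C : ℝ, ∀ᶠ N : ℕ in atTop, phi θ z (N + 1) ≤ C * N := by
  filter_upwards [ae_phi_le_linear θ] with z hz
  refine ⟨2 * (d + 1), ?_⟩
  filter_upwards [(tendsto_add_atTop_nat 1).eventually hz, eventually_ge_atTop 1] with N hN h1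
  have h2 : (1 : ℝ) ≤ N := by exact_mod_cast h1
  push_cast at hN
  refine hN.trans ?_
  have : (0 : ℝ) ≤ d + 1 := by positivity
  nlinarith

/-- If `G` maps `μ`-a.e. point to a typical point, the product of `μ.map G` with the second marginal of
`η` has sceneries equidistributing for `P`, along scales at which `μ.map G` decays at the maximal rate. -/
lemma ae_equi_of_good [IsProbabilityMeasure μ] [IsFiniteMeasure P] (hη : IsProdPM η)
    (hb : InSpt (η : Measure (Euc d × Euc d)).snd b) {G : Euc d → Euc d} (hG : AEMeasurable G μ)
    (hgood : ∀ᵐ u ∂μ, GoodPt η P b (G u)) {s : ℝ} (hs0 : 0 ≤ s) (hent : entD P ≤ ENNReal.ofReal s) :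
    ∀ᵐ u ∂μ, ∀ l : Filter ℕ, l.NeBot → l ≤ atTop →
      (∀ ε > 0, ∀ᶠ N : ℕ in l, (s - ε) * N ≤ phi (μ.map G) (G u) N) →
      Equi l (fun t => rescPM ((μ.map G).prod (η : Measure (Euc d × Euc d)).snd) (G u, b) t) P := by
  haveI : IsProbabilityMeasure (μ.map G) := Measure.isProbabilityMeasure_map hG
  have hη' : (η : Measure (Euc d × Euc d)) =
    (η : Measure (Euc d × Euc d)).fst.prod (η : Measure (Euc d × Euc d)).snd := hη
  filter_upwards [hgood, ae_of_ae_map hG (ae_inSpt (μ.map G)), ae_of_ae_map hG (ae_phi_succ_le (θ := μ.map G)),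
    ae_of_ae_map hG (ae_sync (μ.map G) (η : Measure (Euc d × Euc d)).fst)] with u hu1 hu2 hu3 hu4 l hl0 hl hls
  obtain ⟨C, hC⟩ := hu3
  refine (hu1.equi.of_le hl).congr fun ε hε c hc => ?_
  refine (hu4 l hl0 hl (hu1.subexpAt hu2 hs0 hent hl hls) hu1.spt ⟨C, hl hC⟩ ε hε c hc).mono ?_ le_rfl
  intro t ht
  simp only [mem_ofPred_eq] at ht ⊢
  refine ht.trans_le ?_
  rw [dist_comm (rescPM (μ.map G) (G u) t)]
  refine dist_prod_le (ν := rescPM (η : Measure (Euc d × Euc d)).snd b t) ?_ (rescPM_prod (hu2 t) (hb t))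
  have := rescPM_prod (hu1.spt t) (hb t)
  rwa [← hη'] at this

end Transfer

/-! ### The derivative of the conjugated maps -/

section Deriv

variable {d : ℕ}

lemma Dmat_mulVec (f : Euc d → Euc d) (u e : Euc d) : (Dmat f u).mulVec e = fderiv ℝ f u e :=
  toMatrix'_mulVec_clm _ _

lemma IsCf.isUnit_det {A : Euc d →L[ℝ] Euc d} {c : ℝ} (h : IsCf A c) :
    IsUnit (LinearMap.toMatrix' (A : Euc d →ₗ[ℝ] Euc d)).det := by
  rw [isUnit_iff_ne_zero, LinearMap.det_toMatrix']
  intro h0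
  have h1 := h.abs_det
  rw [h0, abs_zero] at h1
  exact (pow_pos h.1 d).ne h1

lemma isUnit_det_Dmat {f : Euc d → Euc d} {u : Euc d} {c : ℝ} (h : IsCf (fderiv ℝ f u) c) :
    IsUnit (Dmat f u).det := h.isUnit_det

variable {g f : Euc d → Euc d} {u : Euc d} {a b c : ℝ}

lemma isUnit_det_DfhMat (ha : IsCf (fderiv ℝ g u) a) (hb : IsCf (fderiv ℝ g (f u)) b)
    (hc : IsCf (fderiv ℝ f u) c) : IsUnit (DfhMat g f u).det := by
  rw [DfhMat, Matrix.det_mul, Matrix.det_mul]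
  refine ((isUnit_det_Dmat hb).mul (isUnit_det_Dmat hc)).mul ?_
  rw [Matrix.det_nonsing_inv]
  exact (isUnit_det_Dmat ha).ringInverse

lemma DfhMat_mulVec_fderiv (ha : IsCf (fderiv ℝ g u) a) (e : Euc d) :
    (DfhMat g f u).mulVec (fderiv ℝ g u e) = fderiv ℝ g (f u) (fderiv ℝ f u e) := by
  rw [← Dmat_mulVec, DfhMat, Matrix.mulVec_mulVec, Matrix.mul_assoc, Matrix.nonsing_inv_mul _ (isUnit_det_Dmat ha),
    Matrix.mul_one, ← Matrix.mulVec_mulVec, Dmat_mulVec, Dmat_mulVec]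

lemma n2_DfhMat (ha : IsCf (fderiv ℝ g u) a) (hb : IsCf (fderiv ℝ g (f u)) b)
    (hc : IsCf (fderiv ℝ f u) c) (w : Euc d) : n2 ((DfhMat g f u).mulVec w) = b * c / a * n2 w := by
  have h1 : fderiv ℝ g u ((Dmat g u)⁻¹.mulVec w) = w := by
    rw [← Dmat_mulVec, Matrix.mulVec_mulVec, Matrix.mul_nonsing_inv _ (isUnit_det_Dmat ha), Matrix.one_mulVec]
  have h2 := ha.n2_eq ((Dmat g u)⁻¹.mulVec w)
  rw [h1] at h2
  conv_lhs => rw [← h1]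
  rw [DfhMat_mulVec_fderiv ha, hb.n2_eq, hc.n2_eq, h2]
  have := ha.1.ne'
  field_simp

lemma norm_le_one_of_linI {L : Matrix (Fin d) (Fin d) ℝ} {κ : ℝ} (hκ : 0 < κ)
    (hL : ∀ w, n2 (L.mulVec w) = κ * n2 w) {τ : ℝ} (hτ : 0 ≤ τ) (h : Real.sqrt d * 2 ^ (-τ) ≤ κ)
    (p : Euc d × Euc d) (hp : ‖linI L p‖ ≤ 2 ^ (-τ)) : ‖p‖ ≤ 1 := by
  rw [linI_apply, Prod.norm_mk, max_le_iff] at hp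
  rw [Prod.norm_def]
  refine max_le ?_ (hp.2.trans (Real.rpow_le_one_of_one_le_of_nonpos (by norm_num) (by linarith)))
  have h1 : κ * ‖p.1‖ ≤ κ * 1 :=
    calc κ * ‖p.1‖ ≤ κ * n2 p.1 := by gcongr; exact norm_le_n2 _
      _ = n2 (L.mulVec p.1) := (hL _).symm
      _ ≤ Real.sqrt d * ‖L.mulVec p.1‖ := n2_le _
      _ ≤ Real.sqrt d * 2 ^ (-τ) := by gcongr; exact hp.1
      _ ≤ κ * 1 := by rw [mul_one]; exact h
  exact le_of_mul_le_mul_left h1 hκ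

lemma n2_inv_mulVec {L : Matrix (Fin d) (Fin d) ℝ} (hdet : IsUnit L.det) {κ : ℝ} (hκ : 0 < κ)
    (hL : ∀ w, n2 (L.mulVec w) = κ * n2 w) (w : Euc d) : n2 (L⁻¹.mulVec w) = κ⁻¹ * n2 w := by
  have h1 := hL (L⁻¹.mulVec w)
  rw [Matrix.mulVec_mulVec, Matrix.mul_nonsing_inv _ hdet, Matrix.one_mulVec] at h1
  rw [h1]
  field_simp

lemma IsConformalMapOn.exists_bounds (hd : 1 ≤ d) (hg : IsConformalMapOn d g (ball 0 1)) {R : ℝ} (hR0 : 0 ≤ R) (hR : R < 1) :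
    ∃ m M : ℝ, 0 < m ∧ 0 < M ∧ ∀ x ∈ closedBall (0 : Euc d) R, m ≤ confScale g x ∧ confScale g x ≤ M := by
  have hsub : closedBall (0 : Euc d) R ⊆ ball 0 1 := closedBall_subset_ball hR
  obtain ⟨C, α, hα, hC⟩ := hg.2.2.2.2
  have hc : ContinuousOn (fun x => fderiv ℝ g x) (ball 0 1) := hC.continuousOn hα
  have hc2 : ContinuousOn (confScale g) (closedBall (0 : Euc d) R) := by
    have hdet : Continuous fun A : Euc d →L[ℝ] Euc d => LinearMap.det (A : Euc d →ₗ[ℝ] Euc d) :=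
      ContinuousLinearMap.continuous_det
    exact ((hdet.comp_continuousOn (hc.mono hsub)).abs).rpow_const fun x _ => Or.inr (by positivity)
  have hne : (closedBall (0 : Euc d) R).Nonempty := ⟨0, by simp [hR0]⟩
  obtain ⟨y, hy, hmin⟩ := (isCompact_closedBall (0 : Euc d) R).exists_isMinOn hne hc2
  obtain ⟨y', hy', hmax⟩ := (isCompact_closedBall (0 : Euc d) R).exists_isMaxOn hne hc2
  exact ⟨_, _, (hg.isCf hd (hsub hy)).1, (hg.isCf hd (hsub hy')).1, fun x hx => ⟨hmin hx, hmax hx⟩⟩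

/-- There is a time after which magnification of the image under `D(g f g⁻¹)`, or its inverse, only sees
the image of the unit ball, uniformly over points of the invariant cube. -/
lemma exists_time (hd : 1 ≤ d) {Φ : ConformalIFS d} (S : CfSys Φ) (hg : IsConformalMapOn d g (ball 0 1)) :
    ∃ a : ℝ, 0 ≤ a ∧ ∀ i, ∀ u ∈ closedBall (0 : Euc d) S.R, ∀ τ, a ≤ τ → ∀ p,
      (‖linI (DfhMat g (Φ.funs i) u) p‖ ≤ 2 ^ (-τ) → ‖p‖ ≤ 1) ∧
      (‖linI (DfhMat g (Φ.funs i) u)⁻¹ p‖ ≤ 2 ^ (-τ) → ‖p‖ ≤ 1) := by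
  obtain ⟨m, M, hm, hM, hb⟩ := hg.exists_bounds hd S.R_pos.le S.R_lt
  have hmm := S.m_pos
  set κ := min (m * S.m / M) (m / M) with hκ
  have hκ0 : 0 < κ := by positivity
  have ht : Tendsto (fun t : ℝ => Real.sqrt d * (2 : ℝ) ^ (-t)) atTop (𝓝 (Real.sqrt d * 0)) := by
    refine Tendsto.const_mul _ ?_
    have h1 := (tendsto_rpow_atTop_of_base_gt_one 2 (by norm_num)).inv_tendsto_atTop
    refine h1.congr fun t => ?_
    rw [Pi.inv_apply, Real.rpow_neg two_pos.le]
  rw [mul_zero] at ht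
  obtain ⟨a, ha⟩ := eventually_atTop.1 ((ht.eventually (gt_mem_nhds hκ0)).and (eventually_ge_atTop 0))
  refine ⟨max a 0, le_max_right _ _, fun i u hu τ hτ p => ?_⟩
  obtain ⟨h1, h2⟩ := ha τ ((le_max_left _ _).trans hτ)
  have hu1 := S.closedBall_R_subset hu
  have hfu := S.maps i u hu1
  have ca := hg.isCf hd hu1
  have cb := hg.isCf hd (S.ball_R_subset hfu)
  have cc := (Φ.conf i).isCf hd hu1
  obtain ⟨a1, a2⟩ := hb u hu
  obtain ⟨b1, b2⟩ := hb _ (ball_subset_closedBall hfu)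
  have c1 := S.m_le i u hu
  have c2 : confScale (Φ.funs i) u ≤ 1 := (S.le_r i u hu1).trans S.r_lt.le
  set A := confScale g u
  set B := confScale g (Φ.funs i u)
  set C := confScale (Φ.funs i) u
  have hL := n2_DfhMat ca cb cc
  have hpos : 0 < B * C / A := by
    have := ca.1; have := cb.1; have := cc.1
    positivity
  have e1 : κ ≤ B * C / A := (min_le_left _ _).trans (by
    have := ca.1; have := cb.1; have := cc.1
    gcongr)
  have e2 : κ ≤ (B * C / A)⁻¹ := (min_le_right _ _).trans (by
    rw [inv_div]
    have := ca.1; have := cb.1; have := cc.1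
    have h3 : B * C ≤ M := (mul_le_of_le_one_right cb.1.le c2).trans b2
    gcongr)
  exact ⟨norm_le_one_of_linI hpos hL h2 (h1.le.trans e1) p,
    norm_le_one_of_linI (inv_pos.2 hpos) (n2_inv_mulVec (isUnit_det_DfhMat ca cb cc) hpos hL) h2 (h1.le.trans e2) p⟩

end Deriv

/-! ### Invariance at almost every point -/

section Local

variable {d : ℕ} {Φ : ConformalIFS d} {μ : Measure (Euc d)} {p : Fin Φ.n → ℝ≥0∞}
  {η : ProbabilityMeasure (Euc d × Euc d)} {P : Measure (ProbabilityMeasure (Euc d × Euc d))} {b : Euc d}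

lemma eventually_shift_le {φ ψ : ℕ → ℝ} {s : ℝ} {l : Filter ℕ} (hl : l ≤ atTop) {k : ℕ}
    (hφ : ∀ ε > 0, ∀ᶠ n : ℕ in l, (s - ε) * n ≤ φ n) (h : ∀ n, φ n ≤ ψ (n + k)) :
    ∀ ε > 0, ∀ᶠ N : ℕ in map (· + k) l, (s - ε) * N ≤ ψ N := by
  intro ε hε
  rw [eventually_map]
  obtain ⟨n₀, hn₀⟩ := exists_nat_gt ((s - ε) * k / (ε / 2))
  filter_upwards [hφ (ε / 2) (by positivity), hl (eventually_ge_atTop n₀)] with n h1 h2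
  refine le_trans ?_ (h1.trans (h n))
  rw [div_lt_iff₀ (by positivity)] at hn₀
  have h3 : (n₀ : ℝ) * (ε / 2) ≤ n * (ε / 2) := by
    have : (n₀ : ℝ) ≤ n := by exact_mod_cast h2
    gcongr
  push_cast
  nlinarith

lemma SelfConf.aemeasurable_of_continuousOn (h : SelfConf Φ μ p) {G : Euc d → Euc d}
    (hG : ContinuousOn G (ball 0 1)) : AEMeasurable G μ := by
  have h2 := hG.aemeasurable (μ := μ) isOpen_ball.measurableSet
  rwa [Measure.restrict_eq_self_of_ae_mem h.ae_ball] at h2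

lemma IsConformalMapOn.continuousOn {g : Euc d → Euc d} {U : Set (Euc d)} (hg : IsConformalMapOn d g U) :
    ContinuousOn g U := fun u hu => (hg.2.2.1 u hu).continuousAt.continuousWithinAt

/-- An injective map with conformal derivative at `u` expands distances to `u` by at least a fixed
factor. -/
lemma exists_pow_lip {W : Set (Euc d)} (hW : IsCompact W) {G : Euc d → Euc d} (hG : ContinuousOn G W)
    (hinj : InjOn G W) {u : Euc d} (hu : u ∈ W) {A : Euc d →L[ℝ] Euc d} (hA : HasFDerivAt G A u) {c : ℝ}
    (hc : IsCf A c) : ∃ k : ℕ, ∀ j ≥ k, ∀ u' ∈ W, ‖u' - u‖ ≤ 2 ^ j * ‖G u' - G u‖ := by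
  have h0 : ∀ e, c / (Real.sqrt d + 1) * ‖e‖ ≤ ‖A e‖ := fun e => by
    have h1 := hc.le_norm e
    have h2 := norm_nonneg (A e)
    rw [div_mul_eq_mul_div, div_le_iff₀ (by positivity)]
    nlinarith
  have hc0 : 0 < c / (Real.sqrt d + 1) := div_pos hc.1 (by positivity)
  obtain ⟨C, hC0, hC⟩ := exists_inverse_lipschitz hW hG hinj hu hA hc0 h0
  obtain ⟨k, hk⟩ := pow_unbounded_of_one_lt C (one_lt_two (α := ℝ))
  refine ⟨k, fun j hj u' hu' => (hC u' hu').trans ?_⟩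
  have : C ≤ 2 ^ j := hk.le.trans (pow_le_pow_right₀ one_le_two hj)
  gcongr

lemma SelfConf.ae_exists_lip (hd : 1 ≤ d) (h : SelfConf Φ μ p) (S : CfSys Φ) {g : Euc d → Euc d}
    (hg : IsConformalMapOn d g (ball 0 1)) :
    ∀ᵐ u ∂μ, ∃ k : ℕ, ∀ᵐ u' ∂μ, ‖u' - u‖ ≤ 2 ^ k * ‖g u' - g u‖ := by
  filter_upwards [h.ae_ball_R hd S] with u hu
  have hu' := S.ball_R_subset hu
  obtain ⟨k, hk⟩ := exists_pow_lip (isCompact_closedBall (0 : Euc d) S.R) (hg.continuousOn.mono S.closedBall_R_subset)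
    (hg.1.mono S.closedBall_R_subset) (ball_subset_closedBall hu) (hg.2.2.1 u hu').hasFDerivAt (hg.isCf hd hu')
  exact ⟨k, (h.ae_ball_R hd S).mono fun v hv => hk k le_rfl v (ball_subset_closedBall hv)⟩

/-- `P` is invariant under `S_τ (D(g f_i g⁻¹), I)`: the sceneries of `g_* μ × ν'` and of `(g f_i)_* μ × ν'`
both equidistribute for `P`, and the latter is, to first order, the image of the former under the derivative. -/
lemma SelfConf.ae_map_StLI (hd : 1 ≤ d) (h : SelfConf Φ μ p) (S : CfSys Φ) {g : Euc d → Euc d}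
    (hg : IsConformalMapOn d g (ball 0 1)) [IsProbabilityMeasure P]
    (hPspt : ∀ᵐ η : ProbabilityMeasure (Euc d × Euc d) ∂P, InSpt (η : Measure (Euc d × Euc d)) 0)
    (hη : IsProdPM η) (hb : InSpt (η : Measure (Euc d × Euc d)).snd b)
    (hgood : ∀ᵐ u ∂μ, GoodPt η P b (g u)) {s : ℝ} (hs0 : 0 ≤ s) (hent : entD P ≤ ENNReal.ofReal s)
    (hs : ∀ᵐ u ∂μ, ∀ ε > 0, ∃ᶠ n : ℕ in atTop, (s - ε) * n ≤ phi μ u n) (i : Fin Φ.n)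
    {a a' : ℝ} (haa : a < a')
    (ha : ∀ u ∈ closedBall (0 : Euc d) S.R, ∀ τ, a ≤ τ → ∀ p,
      ‖linI (DfhMat g (Φ.funs i) u) p‖ ≤ 2 ^ (-τ) → ‖p‖ ≤ 1) :
    ∀ᵐ u ∂μ, ∃ τ ∈ Ioo a a', P.map (StLI (DfhMat g (Φ.funs i) u) τ) = P := by
  have hμp := h.prob
  have hgc := hg.continuousOn
  have hfc : ContinuousOn (Φ.funs i) (ball 0 1) := (Φ.conf i).continuousOn
  have hmaps : MapsTo (Φ.funs i) (ball 0 1) (ball 0 1) := fun u hu => S.ball_R_subset (S.maps i u hu)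
  set G₁ : Euc d → Euc d := fun u => g (Φ.funs i u) with hG₁
  have hG₁c : ContinuousOn G₁ (ball 0 1) := hgc.comp hfc hmaps
  have hgm := h.aemeasurable_of_continuousOn hgc
  have hG₁m := h.aemeasurable_of_continuousOn hG₁c
  haveI : IsProbabilityMeasure (μ.map g) := Measure.isProbabilityMeasure_map hgm
  haveI : IsProbabilityMeasure (μ.map G₁) := Measure.isProbabilityMeasure_map hG₁m
  set ν' := (η : Measure (Euc d × Euc d)).snd with hν'
  have hW := isCompact_closedBall (0 : Euc d) S.R
  have hWs := S.closedBall_R_subset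
  have haeW : ∀ᵐ u ∂μ, u ∈ closedBall (0 : Euc d) S.R :=
    (h.ae_ball_R hd S).mono fun u hu => ball_subset_closedBall hu
  filter_upwards [ae_equi_of_good hη hb hgm hgood hs0 hent,
    ae_equi_of_good hη hb hG₁m (h.ae_comp hd S i hgood) hs0 hent, haeW, hs,
    ae_of_ae_map hgm (ae_inSpt (μ.map g)), ae_of_ae_map hG₁m (ae_inSpt (μ.map G₁)),
    ae_of_ae_map hG₁m (ae_phi_succ_le (θ := μ.map G₁))] with u E₀ E₁ huW hus hspt₀ hspt₁ hphi
  have hu := hWs huW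
  have ca := hg.isCf hd hu
  have cb := hg.isCf hd (hmaps hu)
  have cc := (Φ.conf i).isCf hd hu
  set L := DfhMat g (Φ.funs i) u with hL
  have hLdet : IsUnit L.det := isUnit_det_DfhMat ca cb cc
  set Lc : Euc d →L[ℝ] Euc d := LinearMap.toContinuousLinearMap L.mulVecLin with hLc
  have hLca : ∀ w, Lc w = L.mulVec w := fun w => rfl
  set A : Euc d →L[ℝ] Euc d := (fderiv ℝ g (Φ.funs i u)).comp (fderiv ℝ (Φ.funs i) u) with hA
  have hAcf : IsCf A _ := cb.comp cc
  have hgd : HasFDerivAt g (fderiv ℝ g u) u := (hg.2.2.1 u hu).hasFDerivAt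
  have hG₁d : HasFDerivAt G₁ A u :=
    ((hg.2.2.1 _ (hmaps hu)).hasFDerivAt).comp u ((Φ.conf i).2.2.1 u hu).hasFDerivAt
  set G₀ : Euc d → Euc d := fun u => Lc (g u) with hG₀
  have hG₀d : HasFDerivAt G₀ A u := by
    have h1 := Lc.hasFDerivAt.comp u hgd
    have h2 : Lc.comp (fderiv ℝ g u) = A := by
      ext1 e
      exact DfhMat_mulVec_fderiv ca e
    rwa [h2] at h1
  have hG₀c : ContinuousOn G₀ (ball 0 1) := Lc.continuous.comp_continuousOn hgc
  have hG₀m := h.aemeasurable_of_continuousOn hG₀c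
  have hLinj : Function.Injective Lc := by
    intro v w hvw
    have h1 := congrArg (fun z => L⁻¹.mulVec z) hvw
    simp only [hLca, Matrix.mulVec_mulVec, Matrix.nonsing_inv_mul _ hLdet, Matrix.one_mulVec] at h1
    exact h1
  have hi₀ : InjOn G₀ (closedBall (0 : Euc d) S.R) := fun v hv w hw hvw => hg.1 (hWs hv) (hWs hw) (hLinj hvw)
  have hi₁ : InjOn G₁ (closedBall (0 : Euc d) S.R) := fun v hv w hw hvw =>
    (Φ.conf i).1 (hWs hv) (hWs hw) (hg.1 (hmaps (hWs hv)) (hmaps (hWs hw)) hvw)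
  -- a sequence of scales of maximal decay, common to both images
  obtain ⟨l₀, hl₀, hl₀', hl₀s⟩ := exists_filter_of_frequently hus
  obtain ⟨k₀, hk₀⟩ := exists_pow_lip hW (hgc.mono hWs) (hg.1.mono hWs) huW hgd ca
  obtain ⟨k₁, hk₁⟩ := exists_pow_lip hW (hG₁c.mono hWs) hi₁ huW hG₁d hAcf
  set k := max k₀ k₁ with hk
  set l := map (· + k) l₀ with hl
  have hlne : l.NeBot := hl₀.map _
  have hlat : l ≤ atTop := (tendsto_add_atTop_nat k).mono_left hl₀'
  have hls₀ : ∀ ε > 0, ∀ᶠ N : ℕ in l, (s - ε) * N ≤ phi (μ.map g) (g u) N :=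
    eventually_shift_le (φ := fun n : ℕ => phi μ u n) (ψ := fun n : ℕ => phi (μ.map g) (g u) n) hl₀' hl₀s fun n => by
      push_cast
      exact phi_le_phi_map hgm hspt₀ (haeW.mono fun v hv => hk₀ k (le_max_left _ _) v hv) n
  have hls₁ : ∀ ε > 0, ∀ᶠ N : ℕ in l, (s - ε) * N ≤ phi (μ.map G₁) (G₁ u) N :=
    eventually_shift_le (φ := fun n : ℕ => phi μ u n) (ψ := fun n : ℕ => phi (μ.map G₁) (G₁ u) n) hl₀' hl₀s fun n => by
      push_cast
      exact phi_le_phi_map hG₁m hspt₁ (haeW.mono fun v hv => hk₁ k (le_max_right _ _) v hv) n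
  have Eq₀ := E₀ l hlne hlat hls₀
  have Eq₁ := E₁ l hlne hlat hls₁
  obtain ⟨τ, hτ, hcont⟩ := exists_ae_continuousAt_StLI hPspt L haa
  refine ⟨τ, hτ, ?_⟩
  have hz : InSpt ((μ.map g).prod ν') (g u, b) := by
    intro t
    rw [← closedBall_prod_same, Measure.prod_prod]
    exact mul_ne_zero (hspt₀ t) (hb t)
  have hSt : ∀ t, (StLI L τ (rescPM ((μ.map g).prod ν') (g u, b) t)) =
      rescPM ((μ.map G₀).prod ν') (G₀ u, b) (t + τ) := by
    intro t
    rw [StLI_eq, stMap, mapI_coe, rescPM_map_rescPM hz (linI L) t (ha u huW τ hτ.1.le)]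
    have e1 : ((μ.map g).prod ν').map (linI L) = (μ.map G₀).prod ν' := by
      have e2 : μ.map G₀ = (μ.map g).map Lc :=
        (AEMeasurable.map_map_of_aemeasurable Lc.continuous.aemeasurable hgm).symm
      have e3 : ν' = ν'.map id := Measure.map_id.symm
      conv_rhs => rw [e2, e3]
      rw [Measure.map_prod_map _ _ Lc.continuous.measurable measurable_id]
      rfl
    rw [e1]
    rfl
  have hspt₀' : InSpt (μ.map G₀) (G₀ u) := by
    have e2 : μ.map G₀ = (μ.map g).map Lc :=
        (AEMeasurable.map_map_of_aemeasurable Lc.continuous.aemeasurable hgm).symm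
    rw [e2]
    exact hspt₀.map Lc
  refine Equi.map_eq hlat (measurable_StLI L τ) hcont Eq₀ ?_
  have e : (fun t => StLI L τ (rescPM ((μ.map g).prod ν') (g u, b) t)) =
      fun t => rescPM ((μ.map G₀).prod ν') (G₀ u, b) (t + τ) := funext hSt
  show Equi l (fun t => StLI L τ (rescPM ((μ.map g).prod ν') (g u, b) t)) P
  rw [e]
  refine (Eq₁.shift hlat τ).congr fun ρ hρ c hc => ?_
  obtain ⟨C, hC⟩ := hphi
  have hc0 : 0 < confScale g (Φ.funs i u) * confScale (Φ.funs i) u / (Real.sqrt d + 1) :=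
    div_pos hAcf.1 (by positivity)
  have hAc : ∀ e, confScale g (Φ.funs i u) * confScale (Φ.funs i) u / (Real.sqrt d + 1) * ‖e‖ ≤ ‖A e‖ := fun e => by
    have h1 := hAcf.le_norm e
    have h2 := norm_nonneg (A e)
    rw [div_mul_eq_mul_div, div_le_iff₀ (by positivity)]
    nlinarith
  have hlin := UD.linearize hlat hG₀m hG₁m hspt₁ ⟨C, hlat hC⟩ (x₀ := G₀ u) (fun ε hε => by
    obtain ⟨δ, hδ, h1⟩ := first_order_close hW (hG₀c.mono hWs) (hG₁c.mono hWs) hi₀ hi₁ huW hG₀d hG₁d hc0 hAc ε hε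
    exact ⟨δ, hδ, haeW.mono fun v hv => h1 v hv⟩) hρ (half_pos hc)
  refine (hlin.shift hlat (half_pos hc).le (half_lt_self hc) τ).mono ?_ le_rfl
  intro t ht
  simp only [mem_ofPred_eq] at ht ⊢
  refine ht.trans_le ?_
  exact dist_prod_le (rescPM_prod (hspt₁ _) (hb _)) (rescPM_prod (hspt₀' _) (hb _))

end Local

/-! ### Barycenters and conclusion -/

section Final

lemma measurable_toMeasure {E : Type*} [MeasurableSpace E] :
    Measurable fun P : ProbabilityMeasure E => P.toMeasure := measurable_subtype_coe

lemma measurable_toMeasure_apply {E : Type*} [MeasurableSpace E] {A : Set E} (hA : MeasurableSet A) :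
    Measurable fun P : ProbabilityMeasure E => P.toMeasure A :=
  (Measure.measurable_coe hA).comp measurable_toMeasure

/-- An almost sure property of the barycenter holds almost surely for almost every component. -/
lemma ae_of_barycenter {E : Type*} [MeasurableSpace E] {Q : Measure E} {Q' : Measure (ProbabilityMeasure E)}
    (hbar : ∀ A : Set E, MeasurableSet A → Q A = ∫⁻ P, P.toMeasure A ∂Q') {q : E → Prop} (h : ∀ᵐ x ∂Q, q x) :
    ∀ᵐ P : ProbabilityMeasure E ∂Q', ∀ᵐ x ∂P.toMeasure, q x := by
  obtain ⟨A, hA, hAm, hA0⟩ := exists_measurable_superset_of_null (ae_iff.1 h)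
  rw [hbar A hAm, lintegral_eq_zero_iff (measurable_toMeasure_apply hAm)] at hA0
  filter_upwards [hA0] with P hP
  exact measure_mono_null hA hP

lemma eq_bind_of_barycenter {E : Type*} [MeasurableSpace E] {Q : Measure E} {Q' : Measure (ProbabilityMeasure E)}
    (hbar : ∀ A : Set E, MeasurableSet A → Q A = ∫⁻ P, P.toMeasure A ∂Q') :
    Q = Q'.bind fun P => P.toMeasure := by
  ext A hA
  rw [hbar A hA, Measure.bind_apply hA measurable_toMeasure.aemeasurable]

/-- An upper bound for the rate of exponential decay of a probability measure is nonnegative. -/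
lemma nonneg_of_phi_le {d : ℕ} {μ : Measure (Euc d)} [IsProbabilityMeasure μ] {s : ℝ}
    (hs : ∀ᵐ u ∂μ, ∀ ε > 0, ∀ᶠ n : ℕ in atTop, phi μ u n ≤ (s + ε) * n) : 0 ≤ s := by
  obtain ⟨u, hu⟩ := hs.exists
  by_contra! h0
  obtain ⟨n, h1, h2⟩ := ((hu (-s / 2) (by linarith)).and (eventually_gt_atTop 0)).exists
  have h3 := phi_nonneg μ u n
  have h4 : (0 : ℝ) < n := by exact_mod_cast h2
  nlinarith

variable {d : ℕ} {Φ : ConformalIFS d} {μ ν : Measure (Euc d)} {p : Fin Φ.n → ℝ≥0∞}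

/-- An ergodic component whose rate `entD P` is that of `μ` has the asserted invariance. -/
lemma SelfConf.invariance (hd : 1 ≤ d) (h : SelfConf Φ μ p) (S : CfSys Φ) {s : ℝ} (hs0 : 0 ≤ s)
    (hs : ∀ᵐ u ∂μ, ∀ ε > 0, ∃ᶠ n : ℕ in atTop, (s - ε) * n ≤ phi μ u n)
    {P : Measure (ProbabilityMeasure (Euc d × Euc d))} (hP : IsErgodicFD P) (hent : entD P ≤ ENNReal.ofReal s)
    {η : ProbabilityMeasure (Euc d × Euc d)} (hη : IsProdPM η) {b : Euc d}
    (hb : InSpt (η : Measure (Euc d × Euc d)).snd b) {g : Euc d → Euc d}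
    (hg : IsConformalMapOn d g (ball 0 1)) (hgood : ∀ᵐ u ∂μ, GoodPt η P b (g u)) :
    ∃ t₀ : ℝ, 0 ≤ t₀ ∧ ∀ i : Fin Φ.n, ∀ᵐ u ∂μ, ∀ t : ℝ, t₀ ≤ t →
      P.map (StLI (DfhMat g (Φ.funs i) u) t) = P ∧ P.map (StLI (DfhMat g (Φ.funs i) u)⁻¹ t) = P := by
  have hPp : IsProbabilityMeasure P := hP.1.1
  obtain ⟨a, ha0, ha⟩ := exists_time hd S hg
  refine ⟨a + 1, by linarith, fun i => ?_⟩
  filter_upwards [h.ae_map_StLI hd S hg (ae_inSpt_of_invariant hP.1.2.1) hη hb hgood hs0 hent hs i (lt_add_one a)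
    (fun u hu τ hτ q => (ha i u hu τ hτ q).1), h.ae_ball_R hd S] with u ⟨τ, hτ, hu⟩ huR t ht
  refine ⟨map_StLI_of_le hP.1.2.1 hu (hτ.2.le.trans ht), ?_⟩
  have hu1 := S.ball_R_subset huR
  have hmap : Φ.funs i u ∈ ball (0 : Euc d) 1 := S.ball_R_subset (S.maps i u hu1)
  refine map_StLI_inv hP.1.2.1
    (isUnit_det_DfhMat (hg.isCf hd hu1) (hg.isCf hd hmap) ((Φ.conf i).isCf hd hu1)) ?_ hu ?_
  · linarith [hτ.1]
  · exact fun q => (ha i u (ball_subset_closedBall huR) t (by linarith) q).2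

end Final

theorem tangent_distributions_of_selfconformal_products_are_invariant
    {d : ℕ} (hd : 1 ≤ d) (Φ : ConformalIFS d) (K : Set (Euc d)) (hK : IsAttractor Φ K)
    (μ : Measure (Euc d)) (hμ : IsSelfConformal Φ μ)
    (ν : Measure (Euc d)) (hν : IsProbabilityMeasure ν) :
    ∀ᵐ z ∂(μ.prod ν),
      ∀ Q : Measure (ProbabilityMeasure (Euc d × Euc d)),
        IsTangentDistribution (μ.prod ν) z Q →
      ∀ Q' : Measure (ProbabilityMeasure (ProbabilityMeasure (Euc d × Euc d))),
        IsProbabilityMeasure Q' →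
        (∀ᵐ P : ProbabilityMeasure (ProbabilityMeasure (Euc d × Euc d)) ∂Q',
          IsErgodicFD P.toMeasure) →
        (∀ A : Set (ProbabilityMeasure (Euc d × Euc d)), MeasurableSet A →
          Q A = ∫⁻ P, P.toMeasure A ∂Q') →
        ∀ᵐ P : ProbabilityMeasure (ProbabilityMeasure (Euc d × Euc d)) ∂Q',
          ∃ h : Euc d → Euc d, IsConformalMapOn d h (Metric.ball 0 1) ∧
            ∃ t₀ : ℝ, 0 ≤ t₀ ∧ ∀ i : Fin Φ.n,
              ∀ᵐ z₁ ∂μ, ∀ᵐ z₂ ∂μ, z₁ ∈ K → z₂ ∈ K → ∀ t : ℝ, t₀ ≤ t →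
                P.toMeasure.map (StLI (DfhMat h (Φ.funs i) z₁) t) = P.toMeasure ∧
                P.toMeasure.map (StLI (DfhMat h (Φ.funs i) z₂)⁻¹ t) = P.toMeasure := by
  obtain ⟨hμp, hμ0, p, hp, hp1, hpe⟩ := hμ
  have h : SelfConf Φ μ p := ⟨hμp, hμ0, hp, hp1, hpe⟩
  obtain ⟨S⟩ := exists_cfSys hd Φ
  obtain ⟨s, hs, hs'⟩ := h.exists_dim hd S
  have hs0 : 0 ≤ s := nonneg_of_phi_le hs
  have hfst := Measure.quasiMeasurePreserving_fst (μ := μ) (ν := ν)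
  have hsnd := Measure.quasiMeasurePreserving_snd (μ := μ) (ν := ν)
  filter_upwards [hfst.ae (ae_inSpt μ), hsnd.ae (ae_inSpt ν), hfst.ae hs] with z hx hy hz Q hQ Q' hQ' herg hbar
  set θ : ProbabilityMeasure (Euc d × Euc d) := ⟨μ.prod ν, inferInstance⟩ with hθdef
  have hθ1 : (θ : Measure (Euc d × Euc d)).fst = μ := by
    rw [hθdef, ProbabilityMeasure.coe_mk, Measure.fst_prod]
  have hθ2 : (θ : Measure (Euc d × Euc d)).snd = ν := by
    rw [hθdef, ProbabilityMeasure.coe_mk, Measure.snd_prod]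
  have hθ : IsProdPM θ := by
    rw [IsProdPM, hθ1, hθ2]
    rfl
  have hzspt : InSpt (θ : Measure (Euc d × Euc d)) z := by
    intro t
    rw [hθdef, ProbabilityMeasure.coe_mk, ← Prod.mk.eta (p := z), ← closedBall_prod_same, Measure.prod_prod]
    exact mul_ne_zero (hx t) (hy t)
  have hQθ : IsTangentDistribution (θ : Measure (Euc d × Euc d)) z Q := hQ
  have hQspt : ∀ᵐ η : ProbabilityMeasure (Euc d × Euc d) ∂Q, InSpt (η : Measure (Euc d × Euc d)) 0 := by
    rw [ae_iff]
    change Q {η : ProbabilityMeasure (Euc d × Euc d) | InSpt (η : Measure (Euc d × Euc d)) 0}ᶜ = 0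
    rw [hbar _ measurableSet_inSpt.compl,
      lintegral_eq_zero_iff (measurable_toMeasure_apply measurableSet_inSpt.compl)]
    filter_upwards [herg] with P hP
    have hPp : IsProbabilityMeasure P.toMeasure := hP.1.1
    exact ae_iff.1 (ae_inSpt_of_invariant hP.1.2.1)
  have hQent : entD Q ≤ ENNReal.ofReal s := hQθ.entD_le hθ hzspt hQspt (by rwa [hθ1])
  have hgood : ∀ᵐ P : ProbabilityMeasure (ProbabilityMeasure (Euc d × Euc d)) ∂Q',
      ∃ η : ProbabilityMeasure (Euc d × Euc d), IsProdPM η ∧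
      ∃ b, InSpt (η : Measure (Euc d × Euc d)).snd b ∧
      ∃ g : Euc d → Euc d, IsConformalMapOn d g (ball 0 1) ∧ ∀ᵐ u ∂μ, GoodPt η P.toMeasure b (g u) := by
    filter_upwards [herg, ae_of_barycenter hbar (hQθ.ae_isProd hθ hzspt),
      ae_of_barycenter hbar hQθ.ae_exists_seq] with P hP h1 h2
    exact h.exists_good hd S hν hx hy hP h1 h2
  have hlow : ∀ᵐ P : ProbabilityMeasure (ProbabilityMeasure (Euc d × Euc d)) ∂Q',
      ENNReal.ofReal s ≤ entD P.toMeasure := by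
    filter_upwards [hgood] with P hP
    obtain ⟨η, hη, b, hb, g, hg, hgd⟩ := hP
    exact ofReal_le_entD (h.aemeasurable_of_continuousOn hg.continuousOn) hgd hs' (h.ae_exists_lip hd S hg)
  have hφ : Measurable fun η : ProbabilityMeasure (Euc d × Euc d) =>
      ENNReal.ofReal (phi (η : Measure (Euc d × Euc d)).fst 0 1) := (measurable_phi_fst 1).ennreal_ofReal
  have hmeas : Measurable fun P : ProbabilityMeasure (ProbabilityMeasure (Euc d × Euc d)) => entD P.toMeasure :=
    (Measure.measurable_lintegral hφ).comp measurable_toMeasure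
  have hFint : ∫⁻ P, entD P.toMeasure ∂Q' ≤ ∫⁻ _, ENNReal.ofReal s ∂Q' := by
    rw [lintegral_const, measure_univ, mul_one]
    refine le_trans (le_of_eq ?_) hQent
    rw [entD, eq_bind_of_barycenter hbar,
      Measure.lintegral_bind measurable_toMeasure.aemeasurable hφ.aemeasurable]
    rfl
  -- the rates of the components average to at most `s` and are at least `s`, hence equal `s`
  have heq := ae_eq_of_ae_le_of_lintegral_le hlow
    (by rw [lintegral_const, measure_univ, mul_one]; exact ENNReal.ofReal_ne_top) hmeas.aemeasurable hFint
  filter_upwards [herg, hgood, heq] with P hP hPg hPe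
  obtain ⟨η, hη, b, hb, g, hg, hgd⟩ := hPg
  obtain ⟨t₀, ht₀, hinv⟩ := h.invariance hd S hs0 hs' hP hPe.symm.le hη hb hg hgd
  refine ⟨g, hg, t₀, ht₀, fun i => ?_⟩
  filter_upwards [hinv i] with z₁ h1
  filter_upwards [hinv i] with z₂ h2 _ _ t ht
  exact ⟨(h1 t ht).1, (h2 t ht).2⟩
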